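/- There exists an absolute constant d_2 > 0 such that for every R > 0 there exists M_0 = M_0(R) ∈ ℕ with the following property: for every real sequence (c_k)_{k≥1} with 2 ≤ c_k ≤ R for all k, and every integer M ≥ M_0, there exist a prime number p_1 ∈ [M, 2M], finite index sets I_k ⊆ ℕ^k (k = 1, 2, …), a function a defined on ∪_{k≥1} I_k taking prime values with a((1)) = p_1, and a function m : ∪_{k≥1} I_k → ℕ satisfying: (B1) I_1 = {(1)} and I_k = {(j, i) : j ∈ I_{k−1}, 1 ≤ i ≤ m(j)} for all k ≥ 2; (B2) for all k ≥ 2 and all j ∈ I_{k−1}: a(j)^{c_k} ≤ a(j,1) < a(j,2) < ⋯ < a(j, m(j)) ≤ (a(j)+1)^{c_k} − 1; (B3) for all k ≥ 2 and all distinct j, j' ∈ I_{k−1}: |a(j) − a(j')| ≥ 2; (B4) for all k ≥ 2 and all j ∈ I_{k−1}: m(j) ≥ d_2 · a(j)^{c_k − 1} · (c_k log a(j))^{−1}. -/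

import Mathlib

/-!
The children of a node `n` at level `k` are primes in `[n^c, (n+1)^c - 1]`, `c = c_{k+1} ≥ 2`. These intervals are
disjoint for distinct `n`, and primes in the tree are odd, so everything reduces to finding, below every node, many
primes which can again serve as nodes. For `n ∼ N` the interval has length about `n^{c-1}`, which for `c = 2` is
the square root of its position; it is not known that each of them contains a prime. But almost all do.

*Primes in almost all intervals* (`primes_ae`). The number of `n ∈ [N, 2N]` whose interval has fewer than
`n^{c-1} / (800 c log n)` primes is at most `10⁷ N exp (-ep * qp N)`, where `qp N = (2 log N)^{1/200}`. The proof
uses a smoothed explicit formula (`explicit_formula`) for `∑ Λ(n) e^{-A (log n - y)²}`, in which `ζ'/ζ` is replaced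
by its difference from the product of `ζ'` with the mollifier `∑_{d ≤ Y} μ(d) d^{-s}`. The contour is shifted to
`Re s = 1 - w`, `w = qp N ^ (-199)`. There the integrand is `ζ'/ζ` times `1 - ζ M`, up to the pole; its mean square
has a saving `exp (-ep * qp N)` (`efn_meansq`). Integrating over `y` with a Gaussian Bessel inequality
(`bessel_gauss`) bounds the number of exceptional `n` (`gbad_card`), and for the other `n` a difference of two
Gaussians detects the interval (`psi_lower`).

*The zero-free region* (`zero_free`, `zlog_bound`). The shift needs a region wider than the classical one, since a
saving larger than every power of `log N` is required below. It comes from Vinogradov's method: the mean value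
theorem (`vinogradov_mean`, through Linnik's lemma and a `p`-adic recursion) bounds bilinear exponential sums, hence
zeta sums (`zeta_sum_bound`), hence the tails of the zeta series (`ztail_main`) and `ζ` itself (`zeta_growth`) near
`Re s = 1`; Landau's argument turns the growth into a zero-free region.

*The tree.* Call `n` bad for height `h + 1` if its interval has too few primes, or if half of them are bad for height
`h`. The children of `n ∼ N` have size at least `N²`, where the proportion of bad numbers is `exp (-ep * qp (N²) / 2)`,
smaller than `exp (-ep * qp N / 2)` by more than any power of `log N`. So a bad set that is too large at scale `N` would
force too large a bad set at scale `N^c`: bad sets of every height stay small (`bad_count`). By finiteness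
(`bad_stable`) a number that is good for all heights has enough children with the same property (`childs_card`). A
prime root in `[M, 2M]` is found among the children of an auxiliary node near `√M` (`exists_root`). The constant
`d₂ = 1/1600` is half of the `1/800` in `primes_ae`.
-/

namespace PrimeTree

set_option maxHeartbeats 1600000
open Finset Real Filter
open Complex (I re_le_norm conj_I conj_ofReal ofReal_sum cpow_def_of_ne_zero natCast_log one_re normSq_apply
  norm_exp norm_cpow_eq_rpow_re_of_pos norm_real ofReal_re neg_re mem_reProdIm ofReal_exp
  norm_natCast_cpow_of_pos abs_im_le_norm sub_re norm_exp_ofReal_mul_I cpow_neg add_re abs_re_le_norm I_sq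
  ofReal_cpow normSq_eq_norm_sq re_ofReal_mul ofReal_mul norm_le_abs_re_add_abs_im hasSum_re continuous_re
  add_im)
open ArithmeticFunction (vonMangoldt moebius vonMangoldt_nonneg)
open Fintype (piFinset mem_piFinset)
open Nat (floor_le le_floor le_ceil lt_floor_add_one ceil_lt_add_one pow_log_le_self lt_pow_succ_log_self)
open scoped Complex
noncomputable section

/-! ### Linnik's lemma -/

/-- Equal power sums force equal elementary symmetric functions when `1, …, K` are invertible. -/
lemma aeval_esymm_eq {R : Type*} [CommRing R] {K : ℕ} (hK : ∀ n : ℕ, 1 ≤ n → n ≤ K → IsUnit (n : R))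
    (x y : Fin K → R) (h : ∀ j, 1 ≤ j → j ≤ K → ∑ i, x i^j = ∑ i, y i^j) (k:ℕ) (hk : k ≤ K) :
    MvPolynomial.aeval x (MvPolynomial.esymm (Fin K) R k) =
      MvPolynomial.aeval y (MvPolynomial.esymm (Fin K) R k) := by
  induction k using Nat.strong_induction_on with
  | _ k ih =>
    rcases Nat.eq_zero_or_pos k with rfl | hpos
    · simp
    have hu := hK k hpos hk
    apply hu.mul_left_cancel
    have e := MvPolynomial.mul_esymm_eq_sum (Fin K) R k
    have ex := congrArg (MvPolynomial.aeval x) e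
    have ey := congrArg (MvPolynomial.aeval y) e
    simp only [map_mul, map_natCast, map_pow, map_neg, map_one, map_sum] at ex ey
    rw [ex, ey]
    congr 1
    refine sum_congr rfl fun a ha => ?_
    simp only [mem_filter, HasAntidiagonal.mem_antidiagonal] at ha
    rw [ih a.1 ha.2 (by omega)]
    congr 1
    simp only [MvPolynomial.psum, map_sum, map_pow, MvPolynomial.aeval_X]
    exact h _ (by omega) (by omega)

lemma prod_sub_eq_zero {R : Type*} [CommRing R] {K : ℕ}
    (hK : ∀ n : ℕ, 1 ≤ n → n ≤ K → IsUnit (n : R))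
    (x y : Fin K → R) (h : ∀ j, 1 ≤ j → j ≤ K → ∑ i, x i^j = ∑ i, y i^j) (l : Fin K) :
    ∏ i, (y l - x i) = 0 := by
  have key : ∀ z : Fin K → R, ∏ i, (y l - z i) = ∑ j ∈ range (K + 1),
      (-1)^j*(MvPolynomial.aeval z (MvPolynomial.esymm (Fin K) R j) * y l^(K - j)) := by
    intro z
    have := congrArg (Polynomial.eval (y l))
      (Multiset.prod_X_sub_X_eq_sum_esymm ((univ : Finset (Fin K)).val.map z))
    simp only [Polynomial.eval_finsetSum, Multiset.map_map, Function.comp_def,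
      Polynomial.eval_multiset_prod] at this
    simp only [Polynomial.eval_sub, Polynomial.eval_X, Polynomial.eval_C, Polynomial.eval_mul,
      Polynomial.eval_pow, Polynomial.eval_neg, Polynomial.eval_one, Multiset.card_map,
      card_val, card_univ, Fintype.card_fin] at this
    rw [← prod_eq_multiset_prod] at this
    rw [this]
    refine sum_congr rfl fun j _ => ?_
    rw [MvPolynomial.aeval_esymm_eq_multiset_esymm]
  rw [key x]
  have h2 : ∏ i, (y l - y i) = 0 := prod_eq_zero (mem_univ l) (sub_self _)
  rw [← h2, key y]
  refine sum_congr rfl fun j hj => ?_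
  rw [aeval_esymm_eq hK x y h j (by simpa [Nat.lt_succ_iff] using hj)]

/-- The `p`-adic rigidity step of Linnik's lemma, phrased with integers. -/
lemma linnik_mem {p K : ℕ} [hp : Fact p.Prime] (hpK : K < p) (x y : Fin K → ℤ)
    (hx : ∀ i i', i ≠ i' → ¬ (p:ℤ) ∣ x i - x i')
    (h : ∀ j, 1 ≤ j → j ≤ K → ((∑ i, x i^j:ℤ) : ZMod (p^K)) = ((∑ i, y i^j:ℤ) : ZMod (p^K)))
    (l : Fin K) : ∃ i, ((y l : ℤ) : ZMod (p^K)) = (x i : ZMod (p^K)) := by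
  have hK0 : K ≠ 0 := by rintro rfl; exact l.elim0
  have hnon : ∀ z : ℤ, ¬ IsUnit ((z:ℤ) : ZMod (p^K)) → (p:ℤ) ∣ z := by
    intro z hz
    rw [ZMod.coe_int_isUnit_iff_isCoprime] at hz
    by_contra hd
    apply hz
    push_cast
    exact ((Nat.prime_iff_prime_int.mp hp.out).coprime_iff_not_dvd.mpr hd).pow_left
  have hunit : ∀ n : ℕ, 1 ≤ n → n ≤ K → IsUnit (n : ZMod (p^K)) := by
    intro n h1 h2
    by_contra hn
    have := hnon n (by simpa using hn)
    have := Int.natCast_dvd_natCast.mp this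
    exact absurd (Nat.le_of_dvd h1 this) (by omega)
  have h0 := prod_sub_eq_zero hunit (fun i => (x i : ZMod (p^K))) (fun i => (y i : ZMod (p^K)))
    (by intro j h1 h2; have := h j h1 h2; push_cast at this; exact this) l
  have : Fact (1 < p^K) := ⟨Nat.one_lt_pow hK0 hp.out.one_lt⟩
  by_cases hall : ∃ i, ¬ IsUnit ((y l - x i:ℤ) : ZMod (p^K))
  · obtain ⟨i, hi⟩ := hall
    refine ⟨i, ?_⟩
    have hrest : IsUnit (∏ i' ∈ univ.erase i, ((y l : ZMod (p^K)) - x i')) := by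
      rw [IsUnit.prod_iff]
      intro i' hi'
      by_contra hcon
      have h1 := hnon _ hi
      have h2 := hnon (y l - x i') (by push_cast; exact hcon)
      exact hx i i' (ne_of_mem_erase hi').symm (by
        have := dvd_sub h2 h1
        rwa [show y l - x i' - (y l - x i) = x i - x i' by ring] at this)
    rw [← mul_prod_erase _ _ (mem_univ i)] at h0
    have := (IsUnit.mul_left_eq_zero hrest).mp h0
    exact sub_eq_zero.mp this
  · push Not at hall
    exfalso
    have : IsUnit (∏ i, ((y l : ZMod (p^K)) - x i)) := by
      rw [IsUnit.prod_iff]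
      intro i _
      have := hall i
      push_cast at this
      exact this
    rw [h0] at this
    exact not_isUnit_zero this

open scoped Classical in
lemma card_lift_le (p K j : ℕ) [hp : Fact p.Prime] (hj : j ≤ K) (b:ℤ) :
    #{m : ZMod (p^K) | ∃ z : ℤ, (z : ZMod (p^K)) = m ∧ ((p^j:ℕ):ℤ) ∣ z - b} ≤ p^(K - j) := by
  have hp0 : 0 < p := hp.out.pos
  calc _ ≤ #((range (p^(K - j))).image
        (fun t : ℕ => ((b + (p^j:ℕ) * t:ℤ) : ZMod (p^K)))) := by
        apply card_le_card
        intro m hm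
        simp only [mem_filter, mem_univ, true_and] at hm
        obtain ⟨z, rfl, q, hq⟩ := hm
        rw [mem_image]
        have hpos : (0:ℤ) < ((p^(K - j):ℕ):ℤ) := by positivity
        refine ⟨(q % ((p^(K - j):ℕ):ℤ)).toNat, ?_, ?_⟩
        · rw [mem_range]
          have := Int.emod_lt_of_pos q hpos
          have := Int.emod_nonneg q hpos.ne'
          omega
        · rw [ZMod.intCast_eq_intCast_iff_dvd_sub]
          rw [Int.toNat_of_nonneg (Int.emod_nonneg q hpos.ne')]
          have e : z = b + ((p^j:ℕ):ℤ) * q := by linarith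
          refine ⟨q / ((p^(K - j):ℕ):ℤ), ?_⟩
          have e2 := Int.emod_add_mul_ediv q ((p^(K - j):ℕ):ℤ)
          have e3 : ((p^K:ℕ):ℤ) = ((p^j:ℕ):ℤ)*((p^(K - j):ℕ):ℤ) := by
            rw [← Nat.cast_mul, ← pow_add]; congr; omega
          rw [e, e3]
          nth_rewrite 1 [← e2]
          ring
    _ ≤ _ := by simpa using card_image_le (s := range (p^(K - j)))

/-- Linnik's lemma: counting solutions of the system of congruences `∑ (xᵢ - u)^j ≡ bⱼ (mod p^j)`
with `x₁, …, x_K` distinct modulo `p`. -/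
lemma linnik_count {p K : ℕ} [hp : Fact p.Prime] (hpK : K < p) (S : Finset ℤ)
    (hS : ∀ a ∈ S, ∀ b ∈ S, (a : ZMod (p^K)) = b → a = b) (u:ℤ) (b : ℕ → ℤ) :
    #{x ∈ piFinset (fun _ : Fin K => S) | (∀ i i', i ≠ i' → ¬ (p:ℤ) ∣ x i - x i') ∧
      ∀ j, 1 ≤ j → j ≤ K → ((p^j:ℕ):ℤ) ∣ ∑ i, (x i - u)^j - b j}
      ≤ K^K * p^(K*(K - 1)/2) := by
  classical
  set X := {x ∈ piFinset (fun _ : Fin K => S) | (∀ i i', i ≠ i' → ¬ (p:ℤ) ∣ x i - x i') ∧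
      ∀ j, 1 ≤ j → j ≤ K → ((p^j:ℕ):ℤ) ∣ ∑ i, (x i - u)^j - b j} with hX
  let φ : (Fin K → ℤ) → (Fin K → ZMod (p^K)) :=
    fun x j => ((∑ i, (x i - u)^(j.val + 1):ℤ) : ZMod (p^K))
  have himg : #(X.image φ) ≤ p^(K*(K - 1)/2) := by
    calc _ ≤ #(piFinset (fun j : Fin K => ({m : ZMod (p^K) | ∃ z : ℤ, (z : ZMod (p^K)) = m ∧
              ((p^(j.val + 1):ℕ):ℤ) ∣ z - b (j.val + 1)} : Finset _))) := by
          apply card_le_card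
          intro m hm
          rw [mem_image] at hm
          obtain ⟨x, hx, rfl⟩ := hm
          rw [mem_piFinset]
          intro j
          simp only [mem_filter, mem_univ, true_and]
          exact ⟨_, rfl, (mem_filter.mp hx).2.2 (j.val + 1) (by omega) (by omega)⟩
      _ = ∏ j : Fin K, _ := Fintype.card_piFinset _
      _ ≤ ∏ j : Fin K, p^(K - (j.val + 1)) :=
          prod_le_prod' fun j _ => card_lift_le p K _ (by omega) _
      _ = p^(K*(K - 1)/2) := by
          rw [prod_pow_eq_pow_sum, Fin.sum_univ_eq_sum_range (fun j => K - (j + 1)) K]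
          congr 1
          rw [← sum_range_id, ← sum_range_reflect (fun j => j)]
          exact sum_congr rfl fun j hj => by omega
  have hfib : ∀ m ∈ X.image φ, #{x ∈ X | φ x = m} ≤ K^K := by
    intro m hm
    obtain ⟨x, hx, rfl⟩ := mem_image.mp hm
    have hxX := mem_filter.mp hx
    calc _ ≤ #((univ : Finset (Fin K → Fin K)).image (fun σ => x ∘ σ)) := by
          apply card_le_card
          intro y hy
          have hy' := mem_filter.mp hy
          have hyX := mem_filter.mp hy'.1
          have hmem : ∀ l, ∃ i, y l = x i := by
            intro l
            obtain ⟨i, hi⟩ := linnik_mem hpK (fun i => x i - u) (fun i => y i - u)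
              (by intro i i' hne; simpa using hxX.2.1 i i' hne)
              (by
                intro j h1 h2
                have := congrFun hy'.2 ⟨j - 1, by omega⟩
                simp only [φ] at this
                rw [show j - 1 + 1 = j by omega] at this
                exact this.symm) l
            refine ⟨i, hS _ (mem_piFinset.mp hyX.1 l) _ (mem_piFinset.mp hxX.1 i) ?_⟩
            push_cast at hi
            exact sub_left_injective hi
          choose σ hσ using hmem
          exact mem_image.mpr ⟨σ, mem_univ _, funext fun l => (hσ l).symm⟩
      _ ≤ _ := card_image_le
      _ = K^K := by simp
  calc #X ≤ K^K * #(X.image φ) := card_le_mul_card_image _ _ hfib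
    _ ≤ _ := Nat.mul_le_mul_left _ himg

/-! ### A sum is controlled by its square function or by elementary symmetric functions -/

/-- Elementary symmetric function of the numbers `f u`. -/
def elem {p : ℕ} (f : Fin p → ℂ) (m:ℕ) : ℂ :=
  MvPolynomial.aeval f (MvPolynomial.esymm (Fin p) ℂ m)

lemma newton_elem {p : ℕ} (f : Fin p → ℂ) (m:ℕ) :
    (m:ℂ) * elem f m = (-1)^(m + 1) *
      ∑ k ∈ range m, (-1)^k * elem f k * ∑ u, f u^(m - k) := by
  have e := congrArg (MvPolynomial.aeval f) (MvPolynomial.mul_esymm_eq_sum (Fin p) ℂ m)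
  simp only [map_mul, map_natCast, map_pow, map_neg, map_one, map_sum, MvPolynomial.psum,
    MvPolynomial.aeval_X] at e
  unfold elem
  rw [e, sum_filter, Finset.Nat.sum_antidiagonal_eq_sum_range_succ_mk, sum_range_succ]
  simp only [lt_irrefl, if_false, add_zero]
  congr 1
  exact sum_congr rfl fun k hk => by rw [if_pos (mem_range.mp hk)]

section pointwise
variable {p : ℕ} {f : Fin p → ℂ} {q Z : ℝ}

lemma norm_psum_le (hq : 0 ≤ q) (hqQ : ∑ u, ‖f u‖^2 ≤ q^2) {i : ℕ} (hi : 2 ≤ i) :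
    ‖∑ u, f u^i‖ ≤ q^i := by
  have h1 : ∀ u, ‖f u‖ ≤ q := fun u => by
    apply le_of_sq_le_sq _ hq
    exact (single_le_sum (f := fun u => ‖f u‖^2) (fun _ _ => by positivity) (mem_univ u)).trans hqQ
  calc _ ≤ ∑ u, ‖f u^i‖ := norm_sum_le _ _
    _ ≤ ∑ u, q^(i - 2) * ‖f u‖^2 := by
        refine sum_le_sum fun u _ => ?_
        rw [norm_pow]
        calc ‖f u‖^i = ‖f u‖^(i - 2) * ‖f u‖^2 := by rw [← pow_add]; congr 1; omega
          _ ≤ _ := by gcongr; exact h1 u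
    _ = q^(i - 2) * ∑ u, ‖f u‖^2 := by rw [mul_sum]
    _ ≤ q^(i - 2) * q^2 := by gcongr
    _ = q^i := by rw [← pow_add]; congr 1; omega

variable (hq : 0 ≤ q) (hqQ : ∑ u, ‖f u‖^2 ≤ q^2) (hqZ : q ≤ Z) (hF : ‖∑ u, f u‖ ≤ Z)
include hq hqQ hqZ hF

lemma norm_elem_le (m:ℕ) : ‖elem f m‖ ≤ Z^m := by
  have hZ : 0 ≤ Z := hq.trans hqZ
  induction m using Nat.strong_induction_on with
  | _ m ih =>
    rcases Nat.eq_zero_or_pos m with rfl | hpos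
    · simp [elem]
    have h := congrArg norm (newton_elem f m)
    have hm : (0:ℝ) < m := by exact_mod_cast hpos
    rw [norm_mul, norm_mul, Complex.norm_natCast, norm_pow, norm_neg, norm_one, one_pow, one_mul] at h
    have : (m:ℝ) * ‖elem f m‖ ≤ m * Z^m := by
      rw [h]
      calc _ ≤ ∑ k ∈ range m, ‖(-1)^k * elem f k * ∑ u, f u^(m - k)‖ := norm_sum_le _ _
        _ ≤ ∑ k ∈ range m, Z^m := by
            refine sum_le_sum fun k hk => ?_
            have hk' := mem_range.mp hk
            rw [norm_mul, norm_mul, norm_pow, norm_neg, norm_one, one_pow, one_mul]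
            have hps : ‖∑ u, f u^(m - k)‖ ≤ Z^(m - k) := by
              rcases Nat.lt_or_ge 1 (m - k) with h2 | h2
              · exact (norm_psum_le hq hqQ h2).trans (by gcongr)
              · have : m - k = 1 := by omega
                simpa [this] using hF
            calc _ ≤ Z^k * Z^(m - k) := by gcongr; exact ih k hk'
              _ = Z^m := by rw [← pow_add]; congr 1; omega
        _ = _ := by simp
    exact le_of_mul_le_mul_left this hm

lemma norm_elem_succ_le (n:ℕ) :
    ‖((n + 1:ℕ):ℂ) * elem f (n + 1) - (∑ u, f u) * elem f n‖ ≤ n*(q * Z^n) := by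
  have hZ : 0 ≤ Z := hq.trans hqZ
  rw [newton_elem, sum_range_succ]
  have e1 : n + 1 - n = 1 := by omega
  have e2 : (-1:ℂ)^(n + 1 + 1)*(∑ k ∈ range n, (-1)^k * elem f k * ∑ u, f u^(n + 1 - k) +
      (-1)^n * elem f n * ∑ u, f u^(n + 1 - n)) - (∑ u, f u) * elem f n =
      (-1:ℂ)^(n + 1 + 1)*(∑ k ∈ range n, (-1)^k * elem f k * ∑ u, f u^(n + 1 - k)) := by
    rw [e1]
    simp only [pow_one]
    have : (-1:ℂ)^(n + 1 + 1)*(-1)^n = 1 := by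
      rw [← pow_add]; exact Even.neg_one_pow ⟨n + 1, by ring⟩
    linear_combination (elem f n * ∑ u, f u) * this
  rw [e2, norm_mul, norm_pow, norm_neg, norm_one, one_pow, one_mul]
  calc _ ≤ ∑ k ∈ range n, ‖(-1)^k * elem f k * ∑ u, f u^(n + 1 - k)‖ := norm_sum_le _ _
    _ ≤ ∑ k ∈ range n, q * Z^n := by
        refine sum_le_sum fun k hk => ?_
        have hk' := mem_range.mp hk
        rw [norm_mul, norm_mul, norm_pow, norm_neg, norm_one, one_pow, one_mul]
        calc _ ≤ Z^k * q^(n + 1 - k) := by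
              gcongr
              · exact norm_elem_le hq hqQ hqZ hF k
              · exact norm_psum_le hq hqQ (by omega)
          _ = Z^k*(q * q^(n - k)) := by rw [← pow_succ']; congr 2; omega
          _ ≤ Z^k*(q * Z^(n - k)) := by gcongr
          _ = q*(Z^k * Z^(n - k)) := by ring
          _ = q * Z^n := by rw [← pow_add]; congr 2; omega
    _ = _ := by simp

lemma norm_elem_sub_pow_le (n:ℕ) :
    ‖((n + 1).factorial:ℂ) * elem f (n + 1) - (∑ u, f u)^(n + 1)‖
      ≤ (n + 1).factorial*(q * Z^n) := by
  have hZ : 0 ≤ Z := hq.trans hqZ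
  induction n with
  | zero =>
    have h1 : elem f 1 = ∑ u, f u := by
      have := newton_elem f 1
      simpa [elem] using this
    simp [h1, hq]
  | succ n ih =>
    have hs := norm_elem_succ_le hq hqQ hqZ hF (n + 1)
    have e : ((n + 1 + 1).factorial:ℂ) * elem f (n + 1 + 1) - (∑ u, f u)^(n + 1 + 1) =
        ((n + 1).factorial:ℂ)*(((n + 1 + 1:ℕ):ℂ) * elem f (n + 1 + 1) - (∑ u, f u) * elem f (n + 1))
        + (∑ u, f u)*(((n + 1).factorial:ℂ) * elem f (n + 1) - (∑ u, f u)^(n + 1)) := by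
      rw [Nat.factorial_succ (n + 1)]; push_cast; ring
    rw [e]
    refine (norm_add_le _ _).trans ?_
    rw [norm_mul, norm_mul, Complex.norm_natCast]
    calc _ ≤ ((n + 1).factorial:ℝ)*((n + 1:ℕ)*(q * Z^(n + 1))) +
          Z*((n + 1).factorial*(q * Z^n)) := by gcongr
      _ = _ := by rw [Nat.factorial_succ (n + 1)]; push_cast; ring

omit hqZ hF in
/-- Either the full sum is dominated by its square function, or by the elementary symmetric
function, whose terms come from distinct indices. -/
lemma norm_pow_le_elem_or (K:ℕ) (h : 2*K.factorial * q ≤ ‖∑ u, f u‖) :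
    ‖∑ u, f u‖^K ≤ 2*K.factorial * ‖elem f K‖ := by
  rcases K with _ | n
  · simp [elem]
  set Y := ‖∑ u, f u‖ with hY
  have hfac : (1:ℝ) ≤ (n + 1).factorial := by exact_mod_cast Nat.one_le_of_lt (Nat.factorial_pos _)
  have hqY : q ≤ Y := by nlinarith
  have hmain := norm_elem_sub_pow_le hq hqQ hqY le_rfl n
  have hY0 : 0 ≤ Y := norm_nonneg _
  have h2 : Y^(n + 1) ≤ (n + 1).factorial * ‖elem f (n + 1)‖ + (n + 1).factorial*(q * Y^n) := by
    rw [hY, ← norm_pow, ← hY]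
    have := norm_sub_le (((n + 1).factorial:ℂ) * elem f (n + 1))
      (((n + 1).factorial:ℂ) * elem f (n + 1) - (∑ u, f u)^(n + 1))
    rw [sub_sub_cancel, norm_mul, Complex.norm_natCast] at this
    linarith
  have h3 : 2*(((n + 1).factorial:ℝ)*(q * Y^n)) ≤ Y^(n + 1) := by
    rw [pow_succ']
    calc _ = (2*(n + 1).factorial * q) * Y^n := by ring
      _ ≤ _ := by gcongr
  linarith

omit hq hqQ hqZ hF in
/-- The alternative of `norm_pow_le_elem_or`, multiplied up to the exponent `2 * (s + K)`. -/
lemma pointwise_bound (f : Fin p → ℂ) (K s : ℕ) :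
    ‖∑ u, f u‖^(2*(s + K)) ≤ 4*(K.factorial:ℝ)^2*(‖elem f K‖^2*‖∑ u, f u‖^(2*s))
      + (2*K.factorial:ℝ)^(2*(s + K))*(∑ u, ‖f u‖^2)^(s + K) := by
  set Q := ∑ u, ‖f u‖^2
  have hQ : 0 ≤ Q := sum_nonneg fun _ _ => by positivity
  have hq := sqrt_nonneg Q
  have hqQ : Q ≤ √Q^2 := by rw [sq_sqrt hQ]
  rcases le_total (2*K.factorial * √Q) ‖∑ u, f u‖ with h | h
  · have := norm_pow_le_elem_or hq hqQ K h
    have h2 : ‖∑ u, f u‖^(2*(s + K)) ≤ 4*(K.factorial:ℝ)^2*(‖elem f K‖^2*‖∑ u, f u‖^(2*s)) := by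
      calc _ = (‖∑ u, f u‖^K)^2*‖∑ u, f u‖^(2*s) := by ring
        _ ≤ (2*K.factorial * ‖elem f K‖)^2*‖∑ u, f u‖^(2*s) := by gcongr
        _ = _ := by ring
    have : 0 ≤ (2*K.factorial:ℝ)^(2*(s + K)) * Q^(s + K) := by positivity
    linarith
  · have h2 : ‖∑ u, f u‖^(2*(s + K)) ≤ (2*K.factorial:ℝ)^(2*(s + K)) * Q^(s + K) := by
      calc _ ≤ (2*K.factorial * √Q)^(2*(s + K)) := by gcongr
        _ = (2*K.factorial:ℝ)^(2*(s + K))*(√Q^2)^(s + K) := by rw [mul_pow, ← pow_mul]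
        _ = _ := by rw [sq_sqrt hQ]
    have : 0 ≤ 4*(K.factorial:ℝ)^2*(‖elem f K‖^2*‖∑ u, f u‖^(2*s)) := by positivity
    linarith

end pointwise

/-! ### Systems of power sums -/

/-- Parseval for a finite abelian group: the second moment of an exponential sum counts
coincidences. -/
lemma char_second_moment {G ι : Type*} [AddCommGroup G] [Fintype G] [DecidableEq G]
    (Ω : Finset ι) (g : ι → G) :
    ∑ ψ : AddChar G ℂ, ‖∑ ω ∈ Ω, ψ (g ω)‖^2 =
      Fintype.card G*(#{z ∈ Ω ×ˢ Ω | g z.1 = g z.2}:ℝ) := by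
  have h : (∑ ψ : AddChar G ℂ, ((‖∑ ω ∈ Ω, ψ (g ω)‖^2:ℝ):ℂ)) =
      Fintype.card G*(#{z ∈ Ω ×ˢ Ω | g z.1 = g z.2}:ℂ) := by
    calc _ = ∑ ψ : AddChar G ℂ, ∑ z ∈ Ω ×ˢ Ω, ψ (g z.1 - g z.2) := by
          refine sum_congr rfl fun ψ _ => ?_
          push_cast
          rw [← Complex.mul_conj', map_sum, sum_mul_sum, sum_product]
          refine sum_congr rfl fun a _ => sum_congr rfl fun b _ => ?_
          rw [sub_eq_add_neg, AddChar.map_add_eq_mul, AddChar.map_neg_eq_conj]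
      _ = ∑ z ∈ Ω ×ˢ Ω, ∑ ψ : AddChar G ℂ, ψ (g z.1 - g z.2) := sum_comm
      _ = ∑ z ∈ Ω ×ˢ Ω, if g z.1 = g z.2 then (Fintype.card G:ℂ) else 0 := by
          refine sum_congr rfl fun z _ => ?_
          rw [AddChar.sum_apply_eq_ite]
          simp [sub_eq_zero]
      _ = _ := by
          rw [← sum_filter, sum_const, nsmul_eq_mul, mul_comm]
  exact_mod_cast h

/-- The number of representations of a difference is largest at `0`. -/
lemma pair_count_le {G ι : Type*} [AddCommGroup G] [DecidableEq G] (Z : Finset ι) (g : ι → G) (h : G) :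
    #{z ∈ Z ×ˢ Z | g z.1 = g z.2 + h} ≤ #{z ∈ Z ×ˢ Z | g z.1 = g z.2} := by
  classical
  let N : G → ℕ := fun a => #{z ∈ Z | g z = a}
  have hcount : ∀ h : G, #{z ∈ Z ×ˢ Z | g z.1 = g z.2 + h} = ∑ b ∈ Z.image g, N b * N (b + h) := by
    intro h
    have h1 : #{z ∈ Z ×ˢ Z | g z.1 = g z.2 + h} = ∑ w ∈ Z, N (g w + h) := by
      rw [card_filter, sum_product_right]
      refine sum_congr rfl fun w _ => ?_
      simp only [N, card_filter]
    rw [h1, ← sum_fiberwise_of_maps_to (t := Z.image g) (g := g)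
      (fun w hw => mem_image_of_mem _ hw)]
    refine sum_congr rfl fun b _ => ?_
    rw [sum_congr rfl (g := fun _ => N (b + h)) (fun w hw => by rw [(mem_filter.mp hw).2]),
      sum_const, smul_eq_mul]
  have h0 := hcount 0
  simp only [add_zero] at h0
  rw [h0, hcount h]
  have hshift : ∑ b ∈ Z.image g, N (b + h)^2 ≤ ∑ b ∈ Z.image g, N b^2 := by
    calc _ = ∑ b ∈ (Z.image g).image (· + h), N b^2 := by
          exact (sum_image (f := fun b => N b^2)
            (fun a _ b _ hab => add_right_cancel hab)).symm
      _ = ∑ b ∈ {b ∈ (Z.image g).image (· + h) | b ∈ Z.image g}, N b^2 := by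
          symm
          apply sum_filter_of_ne
          intro b _ hb
          by_contra hcon
          apply hb
          have : N b = 0 := by
            rw [card_eq_zero, filter_eq_empty_iff]
            intro z hz hgz
            exact hcon (hgz ▸ mem_image_of_mem _ hz)
          simp [this]
      _ ≤ _ := sum_le_sum_of_subset (fun b hb => (mem_filter.mp hb).2)
  have h2 : 2*∑ b ∈ Z.image g, N b * N (b + h) ≤
      ∑ b ∈ Z.image g, N b^2 + ∑ b ∈ Z.image g, N (b + h)^2 := by
    rw [mul_sum, ← sum_add_distrib]
    refine sum_le_sum fun b _ => ?_
    have := two_mul_le_add_sq (N b) (N (b + h))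
    linarith
  have h3 : ∑ b ∈ Z.image g, N b * N b = ∑ b ∈ Z.image g, N b^2 :=
    sum_congr rfl fun b _ => by ring
  omega

/-- Translation invariance of systems of power sums. -/
lemma translate_sys {ι : Type*} (I : Finset ι) (w x : ι → ℤ) (K:ℕ)
    (h : ∀ k ≤ K, ∑ i ∈ I, w i * x i^k = 0) (u:ℤ) (j:ℕ) (hj : j ≤ K) :
    ∑ i ∈ I, w i*(x i - u)^j = 0 := by
  have : ∀ i, w i*(x i - u)^j =
      ∑ k ∈ range (j + 1), (w i * x i^k)*((-u)^(j - k)*(j.choose k)) := by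
    intro i
    rw [sub_eq_add_neg, add_pow, mul_sum]
    exact sum_congr rfl fun k _ => by ring
  simp_rw [this]
  rw [sum_comm]
  refine sum_eq_zero fun k hk => ?_
  rw [← sum_mul, h k (by have := mem_range.mp hk; omega), zero_mul]

/-- Equality of the power sums of orders `1, …, K`. -/
def Sys (K:ℕ) {s : ℕ} (x y : Fin s → ℤ) : Prop :=
  ∀ j, 1 ≤ j → j ≤ K → ∑ i, x i^j = ∑ i, y i^j

lemma Sys.translate {K s : ℕ} {x y : Fin s → ℤ} (h : Sys K x y) (u:ℤ) :
    Sys K (fun i => x i - u) (fun i => y i - u) := by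
  intro j _ hj
  have := translate_sys (univ : Finset (Fin s ⊕ Fin s)) (Sum.elim (fun _ => 1) (fun _ => -1))
    (Sum.elim x y) K (by
      intro k hk
      rw [Fintype.sum_sum_type]
      rcases Nat.eq_zero_or_pos k with rfl | hk0
      · simp
      · have := h k hk0 hk
        simp [this]) u j hj
  rw [Fintype.sum_sum_type] at this
  simp only [Sum.elim_inl, Sum.elim_inr, one_mul, neg_mul, sum_neg_distrib] at this
  linarith

open scoped Classical in
/-- The number of solutions of the Vinogradov system with `2 s` variables taken from `S`. -/
def VJ (K s : ℕ) (S : Finset ℤ) : ℕ :=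
  #{z ∈ piFinset (fun _ : Fin s => S) ×ˢ piFinset (fun _ : Fin s => S) | Sys K z.1 z.2}

/-- The interval `[0, P)`. -/
def seg (P:ℕ) : Finset ℤ := Ico 0 (P:ℤ)

/-- The residue of an integer modulo `p` as an element of `Fin p`. -/
def res (p:ℕ) [NeZero p] (x:ℤ) : Fin p :=
  ⟨(x % p).toNat, by
    have h : (0:ℤ) < p := by exact_mod_cast Nat.pos_of_ne_zero (NeZero.ne p)
    have := Int.emod_lt_of_pos x h
    have := Int.emod_nonneg x h.ne'
    omega⟩

lemma res_coe (p:ℕ) [NeZero p] (x:ℤ) : ((res p x : ℕ):ℤ) = x % p := by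
  have h : (0:ℤ) < p := by exact_mod_cast Nat.pos_of_ne_zero (NeZero.ne p)
  simp only [res]
  rw [Int.toNat_of_nonneg (Int.emod_nonneg x h.ne')]

lemma dvd_sub_res (p:ℕ) [NeZero p] (x:ℤ) : (p:ℤ) ∣ x - (res p x : ℕ) := by
  rw [res_coe]; exact Int.dvd_self_sub_emod

lemma res_eq_of_dvd (p:ℕ) [NeZero p] {x y : ℤ} (h : (p:ℤ) ∣ x - y) : res p x = res p y := by
  apply Fin.ext
  have : x % p = y % p := Int.emod_eq_emod_iff_emod_sub_eq_zero.mpr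
    (Int.emod_eq_zero_of_dvd h)
  have h1 := res_coe p x
  have h2 := res_coe p y
  omega

/-- Elements of `seg P` in a fixed residue class. -/
def cls (P p : ℕ) [NeZero p] (u : Fin p) : Finset ℤ := {x ∈ seg P | res p x = u}

lemma mem_cls {P p : ℕ} [NeZero p] {u : Fin p} {x : ℤ} : x ∈ cls P p u ↔ (0 ≤ x ∧ x < P) ∧ res p x = u := by
  simp [cls, seg]

lemma VJ_cls_le (K s P p : ℕ) [NeZero p] (u : Fin p) : VJ K s (cls P p u) ≤ VJ K s (seg (P / p + 1)) := by
  classical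
  have hp : (0:ℤ) < p := by exact_mod_cast Nat.pos_of_ne_zero (NeZero.ne p)
  unfold VJ
  have hdiv : ∀ x ∈ cls P p u, x - (u:ℕ) = p*(x / p) := by
    intro x hx
    have := (mem_cls.mp hx).2
    rw [← this, res_coe]
    have := Int.emod_add_mul_ediv x p
    linarith
  have hseg : ∀ x ∈ cls P p u, x / p ∈ seg (P / p + 1) := by
    intro x hx
    have := (mem_cls.mp hx).1
    rw [seg, mem_Ico]
    refine ⟨Int.ediv_nonneg this.1 hp.le, ?_⟩
    have h1 : x / p ≤ (P:ℤ) / p := Int.ediv_le_ediv hp this.2.le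
    push_cast
    omega
  refine card_le_card_of_injOn
    (fun z => (fun i => z.1 i / (p:ℤ), fun i => z.2 i / (p:ℤ))) ?_ ?_
  · intro z hz
    simp only [coe_filter, mem_product, mem_piFinset, Set.mem_ofPred_eq] at hz ⊢
    refine ⟨⟨fun i => hseg _ (hz.1.1 i), fun i => hseg _ (hz.1.2 i)⟩, ?_⟩
    intro j h1 h2
    have h3 := hz.2.translate (u:ℕ) j h1 h2
    simp only at h3
    rw [sum_congr rfl (g := fun i => ((p:ℤ)*(z.1 i / p))^j)
        (fun i _ => by rw [hdiv _ (hz.1.1 i)]),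
      sum_congr rfl (f := fun i => (z.2 i - (u:ℕ))^j)
        (g := fun i => ((p:ℤ)*(z.2 i / p))^j)
        (fun i _ => by rw [hdiv _ (hz.1.2 i)])] at h3
    simp only [mul_pow, ← mul_sum] at h3
    exact mul_left_cancel₀ (pow_ne_zero _ hp.ne') h3
  · intro z hz z' hz' h
    simp only [coe_filter, mem_product, mem_piFinset, Set.mem_ofPred_eq] at hz hz'
    have e1 := congrArg Prod.fst h
    have e2 := congrArg Prod.snd h
    simp only at e1 e2
    refine Prod.ext (funext fun i => ?_) (funext fun i => ?_)
    · have a := hdiv _ (hz.1.1 i)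
      have b := hdiv _ (hz'.1.1 i)
      have c := congrFun e1 i
      rw [c] at a
      linarith
    · have a := hdiv _ (hz.1.2 i)
      have b := hdiv _ (hz'.1.2 i)
      have c := congrFun e2 i
      rw [c] at a
      linarith

/-- Elementary symmetric functions as sums over strictly increasing tuples. -/
lemma elem_eq_sum {p : ℕ} (f : Fin p → ℂ) (K:ℕ) :
    elem f K = ∑ t ∈ (powersetCard K (univ : Finset (Fin p))).attach,
      ∏ i : Fin K, f (t.1.orderEmbOfFin (mem_powersetCard.mp t.2).2 i) := by
  unfold elem MvPolynomial.esymm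
  simp only [map_sum, map_prod, MvPolynomial.aeval_X]
  rw [← sum_attach]
  refine sum_congr rfl fun t _ => ?_
  rw [← prod_image (s := univ) (f := f)
    (g := fun i => t.1.orderEmbOfFin (mem_powersetCard.mp t.2).2 i)
    (fun a _ b _ h => (t.1.orderEmbOfFin _).injective h)]
  congr 1
  have := image_orderEmbOfFin_univ t.1 (mem_powersetCard.mp t.2).2
  exact this.symm

open scoped Classical in
/-- Tuples from `seg P` whose residues modulo `p` are strictly increasing. -/
def Om (K P p : ℕ) [NeZero p] : Finset (Fin K → ℤ) :=
  {x ∈ piFinset (fun _ : Fin K => seg P) | StrictMono fun i => res p (x i)}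

lemma addChar_map_sum {G ι : Type*} [AddCommGroup G] (ψ : AddChar G ℂ) (s : Finset ι) (v : ι → G) :
    ψ (∑ i ∈ s, v i) = ∏ i ∈ s, ψ (v i) := by
  classical
  induction s using Finset.induction_on with
  | empty => simp
  | insert a s ha ih => rw [sum_insert ha, prod_insert ha, AddChar.map_add_eq_mul, ih]

lemma pow_eq_sum_pi {G : Type*} [AddCommGroup G] (ψ : AddChar G ℂ) (v : ℤ → G) (S : Finset ℤ) (s:ℕ) :
    (∑ x ∈ S, ψ (v x))^s = ∑ x ∈ piFinset (fun _ : Fin s => S), ψ (∑ i, v (x i)) := by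
  have := prod_univ_sum (fun _ : Fin s => S) (fun _ x => ψ (v x))
  rw [prod_const, card_univ, Fintype.card_fin] at this
  rw [this]
  exact sum_congr rfl fun x _ => (addChar_map_sum ψ _ _).symm

lemma elem_eq_sum_Om {G : Type*} [AddCommGroup G] (ψ : AddChar G ℂ) (v : ℤ → G) (K P p : ℕ) [NeZero p] :
    elem (fun u => ∑ x ∈ cls P p u, ψ (v x)) K = ∑ x ∈ Om K P p, ψ (∑ i, v (x i)) := by
  classical
  rw [elem_eq_sum]
  let τ : (Fin K → ℤ) → Finset (Fin p) := fun x => univ.image fun i => res p (x i)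
  have hτ : ∀ x ∈ Om K P p, τ x ∈ powersetCard K (univ : Finset (Fin p)) := by
    intro x hx
    rw [mem_powersetCard]
    refine ⟨subset_univ _, ?_⟩
    rw [card_image_of_injective _ (mem_filter.mp hx).2.injective]
    simp
  rw [← sum_fiberwise_of_maps_to hτ, ← sum_attach (powersetCard K univ)]
  refine sum_congr rfl fun t _ => ?_
  set ht := (mem_powersetCard.mp t.2).2
  rw [prod_univ_sum]
  have hset : {x ∈ Om K P p | τ x = t.1} =
      piFinset (fun i : Fin K => cls P p (t.1.orderEmbOfFin ht i)) := by
    ext x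
    rw [mem_filter, Om, mem_filter, mem_piFinset, mem_piFinset]
    constructor
    · rintro ⟨⟨h1, h2⟩, h3⟩ i
      have := orderEmbOfFin_unique ht (f := fun i => res p (x i))
        (fun i => by rw [← h3]; exact mem_image_of_mem _ (mem_univ i)) h2
      rw [cls, mem_filter]
      exact ⟨h1 i, congrFun this i⟩
    · intro h
      have hr : (fun i => res p (x i)) = t.1.orderEmbOfFin ht :=
        funext fun i => (mem_filter.mp (h i)).2
      refine ⟨⟨fun i => (mem_filter.mp (h i)).1, ?_⟩, ?_⟩
      · rw [hr]; exact (t.1.orderEmbOfFin ht).strictMono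
      · simp only [τ]
        rw [hr]
        exact image_orderEmbOfFin_univ t.1 ht
  rw [hset]
  exact sum_congr rfl fun x _ => (addChar_map_sum ψ _ _).symm

lemma norm_sum_pow_le {p : ℕ} (a : Fin p → ℝ) (ha : ∀ u, 0 ≤ a u) (n:ℕ) (hn : 1 ≤ n) :
    (∑ u, a u)^n ≤ (p:ℝ)^(n - 1) * ∑ u, a u^n := by
  obtain ⟨m, rfl⟩ : ∃ m, n = m + 1 := ⟨n - 1, by omega⟩
  rcases Nat.eq_zero_or_pos p with rfl | hp
  · simp
  have h := pow_sum_div_card_le_sum_pow (s := (univ : Finset (Fin p))) (f := a) (fun i _ => ha i) m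
  rw [card_univ, Fintype.card_fin, div_le_iff₀ (by positivity)] at h
  simpa [mul_comm] using h

/-! ### The recursive inequality -/

/-- The moment curve reduced modulo `q`. -/
def vec (q K : ℕ) (x:ℤ) : Fin K → ZMod q := fun j => (x : ZMod q)^(j.val + 1)

lemma sum_vec_apply (q K : ℕ) {s : ℕ} (x : Fin s → ℤ) (j : Fin K) :
    (∑ i, vec q K (x i)) j = ((∑ i, x i^(j.val + 1):ℤ) : ZMod q) := by
  simp [vec, Finset.sum_apply]

lemma sum_pow_bound {P K s j : ℕ} (x : Fin s → ℤ) (hx : ∀ i, x i ∈ seg P) (hj : j ≤ K) :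
    0 ≤ ∑ i, x i^j ∧ ∑ i, x i^j ≤ s*(P:ℤ)^K := by
  have h : ∀ i, 0 ≤ x i ∧ x i < P := fun i => by simpa [seg] using hx i
  refine ⟨sum_nonneg fun i _ => pow_nonneg (h i).1 _, ?_⟩
  calc _ ≤ ∑ _i : Fin s, (P:ℤ)^K := sum_le_sum fun i _ => by
        have h1 : (1:ℤ) ≤ P := by have := h i; omega
        calc x i^j ≤ (P:ℤ)^j := pow_le_pow_left₀ (h i).1 (h i).2.le _
          _ ≤ _ := pow_le_pow_right₀ h1 hj
    _ = _ := by simp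

lemma eq_of_cast_eq {q : ℕ} {B a b : ℤ} (hB : B < q) (ha : 0 ≤ a ∧ a ≤ B) (hb : 0 ≤ b ∧ b ≤ B)
    (h : (a : ZMod q) = b) : a = b := by
  rw [ZMod.intCast_eq_intCast_iff_dvd_sub] at h
  have h2 := Int.eq_zero_of_abs_lt_dvd h (by rw [abs_lt]; constructor <;> linarith)
  linarith

lemma mixed_sys {q K s r P : ℕ} (hq : ((s + r:ℕ):ℤ)*(P:ℤ)^K < q) (x y : Fin r → ℤ) (z w : Fin s → ℤ)
    (hx : ∀ i, x i ∈ seg P) (hy : ∀ i, y i ∈ seg P) (hz : ∀ i, z i ∈ seg P) (hw : ∀ i, w i ∈ seg P)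
    (h : ∑ i, vec q K (x i) + ∑ i, vec q K (z i) = ∑ i, vec q K (y i) + ∑ i, vec q K (w i))
    (j:ℕ) (h1 : 1 ≤ j) (h2 : j ≤ K) :
    ∑ i, x i^j + ∑ i, z i^j = ∑ i, y i^j + ∑ i, w i^j := by
  have e := congrFun h ⟨j - 1, by omega⟩
  rw [Pi.add_apply, Pi.add_apply, sum_vec_apply, sum_vec_apply, sum_vec_apply, sum_vec_apply,
    ← Int.cast_add, ← Int.cast_add] at e
  simp only [show j - 1 + 1 = j by omega] at e
  push_cast at hq
  have b1 := sum_pow_bound x hx h2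
  have b2 := sum_pow_bound y hy h2
  have b3 := sum_pow_bound z hz h2
  have b4 := sum_pow_bound w hw h2
  exact eq_of_cast_eq hq ⟨by linarith, by linarith⟩ ⟨by linarith, by linarith⟩ e

lemma sys_iff {q K s P : ℕ} (hq : (s:ℤ)*(P:ℤ)^K < q) (z w : Fin s → ℤ)
    (hz : ∀ i, z i ∈ seg P) (hw : ∀ i, w i ∈ seg P) :
    ∑ i, vec q K (z i) = ∑ i, vec q K (w i) ↔ Sys K z w := by
  constructor
  · intro h j h1 h2
    have := mixed_sys (r := 0) (by simpa using hq) Fin.elim0 Fin.elim0 z w (fun i => i.elim0)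
      (fun i => i.elim0) hz hw (by simpa using h) j h1 h2
    simpa using this
  · intro h
    funext j
    rw [sum_vec_apply, sum_vec_apply, h _ (by omega) (by omega)]

lemma cls_subset (P p : ℕ) [NeZero p] (u : Fin p) : cls P p u ⊆ seg P := filter_subset _ _

lemma card_seg (P:ℕ) : #(seg P) = P := by simp [seg]

lemma char_moment_eq {q K s P : ℕ} [NeZero q] (hq : (s:ℤ)*(P:ℤ)^K < q) (S : Finset ℤ) (hS : S ⊆ seg P) :
    ∑ ψ : AddChar (Fin K → ZMod q) ℂ, ‖∑ x ∈ S, ψ (vec q K x)‖^(2*s) =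
      Fintype.card (Fin K → ZMod q)*(VJ K s S : ℝ) := by
  classical
  have := char_second_moment (piFinset (fun _ : Fin s => S)) (fun x => ∑ i, vec q K (x i))
  rw [VJ]
  have hc : ({z ∈ piFinset (fun _ : Fin s => S) ×ˢ piFinset (fun _ : Fin s => S) |
      ∑ i, vec q K (z.1 i) = ∑ i, vec q K (z.2 i)}) =
      {z ∈ piFinset (fun _ : Fin s => S) ×ˢ piFinset (fun _ : Fin s => S) | Sys K z.1 z.2} := by
    apply filter_congr
    intro z hz
    simp only [mem_product, mem_piFinset] at hz
    exact sys_iff hq z.1 z.2 (fun i => hS (hz.1 i)) (fun i => hS (hz.2 i))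
  rw [hc] at this
  rw [← this]
  refine sum_congr rfl fun ψ _ => ?_
  rw [← pow_eq_sum_pi, norm_pow, ← pow_mul, mul_comm]

lemma card_Om_le (K P p : ℕ) [NeZero p] : #(Om K P p) ≤ P^K := by
  classical
  calc _ ≤ #(piFinset (fun _ : Fin K => seg P)) := card_le_card (filter_subset _ _)
    _ = P^K := by simp [card_seg]

open scoped Classical in
/-- The mixed mean value: the `K` variables with distinct residues are controlled by Linnik's lemma once the
other `s` lie in one residue class. -/
lemma mixed_count {q K s P p : ℕ} [hp : Fact p.Prime] (hpK : K < p) (hP : P ≤ p^K)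
    (hq : ((s + K:ℕ):ℤ)*(P:ℤ)^K < q) (u : Fin p) :
    #{w ∈ (Om K P p ×ˢ piFinset (fun _ : Fin s => cls P p u)) ×ˢ
        (Om K P p ×ˢ piFinset (fun _ : Fin s => cls P p u)) |
        ∑ i, vec q K (w.1.1 i) + ∑ i, vec q K (w.1.2 i) =
          ∑ i, vec q K (w.2.1 i) + ∑ i, vec q K (w.2.2 i)}
      ≤ VJ K s (cls P p u)*((K^K * p^(K*(K - 1)/2)) * P^K) := by
  set Z := piFinset (fun _ : Fin s => cls P p u) with hZ
  set W := {w ∈ (Om K P p ×ˢ Z) ×ˢ (Om K P p ×ˢ Z) | ∑ i, vec q K (w.1.1 i) + ∑ i, vec q K (w.1.2 i) =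
          ∑ i, vec q K (w.2.1 i) + ∑ i, vec q K (w.2.2 i)} with hW
  let C : Finset ((Fin K → ℤ) × (Fin K → ℤ)) := {c ∈ Om K P p ×ˢ Om K P p |
    ∀ j, 1 ≤ j → j ≤ K → ((p^j:ℕ):ℤ) ∣ ∑ i, (c.1 i - (u:ℕ))^j - ∑ i, (c.2 i - (u:ℕ))^j}
  have hOm : ∀ x ∈ Om K P p, ∀ i, x i ∈ seg P := fun x hx i =>
    mem_piFinset.mp (mem_filter.mp hx).1 i
  have hZseg : ∀ z ∈ Z, ∀ i, z i ∈ seg P := fun z hz i =>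
    cls_subset _ _ _ (mem_piFinset.mp hz i)
  have hdvd : ∀ z ∈ Z, ∀ j, ((p^j:ℕ):ℤ) ∣ ∑ i, (z i - (u:ℕ))^j := by
    intro z hz j
    refine dvd_sum fun i _ => ?_
    push_cast
    apply pow_dvd_pow_of_dvd
    have h1 := (mem_cls.mp (mem_piFinset.mp hz i)).2
    have h2 := dvd_sub_res p (z i)
    rwa [h1] at h2
  have himg : W.image (fun w => (w.1.1, w.2.1)) ⊆ C := by
    intro c hc
    obtain ⟨w, hw, rfl⟩ := mem_image.mp hc
    rw [hW, mem_filter, mem_product, mem_product, mem_product] at hw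
    obtain ⟨⟨⟨hx, hz⟩, hy, hz'⟩, heq⟩ := hw
    refine mem_filter.mpr ⟨mem_product.mpr ⟨hx, hy⟩, ?_⟩
    intro j h1 h2
    have hs := mixed_sys hq w.1.1 w.2.1 w.1.2 w.2.2 (hOm _ hx) (hOm _ hy) (hZseg _ hz) (hZseg _ hz') heq
    have ht := translate_sys (univ : Finset ((Fin K ⊕ Fin s) ⊕ (Fin K ⊕ Fin s)))
      (Sum.elim (fun _ => 1) (fun _ => -1))
      (Sum.elim (Sum.elim w.1.1 w.1.2) (Sum.elim w.2.1 w.2.2)) K (by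
        intro k hk
        simp only [Fintype.sum_sum_type, Sum.elim_inl, Sum.elim_inr]
        rcases Nat.eq_zero_or_pos k with rfl | hk0
        · simp; ring
        · have := hs k hk0 hk
          simp only [one_mul, neg_mul, sum_neg_distrib]
          linarith) (u:ℕ) j h2
    simp only [Fintype.sum_sum_type, Sum.elim_inl, Sum.elim_inr, one_mul, neg_mul,
      sum_neg_distrib] at ht
    have e : ∑ i, (w.1.1 i - (u:ℕ))^j - ∑ i, (w.2.1 i - (u:ℕ))^j =
        ∑ i, (w.2.2 i - (u:ℕ))^j - ∑ i, (w.1.2 i - (u:ℕ))^j := by linarith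
    simp only
    rw [e]
    exact dvd_sub (hdvd _ hz' j) (hdvd _ hz j)
  have hfib : ∀ c ∈ W.image (fun w => (w.1.1, w.2.1)),
      #{w ∈ W | (w.1.1, w.2.1) = c} ≤ VJ K s (cls P p u) := by
    intro c hc
    have hsq : (s:ℤ)*(P:ℤ)^K < q := by
      push_cast at hq
      have : (0:ℤ) ≤ (K:ℤ)*(P:ℤ)^K := by positivity
      linarith
    calc _ ≤ #{z ∈ Z ×ˢ Z | ∑ i, vec q K (z.1 i) = ∑ i, vec q K (z.2 i) +
          (∑ i, vec q K (c.2 i) - ∑ i, vec q K (c.1 i))} := by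
          refine card_le_card_of_injOn (fun w => (w.1.2, w.2.2)) ?_ ?_
          · intro w hw
            have hw' := mem_filter.mp (mem_coe.mp hw)
            have hwW := mem_filter.mp hw'.1
            have := hwW.1
            rw [mem_product, mem_product, mem_product] at this
            refine mem_coe.mpr (mem_filter.mpr ⟨mem_product.mpr ⟨this.1.2, this.2.2⟩, ?_⟩)
            rw [← hw'.2]
            have e := hwW.2
            simp only
            rw [← sub_eq_zero] at e ⊢
            rw [← e]
            abel
          · intro w hw w' hw' h
            have h1 := (mem_filter.mp (mem_coe.mp hw)).2
            have h2 := (mem_filter.mp (mem_coe.mp hw')).2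
            rw [← h2] at h1
            simp only [Prod.mk.injEq] at h h1
            exact Prod.ext (Prod.ext h1.1 h.1) (Prod.ext h1.2 h.2)
      _ ≤ #{z ∈ Z ×ˢ Z | ∑ i, vec q K (z.1 i) = ∑ i, vec q K (z.2 i)} :=
          pair_count_le Z (fun z => ∑ i, vec q K (z i)) _
      _ = VJ K s (cls P p u) := by
          rw [VJ]
          congr 1
          apply filter_congr
          intro z hz
          rw [mem_product] at hz
          exact sys_iff hsq z.1 z.2 (hZseg _ hz.1) (hZseg _ hz.2)
  have hC : #C ≤ (K^K * p^(K*(K - 1)/2)) * P^K := by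
    calc #C ≤ (K^K * p^(K*(K - 1)/2)) * #(C.image Prod.snd) := by
          refine card_le_mul_card_image _ _ fun y hy => ?_
          calc _ ≤ _ := ?_
            _ ≤ _ := linnik_count hpK (seg P) (fun a ha b hb hab =>
                eq_of_cast_eq (q := p^K) (B := (P:ℤ) - 1) (by
                  have : (P:ℤ) ≤ ((p^K:ℕ):ℤ) := by exact_mod_cast hP
                  linarith) (by simp only [seg, mem_Ico] at ha; omega)
                  (by simp only [seg, mem_Ico] at hb; omega) hab) (u:ℕ)
                (fun j => ∑ i, (y i - (u:ℕ))^j)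
          refine card_le_card_of_injOn Prod.fst ?_ ?_
          · intro c hc
            have hc' := mem_filter.mp (mem_coe.mp hc)
            have hcC := mem_filter.mp hc'.1
            have h1 := (mem_product.mp hcC.1).1
            refine mem_coe.mpr (mem_filter.mpr ⟨(mem_filter.mp h1).1, ?_, ?_⟩)
            · intro i i' hne hd
              exact hne ((mem_filter.mp h1).2.injective (res_eq_of_dvd p hd))
            · rw [← hc'.2]
              exact hcC.2
          · intro c hc c' hc' h
            have h1 := (mem_filter.mp (mem_coe.mp hc)).2
            have h2 := (mem_filter.mp (mem_coe.mp hc')).2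
            exact Prod.ext h (h1.trans h2.symm)
      _ ≤ _ := by
          gcongr
          refine (card_le_card ?_).trans (card_Om_le K P p)
          intro y hy
          obtain ⟨c, hc, rfl⟩ := mem_image.mp hy
          exact (mem_product.mp (mem_filter.mp hc).1).2
  calc #W ≤ VJ K s (cls P p u) * #(W.image (fun w => (w.1.1, w.2.1))) := card_le_mul_card_image _ _ hfib
    _ ≤ _ := by gcongr; exact (card_le_card himg).trans hC

/-- The recursive inequality for Vinogradov's mean value. -/
lemma VJ_rec {K s P p : ℕ} [hp : Fact p.Prime] (hpK : K < p) (hP : P ≤ p^K) (hs : 1 ≤ s) :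
    (VJ K (s + K) (seg P):ℝ) ≤
      4*(K.factorial:ℝ)^2*((p:ℝ)^(2*s) *
        (VJ K s (seg (P / p + 1))*((K^K * p^(K*(K - 1)/2)) * P^K)))
      + (2*K.factorial:ℝ)^(2*(s + K))*((p:ℝ)^(s + K) * VJ K (s + K) (seg (P / p + 1))) := by
  classical
  set q : ℕ := (s + K) * P^K + 1 with hqdef
  have hq : ((s + K:ℕ):ℤ)*(P:ℤ)^K < q := by rw [hqdef]; push_cast; linarith
  set G := Fin K → ZMod q
  set g : ℝ := (Fintype.card G:ℝ) with hg
  have hg0 : 0 < g := by rw [hg]; exact_mod_cast Fintype.card_pos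
  let f : AddChar G ℂ → Fin p → ℂ := fun ψ u => ∑ x ∈ cls P p u, ψ (vec q K x)
  have hsum : ∀ ψ : AddChar G ℂ, ∑ x ∈ seg P, ψ (vec q K x) = ∑ u, f ψ u := fun ψ =>
    (sum_fiberwise (seg P) (res p) (fun x => ψ (vec q K x))).symm
  have h0 := char_moment_eq hq (seg P) subset_rfl
  simp only [hsum] at h0
  have hp1 : (1:ℝ) ≤ p := by exact_mod_cast hp.out.one_lt.le
  -- first term
  have hA : ∑ ψ : AddChar G ℂ, ‖elem (f ψ) K‖^2*‖∑ u, f ψ u‖^(2*s) ≤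
      g*((p:ℝ)^(2*s) *
        (VJ K s (seg (P / p + 1))*((K^K * p^(K*(K - 1)/2)) * P^K))) := by
    have hu : ∀ u, ∑ ψ : AddChar G ℂ, ‖elem (f ψ) K‖^2*‖f ψ u‖^(2*s) ≤
        g*(VJ K s (seg (P / p + 1))*((K^K * p^(K*(K - 1)/2)) * P^K)) := by
      intro u
      have h1 := char_second_moment (Om K P p ×ˢ piFinset (fun _ : Fin s => cls P p u))
        (fun w => ∑ i, vec q K (w.1 i) + ∑ i, vec q K (w.2 i))
      have h2 : ∀ ψ : AddChar G ℂ, ‖elem (f ψ) K‖^2*‖f ψ u‖^(2*s) =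
          ‖∑ w ∈ Om K P p ×ˢ piFinset (fun _ : Fin s => cls P p u),
            ψ (∑ i, vec q K (w.1 i) + ∑ i, vec q K (w.2 i))‖^2 := by
        intro ψ
        simp only [f]
        rw [elem_eq_sum_Om, mul_comm 2 s, pow_mul ‖_‖ s 2, ← norm_pow (∑ x ∈ cls P p u, ψ (vec q K x)), pow_eq_sum_pi, ← mul_pow,
          ← norm_mul, sum_mul_sum, ← sum_product']
        simp only [AddChar.map_add_eq_mul]
      rw [sum_congr rfl fun ψ _ => h2 ψ, h1]
      gcongr
      have h3 := mixed_count (s := s) hpK hP hq u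
      have h4 := VJ_cls_le K s P p u
      have h5 := h3.trans (Nat.mul_le_mul_right _ h4)
      exact_mod_cast h5
    calc _ ≤ ∑ ψ : AddChar G ℂ, ‖elem (f ψ) K‖^2*((p:ℝ)^(2*s - 1) * ∑ u, ‖f ψ u‖^(2*s)) := by
          refine sum_le_sum fun ψ _ => ?_
          gcongr
          calc _ ≤ (∑ u, ‖f ψ u‖)^(2*s) := by gcongr; exact norm_sum_le _ _
            _ ≤ _ := norm_sum_pow_le _ (fun _ => norm_nonneg _) _ (by omega)
      _ = (p:ℝ)^(2*s - 1) * ∑ u, ∑ ψ : AddChar G ℂ, ‖elem (f ψ) K‖^2*‖f ψ u‖^(2*s) := by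
          rw [sum_comm, mul_sum]
          refine sum_congr rfl fun ψ _ => ?_
          rw [← mul_sum]; ring
      _ ≤ (p:ℝ)^(2*s - 1) * ∑ _u : Fin p,
          g*(VJ K s (seg (P / p + 1))*((K^K * p^(K*(K - 1)/2)) * P^K)) := by
          gcongr with u _
          exact hu u
      _ = _ := by
          rw [sum_const, card_univ, Fintype.card_fin, nsmul_eq_mul]
          obtain ⟨n, hn⟩ : ∃ n, 2*s = n + 1 := ⟨2*s - 1, by omega⟩
          rw [hn, Nat.add_sub_cancel, pow_succ]
          ring
  have hB : ∑ ψ : AddChar G ℂ, (∑ u, ‖f ψ u‖^2)^(s + K) ≤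
      g*((p:ℝ)^(s + K) * VJ K (s + K) (seg (P / p + 1))) := by
    calc _ ≤ ∑ ψ : AddChar G ℂ, (p:ℝ)^(s + K - 1) * ∑ u, (‖f ψ u‖^2)^(s + K) :=
          sum_le_sum fun ψ _ => norm_sum_pow_le _ (fun _ => by positivity) _ (by omega)
      _ = (p:ℝ)^(s + K - 1) * ∑ u, ∑ ψ : AddChar G ℂ, ‖f ψ u‖^(2*(s + K)) := by
          rw [sum_comm, mul_sum]
          simp only [← pow_mul]
      _ ≤ (p:ℝ)^(s + K - 1) * ∑ _u : Fin p, g*(VJ K (s + K) (seg (P / p + 1)):ℝ) := by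
          gcongr with u _
          rw [char_moment_eq hq (cls P p u) (cls_subset _ _ _)]
          gcongr
          exact_mod_cast VJ_cls_le K (s + K) P p u
      _ = _ := by
          rw [sum_const, card_univ, Fintype.card_fin, nsmul_eq_mul]
          obtain ⟨n, hn⟩ : ∃ n, s + K = n + 1 := ⟨s + K - 1, by omega⟩
          rw [hn, Nat.add_sub_cancel, pow_succ]
          ring
  have hfin : g*(VJ K (s + K) (seg P):ℝ) ≤
      4*(K.factorial:ℝ)^2*(g*((p:ℝ)^(2*s) *
        (VJ K s (seg (P / p + 1))*((K^K * p^(K*(K - 1)/2)) * P^K))))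
      + (2*K.factorial:ℝ)^(2*(s + K)) *
        (g*((p:ℝ)^(s + K) * VJ K (s + K) (seg (P / p + 1)))) := by
    rw [← h0]
    calc _ ≤ ∑ ψ : AddChar G ℂ, (4*(K.factorial:ℝ)^2*(‖elem (f ψ) K‖^2*‖∑ u, f ψ u‖^(2*s))
      + (2*K.factorial:ℝ)^(2*(s + K))*(∑ u, ‖f ψ u‖^2)^(s + K)) :=
          sum_le_sum fun ψ _ => pointwise_bound (f ψ) K s
      _ ≤ _ := by
          rw [sum_add_distrib, ← mul_sum, ← mul_sum]
          gcongr
  refine le_of_mul_le_mul_left (hfin.trans (le_of_eq ?_)) hg0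
  ring

/-! ### Vinogradov's mean value theorem -/

lemma VJ_le_trivial (K s P : ℕ) : VJ K s (seg P) ≤ P^(2*s) := by
  classical
  unfold VJ
  refine (card_le_card (filter_subset _ _)).trans ?_
  rw [card_product]
  simp [card_seg, two_mul, pow_add]

lemma VJ_add_le (K s P r : ℕ) : (VJ K (s + r) (seg P):ℝ) ≤ (P:ℝ)^(2*r) * VJ K s (seg P) := by
  classical
  set q : ℕ := (s + r) * P^K + 1 with hqdef
  have hq : ((s + r:ℕ):ℤ)*(P:ℤ)^K < q := by rw [hqdef]; push_cast; linarith
  have hq2 : ((s:ℕ):ℤ)*(P:ℤ)^K < q := by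
    rw [hqdef]; push_cast
    have : (0:ℤ) ≤ (r:ℤ)*(P:ℤ)^K := by positivity
    linarith
  have h1 := char_moment_eq hq (seg P) subset_rfl
  have h2 := char_moment_eq hq2 (seg P) subset_rfl
  have hg0 : (0:ℝ) < Fintype.card (Fin K → ZMod q) := by exact_mod_cast Fintype.card_pos
  refine le_of_mul_le_mul_left ?_ hg0
  rw [← h1]
  calc _ ≤ ∑ ψ : AddChar (Fin K → ZMod q) ℂ, (P:ℝ)^(2*r) * ‖∑ x ∈ seg P, ψ (vec q K x)‖^(2*s) := by
        refine sum_le_sum fun ψ _ => ?_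
        rw [mul_add, pow_add, mul_comm]
        gcongr
        calc _ ≤ ∑ x ∈ seg P, ‖ψ (vec q K x)‖ := norm_sum_le _ _
          _ = P := by simp [card_seg]
    _ = _ := by rw [← mul_sum, h2]; ring

/-- The weight `1 + 2 + ⋯ + K` of the Vinogradov system. -/
def kap (K:ℕ) : ℝ := (K:ℝ)*(K + 1)/2

lemma half_cast (K:ℕ) : ((K*(K - 1)/2:ℕ):ℝ) = (K:ℝ)*(K - 1)/2 := by
  rw [Nat.cast_div (even_iff_two_dvd.mp (Nat.even_mul_pred_self K)) (by norm_num)]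
  rcases K with _ | K
  · simp
  · push_cast; simp

/-- One step `s → s + K` of the recursion, with `p` of size `P ^ (1/K)`, shrinks the excess exponent `Δ` by the
factor `1 - 1/K`. -/
lemma VJ_step {K s : ℕ} (hK : 1 ≤ K) (hs : K^2 ≤ s) {Δ C : ℝ} (hΔ0 : 0 ≤ Δ) (hΔ : Δ ≤ kap K) (hC : 1 ≤ C)
    (h : ∀ P : ℕ, 1 ≤ P → (VJ K s (seg P):ℝ) ≤ C*(P:ℝ)^(2*s - kap K + Δ)) :
    ∀ P : ℕ, 1 ≤ P → (VJ K (s + K) (seg P):ℝ) ≤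
      (8*K:ℝ)^(8*K*(s + K)) * C*(P:ℝ)^(2*(s + K:ℕ) - kap K + Δ*(1 - 1/K)) := by
  intro P hP
  have hKr : (1:ℝ) ≤ K := by exact_mod_cast hK
  have hK0 : (0:ℝ) < K := by linarith
  have hPr : (1:ℝ) ≤ P := by exact_mod_cast hP
  have hsr : (K:ℝ)^2 ≤ s := by exact_mod_cast hs
  have hB1 : (1:ℝ) ≤ 8*K := by linarith
  have hkapK : kap K ≤ (K:ℝ)^2 := by unfold kap; nlinarith
  have hkap0 : 0 ≤ kap K := by unfold kap; positivity
  have hinv : 1/(K:ℝ) ≤ 1 := by rw [div_le_one hK0]; exact hKr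
  have hinv0 : 0 ≤ 1/(K:ℝ) := by positivity
  have hΔ' : 0 ≤ Δ*(1 - 1/K) := mul_nonneg hΔ0 (by linarith)
  rcases Nat.lt_or_ge P (K^K) with hsmall | hbig
  · -- small `P`: the trivial bound
    have h1 : (VJ K (s + K) (seg P):ℝ) ≤ (P:ℝ)^(2*(s + K)) := by
      exact_mod_cast VJ_le_trivial K (s + K) P
    have h2 : (P:ℝ)^(2*(s + K)) = (P:ℝ)^(kap K - Δ*(1 - 1/K)) *
        (P:ℝ)^(2*(s + K:ℕ) - kap K + Δ*(1 - 1/K)) := by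
      rw [← rpow_add (by linarith), ← rpow_natCast]
      congr 1; push_cast; ring
    have h3 : (P:ℝ)^(kap K - Δ*(1 - 1/K)) ≤ (8*K:ℝ)^(8*K*(s + K)) := by
      calc (P:ℝ)^(kap K - Δ*(1 - 1/K)) ≤ (P:ℝ)^((s + K:ℕ):ℝ) := by
            apply rpow_le_rpow_of_exponent_le hPr
            push_cast; linarith
        _ = (P:ℝ)^(s + K) := rpow_natCast _ _
        _ ≤ ((K:ℝ)^K)^(s + K) := by gcongr; exact_mod_cast hsmall.le
        _ ≤ ((8*K:ℝ)^K)^(s + K) := by gcongr; linarith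
        _ = (8*K:ℝ)^(K*(s + K)) := by rw [pow_mul]
        _ ≤ _ := by
            apply pow_le_pow_right₀ hB1
            rw [mul_assoc]; omega
    calc _ ≤ _ := h1
      _ = _ := h2
      _ ≤ (8*K:ℝ)^(8*K*(s + K)) * C*(P:ℝ)^(2*(s + K:ℕ) - kap K + Δ*(1 - 1/K)) := by
          gcongr
          calc _ ≤ _ := h3
            _ ≤ _ := le_mul_of_one_le_right (by positivity) hC
  · -- the scale `X = P ^ (1 / K)`
    set X : ℝ := (P:ℝ)^(1/(K:ℝ)) with hX
    have hXK : X^K = P := by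
      rw [hX, ← rpow_natCast, ← rpow_mul (by linarith)]
      field_simp
      simp
    have hKX : (K:ℝ) ≤ X := by
      have : ((K:ℝ)^K) ≤ X^K := by rw [hXK]; exact_mod_cast hbig
      exact le_of_pow_le_pow_left₀ (by omega) (by positivity) this
    have hX1 : 1 ≤ X := hKr.trans hKX
    have hX0 : 0 < X := by linarith
    obtain ⟨p, hp, hp1, hp2⟩ := Nat.exists_prime_lt_and_le_two_mul (⌊X⌋₊ + 1) (by omega)
    have hpX : X < p := by
      calc X < ⌊X⌋₊ + 1 := lt_floor_add_one X
        _ ≤ p := by exact_mod_cast hp1.le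
    have hp4 : (p:ℝ) ≤ 4*X := by
      have h1 : (p:ℝ) ≤ 2*(⌊X⌋₊ + 1) := by exact_mod_cast hp2
      have h2 := floor_le hX0.le
      linarith
    have : Fact p.Prime := ⟨hp⟩
    have hpK : K < p := by exact_mod_cast hKX.trans_lt hpX
    have hPp : P ≤ p^K := by
      have : (P:ℝ) ≤ (p:ℝ)^K := by rw [← hXK]; gcongr
      exact_mod_cast this
    have hp0 : (0:ℝ) < p := by linarith
    set Q : ℕ := P / p + 1 with hQ
    have hQ1 : 1 ≤ Q := Nat.le_add_left _ _
    have hQX : (Q:ℝ) ≤ 2*X^(K - 1) := by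
      have h1 : ((P / p:ℕ):ℝ) ≤ P / p := Nat.cast_div_le
      have h2 : (P:ℝ) / p ≤ X^(K - 1) := by
        rw [div_le_iff₀ hp0, ← hXK]
        calc X^K = X^(K - 1) * X := by rw [← pow_succ]; congr 1; omega
          _ ≤ _ := by gcongr
      have h3 : 1 ≤ X^(K - 1) := one_le_pow₀ hX1
      rw [hQ]; push_cast; linarith
    have hQr : (1:ℝ) ≤ Q := by exact_mod_cast hQ1
    have hrec := VJ_rec (s := s) hpK hPp (by clear * - hs hK; nlinarith)
    set e : ℝ := 2*s - kap K + Δ with he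
    have he0 : 0 ≤ e := by rw [he]; linarith
    have he2 : e ≤ (2*s:ℕ) := by rw [he]; push_cast; linarith
    have hJs := h Q hQ1
    have hQe : (Q:ℝ)^e ≤ (8*K:ℝ)^(2*s) * X^(((K:ℝ) - 1) * e) := by
      calc (Q:ℝ)^e ≤ (2*X^(K - 1))^e := rpow_le_rpow (by linarith) hQX he0
        _ = 2^e * X^(((K:ℝ) - 1) * e) := by
            rw [mul_rpow (by norm_num) (by positivity), ← rpow_natCast,
              ← rpow_mul hX0.le, Nat.cast_sub hK, Nat.cast_one]
        _ ≤ _ := by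
            gcongr
            calc (2:ℝ)^e ≤ (2:ℝ)^((2*s:ℕ):ℝ) := rpow_le_rpow_of_exponent_le (by norm_num) he2
              _ = (2:ℝ)^(2*s) := rpow_natCast _ _
              _ ≤ _ := by gcongr; linarith
    have hfac : (K.factorial:ℝ) ≤ (8*K:ℝ)^K := by
      calc (K.factorial:ℝ) ≤ (K:ℝ)^K := by exact_mod_cast Nat.factorial_le_pow K
        _ ≤ _ := by gcongr; linarith
    have hfac2 : (2*K.factorial:ℝ) ≤ (8*K:ℝ)^K := by
      calc (2*K.factorial:ℝ) ≤ 2^K*(K:ℝ)^K := by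
            gcongr
            · calc (2:ℝ) = 2^1 := by norm_num
                _ ≤ 2^K := pow_le_pow_right₀ (by norm_num) hK
            · exact_mod_cast Nat.factorial_le_pow K
        _ = (2*K:ℝ)^K := by rw [mul_pow]
        _ ≤ _ := by gcongr; linarith
    have hp8 : (p:ℝ) ≤ 8*K * X := by linarith [mul_le_mul_of_nonneg_right hKr hX0.le]
    have hT : (P:ℝ)^(2*(s + K:ℕ) - kap K + Δ*(1 - 1/K)) =
        X^((K:ℝ)*(2*(s + K) - kap K) + Δ*(K - 1)) := by
      rw [← hXK, ← rpow_natCast, ← rpow_mul hX0.le]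
      congr 1
      push_cast
      field_simp
    rw [hT]
    set T : ℝ := X^((K:ℝ)*(2*(s + K) - kap K) + Δ*(K - 1)) with hTdef
    have hT0 : 0 < T := by positivity
    set B : ℝ := 8*K with hB
    have hterm1 : 4*(K.factorial:ℝ)^2*((p:ℝ)^(2*s) *
        (VJ K s (seg Q)*((K^K * p^(K*(K - 1)/2)) * P^K))) ≤
        B^(8*K*(s + K) - 1) * C * T := by
      calc _ ≤ B*(B^K)^2*((B * X)^(2*s) *
          ((C*(B^(2*s) * X^(((K:ℝ) - 1) * e))) *
            ((B^K*(B * X)^(K*(K - 1)/2))*(X^K)^K))) := by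
            have : (VJ K s (seg Q):ℝ) ≤ C*(B^(2*s) * X^(((K:ℝ) - 1) * e)) :=
              hJs.trans (by gcongr)
            rw [hXK]
            gcongr
            · linarith
            · linarith
        _ = B^(1 + K * 2 + 2*s + 2*s + K + K*(K - 1)/2) * C *
            (X^(2*s) * X^(((K:ℝ) - 1) * e) * X^(K*(K - 1)/2) * X^(K * K)) := by
            rw [mul_pow, mul_pow, ← pow_mul, ← pow_mul]
            ring
        _ = B^(1 + K * 2 + 2*s + 2*s + K + K*(K - 1)/2) * C * T := by
            congr 1
            rw [hTdef, ← rpow_natCast, ← rpow_natCast, ← rpow_natCast,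
              ← rpow_add hX0, ← rpow_add hX0, ← rpow_add hX0]
            congr 1
            rw [half_cast, he]
            unfold kap
            push_cast
            ring
        _ ≤ _ := by
            gcongr
            have h1 : K*(K - 1)/2 ≤ K * K := (Nat.div_le_self _ _).trans (Nat.mul_le_mul_left _ (by omega))
            have h2 : s ≤ K * s := Nat.le_mul_of_pos_left _ hK
            have h3 : K ≤ K * K := Nat.le_mul_self K
            have h4 : 8*K*(s + K) = 8*(K * s) + 8*(K * K) := by ring
            omega
    have hterm2 : (2*K.factorial:ℝ)^(2*(s + K))*((p:ℝ)^(s + K) * VJ K (s + K) (seg Q)) ≤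
        B^(8*K*(s + K) - 1) * C * T := by
      have hJ' : (VJ K (s + K) (seg Q):ℝ) ≤
          (B * X^(K - 1))^(2*K)*(C*(B^(2*s) * X^(((K:ℝ) - 1) * e))) := by
        refine (VJ_add_le K s Q K).trans ?_
        gcongr
        · refine hQX.trans ?_
          gcongr
          linarith
        · exact hJs.trans (by gcongr)
      calc _ ≤ (B^K)^(2*(s + K))*((B * X)^(s + K) *
            ((B * X^(K - 1))^(2*K)*(C*(B^(2*s) * X^(((K:ℝ) - 1) * e))))) := by gcongr
        _ = B^(K*(2*(s + K)) + (s + K) + 2*K + 2*s) * C *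
            (X^(s + K) * X^((K - 1)*(2*K)) * X^(((K:ℝ) - 1) * e)) := by
            rw [mul_pow, mul_pow, ← pow_mul, ← pow_mul]
            ring
        _ ≤ B^(8*K*(s + K) - 1) * C * T := by
            gcongr
            · have h2 : s ≤ K * s := Nat.le_mul_of_pos_left _ hK
              have h3 : K ≤ K * K := Nat.le_mul_self K
              have h4 : 8*K*(s + K) = 8*(K * s) + 8*(K * K) := by ring
              have h5 : K*(2*(s + K)) = 2*(K * s) + 2*(K * K) := by ring
              omega
            · rw [hTdef, ← rpow_natCast, ← rpow_natCast,
                ← rpow_add hX0, ← rpow_add hX0]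
              apply rpow_le_rpow_of_exponent_le hX1
              rw [he]
              push_cast [Nat.cast_sub hK]
              nlinarith
    calc _ ≤ _ := hrec
      _ ≤ B^(8*K*(s + K) - 1) * C * T + B^(8*K*(s + K) - 1) * C * T := add_le_add hterm1 hterm2
      _ = 2*B^(8*K*(s + K) - 1) * C * T := by ring
      _ ≤ B * B^(8*K*(s + K) - 1) * C * T := by gcongr; linarith
      _ = _ := by
          rw [← pow_succ']
          congr 4
          have : 1 ≤ 8*K*(s + K) := by nlinarith [Nat.zero_le (K * s)]
          omega

lemma VJ_iter {K : ℕ} (hK : 1 ≤ K) (r:ℕ) :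
    ∀ P : ℕ, 1 ≤ P → (VJ K (K^2 + r * K) (seg P):ℝ) ≤
      (8*K:ℝ)^(8*K*(K^2 + r * K) * r) *
        (P:ℝ)^(2*(K^2 + r * K:ℕ) - kap K + kap K*(1 - 1/K)^r) := by
  have hKr : (1:ℝ) ≤ K := by exact_mod_cast hK
  have hK0 : (0:ℝ) < K := by linarith
  have hinv : 1/(K:ℝ) ≤ 1 := by rw [div_le_one hK0]; exact hKr
  have hinv0 : 0 ≤ 1/(K:ℝ) := by positivity
  have hkap0 : 0 ≤ kap K := by unfold kap; positivity
  have hB1 : (1:ℝ) ≤ 8*K := by linarith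
  induction r with
  | zero =>
    intro P hP
    have h1 : (VJ K (K^2) (seg P):ℝ) ≤ (P:ℝ)^(2*K^2) := by
      exact_mod_cast VJ_le_trivial K (K^2) P
    simp only [zero_mul, add_zero, mul_zero, pow_zero, one_mul, mul_one]
    refine h1.trans (le_of_eq ?_)
    rw [← rpow_natCast]
    congr 1; push_cast; ring
  | succ r ih =>
    intro P hP
    have hst := VJ_step hK (s := K^2 + r * K) (by nlinarith [Nat.zero_le (r * K)])
      (Δ := kap K*(1 - 1/K)^r) (C := (8*K:ℝ)^(8*K*(K^2 + r * K) * r))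
      (by apply mul_nonneg hkap0; apply pow_nonneg; linarith)
      (by
        apply mul_le_of_le_one_right hkap0
        apply pow_le_one₀ <;> linarith)
      (one_le_pow₀ hB1) ih P hP
    rw [show K^2 + (r + 1) * K = K^2 + r * K + K by ring]
    refine hst.trans ?_
    rw [← pow_add, mul_assoc (kap K), ← pow_succ]
    gcongr
    · nlinarith [Nat.zero_le (K * K * r)]

/-- The exponent used for Vinogradov's mean value of degree `K`. -/
def vs (K:ℕ) : ℕ := K^2 + 16*K^2*K

/-- Vinogradov's mean value theorem, with a loss of `P ^ (1/16)` over the expected size. -/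
theorem vinogradov_mean {K : ℕ} (hK : 1 ≤ K) (P:ℕ) (hP : 1 ≤ P) :
    (VJ K (vs K) (seg P):ℝ) ≤
      (8*K:ℝ)^(128*K^3*vs K)*(P:ℝ)^(2*(vs K : ℝ) - kap K + 1/16) := by
  have h := VJ_iter hK (16*K^2) P hP
  have hKr : (1:ℝ) ≤ K := by exact_mod_cast hK
  have hK0 : (0:ℝ) < K := by linarith
  have hPr : (1:ℝ) ≤ P := by exact_mod_cast hP
  have hd : kap K*(1 - 1/K)^(16*K^2) ≤ 1/16 := by
    have h1 : (1 - 1/(K:ℝ)) ≤ exp (-(1/K)) := by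
      have := add_one_le_exp (-(1/(K:ℝ))); linarith
    have hinv : 1/(K:ℝ) ≤ 1 := by rw [div_le_one hK0]; exact hKr
    have h2 : (1 - 1/(K:ℝ))^(16*K^2) ≤ exp (-(16*K)) := by
      calc _ ≤ exp (-(1/K))^(16*K^2) := pow_le_pow_left₀ (by linarith) h1 _
        _ = exp (-(16*K)) := by
            rw [← exp_nat_mul]
            congr 1; push_cast; field_simp
    have h3 : kap K ≤ (K:ℝ)^2 := by unfold kap; nlinarith
    have h4 : 16*(K:ℝ)^2 ≤ exp (16*K) := by
      have := quadratic_le_exp_of_nonneg (x := 16*(K:ℝ)) (by positivity)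
      nlinarith
    calc _ ≤ (K:ℝ)^2*exp (-(16*K)) := by
          apply mul_le_mul h3 h2 _ (by positivity)
          apply pow_nonneg; linarith
      _ ≤ 1/16 := by
          rw [exp_neg, ← div_eq_mul_inv, div_le_div_iff₀ (exp_pos _) (by norm_num)]
          linarith
  have e : K^2 + 16*K^2*K = vs K := rfl
  rw [e] at h
  refine h.trans ?_
  rw [show 8*K * vs K*(16*K^2) = 128*K^3*vs K by ring]
  gcongr

/-! ### Bilinear sums on the moment curve -/

/-- The additive character `x ↦ exp (2πix)` of the reals. -/
def ee (x:ℝ) : ℂ := cexp ((2*π * x:ℝ) * I)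

lemma norm_ee (x:ℝ) : ‖ee x‖ = 1 := norm_exp_ofReal_mul_I _

lemma ee_add (x y : ℝ) : ee (x + y) = ee x * ee y := by
  unfold ee; rw [← Complex.exp_add]; congr 1; push_cast; ring

lemma ee_zero : ee 0 = 1 := by simp [ee]

lemma ee_neg (x:ℝ) : ee (-x) = (starRingEnd ℂ) (ee x) := by
  unfold ee
  rw [← Complex.exp_conj]
  congr 1
  rw [map_mul, conj_I, conj_ofReal]
  push_cast
  ring

lemma ee_sum {ι : Type*} (s : Finset ι) (f : ι → ℝ) : ee (∑ i ∈ s, f i) = ∏ i ∈ s, ee (f i) := by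
  classical
  induction s using Finset.induction_on with
  | empty => simp [ee_zero]
  | insert a s ha ih => rw [sum_insert ha, prod_insert ha, ee_add, ih]

lemma ee_int (n:ℤ) : ee n = 1 := by
  unfold ee
  rw [Complex.exp_eq_one_iff]
  exact ⟨n, by push_cast; ring⟩

lemma sum_pow_le_card {ι : Type*} (s : Finset ι) (f : ι → ℝ) (hf : ∀ i ∈ s, 0 ≤ f i) (n:ℕ) (hn : 1 ≤ n) :
    (∑ i ∈ s, f i)^n ≤ (#s:ℝ)^(n - 1) * ∑ i ∈ s, f i^n := by
  obtain ⟨m, rfl⟩ : ∃ m, n = m + 1 := ⟨n - 1, by omega⟩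
  rcases s.eq_empty_or_nonempty with rfl | hs
  · simp
  have h := pow_sum_div_card_le_sum_pow (s := s) (f := f) hf m
  have : (0:ℝ) < #s := by exact_mod_cast hs.card_pos
  rw [div_le_iff₀ (by positivity)] at h
  simpa [mul_comm] using h

/-- The point `(x, x², …, x^K)` of the moment curve. -/
def mom (K:ℕ) (x:ℤ) : Fin K → ℤ := fun j => x^(j.val + 1)

/-- The diagonal bilinear form with coefficients `α`. -/
def bil {K : ℕ} (α : Fin K → ℝ) (g h : Fin K → ℤ) : ℝ := ∑ j, α j * g j * h j

lemma bil_add_right {K : ℕ} (α : Fin K → ℝ) (g h h' : Fin K → ℤ) :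
    bil α g (h + h') = bil α g h + bil α g h' := by
  unfold bil; rw [← sum_add_distrib]
  exact sum_congr rfl fun j _ => by push_cast [Pi.add_apply]; ring

lemma bil_comm {K : ℕ} (α : Fin K → ℝ) (g h : Fin K → ℤ) : bil α g h = bil α h g := by
  unfold bil; exact sum_congr rfl fun j _ => by ring

lemma bil_sum_right {K : ℕ} {ι : Type*} (s : Finset ι) (α : Fin K → ℝ) (g : Fin K → ℤ) (h : ι → Fin K → ℤ) :
    bil α g (∑ i ∈ s, h i) = ∑ i ∈ s, bil α g (h i) := by
  classical
  induction s using Finset.induction_on with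
  | empty => simp [bil]
  | insert a s ha ih => rw [sum_insert ha, sum_insert ha, bil_add_right, ih]

lemma bil_neg_right {K : ℕ} (α : Fin K → ℝ) (g h : Fin K → ℤ) : bil α g (-h) = -bil α g h := by
  unfold bil; rw [← sum_neg_distrib]
  exact sum_congr rfl fun j _ => by push_cast [Pi.neg_apply]; ring

/-- The pairs of `s`-tuples with entries in `[0, P)`. -/
def tup (s P : ℕ) : Finset ((Fin s → ℤ) × (Fin s → ℤ)) :=
  piFinset (fun _ : Fin s => seg P) ×ˢ piFinset (fun _ : Fin s => seg P)

/-- The difference of the power sums of the two tuples. -/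
def dif (K:ℕ) {s : ℕ} (z : (Fin s → ℤ) × (Fin s → ℤ)) : Fin K → ℤ :=
  ∑ i, mom K (z.1 i) - ∑ i, mom K (z.2 i)

lemma card_tup (s P : ℕ) : #(tup s P) = P^(2*s) := by
  simp [tup, card_seg, two_mul, pow_add]

/-- The box `∏_j [-sP^j, sP^j]`, which contains all differences of power sums. -/
def box (K s P : ℕ) : Finset (Fin K → ℤ) :=
  piFinset fun j : Fin K => Icc (-((s:ℤ) * P^(j.val + 1))) ((s:ℤ) * P^(j.val + 1))

lemma dif_mem_box {K s P : ℕ} {z : (Fin s → ℤ) × (Fin s → ℤ)} (hz : z ∈ tup s P) : dif K z ∈ box K s P := by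
  unfold tup at hz
  rw [mem_product, mem_piFinset, mem_piFinset] at hz
  unfold box
  rw [mem_piFinset]
  intro j
  have key : ∀ x : Fin s → ℤ, (∀ i, x i ∈ seg P) → 0 ≤ ∑ i, x i^(j.val + 1) ∧
      ∑ i, x i^(j.val + 1) ≤ (s:ℤ) * P^(j.val + 1) := by
    intro x hx
    have hb : ∀ i, 0 ≤ x i ∧ x i ≤ P := fun i => by
      have := hx i; unfold seg at this; rw [mem_Ico] at this; omega
    constructor
    · exact sum_nonneg fun i _ => pow_nonneg (hb i).1 _
    · calc _ ≤ ∑ _i : Fin s, (P:ℤ)^(j.val + 1) :=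
            sum_le_sum fun i _ => pow_le_pow_left₀ (hb i).1 (hb i).2 _
        _ = _ := by simp
  have h1 := key z.1 hz.1
  have h2 := key z.2 hz.2
  have e : dif K z j = ∑ i, z.1 i^(j.val + 1) - ∑ i, z.2 i^(j.val + 1) := by
    simp [dif, mom, Finset.sum_apply]
  rw [mem_Icc, e]
  constructor <;> linarith [h1.1, h1.2, h2.1, h2.2]

lemma dif_fibre {K s P : ℕ} (h : Fin K → ℤ) : #{z ∈ tup s P | dif K z = h} ≤ VJ K s (seg P) := by
  classical
  have h1 := pair_count_le (piFinset fun _ : Fin s => seg P) (fun x => ∑ i, mom K (x i)) h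
  have h2 : #{z ∈ tup s P | dif K z = h} ≤
      #{z ∈ piFinset (fun _ : Fin s => seg P) ×ˢ piFinset (fun _ : Fin s => seg P) |
        ∑ i, mom K (z.1 i) = ∑ i, mom K (z.2 i) + h} := by
    apply card_le_card
    intro z hz
    rw [mem_filter] at hz ⊢
    refine ⟨hz.1, ?_⟩
    rw [← hz.2]; unfold dif; abel
  refine h2.trans (h1.trans ?_)
  unfold VJ
  apply card_le_card
  intro z hz
  rw [mem_filter] at hz ⊢
  refine ⟨hz.1, fun j hj1 hj2 => ?_⟩
  have := congrFun hz.2 ⟨j - 1, by omega⟩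
  simp only [Finset.sum_apply, mom] at this
  rwa [show j - 1 + 1 = j by omega] at this

lemma sum_dif_le {K s P : ℕ} (f : (Fin K → ℤ) → ℝ) (hf : ∀ h, 0 ≤ f h) :
    ∑ z ∈ tup s P, f (dif K z) ≤ VJ K s (seg P) * ∑ h ∈ box K s P, f h := by
  classical
  rw [← sum_fiberwise_of_maps_to (s := tup s P) (t := box K s P) (g := dif K) (fun z hz => dif_mem_box hz),
    mul_sum]
  refine sum_le_sum fun h _ => ?_
  rw [sum_congr rfl (g := fun _ => f h) (fun z hz => by rw [(mem_filter.mp hz).2]), sum_const, nsmul_eq_mul]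
  exact mul_le_mul_of_nonneg_right (by exact_mod_cast dif_fibre h) (hf h)

/-- Expansion of an even moment into differences of power sums. -/
lemma moment_expand {K : ℕ} (s P : ℕ) (α : Fin K → ℝ) (g : Fin K → ℤ) :
    ((‖∑ y ∈ seg P, ee (bil α g (mom K y))‖^(2*s):ℝ):ℂ) = ∑ z ∈ tup s P, ee (bil α g (dif K z)) := by
  have hp : (∑ y ∈ seg P, ee (bil α g (mom K y)))^s =
      ∑ x ∈ piFinset (fun _ : Fin s => seg P), ee (bil α g (∑ i, mom K (x i))) := by
    rw [sum_pow']
    refine sum_congr rfl fun x _ => ?_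
    rw [bil_sum_right, ee_sum]
  rw [pow_mul, ← normSq_eq_norm_sq, Complex.ofReal_pow, Complex.normSq_eq_conj_mul_self, mul_pow, mul_comm,
    ← map_pow, hp, map_sum, sum_mul_sum, tup, sum_product]
  refine sum_congr rfl fun x _ => sum_congr rfl fun y _ => ?_
  rw [← ee_neg, ← ee_add, dif, sub_eq_add_neg, bil_add_right, bil_neg_right]

lemma box_sum {K s P : ℕ} (α : Fin K → ℝ) :
    ∑ g ∈ box K s P, ‖∑ h ∈ box K s P, ee (bil α g h)‖ =
      ∏ j : Fin K, ∑ g ∈ Icc (-((s:ℤ) * P^(j.val + 1))) ((s:ℤ) * P^(j.val + 1)),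
        ‖∑ h ∈ Icc (-((s:ℤ) * P^(j.val + 1))) ((s:ℤ) * P^(j.val + 1)), ee (α j * g * h)‖ := by
  unfold box
  rw [prod_univ_sum]
  refine sum_congr rfl fun g _ => ?_
  rw [← norm_prod, prod_univ_sum]
  congr 1
  refine sum_congr rfl fun h _ => ?_
  unfold bil
  rw [ee_sum]

/-- The bilinear form of Vinogradov's method. -/
theorem bilinear_bound {K : ℕ} (s P : ℕ) (hs : 1 ≤ s) (α : Fin K → ℝ) :
    ‖∑ x ∈ seg P, ∑ y ∈ seg P, ee (bil α (mom K x) (mom K y))‖^(2*s*(2*s)) ≤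
      (P:ℝ)^((2*s - 1)*(2*s))*(P:ℝ)^(2*s*(2*s - 1))*(VJ K s (seg P):ℝ)^2 *
      ∏ j : Fin K, ∑ g ∈ Icc (-((s:ℤ) * P^(j.val + 1))) ((s:ℤ) * P^(j.val + 1)),
        ‖∑ h ∈ Icc (-((s:ℤ) * P^(j.val + 1))) ((s:ℤ) * P^(j.val + 1)), ee (α j * g * h)‖ := by
  set T : (Fin K → ℤ) → ℝ := fun h => ‖∑ x ∈ seg P, ee (bil α h (mom K x))‖ with hT
  have h1 : ‖∑ x ∈ seg P, ∑ y ∈ seg P, ee (bil α (mom K x) (mom K y))‖^(2*s) ≤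
      (P:ℝ)^(2*s - 1) * ∑ z ∈ tup s P, T (dif K z) := by
    calc _ ≤ (∑ x ∈ seg P, ‖∑ y ∈ seg P, ee (bil α (mom K x) (mom K y))‖)^(2*s) := by
          gcongr; exact norm_sum_le _ _
      _ ≤ (P:ℝ)^(2*s - 1) * ∑ x ∈ seg P, ‖∑ y ∈ seg P, ee (bil α (mom K x) (mom K y))‖^(2*s) := by
          have := sum_pow_le_card (seg P) (fun x => ‖∑ y ∈ seg P, ee (bil α (mom K x) (mom K y))‖)
            (fun _ _ => norm_nonneg _) (2*s) (by omega)
          rwa [card_seg] at this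
      _ ≤ _ := by
          gcongr
          have e : ((∑ x ∈ seg P, ‖∑ y ∈ seg P, ee (bil α (mom K x) (mom K y))‖^(2*s):ℝ):ℂ) =
              ∑ z ∈ tup s P, ∑ x ∈ seg P, ee (bil α (dif K z) (mom K x)) := by
            rw [ofReal_sum, sum_comm]
            refine sum_congr rfl fun x _ => ?_
            rw [moment_expand]
            exact sum_congr rfl fun z _ => by rw [bil_comm]
          calc _ = ‖((∑ x ∈ seg P, ‖∑ y ∈ seg P, ee (bil α (mom K x) (mom K y))‖^(2*s):ℝ):ℂ)‖ := by
                rw [norm_real, norm_of_nonneg]; positivity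
            _ ≤ _ := by rw [e]; exact norm_sum_le _ _
  have h2 : (∑ z ∈ tup s P, T (dif K z))^(2*s) ≤
      (P:ℝ)^(2*s*(2*s - 1))*(VJ K s (seg P) * ∑ h ∈ box K s P, T h^(2*s)) := by
    have := sum_pow_le_card (tup s P) (fun z => T (dif K z)) (fun _ _ => norm_nonneg _) (2*s) (by omega)
    rw [card_tup, Nat.cast_pow, ← pow_mul] at this
    refine this.trans ?_
    gcongr
    exact sum_dif_le (fun h => T h^(2*s)) fun h => by positivity
  have h3 : ∑ h ∈ box K s P, T h^(2*s) ≤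
      VJ K s (seg P) * ∑ g ∈ box K s P, ‖∑ h ∈ box K s P, ee (bil α g h)‖ := by
    have e : ((∑ h ∈ box K s P, T h^(2*s):ℝ):ℂ) =
        ∑ z ∈ tup s P, ∑ h ∈ box K s P, ee (bil α (dif K z) h) := by
      rw [ofReal_sum, sum_comm]
      refine sum_congr rfl fun x _ => ?_
      rw [hT, moment_expand]
      exact sum_congr rfl fun z _ => by rw [bil_comm]
    calc _ = ‖((∑ h ∈ box K s P, T h^(2*s):ℝ):ℂ)‖ := by
          rw [norm_real, norm_of_nonneg]; positivity
      _ ≤ ∑ z ∈ tup s P, ‖∑ h ∈ box K s P, ee (bil α (dif K z) h)‖ := by rw [e]; exact norm_sum_le _ _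
      _ ≤ _ := sum_dif_le (fun g => ‖∑ h ∈ box K s P, ee (bil α g h)‖) fun _ => norm_nonneg _
  rw [pow_mul, ← box_sum]
  calc _ ≤ ((P:ℝ)^(2*s - 1) * ∑ z ∈ tup s P, T (dif K z))^(2*s) := by gcongr
    _ = (P:ℝ)^((2*s - 1)*(2*s))*(∑ z ∈ tup s P, T (dif K z))^(2*s) := by
        rw [mul_pow, ← pow_mul]
    _ ≤ (P:ℝ)^((2*s - 1)*(2*s))*((P:ℝ)^(2*s*(2*s - 1)) *
        (VJ K s (seg P)*(VJ K s (seg P) * ∑ g ∈ box K s P, ‖∑ h ∈ box K s P, ee (bil α g h)‖))) := by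
        gcongr
        exact h2.trans (by gcongr)
    _ = _ := by ring

/-! ### Geometric sums -/

lemma norm_ee_sub_one (x:ℝ) : 4*|x - round x| ≤ ‖ee x - 1‖ := by
  set y : ℝ := x - round x with hy
  have e : ee x = ee y := by
    rw [show x = y + (round x : ℤ) by rw [hy]; ring, ee_add, ee_int, mul_one]
  have hy2 : |y| ≤ 1/2 := abs_sub_round x
  rw [e]
  have h1 : ‖ee y - 1‖ = 2*|sin (π * y)| := by
    have h := Complex.norm_exp_I_mul_ofReal_sub_one (2*π * y)
    unfold ee
    rw [mul_comm, h, norm_mul, norm_eq_abs, norm_eq_abs, abs_two]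
    congr 3; ring
  rw [h1]
  have h2 : |sin (π * y)| = sin (π * |y|) := by
    rcases abs_cases y with ⟨h, h'⟩ | ⟨h, h'⟩
    · rw [h, abs_of_nonneg]
      apply sin_nonneg_of_nonneg_of_le_pi <;> nlinarith [pi_pos]
    · rw [h, mul_neg, sin_neg, abs_of_nonpos]
      have : 0 ≤ sin (-(π * y)) := by
        apply sin_nonneg_of_nonneg_of_le_pi <;> nlinarith [pi_pos]
      rw [sin_neg] at this; linarith
  have h3 := mul_le_sin (x := π * |y|) (by positivity) (by nlinarith [pi_pos])
  rw [h2]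
  have : 2/π*(π * |y|) = 2*|y| := by field_simp
  linarith

lemma geom_sum_bound (G:ℕ) (x:ℝ) :
    ‖∑ h ∈ Icc (-(G:ℤ)) G, ee (x * h)‖ * (2*|x - round x|) ≤ 1 := by
  set S := ∑ h ∈ Icc (-(G:ℤ)) G, ee (x * h) with hS
  have key : S*(ee x - 1) = ee (x*((G:ℤ) + 1:ℤ)) - ee (x*(-(G:ℤ):ℤ)) := by
    rw [hS]
    clear hS S
    induction G with
    | zero => simp [ee_zero]
    | succ G ih =>
      have e : Icc (-((G + 1:ℕ):ℤ)) ((G + 1:ℕ):ℤ) =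
          insert (-((G + 1:ℕ):ℤ)) (insert (((G + 1:ℕ):ℤ)) (Icc (-(G:ℤ)) G)) := by
        ext a; simp only [mem_Icc, mem_insert]; push_cast; omega
      rw [e, sum_insert (by simp only [mem_Icc, mem_insert]; push_cast; omega),
        sum_insert (by simp only [mem_Icc]; push_cast; omega), add_mul, add_mul, ih, mul_sub, mul_sub,
        mul_one, mul_one, ← ee_add, ← ee_add]
      have e1 : x*((-((G + 1:ℕ):ℤ):ℤ):ℝ) + x = x*(-(G:ℤ):ℤ) := by push_cast; ring
      have e2 : x*(((G + 1:ℕ):ℤ):ℝ) + x = x*(((G + 1:ℕ):ℤ) + 1:ℤ) := by push_cast; ring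
      have e3 : x*(((G:ℤ) + 1:ℤ):ℝ) = x*(((G + 1:ℕ):ℤ):ℝ) := by push_cast; ring
      rw [e1, e2, e3]
      ring
  have h1 : ‖S‖ * ‖ee x - 1‖ ≤ 2 := by
    rw [← norm_mul, key]
    refine (norm_sub_le _ _).trans ?_
    rw [norm_ee, norm_ee]; norm_num
  have h2 := mul_le_mul_of_nonneg_left (norm_ee_sub_one x) (norm_nonneg S)
  nlinarith

lemma card_Icc_le (a b : ℝ) (S : Finset ℤ) (hab : a ≤ b) (hS : ∀ g ∈ S, a ≤ g ∧ (g:ℝ) ≤ b) :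
    (#S:ℝ) ≤ b - a + 1 := by
  have : S ⊆ Icc ⌈a⌉ ⌊b⌋ := fun g hg => by
    rw [mem_Icc]; exact ⟨Int.ceil_le.mpr (hS g hg).1, Int.le_floor.mpr (hS g hg).2⟩
  have h1 := card_le_card this
  rw [Int.card_Icc] at h1
  have h2 : ((⌊b⌋ + 1 - ⌈a⌉).toNat:ℝ) ≤ b - a + 1 := by
    have h3 : (((⌊b⌋ + 1 - ⌈a⌉).toNat:ℤ):ℝ) ≤ b - a + 1 := by
      rw [Int.toNat_eq_max]
      push_cast
      apply max_le
      · linarith [Int.floor_le b, Int.le_ceil a]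
      · linarith
    exact_mod_cast h3
  exact le_trans (by exact_mod_cast h1) h2

/-- The number of `|g| ≤ G` for which `α g` is close to an integer. -/
lemma count_near {G : ℕ} {α η : ℝ} (hα : α ≠ 0) (hη : 0 ≤ η) :
    (#{g ∈ Icc (-(G:ℤ)) G | |α*(g:ℤ) - round (α*(g:ℤ))| < η}:ℝ) ≤
      (2*|α| * G + 3)*(2*η / |α| + 1) := by
  classical
  have ha : 0 < |α| := abs_pos.mpr hα
  set S := {g ∈ Icc (-(G:ℤ)) G | |α*(g:ℤ) - round (α*(g:ℤ))| < η} with hS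
  set M := S.image fun g : ℤ => round (α * g) with hM
  have hMc : (#M:ℝ) ≤ 2*|α| * G + 3 := by
    have := card_Icc_le (-(|α| * G + 1)) (|α| * G + 1) M (by nlinarith [mul_nonneg ha.le (Nat.cast_nonneg (α := ℝ) G)]) ?_
    · linarith
    · intro m hm
      obtain ⟨g, hg, rfl⟩ := mem_image.mp hm
      have hg' := (mem_Icc.mp (mem_filter.mp hg).1)
      have h1 : |(g:ℝ)| ≤ G := by
        rw [abs_le]; constructor
        · exact_mod_cast hg'.1
        · exact_mod_cast hg'.2
      have h2 := abs_sub_round (α * g)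
      have h3 : |α * g| ≤ |α| * G := by rw [abs_mul]; gcongr
      rw [abs_le] at h2 h3
      constructor <;> linarith [h2.1, h2.2, h3.1, h3.2]
  have hfib : ∀ m ∈ M, (#{g ∈ S | round (α*(g:ℤ)) = m}:ℝ) ≤ 2*η / |α| + 1 := by
    intro m _
    have := card_Icc_le (m / α - η / |α|) (m / α + η / |α|) {g ∈ S | round (α*(g:ℤ)) = m}
      (by have : 0 ≤ η / |α| := by positivity
          linarith) ?_
    · calc _ ≤ _ := this
        _ = _ := by ring
    · intro g hg
      rw [mem_filter, hS, mem_filter] at hg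
      have h1 := hg.1.2
      rw [hg.2] at h1
      have h2 : |(g:ℝ) - m / α| ≤ η / |α| := by
        rw [le_div_iff₀ ha, ← abs_mul]
        have : ((g:ℝ) - m / α) * α = α * g - m := by field_simp
        rw [this]; exact h1.le
      rw [abs_le] at h2
      constructor <;> linarith [h2.1, h2.2]
  have hc : (#S:ℝ) = ∑ m ∈ M, (#{g ∈ S | round (α*(g:ℤ)) = m}:ℝ) := by
    exact_mod_cast card_eq_sum_card_image (fun g : ℤ => round (α * g)) S
  rw [hc]
  calc _ ≤ ∑ _m ∈ M, (2*η / |α| + 1) := sum_le_sum hfib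
    _ = #M*(2*η / |α| + 1) := by rw [sum_const, nsmul_eq_mul]
    _ ≤ _ := by gcongr

lemma E_trivial {G : ℕ} (hG : 1 ≤ G) (α:ℝ) :
    ∑ g ∈ Icc (-(G:ℤ)) G, ‖∑ h ∈ Icc (-(G:ℤ)) G, ee (α * g * h)‖ ≤ (3*G:ℝ)^2 := by
  have hc : (#(Icc (-(G:ℤ)) G):ℝ) ≤ 3*G := by
    rw [Int.card_Icc]
    have : ((G:ℤ) + 1 - -(G:ℤ)).toNat ≤ 3*G := by omega
    exact_mod_cast this
  calc _ ≤ ∑ g ∈ Icc (-(G:ℤ)) G, (3*G:ℝ) := by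
        refine sum_le_sum fun g _ => ?_
        refine (norm_sum_le _ _).trans ?_
        simp only [norm_ee, sum_const, nsmul_eq_mul, mul_one]
        exact hc
    _ = #(Icc (-(G:ℤ)) G)*(3*G:ℝ) := by simp
    _ ≤ _ := by rw [sq]; gcongr

/-- A saving `X` for the double sum as soon as `α` is neither too small nor too large. -/
lemma E_saving {G : ℕ} (hG : 1 ≤ G) {α X : ℝ} (hX : 1 ≤ X) (h1 : |α| * X^2 ≤ 1) (h2 : X^2 ≤ |α| * (G:ℝ)^2) :
    ∑ g ∈ Icc (-(G:ℤ)) G, ‖∑ h ∈ Icc (-(G:ℤ)) G, ee (α * g * h)‖ ≤ 50*(G:ℝ)^2/X := by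
  have hGr : (1:ℝ) ≤ G := by exact_mod_cast hG
  have hα : α ≠ 0 := by
    rintro rfl; simp at h2; nlinarith
  have ha : 0 < |α| := abs_pos.mpr hα
  have hX0 : 0 < X := by linarith
  have hc : (#(Icc (-(G:ℤ)) G):ℝ) ≤ 3*G := by
    rw [Int.card_Icc]
    have : ((G:ℤ) + 1 - -(G:ℤ)).toNat ≤ 3*G := by omega
    exact_mod_cast this
  have hXG : X^2 ≤ G := by
    have h3 : X^2*X^2 ≤ (G:ℝ)^2 := by
      calc X^2*X^2 ≤ |α| * (G:ℝ)^2*X^2 := by gcongr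
        _ = (|α| * X^2)*(G:ℝ)^2 := by ring
        _ ≤ 1*(G:ℝ)^2 := by gcongr
        _ = _ := one_mul _
    rw [← sq] at h3
    exact le_of_sq_le_sq h3 (by linarith)
  set η : ℝ := X / G with hη
  have hη0 : 0 < η := by positivity
  have hterm : ∀ g : ℤ, g ∈ Icc (-(G:ℤ)) G → ‖∑ h ∈ Icc (-(G:ℤ)) G, ee (α * g * h)‖ ≤
      (if |α * g - round (α * g)| < η then (3*G:ℝ) else 0) + G / (2*X) := by
    intro g _
    split_ifs with hg
    · have : ‖∑ h ∈ Icc (-(G:ℤ)) G, ee (α * g * h)‖ ≤ 3*G := by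
        refine (norm_sum_le _ _).trans ?_
        simp only [norm_ee, sum_const, nsmul_eq_mul, mul_one]
        exact hc
      have : (0:ℝ) ≤ G / (2*X) := by positivity
      linarith
    · rw [zero_add]
      push Not at hg
      have h3 := geom_sum_bound G (α * g)
      rw [le_div_iff₀ (by positivity)]
      have h4 : ‖∑ h ∈ Icc (-(G:ℤ)) G, ee (α * g * h)‖ * (2*η) ≤ 1 :=
        le_trans (by gcongr) h3
      have h5 : ‖∑ h ∈ Icc (-(G:ℤ)) G, ee (α * g * h)‖ * (2*X) =
          ‖∑ h ∈ Icc (-(G:ℤ)) G, ee (α * g * h)‖ * (2*η) * G := by rw [hη]; field_simp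
      rw [h5]
      nlinarith
  refine (sum_le_sum hterm).trans ?_
  rw [sum_add_distrib, ← sum_filter, sum_const, sum_const, nsmul_eq_mul, nsmul_eq_mul]
  have hcn := count_near (G := G) hα hη0.le
  have hb1 : (2*|α| * G + 3)*(2*η / |α| + 1)*(3*G) ≤ 45*(G:ℝ)^2/X := by
    have e : (2*|α| * G + 3)*(2*η / |α| + 1)*(3*G) =
        12*X * G + 6*|α| * G^2 + 18*X / |α| + 9*G := by
      rw [hη]; field_simp; ring
    rw [e, le_div_iff₀ hX0]
    have i1 : X / |α| * X ≤ (G:ℝ)^2 := by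
      rw [div_mul_eq_mul_div, div_le_iff₀ ha]; nlinarith
    have i2 : |α| * X ≤ 1 := by nlinarith
    have i3 : X ≤ G := by nlinarith
    have i4 : X * G * X ≤ (G:ℝ)^2 := by nlinarith
    have i5 : |α| * G^2*X ≤ (G:ℝ)^2 := by nlinarith [sq_nonneg (G:ℝ)]
    have i6 : G * X ≤ (G:ℝ)^2 := by nlinarith
    have : 18*X / |α| * X = 18*(X / |α| * X) := by ring
    nlinarith
  have hb2 : (#(Icc (-(G:ℤ)) G):ℝ)*(G / (2*X)) ≤ 5*(G:ℝ)^2/X := by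
    calc _ ≤ 3*(G:ℝ)*(G / (2*X)) := by gcongr
      _ = 3/2*(G^2/X) := by ring
      _ ≤ 5*(G^2/X) := by gcongr; norm_num
      _ = _ := by ring
  have hb3 := mul_le_mul_of_nonneg_right hcn (show (0:ℝ) ≤ 3*G by positivity)
  calc _ ≤ 45*(G:ℝ)^2/X + 5*(G:ℝ)^2/X := add_le_add (hb3.trans hb1) hb2
    _ = _ := by ring

/-! ### The bilinear sum of a Taylor polynomial -/

lemma vs_pos {K : ℕ} (hK : 1 ≤ K) : 1 ≤ vs K := by
  unfold vs
  have : 1 ≤ K^2 := Nat.one_le_pow _ _ hK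
  omega

lemma prod_pow_weight (K P : ℕ) : (∏ j : Fin K, ((P:ℝ)^(j.val + 1))^2) = (P:ℝ)^(K*(K + 1)) := by
  rw [Fin.prod_univ_eq_prod_range (fun j => ((P:ℝ)^(j + 1))^2) K]
  induction K with
  | zero => simp
  | succ K ih => rw [prod_range_succ, ih]; ring

lemma W_pow_bound {K P : ℕ} (hK : 1 ≤ K) (hP : 1 ≤ P) (α : Fin K → ℝ) (j₀ : Fin K) {X : ℝ} (hX : 1 ≤ X)
    (h1 : |α j₀| * X^2 ≤ 1) (h2 : X^2 ≤ |α j₀| * ((P:ℝ)^(j₀.val + 1))^2) :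
    ‖∑ x ∈ seg P, ∑ y ∈ seg P, ee (bil α (mom K x) (mom K y))‖^(2*vs K*(2*vs K)) ≤
      (P:ℝ)^(2*(2*vs K*(2*vs K))) *
        (6*(8*K:ℝ)^(256*K^3*vs K)*(3*vs K:ℝ)^(2*K))*((P:ℝ)^(1/8:ℝ) / X) := by
  classical
  have hs := vs_pos hK
  have hm := vinogradov_mean hK P hP
  set s := vs K with hsdef
  have hsr : (1:ℝ) ≤ s := by exact_mod_cast hs
  have hPr : (1:ℝ) ≤ P := by exact_mod_cast hP
  have hP0 : (0:ℝ) < P := by linarith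
  have hX0 : 0 < X := by linarith
  refine (bilinear_bound s P hs α).trans ?_
  set E : Fin K → ℝ := fun j => ∑ g ∈ Icc (-((s:ℤ) * P^(j.val + 1))) ((s:ℤ) * P^(j.val + 1)),
        ‖∑ h ∈ Icc (-((s:ℤ) * P^(j.val + 1))) ((s:ℤ) * P^(j.val + 1)), ee (α j * g * h)‖ with hE
  have hG : ∀ j : ℕ, 1 ≤ s * P^j := fun j => Nat.mul_pos hs (Nat.pow_pos hP)
  have hcast : ∀ j : ℕ, (s:ℤ) * P^j = ((s * P^j:ℕ):ℤ) := fun j => by push_cast; rfl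
  have hE1 : ∀ j, E j ≤ (3*s*(P:ℝ)^(j.val + 1))^2 := fun j => by
    have := E_trivial (hG (j.val + 1)) (α j)
    rw [hE]; simp only [hcast]
    refine this.trans (le_of_eq ?_)
    push_cast; ring
  have hE2 : E j₀ ≤ (3*s*(P:ℝ)^(j₀.val + 1))^2*(6/X) := by
    have h2' : X^2 ≤ |α j₀| * ((s * P^(j₀.val + 1):ℕ):ℝ)^2 := by
      refine h2.trans ?_
      gcongr
      push_cast
      exact le_mul_of_one_le_left (by positivity) hsr
    have := E_saving (hG (j₀.val + 1)) hX h1 h2'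
    rw [hE]; simp only [hcast]
    refine this.trans ?_
    push_cast
    rw [mul_div_assoc', div_le_div_iff_of_pos_right hX0]
    have : 0 ≤ ((s:ℝ) * P^(j₀.val + 1))^2 := by positivity
    nlinarith
  have hprod : ∏ j, E j ≤ (3*s:ℝ)^(2*K)*(P:ℝ)^(K*(K + 1))*(6/X) := by
    calc ∏ j, E j ≤ ∏ j, (3*s*(P:ℝ)^(j.val + 1))^2*(if j = j₀ then 6/X else 1) := by
          refine prod_le_prod (fun j _ => ?_) fun j _ => ?_
          · rw [hE]; positivity
          · split_ifs with hj
            · rw [hj]; exact hE2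
            · rw [mul_one]; exact hE1 j
      _ = _ := by
          rw [prod_mul_distrib, prod_ite_eq' univ j₀]
          simp only [mul_pow, prod_mul_distrib, prod_pow_weight, prod_const, card_univ,
            Fintype.card_fin, mem_univ, if_true]
          rw [← mul_pow, ← mul_pow, ← pow_mul, ← mul_pow]
  calc _ ≤ (P:ℝ)^((2*s - 1)*(2*s))*(P:ℝ)^(2*s*(2*s - 1)) *
        ((8*K:ℝ)^(128*K^3*s)*(P:ℝ)^(2*(s:ℝ) - kap K + 1/16))^2 *
        ((3*s:ℝ)^(2*K)*(P:ℝ)^(K*(K + 1))*(6/X)) := by gcongr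
    _ = (6*(8*K:ℝ)^(256*K^3*s)*(3*s:ℝ)^(2*K))*(1/X) *
        ((P:ℝ)^((2*s - 1)*(2*s))*(P:ℝ)^(2*s*(2*s - 1)) *
         ((P:ℝ)^(2*(s:ℝ) - kap K + 1/16))^2*(P:ℝ)^(K*(K + 1))) := by
        rw [mul_pow, ← pow_mul (8*K:ℝ), show 128*K^3*s * 2 = 256*K^3*s by ring]
        ring
    _ = (6*(8*K:ℝ)^(256*K^3*s)*(3*s:ℝ)^(2*K))*(1/X) *
        ((P:ℝ)^(2*(2*s*(2*s)))*(P:ℝ)^(1/8:ℝ)) := by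
        congr 1
        rw [← rpow_natCast, ← rpow_natCast, ← rpow_natCast _ 2, ← rpow_natCast,
          ← rpow_natCast, ← rpow_mul hP0.le, ← rpow_add hP0, ← rpow_add hP0,
          ← rpow_add hP0, ← rpow_add hP0]
        congr 1
        have : 1 ≤ 2*s := by omega
        push_cast [Nat.cast_sub this]
        unfold kap
        ring
    _ = _ := by ring

lemma vs_le {K : ℕ} (hK : 1 ≤ K) : (vs K : ℝ) ≤ 17*K^3 := by
  have hKr : (1:ℝ) ≤ K := by exact_mod_cast hK
  unfold vs
  push_cast
  nlinarith [sq_nonneg (K:ℝ)]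

lemma const_le_exp {K : ℕ} (hK : 1 ≤ K) :
    6*(8*K:ℝ)^(256*K^3*vs K)*(3*vs K:ℝ)^(2*K) ≤ exp (40000*K^7) := by
  have hKr : (1:ℝ) ≤ K := by exact_mod_cast hK
  have hv := vs_le hK
  have hle : ∀ x : ℝ, x ≤ exp x := fun x => by linarith [add_one_le_exp x]
  calc _ ≤ exp 6*(exp (8*K))^(256*K^3*vs K)*(exp (3*vs K))^(2*K) := by
        gcongr <;> exact hle _
    _ = exp (6 + (256*K^3*vs K:ℕ)*(8*K) + (2*K:ℕ)*(3*vs K)) := by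
        rw [← exp_nat_mul, ← exp_nat_mul, ← exp_add, ← exp_add]
    _ ≤ _ := by
        apply exp_le_exp.mpr
        push_cast
        have h1 : (256*(K:ℝ)^3*vs K)*(8*K) ≤ 34816*K^7 := by
          calc _ = 2048*(K:ℝ)^4*vs K := by ring
            _ ≤ 2048*(K:ℝ)^4*(17*(K:ℝ)^3) := by gcongr
            _ = _ := by ring
        have h2 : (2*(K:ℝ))*(3*vs K) ≤ 102*K^7 := by
          calc (2*(K:ℝ))*(3*vs K) = 6*K * vs K := by ring
            _ ≤ 6*K*(17*K^3) := by gcongr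
            _ = 102*K^4 := by ring
            _ ≤ 102*K^7 := by gcongr; norm_num
        have h3 : (1:ℝ) ≤ K^7 := one_le_pow₀ hKr
        linarith

/-- The coefficients of the Taylor expansion of `(t / 2π) log (1 + u / n)`. -/
def tcoef (K:ℕ) (t n : ℝ) : Fin K → ℝ := fun j =>
  (-1)^j.val * t / (2*π*(j.val + 1) * n^(j.val + 1))

lemma k60 {k : ℕ} (hk : 2 ≤ k) (a:ℕ) (ha : a ≤ 60) : (2:ℝ)^(60 - a)*(k:ℝ)^a ≤ (k:ℝ)^60 := by
  have hkr : (2:ℝ) ≤ k := by exact_mod_cast hk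
  calc _ ≤ (k:ℝ)^(60 - a)*(k:ℝ)^a := by gcongr
    _ = _ := by rw [← pow_add]; congr 1; omega

lemma exp_le_rpow_of {x L c : ℝ} (hL : 0 < L) (h : x ≤ c * log L) : exp x ≤ L^c := by
  rw [rpow_def_of_pos hL, mul_comm]
  exact exp_le_exp.mpr h

/-- Vinogradov's bound for the bilinear sum attached to `n ^ (it)`: the mean value theorem supplies the moments,
and `E_saving` a saving in the coordinate where the Taylor coefficient has a suitable size. -/
lemma W_bound {k : ℕ} (hk : 2 ≤ k) {L : ℝ} (hL : (k:ℝ)^60 ≤ log L) (hL0 : 1 < L) {t : ℝ}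
    (ht1 : L^(3/4:ℝ) ≤ |t|) (ht2 : |t| ≤ L^(k:ℝ)) {n : ℝ} (hn1 : L ≤ n) (hn2 : n ≤ 2*L)
    {P : ℕ} (hP : P = ⌊L^(2/5:ℝ)⌋₊) :
    ‖∑ x ∈ seg P, ∑ y ∈ seg P, ee (bil (tcoef (5*k) t n) (mom (5*k) x) (mom (5*k) y))‖ ≤
      (P:ℝ)^2*L^(-(2/(k:ℝ)^60)) := by
  have hLp : 0 < L := by linarith
  have hkr : (2:ℝ) ≤ k := by exact_mod_cast hk
  set l := log L with hl
  have hl60 : (2:ℝ)^60 ≤ l := by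
    have := k60 hk 0 (by norm_num); simp only [pow_zero, mul_one] at this
    exact this.trans hL
  set K := 5*k with hKdef
  have hK : 1 ≤ K := by omega
  have hKr : (K:ℝ) = 5*k := by rw [hKdef]; push_cast; ring
  set X : ℝ := L^(1/10:ℝ) with hX
  have hX1 : 1 ≤ X := one_le_rpow hL0.le (by norm_num)
  have hX0 : 0 < X := by linarith
  have hZ1 : 1 ≤ L^(2/5:ℝ) := one_le_rpow hL0.le (by norm_num)
  have hP1 : 1 ≤ P := by rw [hP]; exact le_floor (by simpa using hZ1)
  have hPr : (1:ℝ) ≤ P := by exact_mod_cast hP1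
  have hPle : (P:ℝ) ≤ L^(2/5:ℝ) := by rw [hP]; exact floor_le (by positivity)
  have hPge : L^(2/5:ℝ)/2 ≤ P := by
    have : L^(2/5:ℝ) < P + 1 := by rw [hP]; exact lt_floor_add_one _
    linarith
  -- the degree `j` at which the coefficient is between `L⁻²` and `L⁻¹`
  have ht0 : 0 < |t| := lt_of_lt_of_le (by positivity) ht1
  set τ := log |t| / l with hτ
  have hlp : 0 < l := by linarith [show (0:ℝ) < 2^60 by positivity]
  have htτ : |t| = L^τ := by
    rw [rpow_def_of_pos hLp, hτ, ← hl, mul_div_cancel₀ _ hlp.ne', exp_log ht0]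
  have hτ1 : 3/4 ≤ τ := by rw [htτ] at ht1; exact (rpow_le_rpow_left_iff hL0).mp ht1
  have hτ2 : τ ≤ k := by rw [htτ] at ht2; exact (rpow_le_rpow_left_iff hL0).mp ht2
  have hτ0 : 0 ≤ τ := by linarith
  set j : ℕ := ⌊τ⌋₊ + 2 with hj
  have hjr : (j:ℝ) = ⌊τ⌋₊ + 2 := by rw [hj]; push_cast; ring
  have hfl1 := floor_le hτ0
  have hfl2 := lt_floor_add_one τ
  have hjK : j - 1 < K := by
    have : ⌊τ⌋₊ ≤ k := by
      have : (⌊τ⌋₊:ℝ) ≤ k := hfl1.trans hτ2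
      exact_mod_cast this
    omega
  have hjk : (j:ℝ) ≤ 2*k := by linarith
  have hj1 : (2:ℝ) ≤ j := by rw [hjr]; linarith [Nat.cast_nonneg (α := ℝ) ⌊τ⌋₊]
  set j₀ : Fin K := ⟨j - 1, hjK⟩ with hj₀
  have hj₀1 : j₀.val + 1 = j := by rw [hj₀]; simp only; omega
  have hexp : 7/20 ≤ τ - (j:ℝ)/5 := by
    rw [hjr]
    rcases lt_or_ge τ 1 with h | h
    · have : ⌊τ⌋₊ = 0 := Nat.floor_eq_zero.mpr h
      rw [this]; push_cast; linarith
    · linarith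
  have hα : |tcoef K t n j₀| = L^τ / (2*π * j * n^j) := by
    have hn0 : 0 < n := by linarith
    unfold tcoef
    rw [abs_div, abs_mul, abs_pow, abs_neg, abs_one, one_pow, one_mul, htτ]
    have : ((j₀.val:ℝ) + 1) = j := by exact_mod_cast hj₀1
    rw [this, hj₀1, abs_of_pos (by positivity)]
  have hn0 : 0 < n := by linarith
  have hpi := pi_gt_three
  have h1 : |tcoef K t n j₀| * X^2 ≤ 1 := by
    have a1 : L^τ / (2*π * j * n^j) ≤ L^τ / L^(j:ℝ) := by
      apply div_le_div_of_nonneg_left (by positivity) (by positivity)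
      rw [rpow_natCast]
      calc L^j ≤ n^j := by gcongr
        _ ≤ 2*π * j * n^j := le_mul_of_one_le_left (by positivity) (by clear * - hpi hj1; nlinarith)
    rw [← rpow_sub hLp] at a1
    calc _ ≤ L^(τ - j) * X^2 := by rw [hα]; gcongr
      _ = L^(τ - j + 1/5) := by
          rw [hX, ← rpow_natCast, ← rpow_mul hLp.le, ← rpow_add hLp]
          congr 1; norm_num
      _ ≤ 1 := rpow_le_one_of_one_le_of_nonpos hL0.le (by rw [hjr]; linarith)
  have h2 : X^2 ≤ |tcoef K t n j₀| * ((P:ℝ)^(j₀.val + 1))^2 := by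
    rw [hα, hj₀1]
    have b1 : 2*π * j * 8^j ≤ L^(3/20:ℝ) := by
      have c1 : 2*π * j * 8^j ≤ exp (3 + 4*j) := by
        have e1 : (8:ℝ) ≤ exp 3 := by
          have := exp_one_gt_d9
          have e3 : exp 3 = exp 1^3 := by rw [← exp_nat_mul]; norm_num
          rw [e3]
          calc (8:ℝ) = 2^3 := by norm_num
            _ ≤ _ := by gcongr; linarith
        have e2 : (j:ℝ) ≤ exp j := by linarith [add_one_le_exp (j:ℝ)]
        calc 2*π * j * 8^j ≤ 8*j * 8^j := by
              gcongr; linarith [pi_lt_four]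
          _ ≤ exp 3*exp j * exp 3^j := by gcongr
          _ = _ := by rw [← exp_nat_mul, ← exp_add, ← exp_add]; congr 1; ring
      refine c1.trans (exp_le_rpow_of hLp ?_)
      have := k60 hk 1 (by norm_num)
      norm_num at this
      linarith
    rw [div_mul_eq_mul_div, le_div_iff₀ (by positivity)]
    calc X^2*(2*π * j * n^j) ≤ X^2*(2*π * j*(2*L)^j) := by gcongr
      _ = X^2*(2*π * j * 8^j)*(L^j/4^j) := by
          rw [show (8:ℝ) = 2*4 by norm_num, mul_pow, mul_pow]; field_simp
      _ ≤ X^2*L^(3/20:ℝ)*(L^j/4^j) := by gcongr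
      _ = L^(7/20:ℝ)*(L^j/4^j) := by
          rw [hX, ← rpow_natCast _ 2, ← rpow_mul hLp.le, ← rpow_add hLp]
          congr 2; norm_num
      _ ≤ L^(τ - (j:ℝ)/5)*(L^j/4^j) := by
          gcongr
          exact hL0.le
      _ = L^τ*((L^(2/5:ℝ)/2)^j)^2 := by
          have e2 : ((L^(2/5:ℝ)/2)^j)^2 = L^(4/5*(j:ℝ))/4^j := by
            rw [← pow_mul, mul_comm j 2, pow_mul, div_pow (L^(2/5:ℝ)), div_pow _ _ j,
              ← rpow_natCast (L^(2/5:ℝ)) 2, ← rpow_mul hLp.le,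
              ← rpow_natCast _ j, ← rpow_mul hLp.le]
            congr 1
            · congr 1; push_cast; ring
            · norm_num
          rw [e2, ← rpow_natCast L j, ← mul_div_assoc, ← mul_div_assoc, ← rpow_add hLp,
            ← rpow_add hLp]
          congr 2; ring
      _ ≤ L^τ*((P:ℝ)^j)^2 := by gcongr
  have hW := W_pow_bound hK hP1 (tcoef K t n) j₀ hX1 h1 h2
  set W := ‖∑ x ∈ seg P, ∑ y ∈ seg P, ee (bil (tcoef K t n) (mom K x) (mom K y))‖ with hWdef
  set D := 2*vs K*(2*vs K) with hD
  have hs := vs_pos hK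
  have hD0 : D ≠ 0 := by rw [hD]; positivity
  have hC : 6*(8*K:ℝ)^(256*K^3*vs K)*(3*vs K:ℝ)^(2*K) ≤ L^(1/40:ℝ) := by
    refine (const_le_exp hK).trans (exp_le_rpow_of hLp ?_)
    have := k60 hk 7 (by norm_num)
    norm_num at this
    rw [hKr, mul_pow]
    have : (0:ℝ) ≤ (k:ℝ)^7 := by positivity
    rw [← hl]
    linarith
  have hP8 : (P:ℝ)^(1/8:ℝ) / X ≤ L^(-(1/20):ℝ) := by
    rw [div_le_iff₀ hX0, hX, ← rpow_add hLp]
    calc (P:ℝ)^(1/8:ℝ) ≤ (L^(2/5:ℝ))^(1/8:ℝ) := rpow_le_rpow (by linarith) hPle (by norm_num)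
      _ = _ := by rw [← rpow_mul hLp.le]; congr 1; norm_num
  have hWD : W^D ≤ ((P:ℝ)^2*L^(-(2/(k:ℝ)^60)))^D := by
    refine hW.trans ?_
    rw [mul_pow (_^2), ← pow_mul, mul_assoc]
    refine mul_le_mul_of_nonneg_left ?_ (by positivity)
    calc _ ≤ L^(1/40:ℝ) * L^(-(1/20):ℝ) := by gcongr
      _ = L^(-(1/40):ℝ) := by rw [← rpow_add hLp]; norm_num
      _ ≤ L^(-(2/(k:ℝ)^60) * D) := by
          apply rpow_le_rpow_of_exponent_le hL0.le
          have hv := vs_le hK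
          have hDr : (D:ℝ) ≤ 4*(17*K^3)^2 := by
            rw [hD]; push_cast
            have : (0:ℝ) ≤ vs K := by positivity
            clear * - hv this; nlinarith
          have h6 := k60 hk 6 (by norm_num)
          norm_num at h6
          have : 2/(k:ℝ)^60*D ≤ 1/40 := by
            rw [div_mul_eq_mul_div, div_le_div_iff₀ (by positivity) (by norm_num)]
            rw [hKr] at hDr
            have : 4*(17*(5*(k:ℝ))^3)^2 = 18062500*k^6 := by ring
            rw [this] at hDr
            have : (0:ℝ) ≤ (k:ℝ)^6 := by positivity
            linarith
          linarith
      _ = (L^(-(2/(k:ℝ)^60)))^D := by rw [rpow_mul hLp.le, rpow_natCast]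
  exact le_of_pow_le_pow_left₀ hD0 (by positivity) hWD

/-! ### Zeta sums -/

/-- The function `u ↦ u ^ (it)` of a positive real variable. -/
def nit (t u : ℝ) : ℂ := cexp (((t * log u:ℝ):ℂ) * I)

lemma norm_nit (t u : ℝ) : ‖nit t u‖ = 1 := norm_exp_ofReal_mul_I _

lemma norm_exp_sub_exp_le (a b : ℝ) :
    ‖cexp ((a:ℂ) * I) - cexp ((b:ℂ) * I)‖ ≤ |a - b| := by
  have e : cexp ((a:ℂ) * I) - cexp ((b:ℂ) * I) =
      cexp ((b:ℂ) * I)*(cexp (I*((a - b:ℝ):ℂ)) - 1) := by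
    rw [mul_sub, ← Complex.exp_add, mul_one]
    congr 2; push_cast; ring
  rw [e, norm_mul, norm_exp_ofReal_mul_I, one_mul]
  exact norm_exp_I_mul_ofReal_sub_one_le

lemma shift_bound (f : ℤ → ℂ) (hf : ∀ n, ‖f n‖ ≤ 1) {a b : ℤ} (hab : a ≤ b) (h:ℕ) :
    ‖∑ n ∈ Ioc a b, f n - ∑ n ∈ Ioc a b, f (n + h)‖ ≤ 2*h := by
  induction h with
  | zero => simp
  | succ h ih =>
    have e : ∑ n ∈ Ioc a b, f (n + h) - ∑ n ∈ Ioc a b, f (n + (h + 1:ℕ)) = f (a + 1 + h) - f (b + 1 + h) := by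
      have : ∀ m : ℕ, ∑ n ∈ Ioc a (a + m), f (n + h) - ∑ n ∈ Ioc a (a + m), f (n + (h + 1:ℕ)) =
          f (a + 1 + h) - f (a + m + 1 + h) := by
        intro m
        induction m with
        | zero => simp
        | succ m ihm =>
          have e1 : Ioc a (a + (m + 1:ℕ)) = insert (a + (m + 1:ℕ)) (Ioc a (a + m)) := by
            ext x; simp only [mem_Ioc, mem_insert]; push_cast; omega
          rw [e1, sum_insert (by simp), sum_insert (by simp), add_sub_add_comm, ihm]
          have e2 : a + ((m + 1:ℕ):ℤ) + h = a + m + 1 + h := by push_cast; ring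
          have e3 : a + ((m + 1:ℕ):ℤ) + (h + 1:ℕ) = a + (m + 1:ℕ) + 1 + h := by push_cast; ring
          rw [e2, e3]; ring
      have h2 := this (b - a).toNat
      rwa [Int.toNat_of_nonneg (by omega), show a + (b - a) = b by ring] at h2
    calc _ = ‖(∑ n ∈ Ioc a b, f n - ∑ n ∈ Ioc a b, f (n + h)) +
          (∑ n ∈ Ioc a b, f (n + h) - ∑ n ∈ Ioc a b, f (n + (h + 1:ℕ)))‖ := by congr 1; ring
      _ ≤ 2*h + (1 + 1) := by
          refine (norm_add_le _ _).trans (add_le_add ih ?_)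
          rw [e]
          exact (norm_sub_le _ _).trans (add_le_add (hf _) (hf _))
      _ = _ := by push_cast; ring

/-- Taylor expansion of `(n + xy) ^ (it)` in terms of the bilinear form. -/
lemma taylor_term {K : ℕ} {t n : ℝ} (hn : 0 < n) {x y : ℤ} (hu0 : 0 ≤ x * y) (hu : 2*(x * y:ℝ) ≤ n) :
    ‖nit t (n + x * y) - nit t n * ee (bil (tcoef K t n) (mom K x) (mom K y))‖ ≤
      |t| * (2*(x * y / n)^(K + 1)) := by
  set u : ℝ := x * y / n with hudef
  have hxy : (0:ℝ) ≤ x * y := by exact_mod_cast hu0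
  have hu1 : 0 ≤ u := by positivity
  have hu2 : u ≤ 1/2 := by rw [hudef, div_le_iff₀ hn]; linarith
  have hlog : log (n + x * y) = log n + log (1 + u) := by
    rw [← log_mul hn.ne' (by linarith)]
    congr 1; rw [hudef]; field_simp
  have hT := abs_log_sub_add_sum_range_le (x := -u) (by rw [abs_neg, abs_of_nonneg hu1]; linarith) K
  rw [abs_neg, abs_of_nonneg hu1, sub_neg_eq_add] at hT
  have hb : 2*π * bil (tcoef K t n) (mom K x) (mom K y) =
      -t * ∑ i ∈ range K, (-u)^(i + 1) / ((i:ℝ) + 1) := by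
    unfold bil tcoef mom
    rw [← Fin.sum_univ_eq_sum_range (fun i => (-u)^(i + 1) / ((i:ℝ) + 1)), mul_sum, mul_sum]
    refine sum_congr rfl fun i _ => ?_
    rw [hudef]
    have : ((i.val:ℝ) + 1) ≠ 0 := by positivity
    have hpi := pi_ne_zero
    rw [neg_pow ((x:ℝ) * y / n), div_pow ((x:ℝ) * y), mul_pow (x:ℝ), pow_succ (-1:ℝ)]
    push_cast
    field_simp
  have e1 : nit t n * ee (bil (tcoef K t n) (mom K x) (mom K y)) =
      cexp (((t * log n - t * ∑ i ∈ range K, (-u)^(i + 1) / ((i:ℝ) + 1):ℝ):ℂ) * I) := by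
    unfold nit ee
    rw [hb, ← Complex.exp_add]
    congr 1; push_cast; ring
  rw [e1]
  unfold nit
  refine (norm_exp_sub_exp_le _ _).trans ?_
  rw [hlog, show t*(log n + log (1 + u)) -
    (t * log n - t * ∑ i ∈ range K, (-u)^(i + 1) / ((i:ℝ) + 1)) =
    t*(∑ i ∈ range K, (-u)^(i + 1) / ((i:ℝ) + 1) + log (1 + u)) by ring, abs_mul]
  gcongr
  refine hT.trans ?_
  rw [div_le_iff₀ (by linarith)]
  have : 0 ≤ u^(K + 1) := by positivity
  nlinarith

/-- Vinogradov's bound for the zeta sum, with the dependence on `k` polynomial. -/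
theorem zeta_sum_bound {k : ℕ} (hk : 2 ≤ k) {L L' : ℕ} (hL : (k:ℝ)^60 ≤ log L) (h1 : L ≤ L')
    (h2 : L' ≤ 2*L) {t : ℝ} (ht1 : (L:ℝ)^(3/4:ℝ) ≤ |t|) (ht2 : |t| ≤ (L:ℝ)^(k:ℝ)) :
    ‖∑ n ∈ Ioc L L', nit t n‖ ≤ (L:ℝ)^(1 - 1/(k:ℝ)^60) := by
  have hkr : (2:ℝ) ≤ k := by exact_mod_cast hk
  have hl60 : (2:ℝ)^60 ≤ log L := by
    have := k60 hk 0 (by norm_num); simp only [pow_zero, mul_one] at this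
    exact this.trans hL
  have hL0 : (1:ℝ) < L := by
    by_contra hc
    push Not at hc
    have := log_nonpos (Nat.cast_nonneg L) hc
    have : (0:ℝ) < 2^60 := by positivity
    linarith
  have hLp : (0:ℝ) < L := by linarith
  set P := ⌊(L:ℝ)^(2/5:ℝ)⌋₊ with hP
  have hZ1 : 1 ≤ (L:ℝ)^(2/5:ℝ) := one_le_rpow hL0.le (by norm_num)
  have hP1 : 1 ≤ P := by rw [hP]; exact le_floor (by simpa using hZ1)
  have hPr : (1:ℝ) ≤ P := by exact_mod_cast hP1
  have hPle : (P:ℝ) ≤ (L:ℝ)^(2/5:ℝ) := by rw [hP]; exact floor_le (by positivity)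
  have hP2 : (P:ℝ)^2 ≤ (L:ℝ)^(4/5:ℝ) := by
    calc (P:ℝ)^2 ≤ ((L:ℝ)^(2/5:ℝ))^2 := by gcongr
      _ = _ := by rw [← rpow_natCast, ← rpow_mul hLp.le]; norm_num
  have hsmall : 8 ≤ (L:ℝ)^(1/10:ℝ) := by
    calc (8:ℝ) ≤ exp 8 := by linarith [add_one_le_exp (8:ℝ)]
      _ ≤ _ := exp_le_rpow_of hLp (by norm_num at hl60; linarith)
  set f : ℤ → ℂ := fun n => nit t n with hf
  have hf1 : ∀ n, ‖f n‖ ≤ 1 := fun n => (norm_nit _ _).le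
  set S := ∑ n ∈ Ioc (L:ℤ) L', f n with hS
  have hSe : ∑ n ∈ Ioc L L', nit t n = S := by
    rw [hS]
    refine sum_bij (fun n _ => (n:ℤ)) ?_ ?_ ?_ ?_
    · intro n hn; rw [mem_Ioc] at hn ⊢; omega
    · intro a _ b _ hab; exact_mod_cast hab
    · intro b hb; rw [mem_Ioc] at hb; exact ⟨b.toNat, by rw [mem_Ioc]; omega, by omega⟩
    · intro n _; rw [hf]; simp
  rw [hSe]
  have hseg : ∀ x ∈ seg P, 0 ≤ x ∧ x ≤ (P:ℤ) := fun x hx => by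
    unfold seg at hx; rw [mem_Ico] at hx; omega
  -- averaging over shifts by `xy`
  have hav : (P:ℝ)^2*‖S‖ ≤ ∑ n ∈ Ioc (L:ℤ) L', ‖∑ x ∈ seg P, ∑ y ∈ seg P, f (n + x * y)‖ +
      (P:ℝ)^2*(2*(P:ℝ)^2) := by
    have e1 : (P:ℂ)^2*S = ∑ n ∈ Ioc (L:ℤ) L', ∑ x ∈ seg P, ∑ y ∈ seg P, f (n + x * y) +
        ∑ x ∈ seg P, ∑ y ∈ seg P, (S - ∑ n ∈ Ioc (L:ℤ) L', f (n + x * y)) := by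
      simp only [sum_sub_distrib]
      rw [sum_comm (s := Ioc (L:ℤ) L')]
      have : ∀ x ∈ seg P, ∑ n ∈ Ioc (L:ℤ) L', ∑ y ∈ seg P, f (n + x * y) =
          ∑ y ∈ seg P, ∑ n ∈ Ioc (L:ℤ) L', f (n + x * y) := fun x _ => sum_comm
      rw [sum_congr rfl this]
      simp [card_seg]
      ring
    calc (P:ℝ)^2*‖S‖ = ‖(P:ℂ)^2*S‖ := by rw [norm_mul, norm_pow, Complex.norm_natCast]
      _ ≤ _ := by
        rw [e1]
        refine (norm_add_le _ _).trans (add_le_add (norm_sum_le _ _) ?_)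
        calc _ ≤ ∑ x ∈ seg P, ∑ y ∈ seg P, ‖S - ∑ n ∈ Ioc (L:ℤ) L', f (n + x * y)‖ :=
              (norm_sum_le _ _).trans (sum_le_sum fun x _ => norm_sum_le _ _)
          _ ≤ ∑ x ∈ seg P, ∑ y ∈ seg P, (2*(P:ℝ)^2) := by
              refine sum_le_sum fun x hx => sum_le_sum fun y hy => ?_
              obtain ⟨a, rfl⟩ := Int.eq_ofNat_of_zero_le (hseg x hx).1
              obtain ⟨b, rfl⟩ := Int.eq_ofNat_of_zero_le (hseg y hy).1
              have ha := (hseg _ hx).2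
              have hb := (hseg _ hy).2
              have := shift_bound f hf1 (a := L) (b := L') (by exact_mod_cast h1) (a * b)
              rw [← hS] at this
              push_cast at this
              refine this.trans ?_
              have ha' : (a:ℝ) ≤ P := by exact_mod_cast ha
              have hb' : (b:ℝ) ≤ P := by exact_mod_cast hb
              rw [sq]; gcongr
          _ = _ := by simp [card_seg]; ring
  have hterm : ∀ n ∈ Ioc (L:ℤ) L', ‖∑ x ∈ seg P, ∑ y ∈ seg P, f (n + x * y)‖ ≤
      (P:ℝ)^2*(L:ℝ)^(-(2/(k:ℝ)^60)) + (P:ℝ)^2*(2*(L:ℝ)^(-(1/5):ℝ)) := by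
    intro n hn
    rw [mem_Ioc] at hn
    have hn1 : (L:ℝ) ≤ n := by exact_mod_cast hn.1.le
    have hn2 : (n:ℝ) ≤ 2*L := by
      have : n ≤ 2*L := by omega
      exact_mod_cast this
    have hn0 : (0:ℝ) < n := by linarith
    have hW := W_bound hk hL hL0 ht1 ht2 hn1 hn2 hP
    set β : ℤ → ℤ → ℂ := fun x y => ee (bil (tcoef (5*k) t n) (mom (5*k) x) (mom (5*k) y)) with hβ
    have e1 : ∑ x ∈ seg P, ∑ y ∈ seg P, f (n + x * y) =
        nit t n * ∑ x ∈ seg P, ∑ y ∈ seg P, β x y +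
        ∑ x ∈ seg P, ∑ y ∈ seg P, (f (n + x * y) - nit t n * β x y) := by
      simp only [sum_sub_distrib, mul_sum]
      ring
    rw [e1]
    refine (norm_add_le _ _).trans (add_le_add ?_ ?_)
    · rw [norm_mul, norm_nit, one_mul]; exact hW
    · calc _ ≤ ∑ x ∈ seg P, ∑ y ∈ seg P, ‖f (n + x * y) - nit t n * β x y‖ :=
              (norm_sum_le _ _).trans (sum_le_sum fun x _ => norm_sum_le _ _)
        _ ≤ ∑ x ∈ seg P, ∑ y ∈ seg P, (2*(L:ℝ)^(-(1/5):ℝ)) := by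
            refine sum_le_sum fun x hx => sum_le_sum fun y hy => ?_
            have hx' := hseg x hx
            have hy' := hseg y hy
            have hx0 : (0:ℝ) ≤ x := by exact_mod_cast hx'.1
            have hy0 : (0:ℝ) ≤ y := by exact_mod_cast hy'.1
            have hx1 : (x:ℝ) ≤ P := by exact_mod_cast hx'.2
            have hy1 : (y:ℝ) ≤ P := by exact_mod_cast hy'.2
            have hxy : (x:ℝ) * y ≤ (L:ℝ)^(4/5:ℝ) := by
              calc (x:ℝ) * y ≤ P * P := by gcongr
                _ = (P:ℝ)^2 := by ring
                _ ≤ _ := hP2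
            have hr : (x:ℝ) * y / n ≤ (L:ℝ)^(-(1/5):ℝ) := by
              rw [div_le_iff₀ hn0]
              calc _ ≤ _ := hxy
                _ = (L:ℝ)^(-(1/5):ℝ) * L := by
                    nth_rewrite 3 [← rpow_one (L:ℝ)]
                    rw [← rpow_add hLp]; norm_num
                _ ≤ _ := by gcongr
            have hu : 2*((x:ℝ) * y) ≤ n := by
              have : (L:ℝ) = (L:ℝ)^(4/5:ℝ)*((L:ℝ)^(1/10:ℝ)*(L:ℝ)^(1/10:ℝ)) := by
                rw [← rpow_add hLp, ← rpow_add hLp]; norm_num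
              have h4 : 0 ≤ (L:ℝ)^(4/5:ℝ) := by positivity
              have h5 : 2 ≤ (L:ℝ)^(1/10:ℝ)*(L:ℝ)^(1/10:ℝ) := by nlinarith
              have h6 := mul_le_mul_of_nonneg_left h5 h4
              linarith
            have hT := taylor_term (K := 5*k) (t := t) hn0 (mul_nonneg hx'.1 hy'.1) hu
            have e2 : f (n + x * y) = nit t ((n:ℝ) + x * y) := by rw [hf]; push_cast; rfl
            rw [e2]
            refine hT.trans ?_
            calc _ ≤ (L:ℝ)^(k:ℝ)*(2*((L:ℝ)^(-(1/5):ℝ))^(5*k + 1)) := by gcongr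
              _ = 2*((L:ℝ)^(k:ℝ)*(L:ℝ)^(-(1/5)*((5*k + 1:ℕ):ℝ))) := by
                  rw [← rpow_natCast, ← rpow_mul hLp.le]; ring
              _ = _ := by
                  rw [← rpow_add hLp]
                  congr 2; push_cast; ring
        _ = _ := by simp [card_seg]; ring
  have hcard : (#(Ioc (L:ℤ) L'):ℝ) ≤ L := by
    rw [Int.card_Ioc]
    have : ((L':ℤ) - L).toNat ≤ L := by omega
    exact_mod_cast this
  have hmain : ‖S‖ ≤ L*(L:ℝ)^(-(2/(k:ℝ)^60)) + L*(2*(L:ℝ)^(-(1/5):ℝ)) + 2*(P:ℝ)^2 := by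
    have hPP : (0:ℝ) < (P:ℝ)^2 := by positivity
    refine le_of_mul_le_mul_left (hav.trans ?_) hPP
    calc _ ≤ L*((P:ℝ)^2*(L:ℝ)^(-(2/(k:ℝ)^60)) + (P:ℝ)^2*(2*(L:ℝ)^(-(1/5):ℝ))) +
          (P:ℝ)^2*(2*(P:ℝ)^2) := by
          gcongr
          refine (sum_le_sum hterm).trans ?_
          rw [sum_const, nsmul_eq_mul]
          gcongr
      _ = _ := by ring
  set δ : ℝ := 1/(k:ℝ)^60 with hδ
  have hk60 : (0:ℝ) < (k:ℝ)^60 := by positivity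
  have hδ1 : δ ≤ 1/20 := by
    have := k60 hk 0 (by norm_num); norm_num at this
    rw [hδ, div_le_div_iff₀ hk60 (by norm_num)]; linarith
  have hLδ : 2 ≤ (L:ℝ)^δ := by
    calc (2:ℝ) ≤ exp 1 := by linarith [add_one_le_exp (1:ℝ)]
      _ ≤ _ := exp_le_rpow_of hLp (by rw [hδ, div_mul_eq_mul_div, le_div_iff₀ hk60]; linarith)
  have hA : 2*(L*(L:ℝ)^(-(2/(k:ℝ)^60))) ≤ (L:ℝ)^(1 - δ) := by
    calc _ ≤ (L:ℝ)^δ*(L*(L:ℝ)^(-(2/(k:ℝ)^60))) := by gcongr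
      _ = (L:ℝ)^δ*((L:ℝ)^(1:ℝ)*(L:ℝ)^(-(2/(k:ℝ)^60))) := by rw [rpow_one]
      _ = _ := by
          rw [← rpow_add hLp, ← rpow_add hLp]
          congr 1; rw [hδ]; ring
  have hB : 8*(L:ℝ)^(4/5:ℝ) ≤ (L:ℝ)^(1 - δ) := by
    calc _ ≤ (L:ℝ)^(1/10:ℝ)*(L:ℝ)^(4/5:ℝ) := by gcongr
      _ = (L:ℝ)^(9/10:ℝ) := by rw [← rpow_add hLp]; norm_num
      _ ≤ _ := rpow_le_rpow_of_exponent_le hL0.le (by linarith)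
  have hC : L*(2*(L:ℝ)^(-(1/5):ℝ)) = 2*(L:ℝ)^(4/5:ℝ) := by
    have : (L:ℝ)^(4/5:ℝ) = (L:ℝ)^(1:ℝ)*(L:ℝ)^(-(1/5):ℝ) := by
      rw [← rpow_add hLp]; norm_num
    rw [this, rpow_one]; ring
  linarith

section
open Metric

/-! ### Logarithmic derivatives of analytic functions in a disc -/

lemma logderiv_bound {f : ℂ → ℂ} {R M : ℝ} (hR : 0 < R) (hM : 0 < M)
    (hf : DifferentiableOn ℂ f (ball 0 R)) (hne : ∀ z ∈ ball (0:ℂ) R, f z ≠ 0)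
    (hb : ∀ z ∈ ball (0:ℂ) R, ‖f z‖ ≤ exp M * ‖f 0‖) {z : ℂ} (hz : ‖z‖ ≤ R/2) :
    ‖deriv f z / f z‖ ≤ 24*M / R := by
  have h0 : (0:ℂ) ∈ ball (0:ℂ) R := mem_ball_self hR
  have hfd : DifferentiableOn ℂ (fun z => deriv f z / f z) (ball 0 R) :=
    (hf.deriv isOpen_ball).div hf hne
  obtain ⟨h, hh0, hh⟩ := hfd.isExactOn_ball.with_val_at 0 (0:ℂ)
  have hhd : DifferentiableOn ℂ h (ball 0 R) := fun z hz => (hh z hz).differentiableAt.differentiableWithinAt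
  have hconst : ∀ z ∈ ball (0:ℂ) R, f z * cexp (-h z) = f 0 := by
    intro z hz
    have hder : ∀ x ∈ ball (0:ℂ) R, HasDerivAt (fun z => f z * cexp (-h z)) 0 x := by
      intro x hx
      have h1 := (hf.differentiableAt (isOpen_ball.mem_nhds hx)).hasDerivAt.mul (hh x hx).neg.cexp
      convert! h1 using 1
      have := hne x hx
      simp only [Pi.neg_apply]
      field_simp
      ring
    have := (convex_ball (0:ℂ) R).is_const_of_fderivWithin_eq_zero (𝕜 := ℂ)
      (f := fun z => f z * cexp (-h z))
      (fun x hx => (hder x hx).differentiableAt.differentiableWithinAt)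
      (fun x hx => by
        rw [fderivWithin_of_isOpen isOpen_ball hx, (hder x hx).hasFDerivAt.fderiv]
        ext; simp) hz h0
    simpa [hh0] using this
  have hre : ∀ z ∈ ball (0:ℂ) R, (h z).re ≤ M := by
    intro z hz
    have e : ‖f z‖ = ‖f 0‖ * exp (h z).re := by
      rw [← hconst z hz, norm_mul, norm_exp, mul_assoc, ← exp_add]
      simp
    have hp : 0 < ‖f 0‖ := norm_pos_iff.2 (hne 0 h0)
    have := hb z hz
    rw [e, mul_comm] at this
    exact exp_le_exp.1 (le_of_mul_le_mul_right this hp)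
  have hbc : ∀ x : ℂ, ‖x‖ ≤ 3/4*R → ‖h x‖ ≤ 6*M := by
    intro x hx
    have hx' : x ∈ ball (0:ℂ) R := by rw [mem_ball_zero_iff]; linarith
    refine (Complex.borelCaratheodory_zero hM hhd hre hR hx' hh0).trans ?_
    rw [div_le_iff₀ (by linarith)]
    nlinarith
  have hzb : z ∈ ball (0:ℂ) R := by rw [mem_ball_zero_iff]; linarith
  have hsub : closedBall z (R/4) ⊆ ball 0 R := by
    intro x hx
    rw [mem_closedBall, dist_eq_norm] at hx
    rw [mem_ball_zero_iff]
    have := norm_add_le (x - z) z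
    rw [sub_add_cancel] at this
    linarith
  have hcau := Complex.norm_deriv_le_of_forall_mem_sphere_norm_le (c := z) (R := R/4) (C := 6*M) (f := h)
    (by positivity) ((hhd.mono hsub).diffContOnCl_ball subset_rfl) (fun x hx => hbc x (by
      rw [mem_sphere, dist_eq_norm] at hx
      have := norm_add_le (x - z) z
      rw [sub_add_cancel] at this
      linarith))
  rw [(hh z hzb).deriv] at hcau
  refine hcau.trans (le_of_eq ?_)
  field_simp
  norm_num

/-- Dividing out a zero in the inner disc halves the bound on the outer circle. -/
lemma divide_zero {f : ℂ → ℂ} {r B : ℝ} (hr : 0 < r) (hf : DiffContOnCl ℂ f (ball 0 r)) (hf0 : f 0 = 1)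
    (hB : ∀ z ∈ closedBall (0:ℂ) r, ‖f z‖ ≤ B) {ρ : ℂ} (hρ : ‖ρ‖ ≤ r/3) (hz : f ρ = 0) :
    ∃ g : ℂ → ℂ, DiffContOnCl ℂ g (ball 0 r) ∧ g 0 = 1 ∧ (∀ z ∈ closedBall (0:ℂ) r, ‖g z‖ ≤ B/2) ∧
      (∀ z, f z = (1 - z / ρ) * g z) ∧ deriv f 0 = deriv g 0 - 1/ρ := by
  have hρ0 : ρ ≠ 0 := by rintro rfl; rw [hf0] at hz; exact one_ne_zero hz
  have hρb : ρ ∈ ball (0:ℂ) r := by rw [mem_ball_zero_iff]; linarith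
  have hfac : ∀ z, f z = (1 - z / ρ)*(-ρ * dslope f ρ z) := by
    intro z
    have := sub_smul_dslope f ρ z
    rw [hz, sub_zero, smul_eq_mul] at this
    rw [← this]; field_simp; ring
  have hg : DiffContOnCl ℂ (fun z => -ρ * dslope f ρ z) (ball 0 r) := by
    have hd : DiffContOnCl ℂ (dslope f ρ) (ball 0 r) := by
      refine ⟨(Complex.differentiableOn_dslope (isOpen_ball.mem_nhds hρb)).2 hf.differentiableOn, ?_⟩
      refine (continuousOn_dslope (mem_of_superset (isOpen_ball.mem_nhds hρb) subset_closure)).2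
        ⟨hf.continuousOn, hf.differentiableAt isOpen_ball hρb⟩
    exact hd.const_smul (-ρ)
  have hg0 : -ρ * dslope f ρ 0 = 1 := by have := hfac 0; rw [hf0] at this; simpa using this.symm
  refine ⟨_, hg, hg0, ?_, hfac, ?_⟩
  · intro z hzz
    refine Complex.norm_le_of_forall_mem_frontier_norm_le isBounded_ball hg (C := B/2) ?_
      (by rwa [closure_ball _ hr.ne'])
    intro x hx
    rw [frontier_ball _ hr.ne', mem_sphere_zero_iff_norm] at hx
    have h1 := hB x (by rw [mem_closedBall_zero_iff]; exact hx.le)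
    rw [hfac x, norm_mul] at h1
    have h2 : 2 ≤ ‖1 - x / ρ‖ := by
      have h3 : 3 ≤ ‖x / ρ‖ := by
        rw [norm_div, hx, le_div_iff₀ (norm_pos_iff.2 hρ0)]; linarith
      have := norm_sub_norm_le (x / ρ) 1
      rw [norm_one, norm_sub_rev] at this
      linarith
    have := norm_nonneg (-ρ * dslope f ρ x)
    nlinarith
  · have hgd : HasDerivAt (fun z => -ρ * dslope f ρ z) (deriv (fun z => -ρ * dslope f ρ z) 0) 0 :=
      (hg.differentiableAt isOpen_ball (mem_ball_self hr)).hasDerivAt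
    have h1 : HasDerivAt (fun z : ℂ => 1 - z / ρ) (-(1/ρ)) 0 :=
      ((hasDerivAt_id (0:ℂ)).div_const ρ).const_sub 1
    have h2 := h1.mul hgd
    have h3 : HasDerivAt f (-(1/ρ)*(-ρ * dslope f ρ 0) + (1 - 0/ρ) * deriv (fun z => -ρ * dslope f ρ z) 0) 0 :=
      h2.congr_of_eventuallyEq (.of_forall hfac)
    rw [h3.deriv, hg0]; ring

/-- Zeros to the left of the centre can only increase the real part of the logarithmic
derivative there.  Each division by a factor `1 - z / ρ` halves the maximum, so the process of
removing zeros terminates. -/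
lemma landau_lower {r M : ℝ} (hr : 0 < r) (hM : 0 < M) (n:ℕ) : ∀ (f : ℂ → ℂ) (B:ℝ),
    DiffContOnCl ℂ f (ball 0 r) → f 0 = 1 → (∀ z ∈ closedBall (0:ℂ) r, ‖f z‖ ≤ B) → B < 2^n →
    B ≤ exp M → (∀ z, ‖z‖ ≤ r/3 → f z = 0 → z.re ≤ 0) → -(72*M / r) ≤ (deriv f 0).re := by
  induction n with
  | zero =>
    intro f B _ hf0 hB hn
    have := hB 0 (by simp [hr.le])
    rw [hf0, norm_one] at this
    norm_num at hn; linarith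
  | succ n ih =>
    intro f B hf hf0 hB hn hBM hz
    by_cases hex : ∃ ρ : ℂ, ‖ρ‖ ≤ r/3 ∧ f ρ = 0
    · obtain ⟨ρ, hρ, hfρ⟩ := hex
      obtain ⟨g, hg, hg0, hgB, hfac, hd⟩ := divide_zero hr hf hf0 hB hρ hfρ
      have hB0 : 0 ≤ B := (norm_nonneg _).trans (hB 0 (by simp [hr.le]))
      have := ih g (B/2) hg hg0 hgB (by rw [pow_succ] at hn; linarith) (by linarith)
        (fun z h1 h2 => hz z h1 (by rw [hfac, h2, mul_zero]))
      rw [hd, sub_re]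
      have h3 : (1/ρ).re ≤ 0 := by
        rw [one_div, Complex.inv_re]
        exact div_nonpos_of_nonpos_of_nonneg (hz ρ hρ hfρ) (Complex.normSq_nonneg _)
      linarith
    · push Not at hex
      have h1 := logderiv_bound (f := f) (R := r/3) (M := M) (by positivity) hM
        (hf.differentiableOn.mono (ball_subset_ball (by linarith)))
        (fun z hz => hex z (by rw [mem_ball_zero_iff] at hz; exact hz.le))
        (fun z hz => by
          rw [hf0, norm_one, mul_one]
          refine (hB z ?_).trans hBM
          rw [mem_ball_zero_iff] at hz; rw [mem_closedBall_zero_iff]; linarith) (z := 0) (by simp; positivity)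
      rw [hf0, div_one] at h1
      have h2 := (abs_le.1 ((abs_re_le_norm (deriv f 0)).trans h1)).1
      calc -(72*M / r) = -(24*M / (r/3)) := by field_simp; norm_num
        _ ≤ _ := h2

lemma exists_two_pow_gt (B:ℝ) : ∃ n : ℕ, B < 2^n := pow_unbounded_of_one_lt B (by norm_num)

lemma landau_lower' {r M : ℝ} (hr : 0 < r) (hM : 0 < M) {f : ℂ → ℂ}
    (hf : DiffContOnCl ℂ f (ball 0 r)) (hf0 : f 0 = 1) (hB : ∀ z ∈ closedBall (0:ℂ) r, ‖f z‖ ≤ exp M)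
    (hz : ∀ z, ‖z‖ ≤ r/3 → f z = 0 → z.re ≤ 0) : -(72*M / r) ≤ (deriv f 0).re := by
  obtain ⟨n, hn⟩ := exists_two_pow_gt (exp M)
  exact landau_lower hr hM n f _ hf hf0 hB hn le_rfl hz

lemma landau_lower_zero {r M : ℝ} (hr : 0 < r) (hM : 0 < M) {f : ℂ → ℂ}
    (hf : DiffContOnCl ℂ f (ball 0 r)) (hf0 : f 0 = 1) (hB : ∀ z ∈ closedBall (0:ℂ) r, ‖f z‖ ≤ exp M)
    (hz : ∀ z, ‖z‖ ≤ r/3 → f z = 0 → z.re ≤ 0) {x : ℝ} (hx : 0 < x) (hxr : x ≤ r/3) (hfx : f (-x:ℝ) = 0) :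
    -(72*M / r) + 1/x ≤ (deriv f 0).re := by
  obtain ⟨g, hg, hg0, hgB, hfac, hd⟩ := divide_zero hr hf hf0 hB (ρ := ((-x:ℝ):ℂ))
    (by rw [norm_real, norm_eq_abs, abs_neg, abs_of_pos hx]; exact hxr) hfx
  have := landau_lower' hr hM hg hg0 (fun z hz => (hgB z hz).trans (by linarith [exp_pos M]))
    (fun z h1 h2 => hz z h1 (by rw [hfac, h2, mul_zero]))
  rw [hd, sub_re, show (1/((-x:ℝ):ℂ)) = ((-(1/x):ℝ):ℂ) by push_cast; field_simp, ofReal_re]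
  linarith

/-! ### Truncating the zeta series -/

lemma cpow_hasDerivAt {x : ℝ} (hx : 0 < x) (r:ℂ) :
    HasDerivAt (fun y : ℝ => (y:ℂ)^r) (r*(x:ℂ)^(r - 1)) x := by
  rcases eq_or_ne r 0 with rfl | hr
  · simpa using hasDerivAt_const x (1:ℂ)
  · exact hasDerivAt_ofReal_cpow_const hx.ne' hr

/-- `(s - 1)` times the discrepancy between `(n + 1) ^ (-s)` and `∫ x ^ (-s)` over `[n, n + 1]`. -/
def tau (s:ℂ) (n:ℕ) : ℂ :=
  (s - 1)*((n + 1:ℕ):ℂ)^(-s) + ((n + 1:ℕ):ℂ)^(1 - s) - (n:ℂ)^(1 - s)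

lemma tau_aux {s : ℂ} {n : ℕ} (hn : 1 ≤ n) {B B' : ℝ → ℝ} (hB0 : B n = 0)
    (hB : ∀ x ∈ Set.Icc (n:ℝ) (n + 1), HasDerivAt B (B' x) x)
    (hBB : ∀ x ∈ Set.Ico (n:ℝ) (n + 1), ‖s - 1‖ * ‖s‖ * x^(-s.re - 1) ≤ B' x) :
    ‖tau s n‖ ≤ B (n + 1) := by
  have hn0 : (0:ℝ) < n := by exact_mod_cast hn
  have hd : ∀ x ∈ Set.Icc (n:ℝ) (n + 1), HasDerivAt
      (fun x : ℝ => ((x - n:ℝ):ℂ)*(s - 1)*(x:ℂ)^(-s) + (x:ℂ)^(1 - s) - (n:ℂ)^(1 - s))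
      (-((x - n:ℝ):ℂ)*(s - 1) * s*(x:ℂ)^(-s - 1)) x := by
    intro x hx
    have hx0 : 0 < x := by linarith [hx.1]
    have h1 : HasDerivAt (fun x : ℝ => ((x - n:ℝ):ℂ)) 1 x := by
      have : HasDerivAt (fun x : ℝ => x - (n:ℝ)) 1 x := (hasDerivAt_id x).sub_const _
      simpa using this.ofReal_comp
    have h2 := ((h1.mul_const (s - 1)).mul (cpow_hasDerivAt hx0 (-s))).add (cpow_hasDerivAt hx0 (1 - s))
    have h3 := h2.sub_const ((n:ℂ)^(1 - s))
    convert! h3 using 1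
    rw [show 1 - s - 1 = -s by ring]
    ring
  have := image_norm_le_of_norm_deriv_right_le_deriv_boundary' (a := (n:ℝ)) (b := n + 1)
    (f := fun x : ℝ => ((x - n:ℝ):ℂ)*(s - 1)*(x:ℂ)^(-s) + (x:ℂ)^(1 - s) - (n:ℂ)^(1 - s))
    (fun x hx => (hd x hx).continuousAt.continuousWithinAt)
    (fun x hx => (hd x ⟨hx.1, hx.2.le⟩).hasDerivWithinAt) (B := B) (B' := B')
    (by rw [hB0]; simp) (fun x hx => (hB x hx).continuousAt.continuousWithinAt)
    (fun x hx => (hB x ⟨hx.1, hx.2.le⟩).hasDerivWithinAt)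
    (fun x hx => by
      have hx0 : 0 < x := by linarith [hx.1]
      refine le_trans ?_ (hBB x hx)
      rw [norm_mul, norm_mul, norm_mul, norm_neg, norm_real, norm_eq_abs,
        norm_cpow_eq_rpow_re_of_pos hx0, sub_re, neg_re, one_re,
        abs_of_nonneg (by linarith [hx.1])]
      gcongr
      nlinarith [norm_nonneg (s - 1), hx.2])
    (x := n + 1) ⟨by linarith, le_rfl⟩
  refine le_trans (le_of_eq ?_) this
  unfold tau
  push_cast
  simp

lemma tau_le {s : ℂ} (hs : 0 < s.re) {n : ℕ} (hn : 1 ≤ n) :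
    ‖tau s n‖ ≤ ‖s - 1‖ * ‖s‖ / s.re*((n:ℝ)^(-s.re) - ((n:ℝ) + 1)^(-s.re)) := by
  have hn0 : (0:ℝ) < n := by exact_mod_cast hn
  refine tau_aux hn (B := fun x => ‖s - 1‖ * ‖s‖ / s.re*((n:ℝ)^(-s.re) - x^(-s.re)))
    (B' := fun x => ‖s - 1‖ * ‖s‖ * x^(-s.re - 1)) (by simp) ?_ (fun x _ => le_rfl)
  intro x hx
  have h1 := (hasDerivAt_rpow_const (x := x) (p := -s.re) (Or.inl (by linarith [hx.1]))).const_sub ((n:ℝ)^(-s.re))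
  have h2 := h1.const_mul (‖s - 1‖ * ‖s‖ / s.re)
  convert! h2 using 1
  field_simp

lemma tau_le' {s : ℂ} (hs : 0 < s.re) {n : ℕ} (hn : 1 ≤ n) :
    ‖tau s n‖ ≤ ‖s - 1‖ * ‖s‖ * (n:ℝ)^(-s.re - 1) := by
  have hn0 : (0:ℝ) < n := by exact_mod_cast hn
  have := tau_aux (s := s) hn (B := fun x => ‖s - 1‖ * ‖s‖ * (n:ℝ)^(-s.re - 1)*(x - n))
    (B' := fun x => ‖s - 1‖ * ‖s‖ * (n:ℝ)^(-s.re - 1)) (by simp)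
    (fun x _ => by simpa using ((hasDerivAt_id x).sub_const (n:ℝ)).const_mul _)
    (fun x hx => mul_le_mul_of_nonneg_left
      (rpow_le_rpow_of_nonpos hn0 hx.1 (by linarith)) (by positivity))
  simpa using this

/-- Partial summation, continued analytically to the half-plane `Re s > 0`. -/
lemma zeta1_sub_eq {s : ℂ} (hs : 0 < s.re) {v : ℕ} (hv : 1 ≤ v) :
    riemannZeta₁ s - (s - 1) * ∑ n ∈ Icc 1 v, (n:ℂ)^(-s) - (v:ℂ)^(1 - s) = ∑' n : ℕ, tau s (v + n) := by
  set ε := s.re/2 with hε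
  have hε0 : 0 < ε := by positivity
  set K := ‖s‖ + 3 with hK
  set U : Set ℂ := {z | ε < z.re} ∩ ball 0 K with hU
  have hUo : IsOpen U := (isOpen_lt continuous_const continuous_re).inter isOpen_ball
  have hUc : IsPreconnected U := ((convex_halfSpace_re_gt ε).inter (convex_ball 0 K)).isPreconnected
  have hbnd : ∀ (n:ℕ) (z:ℂ), z ∈ U → ‖tau z (v + n)‖ ≤ (K + 1) * K*((v + n:ℕ):ℝ)^(-ε - 1) := by
    intro n z hz
    have hz1 : ε < z.re := hz.1
    have hz2 : ‖z‖ < K := by simpa using hz.2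
    refine (tau_le' (hε0.trans hz1) (by omega)).trans ?_
    have h1 : (1:ℝ) ≤ (v + n:ℕ) := by exact_mod_cast (by omega : 1 ≤ v + n)
    have h2 : ‖z - 1‖ ≤ K + 1 := by
      have := norm_sub_le z 1; rw [norm_one] at this; linarith
    gcongr
  have hsum : Summable (fun n : ℕ => (K + 1) * K*((v + n:ℕ):ℝ)^(-ε - 1)) := by
    refine Summable.mul_left _ ?_
    have := (summable_nat_rpow (p := -ε - 1)).2 (by linarith)
    have h2 := (summable_nat_add_iff v).2 this
    simpa [add_comm] using h2
  have hcp : ∀ n : ℕ, 1 ≤ n → ∀ g : ℂ → ℂ, Differentiable ℂ g → Differentiable ℂ (fun z => (n:ℂ)^(g z)) := by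
    intro n hn g hg
    exact hg.const_cpow (Or.inl (by exact_mod_cast (by omega : n ≠ 0)))
  have htd : ∀ n, 1 ≤ n → Differentiable ℂ (fun z => tau z n) := by
    intro n hn
    unfold tau
    have h1 := hcp (n + 1) (by omega) (fun z => -z) (by fun_prop)
    have h2 := hcp (n + 1) (by omega) (fun z => 1 - z) (by fun_prop)
    have h3 := hcp n hn (fun z => 1 - z) (by fun_prop)
    exact (((differentiable_id.sub_const 1).mul h1).add h2).sub h3
  have hR : DifferentiableOn ℂ (fun z => ∑' n : ℕ, tau z (v + n)) U :=
    Complex.differentiableOn_tsum_of_summable_norm hsum (fun n => (htd _ (by omega)).differentiableOn) hUo hbnd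
  have hLd : Differentiable ℂ (fun z => riemannZeta₁ z - (z - 1) * ∑ n ∈ Icc 1 v, (n:ℂ)^(-z) - (v:ℂ)^(1 - z)) := by
    refine (differentiable_riemannZeta₁.sub ((differentiable_id.sub_const 1).mul ?_)).sub
      (hcp v hv (fun z => 1 - z) (by fun_prop))
    exact Differentiable.fun_sum fun n hn => hcp n (by rw [mem_Icc] at hn; omega) (fun z => -z) (by fun_prop)
  -- the base point of the identity theorem
  set z0 : ℂ := ((max 2 s.re:ℝ):ℂ) with hz0d
  have hsre : s.re ≤ ‖s‖ := re_le_norm s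
  have hz0U : z0 ∈ U := by
    refine ⟨?_, ?_⟩
    · change ε < z0.re
      rw [hz0d, ofReal_re]
      have := le_max_right 2 s.re
      linarith
    · rw [mem_ball_zero_iff, hz0d, norm_real, norm_eq_abs, abs_of_nonneg (by positivity)]
      exact max_lt (by have := norm_nonneg s; linarith) (by linarith)
  have heq : ∀ z : ℂ, 1 < z.re → riemannZeta₁ z - (z - 1) * ∑ n ∈ Icc 1 v, (n:ℂ)^(-z) - (v:ℂ)^(1 - z)
      = ∑' n : ℕ, tau z (v + n) := by
    intro z hz
    have hz1 : z ≠ 1 := by rintro rfl; simp at hz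
    have hpart : ∀ N : ℕ, ∑ n ∈ range N, tau z (v + n) =
        (z - 1)*(∑ n ∈ range (v + N + 1), 1/(n:ℂ)^z - ∑ n ∈ Icc 1 v, (n:ℂ)^(-z)) +
          ((v + N:ℕ):ℂ)^(1 - z) - (v:ℂ)^(1 - z) := by
      intro N
      induction N with
      | zero =>
        have : ∑ n ∈ range (v + 0 + 1), 1/(n:ℂ)^z = ∑ n ∈ Icc 1 v, (n:ℂ)^(-z) := by
          rw [add_zero, sum_range_succ', Nat.cast_zero, Complex.zero_cpow (by rintro rfl; simp at hz; linarith), div_zero, add_zero,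
            range_eq_Ico, sum_Ico_add' (fun n : ℕ => 1/(n:ℂ)^z) 0 v 1]
          exact sum_congr (by ext x; simp only [mem_Ico, mem_Icc]; omega) fun n _ => by rw [cpow_neg, one_div]
        rw [this]; simp
      | succ N ih =>
        rw [sum_range_succ, ih, show v + (N + 1) + 1 = (v + N + 1) + 1 by ring, sum_range_succ _ (v + N + 1)]
        unfold tau
        rw [cpow_neg, one_div, show v + (N + 1) = v + N + 1 by ring]
        ring
    have hS : Summable (fun n => tau z (v + n)) := by
      refine Summable.of_norm_bounded (g := fun n : ℕ => ‖z - 1‖ * ‖z‖ * ((v + n:ℕ):ℝ)^(-z.re - 1)) ?_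
        (fun n => tau_le' (by linarith) (by omega))
      refine Summable.mul_left _ ?_
      have := (summable_nat_rpow (p := -z.re - 1)).2 (by linarith)
      have h2 := (summable_nat_add_iff v).2 this
      simpa [add_comm] using h2
    refine tendsto_nhds_unique ?_ hS.hasSum.tendsto_sum_nat
    simp_rw [hpart]
    have h1 : Tendsto (fun N : ℕ => ∑ n ∈ range (v + N + 1), 1/(n:ℂ)^z) atTop (nhds (riemannZeta z)) := by
      rw [zeta_eq_tsum_one_div_nat_cpow hz]
      have := (Complex.summable_one_div_nat_cpow.2 hz).hasSum.tendsto_sum_nat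
      refine this.comp ?_
      exact tendsto_atTop_mono (fun N => by simp only [id]; omega) tendsto_id
    have h2 : Tendsto (fun N : ℕ => ((v + N:ℕ):ℂ)^(1 - z)) atTop (nhds 0) := by
      rw [tendsto_zero_iff_norm_tendsto_zero]
      have h3 : Tendsto (fun N : ℕ => ((v + N:ℕ):ℝ)^(-(z.re - 1))) atTop (nhds 0) :=
        (tendsto_rpow_neg_atTop (by linarith : 0 < z.re - 1)).comp
          (tendsto_natCast_atTop_atTop.comp (tendsto_atTop_mono (fun N => by simp) tendsto_id))
      refine h3.congr fun N => ?_
      rw [norm_natCast_cpow_of_pos (by omega)]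
      congr 1; simp
    have h3 := (((h1.sub_const (∑ n ∈ Icc 1 v, (n:ℂ)^(-z))).const_mul (z - 1)).add h2).sub_const ((v:ℂ)^(1 - z))
    convert! h3 using 2
    have : riemannZeta₁ z = (z - 1) * riemannZeta z := by
      rw [riemannZeta_eq_inv_sub_mul hz1, ← mul_assoc]
      have : z - 1 ≠ 0 := sub_ne_zero.2 hz1
      field_simp
    rw [this]; ring
  have hev : (fun z => riemannZeta₁ z - (z - 1) * ∑ n ∈ Icc 1 v, (n:ℂ)^(-z) - (v:ℂ)^(1 - z)) =ᶠ[nhds z0]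
      (fun z => ∑' n : ℕ, tau z (v + n)) := by
    have : ∀ᶠ z : ℂ in nhds z0, 1 < z.re := by
      refine (isOpen_lt continuous_const continuous_re).mem_nhds ?_
      change 1 < z0.re
      rw [hz0d, ofReal_re]
      have := le_max_left 2 s.re
      linarith
    filter_upwards [this] with z hz using heq z hz
  have hsU : s ∈ U := ⟨by change ε < s.re; linarith, by rw [mem_ball_zero_iff]; linarith⟩
  exact (hLd.differentiableOn.analyticOnNhd hUo).eqOn_of_preconnected_of_eventuallyEq
    (hR.analyticOnNhd hUo) hUc hz0U hev hsU

/-- The tail of the zeta series beyond `v`, continued analytically. -/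
def ztail (s:ℂ) (v:ℕ) : ℂ := riemannZeta s - ∑ n ∈ Icc 1 v, (n:ℂ)^(-s)

lemma ztail_bound {s : ℂ} (hs : 0 < s.re) (hs1 : s ≠ 1) {v : ℕ} (hv : 1 ≤ v) :
    ‖ztail s v - (v:ℂ)^(1 - s) / (s - 1)‖ ≤ ‖s‖ / s.re*(v:ℝ)^(-s.re) := by
  have h0 : s - 1 ≠ 0 := sub_ne_zero.2 hs1
  have hz := zeta1_sub_eq hs hv
  have e : ztail s v - (v:ℂ)^(1 - s) / (s - 1) = (∑' n : ℕ, tau s (v + n)) / (s - 1) := by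
    rw [← hz, ztail, riemannZeta_eq_inv_sub_mul hs1]
    field_simp
  rw [e, norm_div, div_le_iff₀ (norm_pos_iff.2 h0)]
  refine (tsum_of_norm_bounded (g := fun n : ℕ => ‖s - 1‖ * ‖s‖ / s.re*(((v + n:ℕ):ℝ)^(-s.re) - ((v + (n + 1):ℕ):ℝ)^(-s.re)))
    (a := ‖s - 1‖ * ‖s‖ / s.re*((v:ℝ)^(-s.re))) ?_ (fun n => ?_)).trans (le_of_eq (by ring))
  · refine HasSum.mul_left _ ?_
    have hlim : Tendsto (fun N : ℕ => ((v + N:ℕ):ℝ)^(-s.re)) atTop (nhds 0) :=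
      (tendsto_rpow_neg_atTop hs).comp
        (tendsto_natCast_atTop_atTop.comp (tendsto_atTop_mono (fun N => by simp) tendsto_id))
    rw [hasSum_iff_tendsto_nat_of_nonneg]
    · simp_rw [sum_range_sub' (fun n => ((v + n:ℕ):ℝ)^(-s.re))]
      simpa using hlim.const_sub ((v:ℝ)^(-s.re))
    · intro n
      have : (0:ℝ) < (v + n:ℕ) := by exact_mod_cast (by omega : 0 < v + n)
      rw [sub_nonneg]
      exact rpow_le_rpow_of_nonpos this (by push_cast; linarith) (by linarith)
  · have := tau_le hs (n := v + n) (by omega)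
    push_cast at this ⊢
    rwa [← add_assoc]

/-! ### Tails of the zeta series near the line `Re s = 1` -/

lemma abel_bound {a : ℕ → ℂ} {b : ℕ → ℝ} {L : ℕ} {S : ℝ} (hb : ∀ n, L ≤ n → b (n + 1) ≤ b n)
    (hb0 : ∀ n, L ≤ n → 0 ≤ b n) {L' : ℕ} (h : L ≤ L')
    (hS : ∀ m, L ≤ m → m ≤ L' → ‖∑ n ∈ Ioc L m, a n‖ ≤ S) :
    ‖∑ n ∈ Ioc L L', (b n : ℂ) * a n‖ ≤ b L * S := by
  have key : ∀ m, L ≤ m → m ≤ L' →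
      ‖∑ n ∈ Ioc L m, (b n : ℂ) * a n - (b m : ℂ) * ∑ n ∈ Ioc L m, a n‖ ≤ S*(b L - b m) := by
    intro m hm
    induction m, hm using Nat.le_induction with
    | base => intro _; simp
    | succ m hm ih =>
      intro hm'
      have e : Ioc L (m + 1) = insert (m + 1) (Ioc L m) := by
        ext x; simp only [mem_Ioc, mem_insert]; omega
      have hnot : m + 1 ∉ Ioc L m := by simp
      rw [e, sum_insert hnot, sum_insert hnot]
      have e2 : ((b (m + 1):ℂ) * a (m + 1) + ∑ n ∈ Ioc L m, (b n : ℂ) * a n -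
          (b (m + 1):ℂ)*(a (m + 1) + ∑ n ∈ Ioc L m, a n)) =
          (∑ n ∈ Ioc L m, (b n : ℂ) * a n - (b m : ℂ) * ∑ n ∈ Ioc L m, a n) +
          ((b m - b (m + 1):ℝ):ℂ) * ∑ n ∈ Ioc L m, a n := by push_cast; ring
      rw [e2]
      refine (norm_add_le _ _).trans ?_
      rw [norm_mul, norm_real, norm_eq_abs, abs_of_nonneg (by linarith [hb m hm])]
      have h1 := ih (by omega)
      have h2 := mul_le_mul_of_nonneg_left (hS m hm (by omega)) (by linarith [hb m hm] : 0 ≤ b m - b (m + 1))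
      nlinarith
  have h1 := key L' h le_rfl
  have h2 := mul_le_mul_of_nonneg_left (hS L' h le_rfl) (hb0 L' h)
  calc _ = ‖(∑ n ∈ Ioc L L', (b n : ℂ) * a n - (b L' : ℂ) * ∑ n ∈ Ioc L L', a n) + (b L' : ℂ) * ∑ n ∈ Ioc L L', a n‖ := by
        rw [sub_add_cancel]
    _ ≤ S*(b L - b L') + b L' * S := by
        refine (norm_add_le _ _).trans (add_le_add h1 ?_)
        rw [norm_mul, norm_real, norm_eq_abs, abs_of_nonneg (hb0 L' h)]
        exact h2
    _ = _ := by ring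

lemma cpow_eq_nit {n : ℕ} (hn : 1 ≤ n) (s:ℂ) : (n:ℂ)^(-s) = (((n:ℝ)^(-s.re):ℝ):ℂ) * nit (-s.im) n := by
  have hn0 : (0:ℝ) < n := by exact_mod_cast hn
  have hnc : (n:ℂ) ≠ 0 := by exact_mod_cast hn0.ne'
  rw [cpow_def_of_ne_zero hnc, rpow_def_of_pos hn0, nit, ofReal_exp, ← Complex.exp_add,
    ← natCast_log]
  congr 1
  conv_lhs => rw [← Complex.re_add_im s]
  push_cast
  ring

lemma block_bound {k : ℕ} (hk : 2 ≤ k) {L L' : ℕ} (hL : (k:ℝ)^60 ≤ log L) (h1 : L ≤ L')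
    (h2 : L' ≤ 2*L) {s : ℂ} (hs : 0 ≤ s.re) (ht1 : (L:ℝ)^(3/4:ℝ) ≤ |s.im|) (ht2 : |s.im| ≤ (L:ℝ)^(k:ℝ)) :
    ‖∑ n ∈ Ioc L L', (n:ℂ)^(-s)‖ ≤ (L:ℝ)^(1 - 1/(k:ℝ)^60 - s.re) := by
  have hLp : (0:ℝ) < L := by
    rcases Nat.eq_zero_or_pos L with h | h
    · subst h
      have : (0:ℝ) < (k:ℝ)^60 := by positivity
      simp at hL; linarith
    · exact_mod_cast h
  have e : ∑ n ∈ Ioc L L', (n:ℂ)^(-s) = ∑ n ∈ Ioc L L', (((n:ℝ)^(-s.re):ℝ):ℂ) * nit (-s.im) n :=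
    sum_congr rfl fun n hn => cpow_eq_nit (by rw [mem_Ioc] at hn; omega) s
  rw [e]
  refine (abel_bound (b := fun n => (n:ℝ)^(-s.re)) (S := (L:ℝ)^(1 - 1/(k:ℝ)^60)) ?_ ?_ h1 ?_).trans (le_of_eq ?_)
  · intro n hn
    have : (0:ℝ) < n := hLp.trans_le (by exact_mod_cast hn)
    exact rpow_le_rpow_of_nonpos this (by push_cast; linarith) (by linarith)
  · intro n _; positivity
  · intro m hm hm'
    exact zeta_sum_bound hk hL hm (by omega) (by rwa [abs_neg]) (by rwa [abs_neg])
  · rw [← rpow_add hLp]; congr 1; ring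

lemma ztail_split {s : ℂ} {v v' : ℕ} (h : v ≤ v') : ztail s v = ∑ n ∈ Ioc v v', (n:ℂ)^(-s) + ztail s v' := by
  unfold ztail
  have e : Icc 1 v' = Icc 1 v ∪ Ioc v v' := by ext x; simp only [mem_union, mem_Icc, mem_Ioc]; omega
  have hd : Disjoint (Icc 1 v) (Ioc v v') := by
    rw [disjoint_left]; intro x; simp only [mem_Icc, mem_Ioc]; omega
  rw [e, sum_union hd]; ring

lemma ztail_main_aux {k : ℕ} (hk : 2 ≤ k) {s : ℂ} (hs : 1 - 1/(2*(k:ℝ)^60) ≤ s.re) (hs2 : s.re ≤ 2)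
    (ht : 2 ≤ |s.im|) (J:ℕ) : ∀ v : ℕ, (k:ℝ)^60 ≤ log v → |s.im| ≤ (v:ℝ)^(k:ℝ) →
      |s.im| < (2^J * v:ℝ)^(3/4:ℝ) →
      ‖ztail s v‖ ≤ (v:ℝ)^(1 - s.re) / |s.im| + (3*J + 4)*(v:ℝ)^(-(1/(2*(k:ℝ)^60))) := by
  have hkr : (2:ℝ) ≤ k := by exact_mod_cast hk
  have hk60 : (0:ℝ) < (k:ℝ)^60 := by positivity
  set ρ : ℝ := 1/(2*(k:ℝ)^60) with hρ
  have hρ0 : 0 < ρ := by positivity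
  have hρ1 : ρ ≤ 1/100 := by
    have := k60 hk 0 (by norm_num); norm_num at this
    rw [hρ]
    exact one_div_le_one_div_of_le (by norm_num) (by linarith)
  have hρ2 : 1/(k:ℝ)^60 = 2*ρ := by rw [hρ]; field_simp
  have ht0 : 0 < |s.im| := by linarith
  have hsre : 0 < s.re := by linarith
  have hs1 : s ≠ 1 := by rintro rfl; simp at ht; linarith
  -- the case where `v` is already large compared with the height
  have base : ∀ v : ℕ, (k:ℝ)^60 ≤ log v → |s.im| < (v:ℝ)^(3/4:ℝ) →
      ‖ztail s v‖ ≤ (v:ℝ)^(1 - s.re) / |s.im| + 4*(v:ℝ)^(-ρ) := by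
    intro v hv hvt
    have hv1 : (1:ℝ) < v := by
      by_contra hc; push Not at hc
      have := log_nonpos (Nat.cast_nonneg v) hc; linarith
    have hv0 : (0:ℝ) < v := by linarith
    have hb := ztail_bound hsre hs1 (v := v) (by exact_mod_cast hv1.le)
    have e : ztail s v = (v:ℂ)^(1 - s) / (s - 1) + (ztail s v - (v:ℂ)^(1 - s) / (s - 1)) := by ring
    rw [e]
    refine (norm_add_le _ _).trans (add_le_add ?_ (hb.trans ?_))
    · rw [norm_div, norm_natCast_cpow_of_pos (by exact_mod_cast hv0), sub_re, one_re]
      gcongr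
      have := abs_im_le_norm (s - 1)
      simpa using this
    · have h1 : ‖s‖ / s.re ≤ 4*|s.im| := by
        rw [div_le_iff₀ hsre]
        have := norm_le_abs_re_add_abs_im s
        rw [abs_of_pos hsre] at this
        nlinarith
      calc _ ≤ 4*(v:ℝ)^(3/4:ℝ)*(v:ℝ)^(-s.re) := by
            gcongr; linarith
        _ = 4*(v:ℝ)^(3/4 - s.re) := by rw [mul_assoc, ← rpow_add hv0]; rfl
        _ ≤ _ := by
            gcongr
            · exact hv1.le
            · linarith
  induction J with
  | zero => intro v hv _ hvt; simpa using base v hv (by simpa using hvt)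
  | succ J ih =>
    intro v hv hvk hvt
    have hv1 : (1:ℝ) < v := by
      by_contra hc; push Not at hc
      have := log_nonpos (Nat.cast_nonneg v) hc; linarith
    have hv0 : (0:ℝ) < v := by linarith
    rcases lt_or_ge |s.im| ((v:ℝ)^(3/4:ℝ)) with hlt | hge
    · refine (base v hv hlt).trans ?_
      gcongr
      push_cast; linarith [Nat.cast_nonneg (α := ℝ) J]
    · have h2v : ((2*v:ℕ):ℝ) = 2*v := by push_cast; ring
      have h1 := ih (2*v) (hv.trans (by rw [h2v]; exact log_le_log hv0 (by linarith)))
        (hvk.trans (by rw [h2v]; gcongr; linarith)) (by rw [h2v]; convert hvt using 2; ring)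
      rw [h2v] at h1
      have hbl := block_bound hk hv (by omega : v ≤ 2*v) le_rfl hsre.le hge hvk
      rw [ztail_split (by omega : v ≤ 2*v)]
      refine (norm_add_le _ _).trans ?_
      have e1 : (v:ℝ)^(1 - 1/(k:ℝ)^60 - s.re) ≤ (v:ℝ)^(-ρ) := by
        gcongr
        · exact hv1.le
        · rw [hρ2]; linarith
      have e2 : (2*v:ℝ)^(1 - s.re) / |s.im| ≤ 2*(v:ℝ)^(-ρ) := by
        rw [div_le_iff₀ ht0]
        calc (2*v:ℝ)^(1 - s.re) ≤ (2*v:ℝ)^ρ := by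
              gcongr
              · linarith
              · linarith
          _ = (2:ℝ)^ρ*(v:ℝ)^ρ := mul_rpow (by norm_num) hv0.le
          _ ≤ (2:ℝ)^(1:ℝ)*(v:ℝ)^(-ρ + 3/4) := by
              gcongr
              · norm_num
              · linarith
              · exact hv1.le
              · linarith
          _ = 2*(v:ℝ)^(-ρ)*(v:ℝ)^(3/4:ℝ) := by rw [rpow_one, mul_assoc, ← rpow_add hv0]
          _ ≤ _ := by gcongr
      have e3 : (2*v:ℝ)^(-ρ) ≤ (v:ℝ)^(-ρ) :=
        rpow_le_rpow_of_nonpos hv0 (by linarith) (by linarith)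
      have e4 : (3*(J:ℝ) + 4)*(2*v:ℝ)^(-ρ) ≤ (3*(J:ℝ) + 4)*(v:ℝ)^(-ρ) := by gcongr
      have e5 : 0 ≤ (v:ℝ)^(1 - s.re) / |s.im| := by positivity
      push_cast
      linarith

/-- Vinogradov's method: a power saving in `v` for the tail of the zeta series, as far as `|t| ≤ v ^ k`. -/
theorem ztail_main {k : ℕ} (hk : 2 ≤ k) {s : ℂ} (hs : 1 - 1/(2*(k:ℝ)^60) ≤ s.re) (hs2 : s.re ≤ 2)
    (ht : 2 ≤ |s.im|) {v : ℕ} (hv : (k:ℝ)^60 ≤ log v) (hvk : |s.im| ≤ (v:ℝ)^(k:ℝ)) :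
    ‖ztail s v‖ ≤ (v:ℝ)^(1 - s.re) / |s.im| +
      (6*log |s.im| + 7)*(v:ℝ)^(-(1/(2*(k:ℝ)^60))) := by
  set ℓ := log |s.im| with hℓ
  have ht0 : 0 < |s.im| := by linarith
  have hℓ0 : 0 < ℓ := log_pos (by linarith)
  set J := ⌈2*ℓ⌉₊ with hJ
  have hv1 : (1:ℝ) < v := by
    by_contra hc; push Not at hc
    have := log_nonpos (Nat.cast_nonneg v) hc
    have : (0:ℝ) < (k:ℝ)^60 := by positivity
    linarith
  have hJ1 : 2*ℓ ≤ J := le_ceil _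
  have hJ2 : (J:ℝ) ≤ 2*ℓ + 1 := (ceil_lt_add_one (by positivity)).le
  have hlt : |s.im| < (2^J * v:ℝ)^(3/4:ℝ) := by
    have e : |s.im| = exp ℓ := (exp_log ht0).symm
    rw [rpow_def_of_pos (by positivity), e]
    apply exp_lt_exp.2
    rw [log_mul (by positivity) (by linarith), log_pow]
    have := log_two_gt_d9
    have := log_pos hv1
    nlinarith
  refine (ztail_main_aux hk hs hs2 ht J v hv hvk hlt).trans ?_
  refine add_le_add le_rfl (mul_le_mul_of_nonneg_right (by linarith) (by positivity))

/-! ### Growth of the zeta function -/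

lemma sum_inv_le_log (v:ℕ) : ∑ n ∈ Icc 1 v, ((n:ℝ))⁻¹ ≤ 1 + log v := by
  have h := harmonic_le_one_add_log v
  rw [harmonic_eq_sum_Icc] at h
  push_cast at h
  exact h

/-- With `T = exp (q ^ 200)`, the zeta function is at most a power of `log T` for `Re s ≥ 1 - (log T) ^ (-198/200)`.
This width exceeds the reciprocal of `log T`, so it beats the classical zero-free region. -/
theorem zeta_growth {q : ℝ} (hq : 3 ≤ q) {s : ℂ} (hs : 1 - 1/q^198 ≤ s.re) (hs2 : s.re ≤ 2)
    (ht : 2 ≤ |s.im|) (hT : |s.im| ≤ exp (q^200)) : ‖riemannZeta s‖ ≤ q^210 := by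
  have hq0 : 0 < q := by linarith
  have ht0 : 0 < |s.im| := by linarith
  set k := ⌊q^2⌋₊ with hkd
  have hk1 : (k:ℝ) ≤ q^2 := floor_le (by positivity)
  have hk2 : q^2 - 1 < k := Nat.sub_one_lt_floor _
  have hq9 : 9 ≤ q^2 := by nlinarith
  have hk2' : q^2/2 ≤ k := by linarith
  have hk8 : (8:ℝ) < k := by linarith
  have hk : 2 ≤ k := by
    have : 8 < k := by exact_mod_cast hk8
    omega
  have hk0 : (0:ℝ) < k := by linarith
  set ℓ := q^200 with hℓ
  have hℓ0 : 0 < ℓ := by positivity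
  set v := ⌈exp (ℓ / k)⌉₊ with hvd
  have hv1 : exp (ℓ / k) ≤ v := le_ceil _
  have hv2 : (v:ℝ) < exp (ℓ / k) + 1 := ceil_lt_add_one (exp_pos _).le
  have hv0 : (0:ℝ) < v := (exp_pos _).trans_le hv1
  have hvn : 1 ≤ v := by exact_mod_cast hv0
  have hlv : ℓ / k ≤ log v := (le_log_iff_exp_le hv0).2 hv1
  have hk60 : (k:ℝ)^60 ≤ q^120 := by
    calc (k:ℝ)^60 ≤ (q^2)^60 := by gcongr
      _ = q^120 := by ring
  have hq1 : 1 ≤ q := by linarith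
  have hlk : q^198 ≤ ℓ / k := by
    rw [le_div_iff₀ hk0, hℓ]
    calc q^198*(k:ℝ) ≤ q^198*q^2 := by gcongr
      _ = q^200 := by ring
  have hlogv2 : log v ≤ 3*q^198 := by
    have h1 : ℓ / k ≤ 2*q^198 := by
      rw [div_le_iff₀ hk0, hℓ]
      calc q^200 = 2*q^198*(q^2/2) := by ring
        _ ≤ 2*q^198*k := by gcongr
    have h2 : (v:ℝ) ≤ exp (ℓ / k + 1) := by
      rw [exp_add]
      have : 1 ≤ exp (ℓ / k) := one_le_exp (by positivity)
      nlinarith [add_one_le_exp (1:ℝ)]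
    have h3 : log v ≤ ℓ / k + 1 := (log_le_iff_le_exp hv0).2 h2
    have : 1 ≤ q^198 := one_le_pow₀ hq1
    linarith
  have hvθ : (v:ℝ)^(1 - s.re) ≤ 21 := by
    rw [rpow_def_of_pos hv0]
    have h0 : 0 ≤ log v := log_nonneg (by exact_mod_cast hvn)
    have : log v*(1 - s.re) ≤ 3 := by
      calc log v*(1 - s.re) ≤ log v*(1/q^198) := by
            apply mul_le_mul_of_nonneg_left _ h0; linarith
        _ ≤ (3*q^198)*(1/q^198) := by gcongr
        _ = 3 := by field_simp
    calc exp (log v*(1 - s.re)) ≤ exp 3 := exp_le_exp.2 this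
      _ = exp 1^3 := by rw [← exp_nat_mul]; norm_num
      _ ≤ 2.7182818286^3 := by
          have := exp_one_lt_d9.le
          have := exp_pos 1
          gcongr
      _ ≤ 21 := by norm_num
  have hz := ztail_main (k := k) hk (s := s) (v := v) ?_ hs2 ht ?_ ?_
  rotate_left
  · refine le_trans ?_ hs
    have : 2*(k:ℝ)^60 ≤ q^198 := by
      have h : 2 ≤ q^78 := le_trans (by linarith) (le_self_pow₀ hq1 (by norm_num : (78:ℕ) ≠ 0))
      calc 2*(k:ℝ)^60 ≤ q^78*q^120 := by gcongr
        _ = q^198 := by ring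
    have := one_div_le_one_div_of_le (by positivity) this
    linarith
  · refine hk60.trans (le_trans ?_ (hlk.trans hlv))
    exact pow_le_pow_right₀ hq1 (by norm_num)
  · refine hT.trans ?_
    calc exp ℓ = exp (ℓ / k)^(k:ℝ) := by
          rw [← exp_mul, div_mul_cancel₀ _ hk0.ne']
      _ ≤ (v:ℝ)^(k:ℝ) := by gcongr
  have hlt : log |s.im| ≤ ℓ := (log_le_iff_le_exp ht0).2 hT
  have hlt0 : 0 ≤ log |s.im| := log_nonneg (by linarith)
  have hz2 : ‖ztail s v‖ ≤ 21 + (6*ℓ + 7) := by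
    refine hz.trans (add_le_add ?_ ?_)
    · rw [div_le_iff₀ ht0]; nlinarith
    · have h1 : (v:ℝ)^(-(1/(2*(k:ℝ)^60))) ≤ 1 :=
        rpow_le_one_of_one_le_of_nonpos (by exact_mod_cast hvn) (by simp)
      have h2 : 0 ≤ (v:ℝ)^(-(1/(2*(k:ℝ)^60))) := by positivity
      nlinarith
  have hsum : ‖∑ n ∈ Icc 1 v, (n:ℂ)^(-s)‖ ≤ 21*(1 + log v) := by
    refine (norm_sum_le _ _).trans ?_
    calc ∑ n ∈ Icc 1 v, ‖(n:ℂ)^(-s)‖ ≤ ∑ n ∈ Icc 1 v, 21*((n:ℝ))⁻¹ := by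
          refine sum_le_sum fun n hn => ?_
          rw [mem_Icc] at hn
          have hn0 : (0:ℝ) < n := by exact_mod_cast hn.1
          rw [norm_natCast_cpow_of_pos (by omega), neg_re,
            show -s.re = (1 - s.re) + (-1) by ring, rpow_add hn0, rpow_neg_one]
          gcongr
          rcases le_total s.re 1 with h | h
          · refine le_trans ?_ hvθ
            have : (n:ℝ) ≤ v := by exact_mod_cast hn.2
            exact rpow_le_rpow hn0.le this (by linarith)
          · exact (rpow_le_one_of_one_le_of_nonpos (by exact_mod_cast hn.1) (by linarith)).trans (by norm_num)
      _ ≤ 21*(1 + log v) := by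
          rw [← mul_sum]; gcongr; exact sum_inv_le_log v
  have he : riemannZeta s = ∑ n ∈ Icc 1 v, (n:ℂ)^(-s) + ztail s v := by unfold ztail; ring
  have h1 := norm_add_le (∑ n ∈ Icc 1 v, (n:ℂ)^(-s)) (ztail s v)
  rw [← he] at h1
  have e1 : q^198 ≤ ℓ := pow_le_pow_right₀ hq1 (by norm_num)
  have e2 : 1 ≤ ℓ := one_le_pow₀ hq1
  have e3 : 150*ℓ ≤ q^210 := by
    have : (150:ℝ) ≤ q^10 := by
      calc (150:ℝ) ≤ 3^10 := by norm_num
        _ ≤ q^10 := by gcongr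
    calc 150*ℓ ≤ q^10*ℓ := by gcongr
      _ = q^210 := by rw [hℓ]; ring
  linarith

/-! ### The logarithmic derivative to the right of the line `Re s = 1` -/

/-- The logarithmic derivative of the entire function `(s - 1) ζ(s)`. -/
def zlog (s:ℂ) : ℂ := deriv riemannZeta₁ s / riemannZeta₁ s

lemma zeta1_ne {s : ℂ} (hs : 1 ≤ s.re) : riemannZeta₁ s ≠ 0 := by
  by_cases h : s = 1
  · rw [h, riemannZeta₁_one]; exact one_ne_zero
  · have := riemannZeta_ne_zero_of_one_le_re hs
    rw [riemannZeta_eq_inv_sub_mul h] at this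
    exact right_ne_zero_of_mul this

lemma zlog_eq {s : ℂ} (hs : s ≠ 1) (h : riemannZeta₁ s ≠ 0) :
    deriv riemannZeta s / riemannZeta s = zlog s - 1/(s - 1) := by
  have h1 : s - 1 ≠ 0 := sub_ne_zero.2 hs
  rw [deriv_riemannZeta_eq_neg_inv_sub_sq_mul_add hs, riemannZeta_eq_inv_sub_mul hs, zlog]
  field_simp
  ring

/-- At bounded height, compactness and the non-vanishing on `Re s = 1` suffice. -/
lemma low_heights : ∃ w0 : ℝ, 0 < w0 ∧ ∃ B : ℝ, 0 < B ∧ ∀ s : ℂ, 1 - w0 ≤ s.re → s.re ≤ 2 → |s.im| ≤ 4 →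
    riemannZeta₁ s ≠ 0 ∧ ‖zlog s‖ ≤ B := by
  set K : Set ℂ := Set.Icc 1 2 ×ℂ Set.Icc (-4) 4 with hK
  have hKc : IsCompact K := isCompact_Icc.reProdIm isCompact_Icc
  set U : Set ℂ := {s | riemannZeta₁ s ≠ 0} with hU
  have hUo : IsOpen U := isOpen_ne_fun differentiable_riemannZeta₁.continuous continuous_const
  have hKU : K ⊆ U := fun s hs => zeta1_ne (by rw [hK, mem_reProdIm] at hs; exact hs.1.1)
  obtain ⟨w, hw, hwU⟩ := hKc.exists_cthickening_subset_open hUo hKU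
  set K' : Set ℂ := Set.Icc (1 - w) 2 ×ℂ Set.Icc (-4) 4 with hK'
  have hK'c : IsCompact K' := isCompact_Icc.reProdIm isCompact_Icc
  have hK'U : K' ⊆ U := by
    intro s hs
    rw [hK', mem_reProdIm] at hs
    apply hwU
    by_cases h1 : 1 ≤ s.re
    · exact self_subset_cthickening _ (by rw [hK, mem_reProdIm]; exact ⟨⟨h1, hs.1.2⟩, hs.2⟩)
    · push Not at h1
      refine mem_cthickening_of_dist_le s ⟨1, s.im⟩ w _ ?_ ?_
      · rw [hK, mem_reProdIm]; exact ⟨⟨le_rfl, by norm_num⟩, hs.2⟩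
      · rw [Complex.dist_of_im_eq (z := s) (w := ⟨1, s.im⟩) rfl, dist_eq, abs_le]
        have := hs.1.1
        constructor <;> simp <;> linarith
  have hc : ContinuousOn zlog K' :=
    (differentiable_riemannZeta₁.deriv.continuous.continuousOn).div
      differentiable_riemannZeta₁.continuous.continuousOn (fun s hs => hK'U hs)
  obtain ⟨B, hB⟩ := hK'c.exists_bound_of_continuousOn hc
  refine ⟨w, hw, max B 1, by positivity, fun s h1 h2 h3 => ?_⟩
  have hm : s ∈ K' := by
    rw [hK', mem_reProdIm]; exact ⟨⟨h1, h2⟩, abs_le.1 h3⟩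
  exact ⟨hK'U hm, (hB s hm).trans (le_max_left _ _)⟩

lemma vm_hasSum {s : ℂ} (hs : 1 < s.re) :
    HasSum (fun n : ℕ => ((vonMangoldt n*(n:ℝ)^(-s.re):ℝ):ℂ) * nit (-s.im) n)
      (-(deriv riemannZeta s / riemannZeta s)) := by
  have h := (ArithmeticFunction.LSeriesSummable_vonMangoldt hs).LSeriesHasSum
  rw [ArithmeticFunction.LSeries_vonMangoldt_eq_deriv_riemannZeta_div hs, neg_div] at h
  unfold LSeriesHasSum at h
  refine h.congr_fun fun n => ?_
  rcases Nat.eq_zero_or_pos n with rfl | hn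
  · simp
  · rw [LSeries.term_of_ne_zero (by omega), div_eq_mul_inv, ← cpow_neg, cpow_eq_nit hn]
    push_cast; ring

lemma nit_re (t u : ℝ) : (nit t u).re = cos (t * log u) := by
  unfold nit
  rw [Complex.exp_ofReal_mul_I_re]

lemma vm_hasSum_re {s : ℂ} (hs : 1 < s.re) :
    HasSum (fun n : ℕ => vonMangoldt n*(n:ℝ)^(-s.re) * cos (-s.im * log n))
      (-(deriv riemannZeta s / riemannZeta s)).re := by
  have h := hasSum_re (vm_hasSum hs)
  refine h.congr_fun fun n => ?_
  rw [re_ofReal_mul, nit_re]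

lemma vm_real {σ : ℝ} (hσ : 1 < σ) :
    HasSum (fun n : ℕ => vonMangoldt n*(n:ℝ)^(-σ))
      (-(deriv riemannZeta (σ:ℂ) / riemannZeta (σ:ℂ))).re := by
  have h := vm_hasSum_re (s := (σ:ℂ)) (by simpa using hσ)
  simpa using h

lemma logderiv_le_real {s : ℂ} (hs : 1 < s.re) :
    ‖deriv riemannZeta s / riemannZeta s‖ ≤ (-(deriv riemannZeta (s.re:ℂ) / riemannZeta (s.re:ℂ))).re := by
  have h1 := vm_hasSum hs
  have h2 := vm_real hs
  rw [← norm_neg, ← h1.tsum_eq, ← h2.tsum_eq]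
  refine tsum_of_norm_bounded h2.summable.hasSum fun n => ?_
  rw [norm_mul, norm_nit, mul_one, norm_real, norm_of_nonneg]
  exact mul_nonneg vonMangoldt_nonneg (by positivity)

lemma three_four_one {σ : ℝ} (hσ : 1 < σ) (t:ℝ) :
    0 ≤ 3*(-(deriv riemannZeta (σ:ℂ) / riemannZeta (σ:ℂ))).re +
      4*(-(deriv riemannZeta ⟨σ, t⟩ / riemannZeta ⟨σ, t⟩)).re +
      (-(deriv riemannZeta ⟨σ, 2*t⟩ / riemannZeta ⟨σ, 2*t⟩)).re := by
  have h1 := (vm_real hσ).mul_left 3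
  have h2 := (vm_hasSum_re (s := ⟨σ, t⟩) hσ).mul_left 4
  have h3 := vm_hasSum_re (s := ⟨σ, 2*t⟩) hσ
  refine ((h1.add h2).add h3).nonneg fun n => ?_
  have hn : 0 ≤ vonMangoldt n*(n:ℝ)^(-σ) :=
    mul_nonneg vonMangoldt_nonneg (by positivity)
  have e : cos (-(2*t) * log n) = 2*cos (-t * log n)^2 - 1 := by
    rw [← cos_two_mul]; congr 1; ring
  simp only [e]
  nlinarith [mul_nonneg hn (sq_nonneg (cos (-t * log n) + 1))]

lemma zeta_inv_le {s : ℂ} (hs : 1 < s.re) (hs2 : s.re ≤ 2) : (s.re - 1)/3 ≤ ‖riemannZeta s‖ := by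
  set σ := s.re with hσd
  have hσ : 1 < ((σ:ℂ)).re := by simpa using hs
  -- `1/ζ(s) = ∑ μ(n) n^{-s}` is dominated termwise by the series of `ζ(σ)`
  have hμ := ArithmeticFunction.LSeriesSummable_moebius_iff.2 hs
  have hm := ArithmeticFunction.LSeries_zeta_mul_Lseries_moebius hs
  rw [ArithmeticFunction.LSeries_zeta_eq_riemannZeta hs] at hm
  have hz := LSeries_one_eq_riemannZeta hσ
  have hzs := (LSeriesSummable_one_iff (s := (σ:ℂ))).2 hσ
  have hle : ‖LSeries (fun n => ((moebius n : ℤ):ℂ)) s‖ ≤ ‖riemannZeta (σ:ℂ)‖ := by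
    have hre : (riemannZeta (σ:ℂ)).re = ∑' n : ℕ, (LSeries.term 1 (σ:ℂ) n).re := by
      rw [← hz, LSeries, Complex.re_tsum hzs]
    refine le_trans ?_ (re_le_norm _)
    rw [hre]
    refine tsum_of_norm_bounded (hasSum_re hzs.hasSum).summable.hasSum fun n => ?_
    rcases Nat.eq_zero_or_pos n with rfl | hn
    · simp
    · rw [LSeries.term_of_ne_zero (by omega), LSeries.term_of_ne_zero (by omega), norm_div,
        norm_natCast_cpow_of_pos hn, Pi.one_apply, ← Complex.ofReal_natCast,
        ← ofReal_cpow (by positivity), ← Complex.ofReal_one, ← Complex.ofReal_div, ofReal_re]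
      refine div_le_div_of_nonneg_right ?_ (by positivity)
      rw [Complex.norm_intCast]
      exact_mod_cast ArithmeticFunction.abs_moebius_le_one
  have hup : ‖riemannZeta (σ:ℂ)‖ ≤ 3/(σ - 1) := by
    have hb := ztail_bound (s := (σ:ℂ)) (v := 1) (by simp; linarith) (by
      intro h; rw [h] at hσ; simp at hσ) le_rfl
    simp only [ztail, Finset.Icc_self, sum_singleton, Nat.cast_one, Complex.one_cpow,
      one_rpow, norm_real, ofReal_re, mul_one] at hb
    rw [norm_of_nonneg (by linarith), div_self (by linarith)] at hb
    have e : riemannZeta (σ:ℂ) = (riemannZeta (σ:ℂ) - 1 - 1/((σ:ℂ) - 1)) + ((1 + 1/(σ - 1):ℝ):ℂ) := by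
      push_cast; ring
    have h1 : 0 < σ - 1 := by linarith
    rw [e]
    refine (norm_add_le _ _).trans ?_
    rw [norm_real, norm_of_nonneg (by positivity), le_div_iff₀ h1]
    have : (1/(σ - 1))*(σ - 1) = 1 := by field_simp
    nlinarith
  have h1 : 1 = ‖riemannZeta s‖ * ‖LSeries (fun n => ((moebius n : ℤ):ℂ)) s‖ := by
    rw [← norm_mul, hm, norm_one]
  have h2 := hle.trans hup
  have h3 : 0 < σ - 1 := by linarith
  rw [le_div_iff₀ h3] at h2
  nlinarith [norm_nonneg (riemannZeta s)]

/-! ### The zero-free region -/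

/-- The hypotheses of the Landau-type lemmas for `z ↦ ζ(s₀ + z)/ζ(s₀)`, `s₀ = 1 + 100 q⁻¹⁹⁹ + it`. -/
lemma landau_setup {q : ℝ} (hq : 1000 ≤ q) {t : ℝ} (ht : 3 ≤ |t|) (hT : 2*|t| ≤ exp (q^200)) :
    -(72*(409*log q) * q^198) ≤
        (deriv riemannZeta ⟨1 + 100/q^199, t⟩ / riemannZeta ⟨1 + 100/q^199, t⟩).re ∧
    ∀ x : ℝ, 0 < x → x ≤ 1/q^198/3 → riemannZeta ⟨1 + 100/q^199 - x, t⟩ = 0 →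
      -(72*(409*log q) * q^198) + 1/x ≤
        (deriv riemannZeta ⟨1 + 100/q^199, t⟩ / riemannZeta ⟨1 + 100/q^199, t⟩).re := by
  have hq0 : 0 < q := by linarith
  have hq1 : 1 ≤ q := by linarith
  set δ := 100/q^199 with hδ
  have hδ0 : 0 < δ := by positivity
  set r := 1/q^198 with hr
  have hr0 : 0 < r := by positivity
  have hr1 : r ≤ 1/2 := by
    rw [hr]
    apply one_div_le_one_div_of_le (by norm_num)
    exact le_trans (by linarith) (le_self_pow₀ hq1 (by norm_num : (198:ℕ) ≠ 0))
  have hδr : δ ≤ r := by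
    rw [hδ, hr, div_le_div_iff₀ (by positivity) (by positivity)]
    calc 100*q^198 ≤ q * q^198 := by gcongr; linarith
      _ = 1*q^199 := by ring
  set s0 : ℂ := ⟨1 + δ, t⟩ with hs0
  have hlow : δ/3 ≤ ‖riemannZeta s0‖ := by
    have := zeta_inv_le (s := s0) (by simp [hs0]; exact hδ0) (by simp [hs0]; linarith)
    simpa [hs0] using this
  have hz0 : riemannZeta s0 ≠ 0 := by
    intro h; rw [h, norm_zero] at hlow; linarith
  set M := 409*log q with hM
  have hM0 : 0 < M := by have := log_pos (show 1 < q by linarith); positivity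
  set f : ℂ → ℂ := fun z => riemannZeta (s0 + z) / riemannZeta s0 with hf
  have him : ∀ z : ℂ, ‖z‖ ≤ r → 2 ≤ |(s0 + z).im| := by
    intro z hz
    have h1 := (abs_im_le_norm z).trans hz
    have h2 := abs_sub_abs_le_abs_sub t (-z.im)
    rw [abs_neg, sub_neg_eq_add] at h2
    simp only [add_im, hs0]; linarith
  have hne1 : ∀ z : ℂ, ‖z‖ ≤ r → s0 + z ≠ 1 := by
    intro z hz h
    have := him z hz
    rw [h] at this; simp at this; linarith
  have hd : ∀ z : ℂ, ‖z‖ ≤ r → DifferentiableAt ℂ f z := fun z hz => by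
    have h1 : DifferentiableAt ℂ riemannZeta (s0 + z) := differentiableAt_riemannZeta (hne1 z hz)
    exact (h1.comp z (by fun_prop)).div_const _
  have hfD : DiffContOnCl ℂ f (ball 0 r) := by
    refine DifferentiableOn.diffContOnCl fun z hz => (hd z ?_).differentiableWithinAt
    rw [closure_ball _ hr0.ne', mem_closedBall_zero_iff] at hz; exact hz
  have hf0 : f 0 = 1 := by simp only [hf, add_zero]; exact div_self hz0
  have hfB : ∀ z ∈ closedBall (0:ℂ) r, ‖f z‖ ≤ exp M := by
    intro z hz
    rw [mem_closedBall_zero_iff] at hz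
    have hre := abs_le.1 ((abs_re_le_norm z).trans hz)
    have h1 : ‖riemannZeta (s0 + z)‖ ≤ q^210 := by
      refine zeta_growth (by linarith) ?_ ?_ (him z hz) ?_
      · simp only [add_re, hs0]; linarith
      · simp only [add_re, hs0]; linarith
      · refine le_trans ?_ hT
        have := (abs_im_le_norm z).trans hz
        simp only [add_im, hs0]
        have := abs_add_le t z.im
        linarith
    have h2 : exp M = q^409 := by
      rw [hM, mul_comm, exp_mul, exp_log hq0]; norm_cast
    simp only [hf]
    rw [norm_div, div_le_iff₀ (by positivity), h2]
    calc ‖riemannZeta (s0 + z)‖ ≤ q^210 := h1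
      _ ≤ q^210*(100/3) := by nlinarith [show 0 < q^210 by positivity]
      _ = q^409*(δ/3) := by rw [hδ]; field_simp
      _ ≤ q^409*‖riemannZeta s0‖ := by gcongr
  have hzer : ∀ z, ‖z‖ ≤ r/3 → f z = 0 → z.re ≤ 0 := by
    intro z _ h
    by_contra hc; push Not at hc
    refine riemannZeta_ne_zero_of_one_le_re (s := s0 + z) ?_ ?_
    · simp only [add_re, hs0]; linarith
    · simp only [hf] at h
      exact (div_eq_zero_iff.1 h).resolve_right hz0
  have hder : deriv f 0 = deriv riemannZeta s0/riemannZeta s0 := by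
    simp only [hf]
    rw [deriv_div_const, deriv_comp_const_add, add_zero]
  have hrq : 72*M / r = 72*M * q^198 := by rw [hr]; field_simp
  rw [← hder, ← hrq]
  refine ⟨landau_lower' hr0 hM0 hfD hf0 hfB hzer, fun x hx hxr h0 => ?_⟩
  refine landau_lower_zero hr0 hM0 hfD hf0 hfB hzer hx hxr ?_
  simp only [hf]
  rw [show s0 + ((-x:ℝ):ℂ) = ⟨1 + δ - x, t⟩ by
    apply Complex.ext <;> simp [hs0, sub_eq_add_neg], h0, zero_div]

lemma eventually_log_le (C:ℝ) : ∃ q1 : ℝ, 1000 ≤ q1 ∧ ∀ q, q1 ≤ q → C * log q ≤ q := by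
  have h := (isLittleO_log_id_atTop.const_mul_left C).bound (show (0:ℝ) < 1 by norm_num)
  obtain ⟨a, ha⟩ := eventually_atTop.1 h
  refine ⟨max a 1000, le_max_right _ _, fun q hq => ?_⟩
  have h1 := ha q ((le_max_left _ _).trans hq)
  have h2 : 1000 ≤ q := (le_max_right _ _).trans hq
  simp only [id, one_mul, norm_eq_abs] at h1
  rw [abs_of_nonneg (show (0:ℝ) ≤ q by linarith)] at h1
  exact (le_abs_self _).trans h1

lemma neg_logderiv_real_le {B w0 : ℝ} (hw0 : 0 < w0) (hlow : ∀ s : ℂ, 1 - w0 ≤ s.re → s.re ≤ 2 → |s.im| ≤ 4 →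
    riemannZeta₁ s ≠ 0 ∧ ‖zlog s‖ ≤ B) {σ : ℝ} (h1 : 1 < σ) (h2 : σ ≤ 2) :
    (-(deriv riemannZeta (σ:ℂ) / riemannZeta (σ:ℂ))).re ≤ 1/(σ - 1) + B := by
  have h := hlow (σ:ℂ) (by simp; linarith) (by simpa using h2) (by simp)
  have hne : (σ:ℂ) ≠ 1 := by exact_mod_cast h1.ne'
  rw [zlog_eq hne h.1]
  have h3 := (abs_re_le_norm (zlog (σ:ℂ))).trans h.2
  have h4 := (abs_le.1 h3).1
  rw [neg_re, sub_re, show (1/((σ:ℂ) - 1)) = ((1/(σ - 1):ℝ):ℂ) by push_cast; rfl, ofReal_re]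
  linarith

/-- The classical `3 + 4 cos + cos` argument in discs of radius about `q⁻¹⁹⁸`, where `zeta_growth` applies. -/
theorem zero_free : ∃ q1 : ℝ, 1000 ≤ q1 ∧ ∀ q, q1 ≤ q → ∀ s : ℂ, 3 ≤ |s.im| → 4*|s.im| ≤ exp (q^200) →
    1 - 20/q^199 ≤ s.re → riemannZeta s ≠ 0 := by
  obtain ⟨w0, hw0, B, hB, hlow⟩ := low_heights
  obtain ⟨q1, hq1, hlog⟩ := eventually_log_le (1000*5*72*409)
  refine ⟨max q1 (10000*B), hq1.trans (le_max_left _ _), fun q hq s ht hT hre h0 => ?_⟩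
  have hqB : 10000*B ≤ q := (le_max_right _ _).trans hq
  have hq' := (le_max_left _ _).trans hq
  have hq1k : 1000 ≤ q := hq1.trans hq'
  have hL := hlog q hq'
  have hq0 : 0 < q := by linarith
  have hs1 : s.re < 1 := by
    by_contra hc; push Not at hc
    exact riemannZeta_ne_zero_of_one_le_re hc h0
  have hq199 : 0 < q^199 := by positivity
  have hqle : q ≤ q^199 := le_self_pow₀ (by linarith) (by norm_num)
  set δ := 100/q^199 with hδ
  have hδ0 : 0 < δ := by positivity
  have hδ1 : δ ≤ 1 := by rw [hδ, div_le_one hq199]; linarith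
  have hδ' : 20/q^199 = δ/5 := by rw [hδ]; ring
  set x := 1 + δ - s.re with hx
  have hx0 : 0 < x := by linarith
  have hxδ : x ≤ 1.2*δ := by rw [hx]; rw [hδ'] at hre; linarith
  have a1 := landau_setup hq1k ht (by linarith [abs_nonneg s.im])
  have a2 := landau_setup hq1k (t := 2*s.im) (by rw [abs_mul]; norm_num; linarith) (by rw [abs_mul]; norm_num; linarith)
  have b1 := a1.2 x hx0 (by
    refine hxδ.trans ?_
    rw [hδ, show q^199 = q^198*q by ring, div_div, mul_div_assoc', div_le_div_iff₀ (by positivity) (by positivity)]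
    nlinarith [show 0 < q^198 by positivity]) (by
    rw [← hδ, hx, show (⟨1 + δ - (1 + δ - s.re), s.im⟩:ℂ) = s by apply Complex.ext <;> simp]; exact h0)
  have b2 := a2.1
  rw [← hδ] at b1 b2
  have b3 := three_four_one (σ := 1 + δ) (by linarith) s.im
  have b4 := neg_logderiv_real_le hw0 hlow (σ := 1 + δ) (by linarith) (by linarith)
  rw [neg_re] at b3 b4
  rw [neg_re, neg_re] at b3
  rw [show 1 + δ - 1 = δ by ring] at b4
  have e1 : 1/δ = q^199/100 := by rw [hδ]; field_simp
  have e2 : 5*(72*(409*log q) * q^198) ≤ 0.1*(1/δ) := by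
    rw [e1, show q^199 = q^198*q by ring]
    nlinarith [show 0 < q^198 by positivity]
  have e4 : B ≤ 0.01*(1/δ) := by rw [e1]; linarith
  have e5 : 1/(1.2*δ) ≤ 1/x := one_div_le_one_div_of_le hx0 hxδ
  have e6 : 1/(1.2*δ) = (1/1.2)*(1/δ) := by field_simp
  have e7 : 0 < 1/δ := by positivity
  rw [e6] at e5
  have e8 : 1/1.2*(1/δ) = (5/6)*(1/δ) := by norm_num
  rw [e8] at e5
  linarith

/-- The zero-free region `Re s ≥ 1 - (log T)^{-199/200}` up to height `T = exp(q²⁰⁰)/8`, with a bound for the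
logarithmic derivative of `(s - 1) ζ(s)` in it. -/
theorem zlog_bound : ∃ q1 : ℝ, 1000 ≤ q1 ∧ ∀ q, q1 ≤ q → ∀ s : ℂ, 1 - 1/q^199 ≤ s.re → s.re ≤ 2 →
    8*|s.im| ≤ exp (q^200) → riemannZeta₁ s ≠ 0 ∧ ‖zlog s‖ ≤ q^201 := by
  obtain ⟨w0, hw0, B, hB, hlow⟩ := low_heights
  obtain ⟨q1, hq1, hzf⟩ := zero_free
  obtain ⟨q2, hq2, hlog⟩ := eventually_log_le (409*1000)
  refine ⟨max (max q1 q2) (max (10000*B) (1/w0)), hq1.trans ((le_max_left _ _).trans (le_max_left _ _)),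
    fun q hq s hs hs2 hT => ?_⟩
  have hqq1 : q1 ≤ q := (le_max_left _ _).trans ((le_max_left _ _).trans hq)
  have hqq2 : q2 ≤ q := (le_max_right _ _).trans ((le_max_left _ _).trans hq)
  have hqB : 10000*B ≤ q := (le_max_left _ _).trans ((le_max_right _ _).trans hq)
  have hqw : 1/w0 ≤ q := (le_max_right _ _).trans ((le_max_right _ _).trans hq)
  have hq1k : 1000 ≤ q := hq1.trans hqq1
  have hq0 : 0 < q := by linarith
  have hqone : 1 ≤ q := by linarith
  have hL := hlog q hqq2
  have hq199 : 0 < q^199 := by positivity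
  have hqle : q ≤ q^199 := le_self_pow₀ hqone (by norm_num)
  have hq201 : q^199*1000000 ≤ q^201 := by
    rw [show q^201 = q^199*(q * q) by ring]
    gcongr; nlinarith
  have hqB2 : B + 1 ≤ q^199 := by linarith
  rcases le_total |s.im| 4 with h4 | h4
  · have hw : 1/q^199 ≤ w0 := by
      rw [div_le_iff₀ hq199]
      rw [div_le_iff₀ hw0] at hqw
      nlinarith
    have h := hlow s (by linarith) hs2 h4
    exact ⟨h.1, h.2.trans (by nlinarith)⟩
  set η := 5/q^199 with hη
  have hη0 : 0 < η := by positivity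
  have hη1 : η ≤ 1/100 := by rw [hη, div_le_iff₀ hq199]; linarith
  have hw5 : 1/q^199 = η/5 := by rw [hη]; ring
  have hw20 : 20/q^199 = 4*η := by rw [hη]; ring
  have hs1 : s ≠ 1 := by intro h; rw [h] at h4; simp at h4; linarith
  have hzs : riemannZeta s ≠ 0 := hzf q hqq1 s (by linarith) (by linarith [abs_nonneg s.im]) (by rw [hw20]; linarith)
  have hz1 : riemannZeta₁ s ≠ 0 := by
    rw [riemannZeta_eq_inv_sub_mul hs1] at hzs
    exact right_ne_zero_of_mul hzs
  refine ⟨hz1, ?_⟩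
  have hd := zlog_eq hs1 hz1
  have hsm : ‖1/(s - 1)‖ ≤ 1 := by
    rw [norm_div, norm_one]
    have h5 := abs_im_le_norm (s - 1)
    simp at h5
    rw [div_le_one (by linarith)]; linarith
  have hmain : ‖deriv riemannZeta s / riemannZeta s‖ ≤ q^199 + q^200 := by
    rcases le_total (1 + η) s.re with h | h
    · refine (logderiv_le_real (by linarith)).trans ((neg_logderiv_real_le hw0 hlow (by linarith) hs2).trans ?_)
      have h1 : 1/(s.re - 1) ≤ 1/η := one_div_le_one_div_of_le hη0 (by linarith)
      have h2 : 1/η = q^199/5 := by rw [hη]; field_simp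
      have h3 : 0 < q^200 := by positivity
      linarith
    · set s1 : ℂ := ⟨1 + η, s.im⟩ with hs1d
      set f : ℂ → ℂ := fun z => riemannZeta (s1 + z) with hf
      set R := 5*η with hR
      have hR0 : 0 < R := by positivity
      set M := 409*log q with hM
      have hM0 : 0 < M := by have := log_pos (show 1 < q by linarith); positivity
      have him : ∀ z : ℂ, ‖z‖ < R → 3 ≤ |(s1 + z).im| ∧ |(s1 + z).im| ≤ |s.im| + 1 := by
        intro z hz
        have h1 := (abs_im_le_norm z).trans hz.le
        have h2 := abs_sub_abs_le_abs_sub s.im (-z.im)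
        rw [abs_neg, sub_neg_eq_add] at h2
        have h3 := abs_add_le s.im z.im
        simp only [add_im, hs1d]; constructor <;> linarith
      have hre : ∀ z : ℂ, ‖z‖ < R → 1 - 4*η ≤ (s1 + z).re ∧ (s1 + z).re ≤ 2 := by
        intro z hz
        have h1 := abs_le.1 ((abs_re_le_norm z).trans hz.le)
        simp only [add_re, hs1d]; constructor <;> linarith
      have hlowz : η/3 ≤ ‖riemannZeta s1‖ := by
        have := zeta_inv_le (s := s1) (by simp [hs1d]; exact hη0) (by simp [hs1d]; linarith)
        simpa [hs1d] using this
      have hb := logderiv_bound (f := f) hR0 hM0 (fun z hz => by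
          rw [mem_ball_zero_iff] at hz
          have hne : s1 + z ≠ 1 := by
            intro h; have := (him z hz).1; rw [h] at this; simp at this; linarith
          have h1 : DifferentiableAt ℂ riemannZeta (s1 + z) := differentiableAt_riemannZeta hne
          exact (h1.comp z (by fun_prop)).differentiableWithinAt)
        (fun z hz => by
          rw [mem_ball_zero_iff] at hz
          have h1 := him z hz
          refine hzf q hqq1 _ h1.1 (by linarith) ?_
          rw [hw20]; exact (hre z hz).1)
        (fun z hz => by
          rw [mem_ball_zero_iff] at hz
          have h1 := him z hz
          have h2 := hre z hz
          have hg : ‖riemannZeta (s1 + z)‖ ≤ q^210 := by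
            refine zeta_growth (by linarith) ?_ h2.2 (by linarith) (by linarith)
            refine le_trans ?_ h2.1
            rw [← hw20]
            have : 20/q^199 ≤ 1/q^198 := by
              rw [div_le_div_iff₀ (by positivity) (by positivity)]
              calc 20*q^198 ≤ q * q^198 := by gcongr; linarith
                _ = 1*q^199 := by ring
            linarith
          have h3 : exp M = q^409 := by
            rw [hM, mul_comm, exp_mul, exp_log hq0]; norm_cast
          simp only [hf, add_zero]
          rw [h3]
          calc ‖riemannZeta (s1 + z)‖ ≤ q^210 := hg
            _ ≤ q^210*(5/3) := by nlinarith [show 0 < q^210 by positivity]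
            _ = q^409*(η/3) := by rw [hη]; field_simp
            _ ≤ q^409*‖riemannZeta s1‖ := by gcongr) (z := s - s1) (by
          have e : s - s1 = ((s.re - (1 + η):ℝ):ℂ) := by
            apply Complex.ext <;> simp [hs1d]
          rw [e, norm_real, norm_eq_abs, abs_le, hR]
          constructor <;> linarith)
      simp only [hf] at hb
      rw [deriv_comp_const_add, add_sub_cancel] at hb
      refine hb.trans ?_
      have : 24*M / R = 24*409/25*(log q) * q^199 := by
        rw [hR, hη, hM]; field_simp
        ring
      rw [this, show q^200 = q * q^199 by ring]
      nlinarith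
  have e : zlog s = deriv riemannZeta s / riemannZeta s + 1/(s - 1) := by rw [hd]; ring
  rw [e]
  refine (norm_add_le _ _).trans ?_
  have : q^200*1000 ≤ q^201 := by
    rw [show q^201 = q^200*q by ring]; gcongr
  have : 1 ≤ q^199 := one_le_pow₀ hqone
  linarith

end

section
open MeasureTheory

/-! ### The Gaussian transform on the line `Re s = 2` -/

/-- The kernel `e^{s²/4A + sy}`. -/
def ker (A y : ℝ) (s:ℂ) : ℂ := cexp (s^2/(4*A) + s * y)

/-- `(4πA)^{-1/2} ∫ F(2 + it) e^{s²/4A + sy} dt`. It takes a (generalized) Dirichlet series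
`∑ a_m e^{-s u_m}` to `∑ a_m e^{-A (u_m - y)²}`. -/
def gtr (A y : ℝ) (F : ℂ → ℂ) : ℂ :=
  ((sqrt (4*π * A))⁻¹:ℝ) * ∫ t : ℝ, F ⟨2, t⟩ * ker A y ⟨2, t⟩

lemma mk_eq (σ t : ℝ) : (⟨σ, t⟩:ℂ) = (σ:ℂ) + (t:ℂ) * I := by
  apply Complex.ext <;> simp

lemma norm_ker (A y σ t : ℝ) :
    ‖ker A y ⟨σ, t⟩‖ = exp ((σ^2 - t^2) / (4*A) + σ * y) := by
  unfold ker
  rw [norm_exp]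
  congr 1
  have e : ((⟨σ, t⟩:ℂ)^2/(4*A) + (⟨σ, t⟩:ℂ) * y) =
      (((σ^2 - t^2) / (4*A) + σ * y:ℝ):ℂ) + ((2*σ * t / (4*A) + t * y:ℝ):ℂ) * I := by
    rw [mk_eq]; push_cast; linear_combination (t:ℂ)^2/(4*A) * I_sq
  rw [e, add_re, ofReal_re, re_ofReal_mul, Complex.I_re, mul_zero, add_zero]

lemma continuous_ker_line (A y σ : ℝ) : Continuous fun t : ℝ => ker A y ⟨σ, t⟩ := by
  simp only [ker, mk_eq]; fun_prop

lemma integrable_ker {A : ℝ} (hA : 0 < A) (y σ : ℝ) : Integrable fun t : ℝ => ker A y ⟨σ, t⟩ := by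
  have h := (integrable_exp_neg_mul_sq (show 0 < 1/(4*A) by positivity)).const_mul
    (exp (σ^2/(4*A) + σ * y))
  refine h.mono' (continuous_ker_line A y σ).aestronglyMeasurable (.of_forall fun t => ?_)
  rw [norm_ker, ← exp_add]
  apply exp_le_exp.2
  apply le_of_eq; ring

lemma integral_ker {A : ℝ} (hA : 0 < A) (x:ℝ) :
    ∫ t : ℝ, ker A x ⟨2, t⟩ = ((sqrt (4*π * A) * exp (-A * x^2):ℝ):ℂ) := by
  have hAc : (A:ℂ) ≠ 0 := by exact_mod_cast hA.ne'
  have h := integral_cexp_quadratic (b := ((-(1/(4*A)):ℝ):ℂ))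
    (by rw [ofReal_re]; simp; positivity) (((1/A + x:ℝ):ℂ) * I) ((1/A + 2*x:ℝ):ℂ)
  have e : ∀ t : ℝ, ker A x ⟨2, t⟩ = cexp (((-(1/(4*A)):ℝ):ℂ)*(t:ℂ)^2 +
      (((1/A + x:ℝ):ℂ) * I) * t + ((1/A + 2*x:ℝ):ℂ)) := by
    intro t
    unfold ker
    congr 1
    rw [mk_eq]; push_cast
    field_simp
    linear_combination (t:ℂ)^2*I_sq
  simp_rw [e, h]
  rw [show ((π:ℂ) / -((-(1/(4*A)):ℝ):ℂ)) = ((4*π * A:ℝ):ℂ) by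
    push_cast; field_simp]
  rw [show (1/2:ℂ) = ((1/2:ℝ):ℂ) by push_cast; rfl, ← ofReal_cpow (by positivity),
    ← sqrt_eq_rpow]
  rw [show ((1/A + 2*x:ℝ):ℂ) - (((1/A + x:ℝ):ℂ) * I)^2/(4*((-(1/(4*A)):ℝ):ℂ)) =
    ((-A * x^2:ℝ):ℂ) by
      push_cast; rw [mul_pow, I_sq]; field_simp; ring_nf]
  push_cast; rfl

lemma ker_mul_exp (A y u : ℝ) (s:ℂ) : cexp (-s * u) * ker A y s = ker A (y - u) s := by
  unfold ker; rw [← Complex.exp_add]; congr 1; push_cast; ring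

section
variable {X : Type*} [MeasurableSpace X] {μ : Measure X} [SFinite μ] {a : X → ℂ} {u : X → ℝ}

omit [SFinite μ] in
lemma gtr_prod_integrable {A : ℝ} (hA : 0 < A) (y:ℝ) (hu : Measurable u)
    (ha : Integrable (fun x => a x*(exp (-2*u x):ℂ)) μ) :
    Integrable (fun p : ℝ × X => a p.2*cexp (-(⟨2, p.1⟩:ℂ) * u p.2) * ker A y ⟨2, p.1⟩)
      ((volume : Measure ℝ).prod μ) := by
  have h1 := (integrable_ker hA y 2).mul_prod ha
  have h2 := h1.bdd_mul (c := 1) (f := fun p : ℝ × X => cexp (((-(p.1*u p.2):ℝ):ℂ) * I))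
    (by
      apply Measurable.aestronglyMeasurable
      fun_prop) (.of_forall fun p => by rw [norm_exp_ofReal_mul_I])
  refine h2.congr (.of_forall fun p => ?_)
  have e : cexp (-(⟨2, p.1⟩:ℂ) * u p.2) =
      cexp (((-(p.1*u p.2):ℝ):ℂ) * I)*(exp (-2*u p.2):ℂ) := by
    rw [ofReal_exp, ← Complex.exp_add, mk_eq]; congr 1; push_cast; ring
  simp only [e]; ring

lemma gtr_integrable {A : ℝ} (hA : 0 < A) (y:ℝ) (hu : Measurable u)
    (ha : Integrable (fun x => a x*(exp (-2*u x):ℂ)) μ) :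
    Integrable (fun t : ℝ => (∫ x, a x * cexp (-(⟨2, t⟩:ℂ) * u x) ∂μ) * ker A y ⟨2, t⟩) := by
  refine (gtr_prod_integrable hA y hu ha).integral_prod_left.congr (.of_forall fun t => ?_)
  simp only [integral_mul_const]

lemma gtr_eq {A : ℝ} (hA : 0 < A) (y:ℝ) (hu : Measurable u)
    (ha : Integrable (fun x => a x*(exp (-2*u x):ℂ)) μ) :
    gtr A y (fun s => ∫ x, a x * cexp (-s * u x) ∂μ) =
      ∫ x, a x*(exp (-A*(u x - y)^2):ℂ) ∂μ := by
  have hs : sqrt (4*π * A) ≠ 0 := (sqrt_pos.2 (by positivity)).ne'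
  unfold gtr
  simp_rw [← integral_mul_const]
  rw [integral_integral_swap (gtr_prod_integrable hA y hu ha)]
  have : ∀ x, ∫ t : ℝ, a x * cexp (-(⟨2, t⟩:ℂ) * u x) * ker A y ⟨2, t⟩ =
      (sqrt (4*π * A):ℂ)*(a x*(exp (-A*(u x - y)^2):ℂ)) := by
    intro x
    simp_rw [mul_assoc, ker_mul_exp]
    rw [integral_const_mul, integral_ker hA]
    rw [show (y - u x)^2 = (u x - y)^2 by ring]
    push_cast; ring
  simp_rw [this]
  rw [integral_const_mul, ← mul_assoc, ← ofReal_mul, inv_mul_cancel₀ hs]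
  simp
end

/-! ### The smoothed explicit formula -/

/-- The Gaussian weight `e^{-A(u-y)²}`. -/
def gw (A y u : ℝ) : ℝ := exp (-A*(u - y)^2)

/-- The mollifier `∑_{d ≤ Y} μ(d) d^{-s}`. -/
def moll (Y:ℕ) (s:ℂ) : ℂ := ∑ d ∈ Icc 1 Y, ((moebius d : ℤ):ℂ)*(d:ℂ)^(-s)

/-- The regular error function `-zlog + M ζ₀'`; off `s = 1` it equals
`-ζ'/ζ - 1/(s-1) + M (ζ' + 1/(s-1)²)`. -/
def efn (Y:ℕ) (s:ℂ) : ℂ := -zlog s + moll Y s * deriv riemannZeta₀ s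

lemma integrable_z_exp : IntegrableOn (fun z : ℝ => z * exp (-z)) (Set.Ioi 0) := by
  have h := Real.GammaIntegral_convergent (s := 2) (by norm_num)
  refine h.congr_fun (fun z hz => ?_) measurableSet_Ioi
  norm_num; ring

lemma integrable_exp_neg1 : IntegrableOn (fun z : ℝ => exp (-z)) (Set.Ioi 0) := by
  simpa using exp_neg_integrableOn_Ioi 0 (b := 1) one_pos

lemma integral_z_exp {r : ℂ} (hr : r.re = 1) :
    ∫ z : ℝ in Set.Ioi 0, (z:ℂ) * cexp (-r * z) = 1/r^2 := by
  have hr0 : r ≠ 0 := by intro h; rw [h] at hr; simp at hr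
  have hnorm : ∀ z : ℝ, ‖cexp (-r * z)‖ = exp (-z) := by
    intro z; rw [norm_exp]; congr 1; simp [hr]
  have hd : ∀ z : ℝ, HasDerivAt (fun z : ℝ => -((z:ℂ) / r + 1/r^2) * cexp (-r * z))
      ((z:ℂ) * cexp (-r * z)) z := by
    intro z
    have h1 : HasDerivAt (fun z : ℝ => (z:ℂ)) 1 z := Complex.ofRealCLM.hasDerivAt
    have h2 := ((h1.div_const r).add_const (1/r^2)).neg
    have h3 := (h1.const_mul (-r)).cexp
    refine (h2.mul h3).congr_deriv ?_
    simp only [Pi.neg_apply]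
    field_simp
    ring
  have ht : Tendsto (fun z : ℝ => -((z:ℂ) / r + 1/r^2) * cexp (-r * z)) atTop (nhds 0) := by
    have t1 := (tendsto_pow_mul_exp_neg_atTop_nhds_zero 1).const_mul (1/‖r‖)
    have t2 := (tendsto_pow_mul_exp_neg_atTop_nhds_zero 0).const_mul (1/‖r‖^2)
    have t3 := t1.add t2
    simp only [mul_zero, add_zero] at t3
    refine squeeze_zero_norm' ?_ t3
    filter_upwards [eventually_ge_atTop 0] with z hz
    rw [norm_mul, hnorm, norm_neg]
    have h4 := norm_add_le ((z:ℂ) / r) (1/r^2)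
    rw [norm_div, norm_div, norm_one, norm_pow, norm_real, norm_of_nonneg hz] at h4
    calc _ ≤ (z / ‖r‖ + 1/‖r‖^2) * exp (-z) := by gcongr
      _ = _ := by ring
  have h := integral_Ioi_of_hasDerivAt_of_tendsto' (a := (0:ℝ)) (fun z _ => hd z) ?_ ht
  · rw [h]; simp
  · refine integrable_z_exp.mono' ?_ ?_
    · apply Continuous.aestronglyMeasurable; fun_prop
    · filter_upwards [ae_restrict_mem measurableSet_Ioi] with z hz
      rw [norm_mul, hnorm, norm_real, norm_of_nonneg (le_of_lt hz)]

/-- The discrete form of `gtr_eq`, for Dirichlet series whose partial terms are indexed by `ℕ`. -/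
lemma gtr_sum {A : ℝ} (hA : 0 < A) (y:ℝ) {a : ℕ → ℝ} {u : ℕ → ℝ} {F : ℂ → ℂ}
    (hsum : Summable fun n => |a n| * exp (-2*u n))
    (hF : ∀ t : ℝ, HasSum (fun n => (a n : ℂ) * cexp (-(⟨2, t⟩:ℂ) * u n)) (F ⟨2, t⟩)) :
    gtr A y F = ((∑' n, a n * gw A y (u n):ℝ):ℂ) ∧ Integrable (fun t : ℝ => F ⟨2, t⟩ * ker A y ⟨2, t⟩) ∧
      Summable fun n => a n * gw A y (u n) := by
  have hu : Measurable u := measurable_of_countable u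
  have ha : Integrable (fun n => (a n : ℂ)*(exp (-2*u n):ℂ)) Measure.count := by
    rw [integrable_count_iff]
    refine hsum.congr fun n => ?_
    rw [norm_mul, norm_real, norm_real, norm_eq_abs, norm_of_nonneg (exp_pos _).le]
  have hsumF : ∀ t : ℝ, ∫ n, (a n : ℂ) * cexp (-(⟨2, t⟩:ℂ) * u n) ∂Measure.count = F ⟨2, t⟩ := by
    intro t
    rw [integral_countable]
    · rw [← (hF t).tsum_eq]; simp [Measure.real]
    · rw [integrable_count_iff]
      refine hsum.congr fun n => ?_
      rw [norm_mul, norm_real, norm_eq_abs, norm_exp]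
      simp
  have h1 := gtr_eq hA y hu ha
  have h2 := gtr_integrable hA y hu ha
  simp only [hsumF] at h2
  -- the Gaussian weight is at most a constant times `e^{-2u}`
  have hg : Summable fun n => a n * gw A y (u n) := by
    refine Summable.of_norm_bounded (hsum.mul_right (exp (2*y + 1/A))) fun n => ?_
    rw [norm_mul, norm_eq_abs, mul_assoc, gw, norm_of_nonneg (exp_pos _).le, ← exp_add]
    gcongr
    have e : -2*u n + (2*y + 1/A) - -A*(u n - y)^2 = (A*(u n - y) - 1)^2/A := by
      field_simp; ring
    have : 0 ≤ (A*(u n - y) - 1)^2/A := by positivity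
    linarith
  refine ⟨?_, h2, hg⟩
  have h3 : gtr A y F = gtr A y (fun s => ∫ n, (a n : ℂ) * cexp (-s * u n) ∂Measure.count) := by
    unfold gtr; simp only [hsumF]
  rw [h3, h1, integral_countable]
  · rw [Complex.ofReal_tsum]; simp [Measure.real, gw]
  · rw [integrable_count_iff]
    refine hg.norm.congr fun n => ?_
    rw [norm_mul, norm_mul, gw, norm_real, norm_real]

/-- The continuous form of `gtr_eq`. -/
lemma gtr_int {A : ℝ} (hA : 0 < A) (y u₀ : ℝ) {a : ℝ → ℝ} {F : ℂ → ℂ}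
    (hItg : IntegrableOn (fun z => a z * exp (-2*(u₀ + z))) (Set.Ioi 0))
    (hF : ∀ t : ℝ, ∫ z in Set.Ioi 0, (a z : ℂ) * cexp (-(⟨2, t⟩:ℂ)*((u₀ + z:ℝ):ℂ)) = F ⟨2, t⟩) :
    gtr A y F = ((∫ z in Set.Ioi 0, a z * gw A y (u₀ + z):ℝ):ℂ) ∧
      Integrable (fun t : ℝ => F ⟨2, t⟩ * ker A y ⟨2, t⟩) := by
  have hu : Measurable fun z : ℝ => u₀ + z := by fun_prop
  have ha : Integrable (fun z => (a z : ℂ)*(exp (-2*(u₀ + z)):ℂ)) (volume.restrict (Set.Ioi 0)) := by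
    have := hItg.ofReal (𝕜 := ℂ)
    simpa using this
  have h1 := gtr_eq hA y hu ha
  have h2 := gtr_integrable hA y hu ha
  simp only [hF] at h2
  refine ⟨?_, h2⟩
  have h3 : gtr A y F = gtr A y (fun s => ∫ z in Set.Ioi 0, (a z : ℂ) * cexp (-s*((u₀ + z:ℝ):ℂ))) := by
    unfold gtr; simp only [hF]
  rw [h3, h1, ← integral_complex_ofReal]
  simp only [gw, ofReal_mul]

lemma gtr_add {A y : ℝ} {F G : ℂ → ℂ} (hF : Integrable (fun t : ℝ => F ⟨2, t⟩ * ker A y ⟨2, t⟩))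
    (hG : Integrable (fun t : ℝ => G ⟨2, t⟩ * ker A y ⟨2, t⟩)) :
    gtr A y (fun s => F s + G s) = gtr A y F + gtr A y G ∧
      Integrable (fun t : ℝ => (F ⟨2, t⟩ + G ⟨2, t⟩) * ker A y ⟨2, t⟩) := by
  constructor
  · unfold gtr; rw [← mul_add, ← integral_add hF hG]; simp only [add_mul]
  · simp only [add_mul]; exact hF.add hG

lemma gtr_const_mul {A y : ℝ} {F : ℂ → ℂ} (c:ℂ) (hF : Integrable (fun t : ℝ => F ⟨2, t⟩ * ker A y ⟨2, t⟩)) :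
    gtr A y (fun s => c * F s) = c * gtr A y F ∧
      Integrable (fun t : ℝ => (c * F ⟨2, t⟩) * ker A y ⟨2, t⟩) := by
  constructor
  · unfold gtr; simp only [mul_assoc]; rw [integral_const_mul]; ring
  · simpa only [mul_assoc] using hF.const_mul c

lemma gtr_finset_sum {ι : Type*} (S : Finset ι) {A y : ℝ} {F : ι → ℂ → ℂ}
    (hF : ∀ i ∈ S, Integrable (fun t : ℝ => F i ⟨2, t⟩ * ker A y ⟨2, t⟩)) :
    gtr A y (fun s => ∑ i ∈ S, F i s) = ∑ i ∈ S, gtr A y (F i) ∧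
      Integrable (fun t : ℝ => (∑ i ∈ S, F i ⟨2, t⟩) * ker A y ⟨2, t⟩) := by
  constructor
  · unfold gtr; rw [← mul_sum, ← integral_finsetSum S hF]; simp only [sum_mul]
  · simpa only [sum_mul] using integrable_finsetSum S hF

lemma cpow_exp {n : ℕ} (hn : 1 ≤ n) (s:ℂ) : (n:ℂ)^(-s) = cexp (-s*(log n : ℝ)) := by
  rw [cpow_def_of_ne_zero (by exact_mod_cast (by omega : n ≠ 0)), ← natCast_log, mul_comm]

lemma exp_two_log {n : ℕ} (hn : 1 ≤ n) : exp (-2*log n) = (n:ℝ)^(-2:ℝ) := by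
  rw [rpow_def_of_pos (by exact_mod_cast hn), mul_comm]

lemma log_hasSum {s : ℂ} (hs : 1 < s.re) :
    HasSum (fun n : ℕ => (log n : ℂ)*(n:ℂ)^(-s)) (-deriv riemannZeta s) := by
  have h0 : LSeries.abscissaOfAbsConv 1 < s.re := by
    rw [LSeries.abscissaOfAbsConv_one]; exact_mod_cast hs
  have h1 := (LSeriesSummable_logMul_of_lt_re h0).LSeriesHasSum
  have h2 := LSeries_deriv h0
  have h3 : deriv (LSeries 1) s = deriv riemannZeta s := by
    apply EventuallyEq.deriv_eq
    have : {z : ℂ | 1 < z.re} ∈ nhds s := (isOpen_lt continuous_const continuous_re).mem_nhds hs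
    filter_upwards [this] with z hz
    exact LSeries_one_eq_riemannZeta hz
  rw [h3] at h2
  rw [h2, neg_neg]
  refine h1.congr_fun fun n => ?_
  rcases Nat.eq_zero_or_pos n with rfl | hn
  · simp
  · rw [LSeries.term_of_ne_zero (by omega), div_eq_mul_inv, ← cpow_neg]
    simp [LSeries.logMul]

lemma summable_log_sq : Summable fun n : ℕ => log n*(n:ℝ)^(-2:ℝ) := by
  have h := (log_hasSum (s := 2) (by norm_num)).summable
  have := (hasSum_re h.hasSum).summable
  refine this.congr fun n => ?_
  rw [re_ofReal_mul]; congr 1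
  rw [show (-2:ℂ) = ((-2:ℝ):ℂ) by push_cast; rfl, ← Complex.ofReal_natCast, ← ofReal_cpow (by positivity)]
  exact ofReal_re _

lemma gtr_vm {A : ℝ} (hA : 0 < A) (y:ℝ) :
    gtr A y (fun s => -(deriv riemannZeta s / riemannZeta s)) =
      ((∑' n : ℕ, vonMangoldt n * gw A y (log n):ℝ):ℂ) ∧
    Integrable (fun t : ℝ => (-(deriv riemannZeta ⟨2, t⟩ / riemannZeta ⟨2, t⟩)) * ker A y ⟨2, t⟩) ∧
    Summable fun n : ℕ => vonMangoldt n * gw A y (log n) := by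
  apply gtr_sum hA y
  · refine (vm_real (σ := 2) (by norm_num)).summable.congr fun n => ?_
    rcases Nat.eq_zero_or_pos n with rfl | hn
    · simp
    · rw [exp_two_log hn, abs_of_nonneg vonMangoldt_nonneg]
  · intro t
    have h := (ArithmeticFunction.LSeriesSummable_vonMangoldt (s := ⟨2, t⟩) (by norm_num)).LSeriesHasSum
    rw [ArithmeticFunction.LSeries_vonMangoldt_eq_deriv_riemannZeta_div (by norm_num), neg_div] at h
    refine HasSum.congr_fun h fun n => ?_
    rcases Nat.eq_zero_or_pos n with rfl | hn
    · simp
    · rw [LSeries.term_of_ne_zero (by omega), div_eq_mul_inv, ← cpow_neg, cpow_exp hn]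

lemma gtr_log {A : ℝ} (hA : 0 < A) (y:ℝ) {d : ℕ} (hd : 1 ≤ d) :
    gtr A y (fun s => (d:ℂ)^(-s) * -deriv riemannZeta s) =
      ((∑' l : ℕ, log l * gw A y (log d + log l):ℝ):ℂ) ∧
    Integrable (fun t : ℝ => ((d:ℂ)^(-(⟨2, t⟩:ℂ)) * -deriv riemannZeta ⟨2, t⟩) * ker A y ⟨2, t⟩) ∧
    Summable fun l : ℕ => log l * gw A y (log d + log l) := by
  apply gtr_sum hA y (F := fun s => (d:ℂ)^(-s) * -deriv riemannZeta s)
  · refine (summable_log_sq.mul_left (exp (-2*log d))).congr fun n => ?_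
    rcases Nat.eq_zero_or_pos n with rfl | hn
    · simp
    · rw [mul_add, exp_add, exp_two_log hn, abs_of_nonneg (log_natCast_nonneg n)]; ring
  · intro t
    have h := (log_hasSum (s := ⟨2, t⟩) (by norm_num)).mul_left ((d:ℂ)^(-(⟨2, t⟩:ℂ)))
    refine HasSum.congr_fun h fun n => ?_
    rcases Nat.eq_zero_or_pos n with rfl | hn
    · simp
    · rw [Complex.ofReal_add, mul_add, Complex.exp_add, cpow_exp hn, cpow_exp hd]; ring

lemma gtr_pole {A : ℝ} (hA : 0 < A) (y:ℝ) :
    gtr A y (fun s => 1/(s - 1)) = ((∫ z in Set.Ioi 0, exp z * gw A y z:ℝ):ℂ) ∧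
    Integrable (fun t : ℝ => (1/((⟨2, t⟩:ℂ) - 1)) * ker A y ⟨2, t⟩) := by
  have h := gtr_int hA y 0 (a := exp) (F := fun s => 1/(s - 1)) ?_ ?_
  · simpa using h
  · refine integrable_exp_neg1.congr_fun (fun z hz => ?_) measurableSet_Ioi
    simp only [zero_add]; rw [← exp_add]; congr 1; ring
  · intro t
    have h1 := integral_exp_mul_complex_Ioi (a := -((⟨2, t⟩:ℂ) - 1)) (by simp) 0
    rw [show (1/((⟨2, t⟩:ℂ) - 1)) = -cexp (-((⟨2, t⟩:ℂ) - 1)*(0:ℝ)) / -((⟨2, t⟩:ℂ) - 1) by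
      rw [Complex.ofReal_zero, mul_zero, Complex.exp_zero, neg_div_neg_eq], ← h1]
    congr 1; ext z
    rw [ofReal_exp, ← Complex.exp_add]; congr 1; push_cast; ring

lemma gtr_pole2 {A : ℝ} (hA : 0 < A) (y:ℝ) {d : ℕ} (hd : 1 ≤ d) :
    gtr A y (fun s => (d:ℂ)^(-s)*(1/(s - 1)^2)) =
      ((∫ z in Set.Ioi 0, (z * exp z) * gw A y (log d + z):ℝ):ℂ) ∧
    Integrable (fun t : ℝ => ((d:ℂ)^(-(⟨2, t⟩:ℂ))*(1/((⟨2, t⟩:ℂ) - 1)^2)) * ker A y ⟨2, t⟩) := by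
  apply gtr_int hA y (log d) (F := fun s => (d:ℂ)^(-s)*(1/(s - 1)^2)) (a := fun z => z * exp z)
  · refine IntegrableOn.congr_fun (integrable_z_exp.const_mul (exp (-2*log d))) (fun z hz => ?_) measurableSet_Ioi
    simp only [mul_add, exp_add]
    rw [show -z = z + (-2*z) by ring, exp_add]; ring
  · intro t
    rw [← integral_z_exp (r := (⟨2, t⟩:ℂ) - 1) (by norm_num), ← integral_const_mul]
    congr 1; ext z
    rw [cpow_exp hd, Complex.ofReal_add, mul_add, Complex.exp_add, ofReal_mul, ofReal_exp,
      show -((⟨2, t⟩:ℂ) - 1)*(z:ℂ) = z + -(⟨2, t⟩:ℂ) * z by ring, Complex.exp_add]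
    ring

/-- The difference between the sum and the integral of `log v · g(dv)`. -/
def errI (A y : ℝ) (d:ℕ) : ℝ :=
  (∑' l : ℕ, log l * gw A y (log d + log l)) -
    ∫ z in Set.Ioi 0, (z * exp z) * gw A y (log d + z)

lemma zeta0_deriv {s : ℂ} (hs : s ≠ 1) : deriv riemannZeta₀ s = deriv riemannZeta s + 1/(s - 1)^2 := by
  rw [deriv_riemannZeta_eq_neg_inv_sub_sq_add hs]; rw [inv_pow, one_div]; ring

lemma gtr_congr {A y : ℝ} {F G : ℂ → ℂ} {c : ℂ} (h : ∀ s : ℂ, s.re = 2 → F s = G s)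
    (hF : gtr A y F = c ∧ Integrable (fun t : ℝ => F ⟨2, t⟩ * ker A y ⟨2, t⟩)) :
    gtr A y G = c ∧ Integrable (fun t : ℝ => G ⟨2, t⟩ * ker A y ⟨2, t⟩) := by
  have h' : ∀ t : ℝ, F ⟨2, t⟩ = G ⟨2, t⟩ := fun t => h _ rfl
  refine ⟨?_, ?_⟩
  · rw [← hF.1]; unfold gtr; simp only [h']
  · simpa only [h'] using hF.2

lemma ne_one_of_re {s : ℂ} (hs : s.re = 2) : s ≠ 1 := by
  intro h; rw [h] at hs; norm_num at hs

lemma gtr_zlog {A : ℝ} (hA : 0 < A) (y:ℝ) :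
    gtr A y (fun s => -zlog s) = ((∑' n : ℕ, vonMangoldt n * gw A y (log n):ℝ):ℂ) -
      ((∫ z in Set.Ioi 0, exp z * gw A y z:ℝ):ℂ) ∧
    Integrable (fun t : ℝ => (fun s => -zlog s) ⟨2, t⟩ * ker A y ⟨2, t⟩) := by
  obtain ⟨v1, v2, -⟩ := gtr_vm hA y
  obtain ⟨p1, p2⟩ := gtr_pole hA y
  have hp := gtr_const_mul (F := fun s => 1/(s - 1)) (-1) p2
  have ha2 := gtr_add (F := fun s => -(deriv riemannZeta s / riemannZeta s))
    (G := fun s => -1*(1/(s - 1))) v2 hp.2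
  refine gtr_congr (F := fun s => -(deriv riemannZeta s / riemannZeta s) + -1*(1/(s - 1))) ?_ ⟨?_, ha2.2⟩
  · intro s hs
    simp only [zlog_eq (ne_one_of_re hs) (zeta1_ne (by rw [hs]; norm_num))]; ring
  · rw [ha2.1, hp.1, v1, p1]; ring

/-- One term of the product of the mollifier with `ζ₀'`. -/
def tfn (d:ℕ) (s:ℂ) : ℂ := (d:ℂ)^(-s) * deriv riemannZeta₀ s

lemma gtr_tfn {A : ℝ} (hA : 0 < A) (y:ℝ) {d : ℕ} (hd1 : 1 ≤ d) :
    gtr A y (tfn d) = -((errI A y d : ℝ):ℂ) ∧ Integrable (fun t : ℝ => tfn d ⟨2, t⟩ * ker A y ⟨2, t⟩) := by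
  obtain ⟨l1, l2, -⟩ := gtr_log hA y hd1
  obtain ⟨q1, q2⟩ := gtr_pole2 hA y hd1
  have hl := gtr_const_mul (F := fun s => (d:ℂ)^(-s) * -deriv riemannZeta s) (-1) l2
  have ha := gtr_add (F := fun s => (-1:ℂ)*((d:ℂ)^(-s) * -deriv riemannZeta s))
    (G := fun s => (d:ℂ)^(-s)*(1/(s - 1)^2)) hl.2 q2
  refine gtr_congr (F := fun s => (-1:ℂ)*((d:ℂ)^(-s) * -deriv riemannZeta s) +
    (d:ℂ)^(-s)*(1/(s - 1)^2)) ?_ ⟨?_, ha.2⟩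
  · intro s hs
    rw [tfn, zeta0_deriv (ne_one_of_re hs)]; ring
  · rw [ha.1, hl.1, l1, q1, errI]
    push_cast; ring

/-- The smoothed explicit formula. -/
lemma explicit_formula {A : ℝ} (hA : 0 < A) (y:ℝ) (Y:ℕ) :
    ((∑' n : ℕ, vonMangoldt n * gw A y (log n):ℝ):ℂ) =
      ((∫ z in Set.Ioi 0, exp z * gw A y z:ℝ):ℂ) +
      ((∑ d ∈ Icc 1 Y, (moebius d : ℝ) * errI A y d:ℝ):ℂ) + gtr A y (efn Y) ∧
    Integrable (fun t : ℝ => efn Y ⟨2, t⟩ * ker A y ⟨2, t⟩) := by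
  obtain ⟨z1, z2⟩ := gtr_zlog hA y
  have hd : ∀ d ∈ Icc 1 Y, gtr A y (fun s => ((moebius d : ℤ):ℂ) * tfn d s) =
      -(((moebius d : ℝ) * errI A y d:ℝ):ℂ) ∧
      Integrable (fun t : ℝ => (((moebius d : ℤ):ℂ) * tfn d ⟨2, t⟩) * ker A y ⟨2, t⟩) := by
    intro d hd
    obtain ⟨q1, q2⟩ := gtr_tfn hA y (mem_Icc.1 hd).1
    have hm := gtr_const_mul ((moebius d : ℤ):ℂ) q2
    refine ⟨?_, hm.2⟩
    rw [hm.1, q1]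
    push_cast; ring
  have hsum := gtr_finset_sum (Icc 1 Y) (A := A) (y := y)
    (F := fun d s => ((moebius d : ℤ):ℂ) * tfn d s) (fun d hd' => (hd d hd').2)
  have ha1 := gtr_add (F := fun s => -zlog s)
    (G := fun s => ∑ d ∈ Icc 1 Y, ((moebius d : ℤ):ℂ) * tfn d s) z2 hsum.2
  have he := gtr_congr (G := efn Y) (fun s hs => ?_) ha1
  · refine ⟨?_, he.2⟩
    rw [he.1, z1, hsum.1, sum_congr rfl (fun d hd' => (hd d hd').1), sum_neg_distrib]
    push_cast
    ring
  · simp only [efn, moll, tfn, sum_mul, mul_assoc]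

/-! ### Sums against integrals -/

lemma step_var {h h' G : ℝ → ℝ} (hd : ∀ z, HasDerivAt h (h' z) z) (hc : Continuous h') (hG : Continuous G)
    (hb : ∀ z, 0 ≤ z → |h' z| ≤ G z) {l : ℕ} (hl : 1 ≤ l) :
    |h (log l) - ∫ z in (log l)..(log (l + 1:ℕ)), h z * exp z| ≤
      ∫ z in (log l)..(log (l + 1:ℕ)), G z := by
  set a := log l with ha
  set b := log (l + 1:ℕ) with hb'
  have hl0 : (0:ℝ) < l := by exact_mod_cast hl
  have ha0 : 0 ≤ a := log_natCast_nonneg l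
  have hab : a ≤ b := log_le_log hl0 (by push_cast; linarith)
  have hch : Continuous h := continuous_iff_continuousAt.2 fun z => (hd z).continuousAt
  have hexp : ∫ z in a..b, exp z = 1 := by
    rw [integral_exp, ha, hb', exp_log hl0, exp_log (by positivity)]; push_cast; ring
  set V := ∫ z in a..b, G z with hV
  have hosc : ∀ z ∈ Set.Icc a b, |h a - h z| ≤ V := by
    intro z hz
    have e1 : ∫ x in a..z, h' x = h z - h a :=
      intervalIntegral.integral_eq_sub_of_hasDerivAt (fun x _ => hd x) (hc.intervalIntegrable _ _)
    rw [abs_sub_comm, ← e1]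
    calc |∫ x in a..z, h' x| ≤ ∫ x in a..z, |h' x| := intervalIntegral.abs_integral_le_integral_abs hz.1
      _ ≤ ∫ x in a..z, G x := intervalIntegral.integral_mono_on hz.1 (hc.abs.intervalIntegrable _ _)
          (hG.intervalIntegrable _ _) fun x hx => hb x (ha0.trans hx.1)
      _ ≤ V := by
          rw [hV, ← intervalIntegral.integral_add_adjacent_intervals (a := a) (b := z) (c := b)
            (hG.intervalIntegrable _ _) (hG.intervalIntegrable _ _)]
          have : 0 ≤ ∫ x in z..b, G x := intervalIntegral.integral_nonneg hz.2 fun x hx =>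
            (abs_nonneg _).trans (hb x (ha0.trans (hz.1.trans hx.1)))
          linarith
  have e2 : h a - ∫ z in a..b, h z * exp z = ∫ z in a..b, (h a - h z) * exp z := by
    have : ∀ z, (h a - h z) * exp z = h a * exp z - h z * exp z := fun z => by ring
    simp only [this]
    rw [intervalIntegral.integral_sub, intervalIntegral.integral_const_mul, hexp, mul_one]
    · exact (by fun_prop : Continuous fun z => h a * exp z).intervalIntegrable _ _
    · exact (by fun_prop : Continuous fun z => h z * exp z).intervalIntegrable _ _
  rw [e2]
  calc _ ≤ ∫ z in a..b, |(h a - h z) * exp z| := intervalIntegral.abs_integral_le_integral_abs hab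
    _ ≤ ∫ z in a..b, V * exp z := by
        apply intervalIntegral.integral_mono_on hab
        · exact (by fun_prop : Continuous fun z => |(h a - h z) * exp z|).intervalIntegrable _ _
        · exact (by fun_prop : Continuous fun z => V * exp z).intervalIntegrable _ _
        · intro z hz
          rw [abs_mul, abs_of_pos (exp_pos z)]
          have := hosc z hz
          gcongr
    _ = V := by rw [intervalIntegral.integral_const_mul, hexp, mul_one]

/-- A sum over `log l` differs from the integral against `e^z dz` by at most the total variation. -/
lemma sum_int_var {h h' G : ℝ → ℝ} (hd : ∀ z, HasDerivAt h (h' z) z) (hc : Continuous h') (hG : Continuous G)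
    (hb : ∀ z, 0 ≤ z → |h' z| ≤ G z) (hG0 : ∀ z, 0 ≤ G z) (hGi : Integrable G) (h0 : h 0 = 0)
    (hs : Summable fun l : ℕ => h (log l)) (hItg : IntegrableOn (fun z => h z * exp z) (Set.Ioi 0)) :
    |(∑' l : ℕ, h (log l)) - ∫ z in Set.Ioi 0, h z * exp z| ≤ ∫ z, G z := by
  have hch : Continuous h := continuous_iff_continuousAt.2 fun z => (hd z).continuousAt
  have hpart : ∀ L : ℕ, |(∑ l ∈ range (L + 1), h (log l)) -
      ∫ z in (0:ℝ)..(log (L + 1:ℕ)), h z * exp z| ≤ ∫ z in (0:ℝ)..(log (L + 1:ℕ)), G z := by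
    intro L
    induction L with
    | zero => simp [h0]
    | succ L ih =>
      rw [sum_range_succ, ← intervalIntegral.integral_add_adjacent_intervals (b := log (L + 1:ℕ))
        ((by fun_prop : Continuous fun z => h z * exp z).intervalIntegrable _ _)
        ((by fun_prop : Continuous fun z => h z * exp z).intervalIntegrable _ _),
        ← intervalIntegral.integral_add_adjacent_intervals (b := log (L + 1:ℕ))
        (hG.intervalIntegrable _ _) (hG.intervalIntegrable _ _)]
      have := step_var hd hc hG hb (l := L + 1) (by omega)
      rw [add_sub_add_comm]
      exact (abs_add_le _ _).trans (add_le_add ih this)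
  have hlog : Tendsto (fun L : ℕ => log (L + 1:ℕ)) atTop atTop :=
    tendsto_log_atTop.comp (tendsto_natCast_atTop_atTop.comp (tendsto_add_atTop_nat 1))
  have t1 := (hs.hasSum.tendsto_sum_nat).comp (tendsto_add_atTop_nat 1)
  have t2 := intervalIntegral_tendsto_integral_Ioi 0 hItg hlog
  refine le_of_tendsto (t1.sub t2).abs (.of_forall fun L => ?_)
  refine (hpart L).trans ?_
  rw [intervalIntegral.integral_of_le (log_natCast_nonneg _)]
  exact setIntegral_le_integral hGi (.of_forall hG0)

lemma gw_shift (A y u z : ℝ) : gw A y (u + z) = exp (-A*(z - (y - u))^2) := by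
  unfold gw; congr 2; ring

lemma integrable_gauss_shift {b : ℝ} (hb : 0 < b) (x:ℝ) : Integrable fun z : ℝ => exp (-b*(z - x)^2) :=
  (integrable_exp_neg_mul_sq hb).comp_sub_right x

lemma integral_gauss_shift (b x : ℝ) : ∫ z : ℝ, exp (-b*(z - x)^2) = sqrt (π / b) := by
  rw [integral_sub_right_eq_self (fun z => exp (-b * z^2)) x, integral_gaussian]

lemma zg_integrable {A : ℝ} (hA : 0 < A) (z₀:ℝ) :
    IntegrableOn (fun z => z * exp (-A*(z - z₀)^2) * exp z) (Set.Ioi 0) := by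
  refine (integrable_z_exp.const_mul (exp (2*z₀ + 1/A))).mono' (by fun_prop) ?_
  filter_upwards [ae_restrict_mem measurableSet_Ioi] with z hz
  have hz' : 0 < z := hz
  rw [norm_of_nonneg (by positivity)]
  rw [mul_assoc, ← exp_add, mul_comm (exp _), mul_assoc, ← exp_add]
  refine mul_le_mul_of_nonneg_left (exp_le_exp.2 ?_) hz'.le
  have e : -z + (2*z₀ + 1/A) - (-A*(z - z₀)^2 + z) = (A*(z - z₀) - 1)^2/A := by
    field_simp; ring
  have : 0 ≤ (A*(z - z₀) - 1)^2/A := by positivity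
  linarith

lemma errI_bound {A : ℝ} (hA : 1 ≤ A) (y:ℝ) {d : ℕ} (hd : 1 ≤ d) :
    |errI A y d| ≤ 15 + 6*(|y| + log d) := by
  have hA0 : 0 < A := by linarith
  obtain ⟨-, -, hs⟩ := gtr_log hA0 y hd
  set z₀ := y - log d with hz₀
  set C := 5 + 2*sqrt A * |z₀| with hC
  have hC0 : 0 ≤ C := by positivity
  have hder : ∀ z, HasDerivAt (fun z => z * exp (-A*(z - z₀)^2))
      (exp (-A*(z - z₀)^2) - 2*A * z*(z - z₀) * exp (-A*(z - z₀)^2)) z := by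
    intro z
    have h1 := ((((hasDerivAt_id z).sub_const z₀).pow 2).const_mul (-A)).exp
    refine ((hasDerivAt_id z).mul h1).congr_deriv ?_
    simp; ring
  have key := sum_int_var (G := fun z => C * exp (-(A/2)*(z - z₀)^2)) hder (by fun_prop) (by fun_prop) ?_
    (fun z => by positivity) ((integrable_gauss_shift (by positivity) z₀).const_mul C) (by simp) ?_
    (zg_integrable hA0 z₀)
  · rw [integral_const_mul, integral_gauss_shift] at key
    have e : errI A y d = (∑' l : ℕ, log l * exp (-A*(log l - z₀)^2)) -
        ∫ z in Set.Ioi 0, z * exp (-A*(z - z₀)^2) * exp z := by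
      rw [errI]; simp only [gw_shift]
      congr 2; ext z; ring
    rw [e]
    refine key.trans ?_
    have hpi : sqrt (π / (A/2)) ≤ 3/sqrt A := by
      rw [show π / (A/2) = (2*π) / A by field_simp, sqrt_div (by positivity)]
      gcongr
      rw [sqrt_le_left (by norm_num)]
      nlinarith [pi_lt_four, pi_lt_d2]
    have hsA : 1 ≤ sqrt A := by rw [one_le_sqrt]; exact hA
    have hz : |z₀| ≤ |y| + log d := by
      rw [hz₀]
      calc _ ≤ |y| + |log d| := abs_sub _ _
        _ = _ := by rw [abs_of_nonneg (log_natCast_nonneg d)]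
    calc _ ≤ C*(3/sqrt A) := by gcongr
      _ = 15/sqrt A + 6*|z₀| := by rw [hC]; field_simp; ring
      _ ≤ 15 + 6*|z₀| := by
          have : 15/sqrt A ≤ 15 := div_le_self (by norm_num) hsA
          linarith
      _ ≤ _ := by linarith
  · intro z hz
    set x := sqrt A * |z - z₀| with hx
    have hx0 : 0 ≤ x := by positivity
    have hx2 : x^2 = A*(z - z₀)^2 := by rw [hx, mul_pow, sq_sqrt hA0.le, sq_abs]
    have eE : exp (-A*(z - z₀)^2) = exp (-(x^2/2)) * exp (-(x^2/2)) := by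
      rw [← exp_add]; congr 1; rw [hx2]; ring
    have eG : exp (-(A/2)*(z - z₀)^2) = exp (-(x^2/2)) := by congr 1; rw [hx2]; ring
    set E := exp (-(x^2/2)) with hE
    have hE0 : 0 < E := exp_pos _
    have hinv : exp (x^2/2) * E = 1 := by rw [hE, ← exp_add]; simp
    have hlow : 1 + x^2/2 ≤ exp (x^2/2) := by linarith [add_one_le_exp (x^2/2)]
    have h1 : (1 + x^2/2) * E ≤ 1 :=
      (mul_le_mul_of_nonneg_right hlow hE0.le).trans hinv.le
    have hsq : sqrt A * sqrt A = A := mul_self_sqrt hA0.le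
    have hz1 : z ≤ |z₀| + |z - z₀| := by
      calc z = z₀ + (z - z₀) := by ring
        _ ≤ _ := add_le_add (le_abs_self _) (le_abs_self _)
    simp only [eE, eG]
    have e3 : |E * E - 2*A * z*(z - z₀)*(E * E)| ≤ E * E + 2*A * z * |z - z₀| * (E * E) := by
      refine (abs_sub _ _).trans ?_
      rw [abs_of_nonneg (by positivity : 0 ≤ E * E), abs_mul, abs_mul, abs_of_nonneg (by positivity : 0 ≤ 2*A * z),
        abs_of_nonneg (by positivity : 0 ≤ E * E)]
    refine e3.trans ?_
    have e4 : 2*A * z * |z - z₀| ≤ 2*sqrt A * |z₀| * x + 2*x^2 := by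
      have : 2*A * z * |z - z₀| ≤ 2*A*(|z₀| + |z - z₀|) * |z - z₀| := by gcongr
      refine this.trans (le_of_eq ?_)
      rw [hx, mul_pow, sq_sqrt hA0.le]
      nth_rewrite 1 [← hsq]
      rw [mul_add, add_mul]
      congr 1
      · ring
      · rw [hsq]; ring
    have e5 : x * E ≤ 1 := by nlinarith [sq_nonneg (x - 1)]
    have e6 : x^2*E ≤ 2 := by nlinarith
    have e7 : E ≤ 1 := by nlinarith [sq_nonneg x]
    calc E * E + 2*A * z * |z - z₀| * (E * E)
        ≤ E * E + (2*sqrt A * |z₀| * x + 2*x^2)*(E * E) := by gcongr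
      _ = (E + 2*sqrt A * |z₀| * (x * E) + 2*(x^2*E)) * E := by ring
      _ ≤ (1 + 2*sqrt A * |z₀| * 1 + 2*2) * E := by gcongr
      _ = C * E := by rw [hC]; ring
  · simpa only [gw_shift] using hs

lemma errI_total {A : ℝ} (hA : 1 ≤ A) (y:ℝ) (Y:ℕ) :
    |∑ d ∈ Icc 1 Y, (moebius d : ℝ) * errI A y d| ≤ Y*(15 + 6*(|y| + log Y)) := by
  calc _ ≤ ∑ d ∈ Icc 1 Y, |(moebius d : ℝ) * errI A y d| := abs_sum_le_sum_abs _ _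
    _ ≤ ∑ d ∈ Icc 1 Y, (15 + 6*(|y| + log Y)) := by
        refine sum_le_sum fun d hd => ?_
        obtain ⟨h1, h2⟩ := mem_Icc.1 hd
        rw [abs_mul]
        have hm : |(moebius d : ℝ)| ≤ 1 := by
          exact_mod_cast ArithmeticFunction.abs_moebius_le_one
        have hl : log d ≤ log Y := log_le_log (by exact_mod_cast h1) (by exact_mod_cast h2)
        have := errI_bound hA y h1
        calc _ ≤ 1*|errI A y d| := by gcongr
          _ ≤ _ := by linarith
    _ = _ := by rw [sum_const, Nat.card_Icc, nsmul_eq_mul]; simp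

/-! ### Shifting the contour -/

lemma gauss_tail {A T : ℝ} (hA : 0 < A) (hT : 0 ≤ T) :
    ∫ t in (Set.Icc (-T) T)ᶜ, exp (-(1/(4*A)) * t^2) ≤
      exp (-(T^2/(8*A))) * sqrt (8*π * A) := by
  have hi : ∀ b : ℝ, 0 < b → Integrable fun t : ℝ => exp (-b * t^2) := fun b hb => integrable_exp_neg_mul_sq hb
  calc _ ≤ ∫ t in (Set.Icc (-T) T)ᶜ, exp (-(T^2/(8*A))) * exp (-(1/(8*A)) * t^2) := by
        apply setIntegral_mono_on (hi _ (by positivity)).integrableOn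
          ((hi _ (by positivity)).const_mul _).integrableOn measurableSet_Icc.compl
        intro t ht
        rw [← exp_add]
        apply exp_le_exp.2
        have h1 : T^2 ≤ t^2 := by
          rw [← sq_abs t]
          have : T < |t| := by
            by_contra hc
            push Not at hc
            exact ht (abs_le.1 hc)
          gcongr
        have : T^2/(8*A) ≤ t^2/(8*A) := by gcongr
        have e1 : -(1/(4*A)) * t^2 = -2*(t^2/(8*A)) := by field_simp; ring
        have e2 : -(1/(8*A)) * t^2 = - (t^2/(8*A)) := by field_simp
        rw [e1, e2]; linarith
    _ ≤ ∫ t : ℝ, exp (-(T^2/(8*A))) * exp (-(1/(8*A)) * t^2) :=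
        setIntegral_le_integral ((hi _ (by positivity)).const_mul _)
          (.of_forall fun t => by positivity)
    _ = _ := by
        rw [integral_const_mul, integral_gaussian]
        congr 2; field_simp

/-- Cauchy's theorem on a rectangle; the Gaussian factor makes the horizontal sides and the tails negligible. -/
lemma contour_shift {A y T σ₀ H C : ℝ} {F : ℂ → ℂ} (hA : 1 ≤ A) (hy : 0 ≤ y) (hT : 0 ≤ T) (hσ : 0 ≤ σ₀) (hσ2 : σ₀ ≤ 2)
    (hF : DifferentiableOn ℂ F {s | σ₀ ≤ s.re ∧ s.re ≤ 2 ∧ |s.im| ≤ T})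
    (hFi : Integrable (fun t : ℝ => F ⟨2, t⟩ * ker A y ⟨2, t⟩))
    (hH : ∀ s : ℂ, σ₀ ≤ s.re → s.re ≤ 2 → |s.im| = T → ‖F s‖ ≤ H) (hC : ∀ t : ℝ, ‖F ⟨2, t⟩‖ ≤ C) :
    ‖gtr A y F - ((sqrt (4*π * A))⁻¹:ℝ) * ∫ t in (-T)..T, F ⟨σ₀, t⟩ * ker A y ⟨σ₀, t⟩‖ ≤
      (4*H + 2*C) * exp (1 + 2*y - T^2/(8*A)) := by
  have hA0 : 0 < A := by linarith
  have hH0 : 0 ≤ H := (norm_nonneg _).trans (hH ⟨2, T⟩ hσ2 le_rfl (abs_of_nonneg hT))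
  have hC0 : 0 ≤ C := (norm_nonneg _).trans (hC 0)
  have hkd : Differentiable ℂ (ker A y) := by unfold ker; fun_prop
  have hkb : ∀ σ t : ℝ, 0 ≤ σ → σ ≤ 2 → ‖ker A y ⟨σ, t⟩‖ ≤ exp (1 + 2*y) * exp (-(1/(4*A)) * t^2) := by
    intro σ t h0 h2
    rw [norm_ker, ← exp_add]
    apply exp_le_exp.2
    have h3 : σ^2/(4*A) ≤ 1 := by rw [div_le_one (by positivity)]; nlinarith
    have h4 : σ * y ≤ 2*y := by gcongr
    have h5 : (σ^2 - t^2) / (4*A) = σ^2/(4*A) + -(1/(4*A)) * t^2 := by field_simp; ring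
    rw [h5]; linarith
  have hrect := Complex.integral_boundary_rect_eq_zero_of_differentiableOn (fun s => F s * ker A y s)
    (⟨σ₀, -T⟩:ℂ) (⟨2, T⟩:ℂ) ?_
  · simp only at hrect
    have hside : ∀ τ : ℝ, |τ| = T → ‖∫ x in σ₀..2, F ((x:ℂ) + (τ:ℂ) * I) * ker A y ((x:ℂ) + (τ:ℂ) * I)‖ ≤
        2*(H * exp (1 + 2*y - T^2/(8*A))) := by
      intro τ hτ
      have := intervalIntegral.norm_integral_le_of_norm_le_const (a := σ₀) (b := 2)
        (f := fun x : ℝ => F ((x:ℂ) + (τ:ℂ) * I) * ker A y ((x:ℂ) + (τ:ℂ) * I))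
        (C := H * exp (1 + 2*y - T^2/(8*A))) ?_
      · refine this.trans ?_
        rw [abs_of_nonneg (by linarith), mul_comm]
        gcongr; linarith
      · intro x hx
        rw [Set.uIoc_of_le hσ2] at hx
        rw [← mk_eq, norm_mul]
        have h1 := hkb x τ (hσ.trans hx.1.le) hx.2
        rw [← exp_add] at h1
        refine mul_le_mul (hH _ hx.1.le hx.2 hτ) (h1.trans (exp_le_exp.2 ?_)) (norm_nonneg _) hH0
        rw [← sq_abs τ, hτ]
        have : T^2/(8*A) ≤ T^2/(4*A) := by gcongr; norm_num
        have e : -(1/(4*A)) * T^2 = - (T^2/(4*A)) := by field_simp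
        rw [e]; linarith
    have h1 := hside (-T) (by rw [abs_neg, abs_of_nonneg hT])
    have h2 := hside T (abs_of_nonneg hT)
    -- split the full line
    have hsplit := integral_add_compl (measurableSet_Icc (a := -T) (b := T)) hFi
    have htail : ‖∫ t in (Set.Icc (-T) T)ᶜ, F ⟨2, t⟩ * ker A y ⟨2, t⟩‖ ≤
        C*(exp (1 + 2*y - T^2/(8*A)) * sqrt (8*π * A)) := by
      have hi : Integrable fun t : ℝ => exp (-(1/(4*A)) * t^2) := integrable_exp_neg_mul_sq (by positivity)
      calc _ ≤ ∫ t in (Set.Icc (-T) T)ᶜ, C*(exp (1 + 2*y) * exp (-(1/(4*A)) * t^2)) := by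
            refine norm_integral_le_of_norm_le ((hi.const_mul _).const_mul _).integrableOn
              (.of_forall fun t => ?_)
            rw [norm_mul]
            exact mul_le_mul (hC t) (hkb 2 t (by norm_num) le_rfl) (norm_nonneg _) hC0
        _ = C*(exp (1 + 2*y) * ∫ t in (Set.Icc (-T) T)ᶜ, exp (-(1/(4*A)) * t^2)) := by
            rw [integral_const_mul, integral_const_mul]
        _ ≤ C*(exp (1 + 2*y)*(exp (-(T^2/(8*A))) * sqrt (8*π * A))) := by
            have := gauss_tail hA0 hT
            gcongr
        _ = _ := by rw [← mul_assoc (exp _), ← exp_add, sub_eq_add_neg]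
    set S := sqrt (4*π * A) with hS
    have hS1 : 1 ≤ S := by
      rw [hS, one_le_sqrt]; nlinarith [pi_gt_three]
    have hS8 : sqrt (8*π * A) ≤ 2*S := by
      rw [hS, show (2:ℝ) = sqrt 4 by rw [show (4:ℝ) = 2^2 by norm_num, sqrt_sq (by norm_num)],
        ← sqrt_mul (by norm_num)]
      apply sqrt_le_sqrt
      have : 0 < π * A := by positivity
      linarith
    set E := exp (1 + 2*y - T^2/(8*A)) with hE
    set I1 := ∫ x in σ₀..2, F ((x:ℂ) + ((-T:ℝ):ℂ) * I) * ker A y ((x:ℂ) + ((-T:ℝ):ℂ) * I)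
    set I2 := ∫ x in σ₀..2, F ((x:ℂ) + ((T:ℝ):ℂ) * I) * ker A y ((x:ℂ) + ((T:ℝ):ℂ) * I)
    simp only [← mk_eq] at hrect
    rw [integral_Icc_eq_integral_Ioc, ← intervalIntegral.integral_of_le (by linarith : -T ≤ T)] at hsplit
    set J0 := ∫ t in (-T)..T, F ⟨σ₀, t⟩ * ker A y ⟨σ₀, t⟩
    set J2 := ∫ t in (-T)..T, F ⟨2, t⟩ * ker A y ⟨2, t⟩
    set JT := ∫ t in (Set.Icc (-T) T)ᶜ, F ⟨2, t⟩ * ker A y ⟨2, t⟩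
    have hJ : J2 - J0 = I*(I1 - I2) := by
      simp only [smul_eq_mul] at hrect
      linear_combination (-I) * hrect + (J2 - J0) * I_sq
    have hg : gtr A y F - ((S⁻¹:ℝ):ℂ) * J0 = ((S⁻¹:ℝ):ℂ)*(I*(I1 - I2) + JT) := by
      rw [gtr, ← hsplit, ← hJ]; ring
    rw [hg, norm_mul, norm_real, norm_of_nonneg (by positivity)]
    have h3 : ‖I*(I1 - I2) + JT‖ ≤ 2*(H * E) + 2*(H * E) + C*(E * sqrt (8*π * A)) := by
      refine (norm_add_le _ _).trans (add_le_add ?_ htail)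
      rw [norm_mul, Complex.norm_I, one_mul]
      exact (norm_sub_le _ _).trans (add_le_add h1 h2)
    have hE0 : 0 < E := exp_pos _
    calc S⁻¹ * ‖I*(I1 - I2) + JT‖ ≤ S⁻¹*(4*H * E * S + C*(E*(2*S))) := by
          gcongr
          refine h3.trans ?_
          have : 4*H * E * 1 ≤ 4*H * E * S := by gcongr
          have : C*(E * sqrt (8*π * A)) ≤ C*(E*(2*S)) := by gcongr
          linarith
      _ = _ := by field_simp
  · intro s hs
    have hs' : s ∈ {s : ℂ | σ₀ ≤ s.re ∧ s.re ≤ 2 ∧ |s.im| ≤ T} := by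
      rw [mem_reProdIm] at hs
      simp only [Set.uIcc_of_le hσ2, Set.uIcc_of_le (by linarith : -T ≤ T)] at hs
      exact ⟨hs.1.1, hs.1.2, abs_le.2 hs.2⟩
    refine ((hF s hs').mul (hkd s).differentiableWithinAt).mono ?_
    intro z hz
    rw [mem_reProdIm] at hz
    simp only [Set.uIcc_of_le hσ2, Set.uIcc_of_le (by linarith : -T ≤ T)] at hz
    exact ⟨hz.1.1, hz.1.2, abs_le.2 hz.2⟩

lemma norm_cpow_neg {n : ℕ} (hn : 1 ≤ n) (s:ℂ) : ‖(n:ℂ)^(-s)‖ = (n:ℝ)^(-s.re) := by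
  rw [norm_natCast_cpow_of_pos (by omega), neg_re]

lemma moebius_norm_le (d:ℕ) : ‖((moebius d : ℤ):ℂ)‖ ≤ 1 := by
  rw [Complex.norm_intCast]; exact_mod_cast ArithmeticFunction.abs_moebius_le_one

lemma norm_moll_le (Y:ℕ) (s:ℂ) : ‖moll Y s‖ ≤ ∑ d ∈ Icc 1 Y, (d:ℝ)^(-s.re) := by
  refine (norm_sum_le _ _).trans (sum_le_sum fun d hd => ?_)
  rw [norm_mul, norm_cpow_neg (mem_Icc.1 hd).1]
  exact mul_le_of_le_one_left (by positivity) (moebius_norm_le d)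

lemma efn_line_bound : ∃ C : ℝ, 0 ≤ C ∧ ∀ (Y:ℕ) (t:ℝ), ‖efn Y ⟨2, t⟩‖ ≤ C := by
  set S := ∑' n : ℕ, (n:ℝ)^(-2:ℝ) with hS
  set L := ∑' n : ℕ, log n*(n:ℝ)^(-2:ℝ) with hL
  set Z := (-(deriv riemannZeta ((2:ℝ):ℂ) / riemannZeta ((2:ℝ):ℂ))).re with hZ
  have hS0 : 0 ≤ S := tsum_nonneg fun n => by positivity
  have hL0 : 0 ≤ L := tsum_nonneg fun n => mul_nonneg (log_natCast_nonneg n) (by positivity)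
  have key : ∀ (Y:ℕ) (t:ℝ), ‖efn Y ⟨2, t⟩‖ ≤ Z + 1 + S*(L + 1) := by
    intro Y t
    have hne : (⟨2, t⟩:ℂ) ≠ 1 := ne_one_of_re rfl
    have hre : 1 ≤ ‖(⟨2, t⟩:ℂ) - 1‖ := by
      refine le_trans ?_ (abs_re_le_norm _)
      norm_num
    have h1 : ‖(1:ℂ) / ((⟨2, t⟩:ℂ) - 1)‖ ≤ 1 := by
      rw [norm_div, norm_one, div_le_one (by linarith)]; exact hre
    have h2 : ‖(1:ℂ) / ((⟨2, t⟩:ℂ) - 1)^2‖ ≤ 1 := by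
      rw [norm_div, norm_one, norm_pow]; apply div_le_one_of_le₀ _ (by positivity)
      nlinarith
    have h3 : ‖zlog ⟨2, t⟩‖ ≤ Z + 1 := by
      have e := zlog_eq hne (zeta1_ne (by norm_num))
      have e' : zlog ⟨2, t⟩ = deriv riemannZeta ⟨2, t⟩ / riemannZeta ⟨2, t⟩ + 1/((⟨2, t⟩:ℂ) - 1) := by rw [e]; ring
      have := logderiv_le_real (s := ⟨2, t⟩) (by norm_num)
      rw [e']
      exact (norm_add_le _ _).trans (add_le_add this h1)
    have h4 : ‖moll Y ⟨2, t⟩‖ ≤ S := by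
      refine (norm_moll_le Y _).trans ?_
      have hs : Summable fun n : ℕ => (n:ℝ)^(-2:ℝ) := summable_nat_rpow.2 (by norm_num)
      exact hs.sum_le_tsum _ fun n _ => by positivity
    have h5 : ‖deriv riemannZeta ⟨2, t⟩‖ ≤ L := by
      have hh := log_hasSum (s := ⟨2, t⟩) (by norm_num)
      rw [← norm_neg, ← hh.tsum_eq]
      refine tsum_of_norm_bounded summable_log_sq.hasSum fun n => ?_
      rcases Nat.eq_zero_or_pos n with rfl | hn
      · simp
      · rw [norm_mul, norm_cpow_neg hn, norm_real, norm_of_nonneg (log_natCast_nonneg n)]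
    rw [efn]
    refine (norm_add_le _ _).trans ?_
    rw [norm_neg, norm_mul, zeta0_deriv hne]
    have h6 := (norm_add_le (deriv riemannZeta ⟨2, t⟩) (1/((⟨2, t⟩:ℂ) - 1)^2)).trans (add_le_add h5 h2)
    exact add_le_add h3 (mul_le_mul h4 h6 (norm_nonneg _) hS0)
  exact ⟨_, (norm_nonneg _).trans (key 0 0), key⟩

lemma differentiable_moll (Y:ℕ) : Differentiable ℂ (moll Y) := by
  unfold moll
  refine Differentiable.fun_sum fun d hd => ?_
  have hd' : (d:ℂ) ≠ 0 := by exact_mod_cast (by have := (mem_Icc.1 hd).1; omega : d ≠ 0)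
  exact (differentiable_const _).mul (differentiable_id.neg.const_cpow (Or.inl hd'))

lemma efn_differentiableAt (Y:ℕ) {s : ℂ} (h : riemannZeta₁ s ≠ 0) : DifferentiableAt ℂ (efn Y) s := by
  unfold efn zlog
  have h1 : Differentiable ℂ (deriv riemannZeta₁) := differentiable_riemannZeta₁.deriv
  have h2 : Differentiable ℂ (deriv riemannZeta₀) := differentiable_riemannZeta₀.deriv
  exact (((h1 s).div (differentiable_riemannZeta₁ s) h).neg).add ((differentiable_moll Y s).mul (h2 s))

/-- `efn` off the pole, in terms of `1 - ζ M`. -/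
lemma efn_eq (Y:ℕ) {s : ℂ} (hs : s ≠ 1) (h : riemannZeta₁ s ≠ 0) (hz : riemannZeta s ≠ 0) :
    efn Y s = -(zlog s - 1/(s - 1))*(1 - riemannZeta s * moll Y s) - 1/(s - 1) + moll Y s / (s - 1)^2 := by
  have e := zlog_eq hs h
  have e2 : deriv riemannZeta s = (zlog s - 1/(s - 1)) * riemannZeta s := by rw [← e]; field_simp
  rw [efn, zeta0_deriv hs, e2]
  ring

lemma zeta_ne_of {s : ℂ} (hs : s ≠ 1) (h : riemannZeta₁ s ≠ 0) : riemannZeta s ≠ 0 := by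
  rw [riemannZeta_eq_inv_sub_mul hs]
  exact mul_ne_zero (inv_ne_zero (sub_ne_zero.2 hs)) h

lemma efn_side_bound {q : ℝ} (hq : 1000 ≤ q) {Y : ℕ} {s : ℂ} (h1 : 1 - 1/q^199 ≤ s.re) (h2 : s.re ≤ 2)
    (h3 : 2 ≤ |s.im|) (h4 : |s.im| ≤ exp (q^200)) (hz : riemannZeta₁ s ≠ 0) (hl : ‖zlog s‖ ≤ q^201) :
    ‖efn Y s‖ ≤ (Y + 1) * q^420 := by
  have hq1 : (1:ℝ) ≤ q := by linarith
  have hne : s ≠ 1 := by intro h; rw [h] at h3; norm_num at h3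
  have hw : 1/q^199 ≤ 1 := by
    rw [div_le_one (by positivity)]; exact one_le_pow₀ hq1
  have hg := zeta_growth (q := q) (by linarith) (s := s) (by
    refine le_trans ?_ h1
    have : 1/q^199 ≤ 1/q^198 := by gcongr <;> first | exact hq1 | norm_num
    linarith) h2 h3 h4
  have hre : 1 ≤ ‖s - 1‖ := by
    refine le_trans ?_ (abs_im_le_norm _)
    simp; linarith
  have k1 : ‖(1:ℂ) / (s - 1)‖ ≤ 1 := by
    rw [norm_div, norm_one, div_le_one (by linarith)]; exact hre
  have k2 : ‖(1:ℂ) / (s - 1)^2‖ ≤ 1 := by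
    rw [norm_div, norm_one, norm_pow]; apply div_le_one_of_le₀ _ (by positivity)
    nlinarith
  have hM : ‖moll Y s‖ ≤ Y := by
    refine (norm_moll_le Y s).trans ?_
    calc ∑ d ∈ Icc 1 Y, (d:ℝ)^(-s.re) ≤ ∑ d ∈ Icc 1 Y, (1:ℝ) := by
          refine sum_le_sum fun d hd => ?_
          exact rpow_le_one_of_one_le_of_nonpos (by exact_mod_cast (mem_Icc.1 hd).1) (by linarith)
      _ = Y := by simp
  have e := zlog_eq hne hz
  have hz' := zeta_ne_of hne hz
  have e2 : deriv riemannZeta s = (zlog s - 1/(s - 1)) * riemannZeta s := by rw [← e]; field_simp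
  have hp : (1:ℝ) ≤ q^201 := one_le_pow₀ hq1
  have k3 : ‖zlog s - 1/(s - 1)‖ ≤ 2*q^201 := (norm_sub_le _ _).trans (by linarith)
  have k4 : ‖deriv riemannZeta₀ s‖ ≤ 2*q^411 + 1 := by
    rw [zeta0_deriv hne, e2]
    refine (norm_add_le _ _).trans (add_le_add ?_ k2)
    rw [norm_mul]
    calc _ ≤ (2*q^201) * q^210 := by gcongr
      _ = _ := by rw [mul_assoc, ← pow_add]
  rw [efn]
  refine (norm_add_le _ _).trans ?_
  rw [norm_neg, norm_mul]
  have p1 : q^201 ≤ q^420 := pow_le_pow_right₀ hq1 (by norm_num)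
  have p2 : 2*q^411 + 1 ≤ q^420 := by
    have : (1:ℝ) ≤ q^411 := one_le_pow₀ hq1
    calc 2*q^411 + 1 ≤ 1000*q^411 := by linarith
      _ ≤ q * q^411 := by gcongr
      _ = q^412 := by rw [← pow_succ']
      _ ≤ _ := pow_le_pow_right₀ hq1 (by norm_num)
  calc ‖zlog s‖ + ‖moll Y s‖ * ‖deriv riemannZeta₀ s‖ ≤ q^420 + Y * q^420 :=
        add_le_add (hl.trans p1) (mul_le_mul hM (k4.trans p2) (norm_nonneg _) (by positivity))
    _ = _ := by ring

/-- The contour shift for the explicit formula, to the line `Re s = 1 - q⁻¹⁹⁹`. -/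
lemma efn_shift : ∃ q1 : ℝ, 1000 ≤ q1 ∧ ∃ C : ℝ, 0 ≤ C ∧ ∀ q, q1 ≤ q → ∀ (Y:ℕ) (A y T : ℝ), 1 ≤ A → 0 ≤ y → 2 ≤ T →
    8*T ≤ exp (q^200) →
    ‖gtr A y (efn Y) - ((sqrt (4*π * A))⁻¹:ℝ) *
      ∫ t in (-T)..T, efn Y ⟨1 - 1/q^199, t⟩ * ker A y ⟨1 - 1/q^199, t⟩‖ ≤
      (4*((Y + 1) * q^420) + 2*C) * exp (1 + 2*y - T^2/(8*A)) := by
  obtain ⟨q1, hq1, hz⟩ := zlog_bound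
  obtain ⟨C, hC0, hC⟩ := efn_line_bound
  refine ⟨q1, hq1, C, hC0, fun q hq Y A y T hA hy hT hT8 => ?_⟩
  have hq0 : (1000:ℝ) ≤ q := hq1.trans hq
  have hw0 : 0 ≤ 1/q^199 := by positivity
  have hw1 : 1/q^199 ≤ 1 := by
    rw [div_le_one (by positivity)]; exact one_le_pow₀ (by linarith)
  have hexp := exp_pos (q^200)
  refine contour_shift hA hy (by linarith) (by linarith) (by linarith) ?_ (explicit_formula (by linarith) y Y).2 ?_ (hC Y)
  · intro s hs
    exact (efn_differentiableAt Y (hz q hq s hs.1 hs.2.1 (by linarith [hs.2.2])).1).differentiableWithinAt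
  · intro s h1 h2 h3
    obtain ⟨z1, z2⟩ := hz q hq s h1 h2 (by rw [h3]; exact hT8)
    exact efn_side_bound hq0 h1 h2 (by rw [h3]; exact hT) (by rw [h3]; linarith) z1 z2

/-! ### A mean square inequality with Gaussian weight -/

lemma gauss_fourier {κ : ℝ} (hκ : 0 < κ) (v:ℝ) :
    ∫ y : ℝ, cexp (((v * y:ℝ):ℂ) * I)*(exp (-κ * y^2):ℂ) =
      ((sqrt (π / κ) * exp (-(v^2/(4*κ))):ℝ):ℂ) := by
  have hκc : (κ:ℂ) ≠ 0 := by exact_mod_cast hκ.ne'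
  have h := integral_cexp_quadratic (b := ((-κ:ℝ):ℂ)) (by rw [ofReal_re]; linarith) ((v:ℂ) * I) 0
  have e : ∀ y : ℝ, cexp (((v * y:ℝ):ℂ) * I)*(exp (-κ * y^2):ℂ) =
      cexp (((-κ:ℝ):ℂ)*(y:ℂ)^2 + (v:ℂ) * I * y + 0) := by
    intro y
    rw [ofReal_exp, ← Complex.exp_add]; congr 1; push_cast; ring
  simp_rw [e, h]
  rw [show ((π:ℂ) / -((-κ:ℝ):ℂ)) = ((π / κ:ℝ):ℂ) by push_cast; rw [neg_neg],
    show (1/2:ℂ) = ((1/2:ℝ):ℂ) by push_cast; rfl, ← ofReal_cpow (by positivity), ← sqrt_eq_rpow,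
    show (0:ℂ) - ((v:ℂ) * I)^2/(4*((-κ:ℝ):ℂ)) = ((-(v^2/(4*κ)):ℝ):ℂ) by
      push_cast; rw [mul_pow, I_sq]; field_simp; ring]
  push_cast; rfl

/-- The large sieve in its Gaussian form: expand the square, integrate the Gaussian, and apply Schur's test. -/
lemma gauss_schur {X : Type*} [MeasurableSpace X] {μ : Measure X} [IsFiniteMeasure μ] {κ : ℝ} (hκ : 0 < κ)
    {f : X → ℂ} {u : X → ℝ} (hu : Measurable u) (hf : Integrable f μ) (hf2 : Integrable (fun x => ‖f x‖^2) μ) :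
    Integrable (fun y : ℝ => ‖∫ x, f x * cexp (((u x * y:ℝ):ℂ) * I) ∂μ‖^2 *
      exp (-κ * y^2)) ∧
    ∫ y : ℝ, ‖∫ x, f x * cexp (((u x * y:ℝ):ℂ) * I) ∂μ‖^2*exp (-κ * y^2) ≤
      sqrt (π / κ) * ∫ x, ‖f x‖^2*(∫ x', exp (-((u x - u x')^2/(4*κ))) ∂μ) ∂μ := by
  set Φ : ℝ × (X × X) → ℂ := fun p => (f p.2.1*(starRingEnd ℂ) (f p.2.2)) *
    (cexp ((((u p.2.1 - u p.2.2) * p.1:ℝ):ℂ) * I)*(exp (-κ * p.1^2):ℂ)) with hΦ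
  have hfc : Integrable (fun x => (starRingEnd ℂ) (f x)) μ := by
    have := (Complex.conjCLE.toContinuousLinearMap).integrable_comp hf
    simpa using this
  have hgi : Integrable fun y : ℝ => (exp (-κ * y^2):ℂ) := (integrable_exp_neg_mul_sq hκ).ofReal
  have hItg : Integrable Φ ((volume : Measure ℝ).prod (μ.prod μ)) := by
    have h1 := hgi.mul_prod (hf.mul_prod hfc)
    have h2 := h1.bdd_mul (c := 1) (f := fun p : ℝ × (X × X) =>
        cexp ((((u p.2.1 - u p.2.2) * p.1:ℝ):ℂ) * I))
      (by apply Measurable.aestronglyMeasurable; fun_prop)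
      (.of_forall fun p => by rw [norm_exp_ofReal_mul_I])
    refine h2.congr (.of_forall fun p => ?_)
    simp only [hΦ]; ring
  have hL : ∀ y : ℝ, ∫ p, Φ (y, p) ∂(μ.prod μ) =
      ((‖∫ x, f x * cexp (((u x * y:ℝ):ℂ) * I) ∂μ‖^2*exp (-κ * y^2):ℝ):ℂ) := by
    intro y
    have e : ∀ p : X × X, Φ (y, p) = (f p.1*cexp (((u p.1*y:ℝ):ℂ) * I)) *
        ((starRingEnd ℂ) (f p.2*cexp (((u p.2*y:ℝ):ℂ) * I))*(exp (-κ * y^2):ℂ)) := by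
      intro p
      rw [map_mul, ← Complex.exp_conj, map_mul, conj_I, conj_ofReal]
      simp only [hΦ]
      rw [show ((((u p.1 - u p.2) * y:ℝ):ℂ) * I) = ((u p.1*y:ℝ):ℂ) * I +
        ((u p.2*y:ℝ):ℂ) * -I by push_cast; ring, Complex.exp_add]
      ring
    simp_rw [e]
    rw [integral_prod_mul (μ := μ) (ν := μ) (fun x => f x * cexp (((u x * y:ℝ):ℂ) * I))
      (fun x => (starRingEnd ℂ) (f x * cexp (((u x * y:ℝ):ℂ) * I))*(exp (-κ * y^2):ℂ)),
      integral_mul_const, integral_conj, ← mul_assoc, Complex.mul_conj, normSq_eq_norm_sq]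
    push_cast; rfl
  refine ⟨?_, ?_⟩
  · have h1 := hItg.integral_prod_left
    simp only [hL] at h1
    refine h1.re.congr (.of_forall fun y => ?_)
    exact ofReal_re _
  have hR : ∀ p : X × X, ∫ y : ℝ, Φ (y, p) = (f p.1*(starRingEnd ℂ) (f p.2)) *
      ((sqrt (π / κ) * exp (-((u p.1 - u p.2)^2/(4*κ))):ℝ):ℂ) := by
    intro p
    simp only [hΦ]
    rw [integral_const_mul, gauss_fourier hκ]
  have hswap := integral_integral_swap (f := fun y p => Φ (y, p)) hItg
  simp_rw [hL, hR] at hswap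
  rw [integral_complex_ofReal] at hswap
  have hnn : 0 ≤ ∫ y : ℝ, ‖∫ x, f x * cexp (((u x * y:ℝ):ℂ) * I) ∂μ‖^2*exp (-κ * y^2) :=
    integral_nonneg fun y => by positivity
  rw [← norm_of_nonneg hnn, ← norm_real, hswap]
  set K : X × X → ℝ := fun p => exp (-((u p.1 - u p.2)^2/(4*κ))) with hK
  have hKm : Measurable K := by simp only [hK]; fun_prop
  have hK0 : ∀ p, 0 ≤ K p := fun p => (exp_pos _).le
  have hK1 : ∀ p, ‖K p‖ ≤ 1 := fun p => by
    rw [norm_of_nonneg (hK0 p)]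
    apply exp_le_one_iff.2
    have : 0 ≤ (u p.1 - u p.2)^2/(4*κ) := by positivity
    linarith
  have hS := sqrt_nonneg (π / κ)
  have i1 : Integrable (fun p : X × X => ‖f p.1‖^2*K p) (μ.prod μ) := by
    have h1 : Integrable (fun p : X × X => ‖f p.1‖^2*1) (μ.prod μ) := hf2.mul_prod (integrable_const (1:ℝ))
    refine (h1.bdd_mul (c := 1) hKm.aestronglyMeasurable (.of_forall hK1)).congr
      (.of_forall fun p => ?_)
    simp only []; ring
  have i2 : Integrable (fun p : X × X => ‖f p.2‖^2*K p) (μ.prod μ) := by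
    have h1 : Integrable (fun p : X × X => 1*‖f p.2‖^2) (μ.prod μ) := (integrable_const (1:ℝ)).mul_prod hf2
    refine (h1.bdd_mul (c := 1) hKm.aestronglyMeasurable (.of_forall hK1)).congr
      (.of_forall fun p => ?_)
    simp only []; ring
  have j1 : ∫ p, ‖f p.1‖^2*K p ∂(μ.prod μ) = ∫ x, ‖f x‖^2*(∫ x', K (x, x') ∂μ) ∂μ := by
    rw [integral_prod _ i1]; simp only [integral_const_mul]
  have j2 : ∫ p, ‖f p.2‖^2*K p ∂(μ.prod μ) = ∫ x, ‖f x‖^2*(∫ x', K (x, x') ∂μ) ∂μ := by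
    rw [integral_prod_symm _ i2]; simp only [integral_const_mul]
    congr 1; ext x; congr 1; congr 1; ext x'
    simp only [hK]; congr 2; ring
  calc _ ≤ ∫ p, sqrt (π / κ)*(1/2*(‖f p.1‖^2*K p + ‖f p.2‖^2*K p)) ∂(μ.prod μ) := by
        refine norm_integral_le_of_norm_le (((i1.add i2).const_mul (1/2)).const_mul _)
          (.of_forall fun p => ?_)
        rw [norm_mul, norm_mul, norm_real, RCLike.norm_conj, norm_of_nonneg (mul_nonneg hS (hK0 p))]
        have : ‖f p.1‖ * ‖f p.2‖ ≤ 1/2*(‖f p.1‖^2 + ‖f p.2‖^2) := by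
          nlinarith [sq_nonneg (‖f p.1‖ - ‖f p.2‖)]
        calc _ ≤ (1/2*(‖f p.1‖^2 + ‖f p.2‖^2))*(sqrt (π / κ) * K p) :=
              mul_le_mul_of_nonneg_right this (mul_nonneg hS (hK0 p))
          _ = _ := by ring
    _ = _ := by
        rw [integral_const_mul, integral_const_mul, integral_add i1 i2, j1, j2]; ring

/-- Bessel's inequality for the Fourier transform, with a Gaussian weight. -/
lemma bessel_gauss {κ T : ℝ} (hκ : 0 < κ) (hT : 0 ≤ T) {h : ℝ → ℂ} (hc : ContinuousOn h (Set.Icc (-T) T)) :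
    Integrable (fun y : ℝ => ‖∫ t in (-T)..T, h t * cexp (((t * y:ℝ):ℂ) * I)‖^2 *
      exp (-κ * y^2)) ∧
    ∫ y : ℝ, ‖∫ t in (-T)..T, h t * cexp (((t * y:ℝ):ℂ) * I)‖^2*exp (-κ * y^2) ≤
      2*π * ∫ t in (-T)..T, ‖h t‖^2 := by
  have hT' : -T ≤ T := by linarith
  simp_rw [intervalIntegral.integral_of_le hT', ← integral_Icc_eq_integral_Ioc]
  have : IsFiniteMeasure (volume.restrict (Set.Icc (-T) T)) := ⟨by simp⟩
  have hf : Integrable h (volume.restrict (Set.Icc (-T) T)) := hc.integrableOn_Icc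
  have hf2 : Integrable (fun x => ‖h x‖^2) (volume.restrict (Set.Icc (-T) T)) :=
    (hc.norm.pow 2).integrableOn_Icc
  refine ⟨(gauss_schur hκ measurable_id hf hf2).1, (gauss_schur hκ measurable_id hf hf2).2.trans ?_⟩
  have e : ∀ t : ℝ, ∫ t' in Set.Icc (-T) T, exp (-((t - t')^2/(4*κ))) ≤ sqrt (4*π * κ) := by
    intro t
    have hi := integrable_gauss_shift (show 0 < 1/(4*κ) by positivity) t
    have e2 : ∀ t' : ℝ, exp (-((t - t')^2/(4*κ))) = exp (-(1/(4*κ))*(t' - t)^2) := by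
      intro t'; congr 1; field_simp; ring
    simp_rw [e2]
    refine (setIntegral_le_integral hi (.of_forall fun t => (exp_pos _).le)).trans ?_
    rw [integral_gauss_shift]
    apply le_of_eq; congr 1; field_simp
  have hS : sqrt (π / κ) * sqrt (4*π * κ) = 2*π := by
    rw [← sqrt_mul (by positivity), show π / κ*(4*π * κ) = (2*π)^2 by field_simp; ring,
      sqrt_sq (by positivity)]
  calc _ ≤ sqrt (π / κ) * ∫ t in Set.Icc (-T) T, ‖h t‖^2*sqrt (4*π * κ) := by
        refine mul_le_mul_of_nonneg_left ?_ (sqrt_nonneg _)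
        refine integral_mono_of_nonneg (.of_forall fun t => ?_) (hf2.mul_const _)
          (.of_forall fun t => ?_)
        · exact mul_nonneg (by positivity) (integral_nonneg fun _ => (exp_pos _).le)
        · exact mul_le_mul_of_nonneg_left (e t) (by positivity)
    _ = _ := by rw [integral_mul_const, ← hS]; ring

/-! ### The mean value theorem for Dirichlet polynomials -/

lemma sum_rpow_le {T : ℝ} (hT : 1 ≤ T) (n:ℕ) : ∑ m ∈ range n, (m:ℝ)^T ≤ (n:ℝ)^(T + 1) / (T + 1) := by
  induction n with
  | zero => simp; positivity
  | succ n ih =>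
    rw [sum_range_succ]
    rcases Nat.eq_zero_or_pos n with rfl | hn
    · simp [zero_rpow (by linarith : T ≠ 0)]; positivity
    have hn0 : (0:ℝ) < n := by exact_mod_cast hn
    have hb := one_add_mul_self_le_rpow_one_add (s := 1/(n:ℝ)) (p := T + 1) (by linarith [show 0 ≤ 1/(n:ℝ) by positivity])
      (by linarith)
    have e : ((n + 1:ℕ):ℝ)^(T + 1) = (n:ℝ)^(T + 1)*(1 + 1/(n:ℝ))^(T + 1) := by
      rw [← mul_rpow hn0.le (by positivity)]; congr 1; push_cast; field_simp
    have e2 : (n:ℝ)^(T + 1) = (n:ℝ)^T * n := by rw [rpow_add hn0, rpow_one]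
    have h3 : (n:ℝ)^(T + 1) + (T + 1)*(n:ℝ)^T ≤ ((n + 1:ℕ):ℝ)^(T + 1) := by
      rw [e]
      calc _ = (n:ℝ)^(T + 1)*(1 + (T + 1)*(1/(n:ℝ))) := by rw [e2]; field_simp
        _ ≤ _ := by gcongr
    calc _ ≤ (n:ℝ)^(T + 1) / (T + 1) + (n:ℝ)^T := by gcongr
      _ = ((n:ℝ)^(T + 1) + (T + 1)*(n:ℝ)^T) / (T + 1) := by field_simp
      _ ≤ _ := by gcongr

lemma sum_rpow_neg_le {T : ℝ} (hT : 1 < T) {n : ℕ} (hn : 1 ≤ n) (X:ℕ) (hX : n ≤ X) :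
    ∑ m ∈ Ioc n X, (m:ℝ)^(-T) ≤ ((n:ℝ)^(1 - T) - (X:ℝ)^(1 - T)) / (T - 1) := by
  have hT1 : 0 < T - 1 := by linarith
  induction X, hX using Nat.le_induction with
  | base => simp
  | succ X hX ih =>
    rw [sum_Ioc_succ_top (by omega)]
    have hX0 : (0:ℝ) < X := by exact_mod_cast (by omega : 0 < X)
    have hX1 : (0:ℝ) < ((X + 1:ℕ):ℝ) := by positivity
    set m : ℝ := ((X + 1:ℕ):ℝ) with hm
    have hmX : m = X + 1 := by rw [hm]; push_cast; ring
    have h1 : 1 + (T - 1) / m ≤ ((X:ℝ) / m)^(1 - T) := by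
      rw [rpow_def_of_pos (by positivity)]
      have h2 : log ((X:ℝ) / m) ≤ (X:ℝ) / m - 1 := log_le_sub_one_of_pos (by positivity)
      have h3 : (X:ℝ) / m - 1 = -(1/m) := by rw [hmX]; field_simp; ring
      have h4 : (T - 1)*(1/m) ≤ log ((X:ℝ) / m)*(1 - T) := by
        rw [h3] at h2; nlinarith
      have := add_one_le_exp (log ((X:ℝ) / m)*(1 - T))
      have e : (T - 1) / m = (T - 1)*(1/m) := by ring
      linarith
    have h5 : (X:ℝ)^(1 - T) = m^(1 - T)*((X:ℝ) / m)^(1 - T) := by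
      rw [← mul_rpow hX1.le (by positivity)]; congr 1; field_simp
    have h6 : m^(-T) = m^(1 - T) / m := by
      rw [show -T = (1 - T) - 1 by ring, rpow_sub_one hX1.ne']
    have h7 : m^(1 - T) + (T - 1) * m^(-T) ≤ (X:ℝ)^(1 - T) := by
      rw [h5, h6]
      calc _ = m^(1 - T)*(1 + (T - 1) / m) := by ring
        _ ≤ _ := by gcongr
    calc _ ≤ ((n:ℝ)^(1 - T) - (X:ℝ)^(1 - T)) / (T - 1) + m^(-T) := by gcongr
      _ = ((n:ℝ)^(1 - T) - ((X:ℝ)^(1 - T) - (T - 1) * m^(-T))) / (T - 1) := by field_simp; ring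
      _ ≤ _ := by gcongr; linarith

lemma log_kernel_sum {T : ℝ} (hT : 2 ≤ T) {n : ℕ} (hn : 1 ≤ n) {S : Finset ℕ} (hS : ∀ m ∈ S, 1 ≤ m) :
    ∑ m ∈ S, exp (-(T^2*(log n - log m)^2/4)) ≤ exp 1*(1 + 3*n / T) := by
  have hn0 : (0:ℝ) < n := by exact_mod_cast hn
  set g : ℕ → ℝ := fun m => if m < n then ((m:ℝ) / n)^T else if m = n then 1 else ((m:ℝ) / n)^(-T) with hg
  have h1 : ∀ m ∈ S, exp (-(T^2*(log n - log m)^2/4)) ≤ exp 1*g m := by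
    intro m hm
    have hm0 : (0:ℝ) < m := by exact_mod_cast hS m hm
    have hq : ∀ x : ℝ, -(x^2/4) ≤ 1 + -x := fun x => by nlinarith [sq_nonneg (x - 2)]
    have hlog : log ((m:ℝ) / n) = log m - log n := log_div hm0.ne' hn0.ne'
    simp only [hg]
    split_ifs with h2 h3
    · rw [rpow_def_of_pos (by positivity), ← exp_add, hlog]
      apply exp_le_exp.2
      have := hq (T*(log n - log m))
      calc _ = -((T*(log n - log m))^2/4) := by ring
        _ ≤ _ := this
        _ = _ := by ring
    · rw [mul_one]; apply exp_le_exp.2; subst h3; simp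
    · rw [rpow_def_of_pos (by positivity), ← exp_add, hlog]
      apply exp_le_exp.2
      have := hq (T*(log m - log n))
      calc _ = -((T*(log m - log n))^2/4) := by ring
        _ ≤ _ := this
        _ = _ := by ring
  refine (sum_le_sum h1).trans ?_
  rw [← mul_sum]
  refine mul_le_mul_of_nonneg_left ?_ (exp_pos 1).le
  set X := n + S.sup id with hX
  have hsub : S ⊆ range n ∪ ({n} ∪ Ioc n X) := by
    intro m hm
    have : m ≤ S.sup id := le_sup (f := id) hm
    simp only [mem_union, mem_range, mem_singleton, mem_Ioc]
    omega
  have hg0 : ∀ m, 0 ≤ g m := by intro m; simp only [hg]; split_ifs <;> positivity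
  calc ∑ m ∈ S, g m ≤ ∑ m ∈ range n ∪ ({n} ∪ Ioc n X), g m :=
        sum_le_sum_of_subset_of_nonneg hsub fun m _ _ => hg0 m
    _ ≤ ∑ m ∈ range n, g m + (∑ m ∈ ({n} : Finset ℕ), g m + ∑ m ∈ Ioc n X, g m) := by
        have u1 := sum_union_inter (s₁ := range n) (s₂ := {n} ∪ Ioc n X) (f := g)
        have u2 := sum_union_inter (s₁ := {n}) (s₂ := Ioc n X) (f := g)
        have p1 : 0 ≤ ∑ m ∈ range n ∩ ({n} ∪ Ioc n X), g m := sum_nonneg fun m _ => hg0 m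
        have p2 : 0 ≤ ∑ m ∈ {n} ∩ Ioc n X, g m := sum_nonneg fun m _ => hg0 m
        linarith
    _ ≤ (n:ℝ) / T + (1 + 2*n / T) := by
        refine add_le_add ?_ (add_le_add ?_ ?_)
        · have : ∀ m ∈ range n, g m = (m:ℝ)^T / (n:ℝ)^T := by
            intro m hm
            simp only [hg, mem_range.1 hm, if_true]
            rw [div_rpow (by positivity) hn0.le]
          rw [sum_congr rfl this, ← sum_div]
          have h3 := sum_rpow_le (by linarith : 1 ≤ T) n
          calc _ ≤ ((n:ℝ)^(T + 1) / (T + 1)) / (n:ℝ)^T := by gcongr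
            _ = n / (T + 1) := by rw [rpow_add hn0, rpow_one]; field_simp
            _ ≤ _ := by gcongr; linarith
        · simp [hg]
        · have : ∀ m ∈ Ioc n X, g m = (m:ℝ)^(-T) / (n:ℝ)^(-T) := by
            intro m hm
            have := (mem_Ioc.1 hm).1
            simp only [hg, if_neg (by omega : ¬ m < n), if_neg (by omega : ¬ m = n)]
            rw [div_rpow (by positivity) hn0.le]
          rw [sum_congr rfl this, ← sum_div]
          have h3 := sum_rpow_neg_le (by linarith : 1 < T) hn X (by omega)
          have hT1 : 0 < T - 1 := by linarith
          calc _ ≤ ((n:ℝ)^(1 - T) / (T - 1)) / (n:ℝ)^(-T) := by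
                gcongr
                refine h3.trans ?_
                gcongr
                have : (0:ℝ) ≤ (X:ℝ)^(1 - T) := by positivity
                linarith
            _ = n / (T - 1) := by
                rw [show 1 - T = 1 + -T by ring, rpow_add hn0, rpow_one]; field_simp
            _ ≤ _ := by
                rw [div_le_div_iff₀ hT1 (by linarith)]; nlinarith
    _ = _ := by ring

/-- `∫ |∑ a(n) n^{-it}|² ≪ ∑ (T + n) |a(n)|²`. -/
lemma mean_value {T : ℝ} (hT : 2 ≤ T) {S : Finset ℕ} (hS : ∀ m ∈ S, 1 ≤ m) (a : ℕ → ℂ) :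
    ∫ t in (-T)..T, ‖∑ n ∈ S, a n * nit (-t) n‖^2 ≤ 60*∑ n ∈ S, (T + n) * ‖a n‖^2 := by
  have hT0 : 0 < T := by linarith
  have hsch := gauss_schur (X := S) (μ := Measure.count) (κ := 1/T^2) (by positivity)
    (f := fun n => a n) (u := fun n => -log (n:ℕ)) (measurable_of_countable _) Integrable.of_finite
    Integrable.of_finite
  have hE : ∀ t : ℝ, ∫ n : S, a n * cexp (((-log (n:ℕ) * t:ℝ):ℂ) * I) ∂Measure.count =
      ∑ n ∈ S, a n * nit (-t) n := by
    intro t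
    rw [integral_count, ← sum_coe_sort S (fun n => a n * nit (-t) n)]
    refine sum_congr rfl fun n _ => ?_
    rw [nit]; congr 4; ring
  simp only [hE] at hsch
  obtain ⟨hi, hle⟩ := hsch
  have hk : ∫ n : S, ‖a n‖^2*(∫ n' : S, exp (-((-log (n:ℕ) - -log (n':ℕ))^2/(4*(1/T^2))))
      ∂Measure.count) ∂Measure.count ≤ ∑ n ∈ S, ‖a n‖^2*(exp 1*(1 + 3*n / T)) := by
    rw [integral_count, ← sum_coe_sort S (fun n => ‖a n‖^2*(exp 1*(1 + 3*n / T)))]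
    refine sum_le_sum fun n _ => ?_
    gcongr
    rw [integral_count]
    refine le_trans (le_of_eq ?_) (log_kernel_sum hT (hS n n.2) hS)
    rw [← sum_coe_sort S (fun m => exp (-(T^2*(log (n:ℕ) - log m)^2/4)))]
    refine sum_congr rfl fun m _ => ?_
    congr 2; field_simp; ring
  have hsq : sqrt (π / (1/T^2)) = sqrt π * T := by
    rw [show π / (1/T^2) = π * T^2 by field_simp, sqrt_mul pi_pos.le, sqrt_sq hT0.le]
  have hpi : sqrt π ≤ 2 := by
    rw [sqrt_le_left (by norm_num)]; linarith [pi_lt_four]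
  have he : exp 1 ≤ 2.7183 := exp_one_lt_d9.le.trans (by norm_num)
  have hlow : exp (-1) * ∫ t in (-T)..T, ‖∑ n ∈ S, a n * nit (-t) n‖^2 ≤
      ∫ y : ℝ, ‖∑ n ∈ S, a n * nit (-y) n‖^2*exp (-(1/T^2) * y^2) := by
    have hcont : Continuous fun t : ℝ => ‖∑ n ∈ S, a n * nit (-t) n‖^2 := by
      unfold nit; fun_prop
    rw [intervalIntegral.integral_of_le (by linarith), ← integral_const_mul]
    refine le_trans ?_ (setIntegral_le_integral (s := Set.Ioc (-T) T) hi (.of_forall fun t => by positivity))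
    refine setIntegral_mono_on ?_ hi.integrableOn measurableSet_Ioc fun t ht => ?_
    · exact ((hcont.const_mul _).integrableOn_Icc).mono_set Set.Ioc_subset_Icc_self
    · rw [mul_comm]
      gcongr
      have : t^2 ≤ T^2 := sq_le_sq' (by linarith [ht.1]) ht.2
      have : t^2/T^2 ≤ 1 := by rw [div_le_one (by positivity)]; exact this
      have e : -(1/T^2) * t^2 = -(t^2/T^2) := by ring
      linarith
  have hfin := hlow.trans (hle.trans (mul_le_mul_of_nonneg_left hk (sqrt_nonneg _)))
  have e1 : ∫ t in (-T)..T, ‖∑ n ∈ S, a n * nit (-t) n‖^2 =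
      exp 1*(exp (-1) * ∫ t in (-T)..T, ‖∑ n ∈ S, a n * nit (-t) n‖^2) := by
    rw [← mul_assoc, ← exp_add]; simp
  rw [e1]
  calc _ ≤ exp 1*(sqrt (π / (1/T^2)) * ∑ n ∈ S, ‖a n‖^2*(exp 1*(1 + 3*n / T))) := by
        gcongr
    _ = ∑ n ∈ S, ‖a n‖^2*(exp 1*exp 1*sqrt π*(T + 3*n)) := by
        rw [hsq, mul_sum, mul_sum]
        refine sum_congr rfl fun n _ => ?_
        field_simp
    _ ≤ ∑ n ∈ S, ‖a n‖^2*(2.7183*2.7183*2*(T + 3*n)) := by gcongr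
    _ ≤ _ := by
        rw [mul_sum]
        refine sum_le_sum fun n _ => ?_
        have : (0:ℝ) ≤ n := by positivity
        calc _ ≤ ‖a n‖^2*(60*(T + n)) := by gcongr ?_ * ?_; linarith
          _ = _ := by ring

lemma sum_tau_le {f : ℕ → ℝ} (hf : ∀ n, 0 ≤ f n) (Z:ℕ) :
    ∑ n ∈ Icc 1 Z, (n.divisors.card:ℝ) * f n ≤ ∑ d ∈ Icc 1 Z, ∑ m ∈ Icc 1 Z, f (d * m) := by
  have h1 : ∀ p ∈ Icc 1 Z ×ˢ Icc 1 Z, ∑ n ∈ Icc 1 Z, (if p.1*p.2 = n then f n else 0) ≤ f (p.1*p.2) := by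
    intro p _
    rw [sum_ite_eq]
    split_ifs
    · exact le_rfl
    · exact hf _
  rw [← sum_product']
  refine le_trans ?_ (sum_le_sum h1)
  rw [sum_comm]
  refine sum_le_sum fun n hn => ?_
  rw [← sum_filter, sum_const, nsmul_eq_mul, ← Nat.image_fst_divisorsAntidiagonal]
  refine mul_le_mul_of_nonneg_right ?_ (hf n)
  refine Nat.cast_le.2 (card_image_le.trans (card_le_card fun p hp => ?_))
  have hn' := mem_Icc.1 hn
  have hp' := Nat.mem_divisorsAntidiagonal.1 hp
  have h3 : p.1 ∣ n := ⟨p.2, hp'.1.symm⟩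
  have h4 : p.2 ∣ n := ⟨p.1, by rw [mul_comm]; exact hp'.1.symm⟩
  have h5 := Nat.le_of_dvd (by omega) h3
  have h6 := Nat.le_of_dvd (by omega) h4
  have h7 := Nat.pos_of_dvd_of_pos h3 (by omega)
  have h8 := Nat.pos_of_dvd_of_pos h4 (by omega)
  simp only [mem_filter, mem_product, mem_Icc]
  exact ⟨⟨⟨h7, by omega⟩, ⟨h8, by omega⟩⟩, hp'.1⟩

lemma sum_tau_sq (Z:ℕ) :
    ∑ n ∈ Icc 1 Z, (n.divisors.card:ℝ)^2/n ≤ (1 + log Z)^4 := by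
  have hH := sum_inv_le_log Z
  have hH0 : 0 ≤ ∑ n ∈ Icc 1 Z, (n:ℝ)⁻¹ := sum_nonneg fun n _ => by positivity
  have h1 : ∑ n ∈ Icc 1 Z, (n.divisors.card:ℝ)*(n:ℝ)⁻¹ ≤ (∑ n ∈ Icc 1 Z, (n:ℝ)⁻¹)^2 := by
    refine (sum_tau_le (f := fun n => (n:ℝ)⁻¹) (fun n => by positivity) Z).trans (le_of_eq ?_)
    rw [sq, sum_mul_sum]
    refine sum_congr rfl fun d _ => sum_congr rfl fun m _ => ?_
    push_cast; rw [mul_inv]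
  have h10 : 0 ≤ ∑ n ∈ Icc 1 Z, (n.divisors.card:ℝ)*(n:ℝ)⁻¹ := sum_nonneg fun n _ => by positivity
  calc _ = ∑ n ∈ Icc 1 Z, (n.divisors.card:ℝ)*((n.divisors.card:ℝ)*(n:ℝ)⁻¹) := by
        refine sum_congr rfl fun d _ => ?_
        rw [div_eq_mul_inv]; ring
    _ ≤ ∑ d ∈ Icc 1 Z, ∑ m ∈ Icc 1 Z, (((d * m).divisors.card:ℝ)*((d * m:ℕ):ℝ)⁻¹) :=
        sum_tau_le (f := fun n => (n.divisors.card:ℝ)*(n:ℝ)⁻¹) (fun n => by positivity) Z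
    _ ≤ ∑ d ∈ Icc 1 Z, ∑ m ∈ Icc 1 Z, ((d.divisors.card:ℝ)*(d:ℝ)⁻¹)*((m.divisors.card:ℝ)*(m:ℝ)⁻¹) := by
        refine sum_le_sum fun d _ => sum_le_sum fun m _ => ?_
        have h2 : ((d * m).divisors.card:ℝ) ≤ d.divisors.card * m.divisors.card := by
          rw [Nat.divisors_mul]; exact_mod_cast card_mul_le
        push_cast
        rw [mul_inv]
        calc _ ≤ ((d.divisors.card:ℝ) * m.divisors.card)*((d:ℝ)⁻¹*(m:ℝ)⁻¹) := by gcongr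
          _ = _ := by ring
    _ = (∑ n ∈ Icc 1 Z, (n.divisors.card:ℝ)*(n:ℝ)⁻¹)^2 := by rw [sq, sum_mul_sum]
    _ ≤ ((∑ n ∈ Icc 1 Z, (n:ℝ)⁻¹)^2)^2 := by gcongr
    _ ≤ ((1 + log Z)^2)^2 := by gcongr
    _ = _ := by ring

/-! ### The mean square of the mollified zeta function -/

/-- The pairs `(d, l)` with `d ≤ Y` and `l ≤ X / 2 ^ ⌊log₂ d⌋`: the cut-off for `l` is constant on each
dyadic block of `d`. -/
def prs (X Y : ℕ) : Finset (Σ _ : ℕ, ℕ) := (Icc 1 Y).sigma fun d => Icc 1 (X/2^Nat.log 2 d)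

/-- The coefficient of `n ^ (-s)` in `∑ μ(d) d ^ (-s) l ^ (-s)` over the pairs in `prs X Y`. -/
def acoef (X Y n : ℕ) : ℤ := ∑ p ∈ prs X Y with p.1*p.2 = n, moebius p.1

/-- The part of the mollifier `moll Y` with `2 ^ i ≤ d < 2 ^ (i + 1)`. -/
def blk (Y i : ℕ) (s:ℂ) : ℂ :=
  ∑ d ∈ Icc 1 Y with Nat.log 2 d = i, ((moebius d : ℤ):ℂ)*(d:ℂ)^(-s)

lemma mem_prs {X Y : ℕ} {p : Σ _ : ℕ, ℕ} : p ∈ prs X Y ↔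
    (1 ≤ p.1 ∧ p.1 ≤ Y) ∧ 1 ≤ p.2 ∧ p.2 ≤ X/2^Nat.log 2 p.1 := by
  simp [prs]

lemma abs_acoef_le (X Y : ℕ) {n : ℕ} (hn : 1 ≤ n) : ‖((acoef X Y n : ℤ):ℂ)‖ ≤ n.divisors.card := by
  rw [acoef, Int.cast_sum]
  refine (norm_sum_le _ _).trans ?_
  refine (sum_le_sum fun p _ => moebius_norm_le p.1).trans ?_
  rw [sum_const, nsmul_eq_mul, mul_one, Nat.cast_le]
  refine card_le_card_of_injOn (fun p => p.1) (fun p hp => ?_) (fun p hp p' hp' h => ?_)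
  · rw [mem_coe, mem_filter] at hp
    exact Nat.mem_divisors.2 ⟨⟨p.2, hp.2.symm⟩, by omega⟩
  · rw [mem_coe, mem_filter, mem_prs] at hp hp'
    obtain ⟨d, l⟩ := p
    obtain ⟨d', l'⟩ := p'
    simp only at h hp hp'
    subst h
    have : l = l' := Nat.eq_of_mul_eq_mul_left (by omega : 0 < d) (by omega)
    rw [this]

lemma acoef_small {X Y n : ℕ} (hn : 1 ≤ n) (hnY : n ≤ Y) (hYX : Y ≤ X) : acoef X Y n = if n = 1 then 1 else 0 := by
  have h0 : ∑ d ∈ n.divisors, moebius d = if n = 1 then 1 else 0 := by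
    rw [← ArithmeticFunction.coe_mul_zeta_apply, ArithmeticFunction.moebius_mul_coe_zeta,
      ArithmeticFunction.one_apply]
  rw [acoef, ← h0]
  refine sum_nbij' (fun p => p.1) (fun d => ⟨d, n / d⟩) ?_ ?_ ?_ ?_ ?_
  · intro p hp
    rw [mem_filter] at hp
    exact Nat.mem_divisors.2 ⟨⟨p.2, hp.2.symm⟩, by omega⟩
  · intro d hd
    have hdn := (Nat.mem_divisors.1 hd).1
    have hd0 := Nat.pos_of_mem_divisors hd
    have hle := Nat.le_of_dvd (by omega) hdn
    rw [mem_filter, mem_prs]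
    refine ⟨⟨⟨hd0, by simp only; omega⟩, Nat.div_pos hle hd0, ?_⟩, Nat.mul_div_cancel' hdn⟩
    calc n / d ≤ X / d := Nat.div_le_div_right (by omega)
      _ ≤ _ := Nat.div_le_div_left (pow_log_le_self 2 (by omega)) (by positivity)
  · intro p hp
    rw [mem_filter, mem_prs] at hp
    obtain ⟨d, l⟩ := p
    simp only at hp ⊢
    rw [← hp.2, Nat.mul_div_cancel_left _ (by omega)]
  · intro d _; rfl
  · intro p _; rfl

lemma zeta_moll_split (X Y : ℕ) (s:ℂ) : riemannZeta s * moll Y s =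
    ∑ n ∈ Icc 1 (2*X), ((acoef X Y n : ℤ):ℂ)*(n:ℂ)^(-s) +
      ∑ i ∈ range (Nat.log 2 Y + 1), ztail s (X/2^i) * blk Y i s := by
  have h1 : ∑ i ∈ range (Nat.log 2 Y + 1), ztail s (X/2^i) * blk Y i s =
      ∑ d ∈ Icc 1 Y, ztail s (X/2^Nat.log 2 d)*(((moebius d : ℤ):ℂ)*(d:ℂ)^(-s)) := by
    rw [← sum_fiberwise_of_maps_to (s := Icc 1 Y) (t := range (Nat.log 2 Y + 1)) (g := fun d => Nat.log 2 d)
      (fun d hd => by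
        rw [mem_range, Nat.lt_succ_iff]; exact Nat.log_mono_right (mem_Icc.1 hd).2)]
    refine sum_congr rfl fun i _ => ?_
    rw [blk, mul_sum]
    refine sum_congr rfl fun d hd => ?_
    rw [(mem_filter.1 hd).2]
  have h2 : ∑ n ∈ Icc 1 (2*X), ((acoef X Y n : ℤ):ℂ)*(n:ℂ)^(-s) =
      ∑ d ∈ Icc 1 Y, ∑ l ∈ Icc 1 (X/2^Nat.log 2 d),
        ((moebius d : ℤ):ℂ)*((d:ℂ)^(-s)*(l:ℂ)^(-s)) := by
    rw [sum_sigma']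
    change _ = ∑ p ∈ prs X Y, _
    rw [← sum_fiberwise_of_maps_to (s := prs X Y) (t := Icc 1 (2*X)) (g := fun p => p.1*p.2) ?_]
    · refine sum_congr rfl fun n _ => ?_
      rw [acoef, Int.cast_sum, sum_mul]
      refine sum_congr rfl fun p hp => ?_
      rw [← (mem_filter.1 hp).2, Nat.cast_mul, Complex.natCast_mul_natCast_cpow]
    · intro p hp
      rw [mem_prs] at hp
      refine mem_Icc.2 ⟨Nat.mul_pos hp.1.1 hp.2.1, ?_⟩
      have h3 : p.1 < 2^(Nat.log 2 p.1 + 1) := lt_pow_succ_log_self (by norm_num) _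
      have h4 : 2^Nat.log 2 p.1*p.2 ≤ X := by
        have := Nat.mul_le_of_le_div _ _ _ hp.2.2
        rw [mul_comm]; exact this
      calc p.1*p.2 ≤ 2^(Nat.log 2 p.1 + 1) * p.2 := Nat.mul_le_mul_right _ h3.le
        _ = 2*(2^Nat.log 2 p.1*p.2) := by ring
        _ ≤ _ := by omega
  rw [h1, h2, ← sum_add_distrib, moll, mul_sum]
  refine sum_congr rfl fun d _ => ?_
  rw [ztail, ← mul_sum, ← mul_sum]
  ring

/-- Up to `Y` the coefficients of `ζ · moll` are those of `1`, so only `n > Y` and the tails remain. -/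
lemma one_sub_split {X Y : ℕ} (hY : 1 ≤ Y) (hYX : Y ≤ X) (s:ℂ) : 1 - riemannZeta s * moll Y s =
    -(∑ n ∈ Ioc Y (2*X), ((acoef X Y n : ℤ):ℂ)*(n:ℂ)^(-s) +
      ∑ i ∈ range (Nat.log 2 Y + 1), ztail s (X/2^i) * blk Y i s) := by
  rw [zeta_moll_split X Y s]
  have e : Icc 1 (2*X) = insert 1 (Ioc 1 Y ∪ Ioc Y (2*X)) := by
    ext n; simp only [mem_Icc, mem_insert, mem_union, mem_Ioc]; omega
  rw [e, sum_insert (by simp; omega), sum_union (by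
    rw [disjoint_left]; intro n hn hn'; rw [mem_Ioc] at hn hn'; omega)]
  rw [sum_eq_zero (s := Ioc 1 Y), acoef_small le_rfl hY hYX]
  · simp; ring
  · intro n hn
    rw [mem_Ioc] at hn
    rw [acoef_small (by omega) hn.2 hYX, if_neg (by omega)]; simp

lemma int_mono {T : ℝ} (hT : 0 ≤ T) {f g : ℝ → ℝ} (hf : ∀ t, 0 ≤ f t) (hg : Continuous g)
    (h : ∀ t, |t| ≤ T → f t ≤ g t) : ∫ t in (-T)..T, f t ≤ ∫ t in (-T)..T, g t := by
  rw [intervalIntegral.integral_of_le (by linarith), intervalIntegral.integral_of_le (by linarith)]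
  refine integral_mono_of_nonneg (.of_forall hf)
    (hg.integrableOn_Icc.mono_set Set.Ioc_subset_Icc_self) ?_
  refine (ae_restrict_iff' measurableSet_Ioc).2 (.of_forall fun t ht => ?_)
  exact h t (abs_le.2 ⟨ht.1.le, ht.2⟩)

lemma term_eq {n : ℕ} (hn : 1 ≤ n) (w t : ℝ) (z:ℂ) :
    z*(n:ℂ)^(-(⟨1 - w, t⟩:ℂ)) = (z*(((n:ℝ)^(-(1 - w)):ℝ):ℂ)) * nit (-t) n := by
  rw [cpow_eq_nit hn]; ring

lemma continuous_term (S : Finset ℕ) (hS : ∀ n ∈ S, 1 ≤ n) (w:ℝ) (z : ℕ → ℂ) :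
    Continuous fun t : ℝ => ∑ n ∈ S, z n*(n:ℂ)^(-(⟨1 - w, t⟩:ℂ)) := by
  have : (fun t : ℝ => ∑ n ∈ S, z n*(n:ℂ)^(-(⟨1 - w, t⟩:ℂ))) =
      fun t : ℝ => ∑ n ∈ S, (z n*(((n:ℝ)^(-(1 - w)):ℝ):ℂ)) * nit (-t) n := by
    funext t; exact sum_congr rfl fun n hn => term_eq (hS n hn) w t _
  rw [this]; unfold nit; fun_prop

lemma sum_mean {T : ℝ} (hT : 2 ≤ T) {S : Finset ℕ} (hS : ∀ n ∈ S, 1 ≤ n) (w:ℝ) (z : ℕ → ℂ) :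
    ∫ t in (-T)..T, ‖∑ n ∈ S, z n*(n:ℂ)^(-(⟨1 - w, t⟩:ℂ))‖^2 ≤
      60*∑ n ∈ S, (T + n)*(‖z n‖^2*((n:ℝ)^(-(1 - w)))^2) := by
  have e : ∀ t : ℝ, ∑ n ∈ S, z n*(n:ℂ)^(-(⟨1 - w, t⟩:ℂ)) =
      ∑ n ∈ S, (z n*(((n:ℝ)^(-(1 - w)):ℝ):ℂ)) * nit (-t) n :=
    fun t => sum_congr rfl fun n hn => term_eq (hS n hn) w t _
  simp_rw [e]
  refine (mean_value hT hS _).trans (le_of_eq ?_)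
  congr 1
  refine sum_congr rfl fun n _ => ?_
  rw [norm_mul, norm_real, mul_pow, norm_eq_abs, sq_abs]

lemma part1_bound {X Y : ℕ} (hY : 1 ≤ Y) {w T : ℝ} (hw : 0 ≤ w) (hT : 2 ≤ T) :
    ∫ t in (-T)..T, ‖∑ n ∈ Ioc Y (2*X), ((acoef X Y n : ℤ):ℂ)*(n:ℂ)^(-(⟨1 - w, t⟩:ℂ))‖^2 ≤
      60*((T / Y + 1)*((2*X:ℕ):ℝ)^(2*w)*(1 + log (2*X:ℕ))^4) := by
  refine (sum_mean hT (fun n hn => by rw [mem_Ioc] at hn; omega) w _).trans ?_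
  refine mul_le_mul_of_nonneg_left ?_ (by norm_num)
  have hY0 : (0:ℝ) < Y := by exact_mod_cast hY
  have h1 : ∀ n ∈ Ioc Y (2*X), (T + n)*(‖((acoef X Y n : ℤ):ℂ)‖^2*((n:ℝ)^(-(1 - w)))^2) ≤
      (T / Y + 1)*((2*X:ℕ):ℝ)^(2*w)*((n.divisors.card:ℝ)^2/n) := by
    intro n hn
    rw [mem_Ioc] at hn
    have hn0 : (0:ℝ) < n := by exact_mod_cast (by omega : 0 < n)
    have hYn : (Y:ℝ) ≤ n := by exact_mod_cast hn.1.le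
    have e : ((n:ℝ)^(-(1 - w)))^2 = (n:ℝ)^(2*w) / n^2 := by
      rw [← rpow_natCast, ← rpow_mul hn0.le, ← rpow_natCast (n:ℝ) 2, ← rpow_sub hn0]
      congr 1; push_cast; ring
    have h2 : T + n ≤ (T / Y + 1) * n := by
      have : T ≤ T / Y * n := by rw [div_mul_eq_mul_div, le_div_iff₀ hY0]; gcongr
      linarith
    have h3 : (n:ℝ)^(2*w) ≤ ((2*X:ℕ):ℝ)^(2*w) :=
      rpow_le_rpow hn0.le (by exact_mod_cast hn.2) (by linarith)
    rw [e]
    calc _ ≤ ((T / Y + 1) * n)*((n.divisors.card:ℝ)^2*(((2*X:ℕ):ℝ)^(2*w) / n^2)) := by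
          gcongr
          exact abs_acoef_le X Y (by omega)
      _ = _ := by field_simp
  refine (sum_le_sum h1).trans ?_
  rw [← mul_sum]
  refine mul_le_mul_of_nonneg_left ?_ (by positivity)
  refine le_trans ?_ (sum_tau_sq (2*X))
  refine sum_le_sum_of_subset_of_nonneg (fun n hn => ?_) fun n _ _ => by positivity
  rw [mem_Ioc] at hn; rw [mem_Icc]; omega

lemma mem_blk {Y i d : ℕ} (hd : d ∈ (Icc 1 Y).filter fun d => Nat.log 2 d = i) : 2^i ≤ d ∧ d < 2^(i + 1) := by
  rw [mem_filter, mem_Icc] at hd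
  obtain ⟨h1, rfl⟩ := hd
  exact ⟨pow_log_le_self 2 (by omega), lt_pow_succ_log_self (by norm_num) _⟩

lemma card_blk (Y i : ℕ) : (((Icc 1 Y).filter fun d => Nat.log 2 d = i).card:ℝ) ≤ 2^i := by
  have h : ((Icc 1 Y).filter fun d => Nat.log 2 d = i) ⊆ Ico (2^i) (2^(i + 1)) := fun d hd =>
    mem_Ico.2 (mem_blk hd)
  have := card_le_card h
  rw [Nat.card_Ico, pow_succ] at this
  exact_mod_cast this.trans (by omega)

lemma blk_bound (Y i : ℕ) {w : ℝ} (hw : w ≤ 1) (t:ℝ) : ‖blk Y i ⟨1 - w, t⟩‖ ≤ ((2:ℝ)^i)^w := by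
  rw [blk]
  have hD : (0:ℝ) < 2^i := by positivity
  calc _ ≤ ∑ d ∈ (Icc 1 Y).filter (fun d => Nat.log 2 d = i), ((2:ℝ)^i)^(-(1 - w)) := by
        refine norm_sum_le_of_le _ fun d hd => ?_
        have h1 := mem_blk hd
        have h2 : (2:ℝ)^i ≤ d := by exact_mod_cast h1.1
        have hd1 : 1 ≤ d := le_trans Nat.one_le_two_pow h1.1
        rw [norm_mul, norm_cpow_neg hd1]
        calc _ ≤ 1*(d:ℝ)^(-(1 - w)) := by gcongr; exact moebius_norm_le d
          _ ≤ _ := by rw [one_mul]; exact rpow_le_rpow_of_nonpos hD h2 (by linarith)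
    _ ≤ 2^i*((2:ℝ)^i)^(-(1 - w)) := by
        rw [sum_const, nsmul_eq_mul]; gcongr; exact card_blk Y i
    _ = _ := by
        rw [show w = 1 + -(1 - w) by ring, rpow_add hD, rpow_one]; ring_nf

lemma blk_mean (Y i : ℕ) {w T : ℝ} (hw : w ≤ 1) (hT : 2 ≤ T) :
    ∫ t in (-T)..T, ‖blk Y i ⟨1 - w, t⟩‖^2 ≤ 60*(T/2^i + 2)*((2:ℝ)^i)^(2*w) := by
  have hD : (0:ℝ) < 2^i := by positivity
  have hp : ∀ n ∈ (Icc 1 Y).filter (fun d => Nat.log 2 d = i), 1 ≤ n :=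
    fun n hn => le_trans Nat.one_le_two_pow (mem_blk hn).1
  refine (sum_mean hT hp w fun d => ((moebius d : ℤ):ℂ)).trans ?_
  rw [mul_assoc]
  refine mul_le_mul_of_nonneg_left ?_ (by norm_num)
  calc _ ≤ ∑ d ∈ (Icc 1 Y).filter (fun d => Nat.log 2 d = i), (T + 2*2^i)*(1^2*(((2:ℝ)^i)^(-(1 - w)))^2) := by
        refine sum_le_sum fun d hd => ?_
        have h1 := mem_blk hd
        have h2 : (2:ℝ)^i ≤ d := by exact_mod_cast h1.1
        have h3 : (d:ℝ) ≤ 2*2^i := by rw [pow_succ] at h1; exact_mod_cast (by omega : d ≤ 2*2^i)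
        gcongr ?_*(?_^2*?_^2)
        · linarith
        · exact moebius_norm_le d
        · exact rpow_le_rpow_of_nonpos hD h2 (by linarith)
    _ ≤ 2^i*((T + 2*2^i)*(1^2*(((2:ℝ)^i)^(-(1 - w)))^2)) := by
        rw [sum_const, nsmul_eq_mul]; gcongr; exact card_blk Y i
    _ = _ := by
        have e : (((2:ℝ)^i)^(-(1 - w)))^2 = ((2:ℝ)^i)^(2*w) / ((2:ℝ)^i)^2 := by
          rw [← rpow_natCast, ← rpow_mul hD.le, ← rpow_natCast ((2:ℝ)^i) 2, ← rpow_sub hD]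
          congr 1; push_cast; ring
        rw [e]; field_simp

lemma continuous_blk (Y i : ℕ) (w:ℝ) : Continuous fun t : ℝ => blk Y i ⟨1 - w, t⟩ :=
  continuous_term _ (fun _ hn => le_trans Nat.one_le_two_pow (mem_blk hn).1) w _

lemma sq_rpow {x : ℝ} (hx : 0 ≤ x) (w:ℝ) : (x^w)^2 = x^(2*w) := by
  rw [← rpow_natCast, ← rpow_mul hx, mul_comm]; norm_num

lemma ztail_bound' {w t : ℝ} (hw : 0 < w) (hw' : w ≤ 1/2) {v : ℕ} (hv : 1 ≤ v) :
    ‖ztail ⟨1 - w, t⟩ v‖ ≤ (v:ℝ)^w / ‖(⟨1 - w, t⟩:ℂ) - 1‖ + 2*(1 + |t|)*(v:ℝ)^(w - 1) := by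
  have hs1 : (⟨1 - w, t⟩:ℂ) ≠ 1 := by
    intro h; have := congrArg Complex.re h; simp at this; linarith
  have h := ztail_bound (s := ⟨1 - w, t⟩) (by simp; linarith) hs1 hv
  have hv0 : (0:ℝ) < v := by exact_mod_cast hv
  have h2 : ‖(v:ℂ)^(1 - (⟨1 - w, t⟩:ℂ)) / ((⟨1 - w, t⟩:ℂ) - 1)‖ = (v:ℝ)^w / ‖(⟨1 - w, t⟩:ℂ) - 1‖ := by
    rw [norm_div, norm_natCast_cpow_of_pos (by omega)]
    congr 2; simp
  have h3 : ‖(⟨1 - w, t⟩:ℂ)‖ ≤ 1 + |t| := by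
    refine (norm_le_abs_re_add_abs_im _).trans ?_
    simp only
    rw [abs_of_nonneg (by linarith)]; linarith
  have h4 := norm_sub_norm_le (ztail ⟨1 - w, t⟩ v) ((v:ℂ)^(1 - (⟨1 - w, t⟩:ℂ)) / ((⟨1 - w, t⟩:ℂ) - 1))
  rw [h2] at h4
  have h5 : ‖(⟨1 - w, t⟩:ℂ)‖ / (1 - w)*(v:ℝ)^(-(1 - w)) ≤ 2*(1 + |t|)*(v:ℝ)^(w - 1) := by
    rw [show -(1 - w) = w - 1 by ring]
    gcongr
    rw [div_le_iff₀ (by linarith)]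
    nlinarith [abs_nonneg t]
  simp only at h
  linarith

/-- The cut-off `v = X / 2 ^ i` is so large that the tail of the zeta series beyond `v` (bounded trivially in the first
case, by Vinogradov's estimate in the second), times the mollifier on `2 ^ i ≤ d < 2 ^ (i + 1)`, has mean square
of order `(T / N) ^ 3` up to height `T`. -/
abbrev ShortTail (N X : ℕ) (T : ℝ) (i : ℕ) : Prop :=
  (N:ℝ)^3 ≤ 8*(((X/2^i:ℕ):ℝ)^2*2^i) ∨ ((2:ℝ)^60 ≤ log (X/2^i:ℕ) ∧
    T ≤ ((X/2^i:ℕ):ℝ)^2 ∧ T*((X/2^i:ℕ):ℝ)^(-(2*(1/(2*(2:ℝ)^60)))) ≤ 2^i*(T / N))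

lemma tail_E {N X i : ℕ} {w T ℓ : ℝ} (hw : 0 < w) (hw' : w ≤ 1/(2*(2:ℝ)^60)) (hT : 2 ≤ T) (hN : 1 ≤ N)
    (hNT : (N:ℝ) ≤ T) (hDT : (2:ℝ)^i ≤ T) (hDX : 2^i ≤ X) (hℓ : 1 ≤ ℓ) (hlT : log T ≤ ℓ)
    (hab : ShortTail N X T i) :
    ∃ E : ℝ, (∀ t : ℝ, |t| ≤ T → ‖ztail ⟨1 - w, t⟩ (X/2^i)‖ ≤
        2*(((X/2^i:ℕ):ℝ)^w / ‖(⟨1 - w, t⟩:ℂ) - 1‖) + E) ∧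
      E^2*(60*(T/2^i + 2)*((2:ℝ)^i)^(2*w)) ≤ 40500*ℓ^2*(T / N)^3*(X:ℝ)^(2*w) := by
  have hv1 : 1 ≤ X/2^i := Nat.div_pos hDX (by positivity)
  have hvX : ((X/2^i:ℕ):ℝ) * 2^i ≤ X := by exact_mod_cast Nat.div_mul_le_self X (2^i)
  have hDX' : (2:ℝ)^i ≤ X := by exact_mod_cast hDX
  unfold ShortTail at hab
  generalize X/2^i = v at *
  have hv0 : (0:ℝ) < v := by exact_mod_cast hv1
  have hv1' : (1:ℝ) ≤ v := by exact_mod_cast hv1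
  have hN0 : (0:ℝ) < N := by exact_mod_cast hN
  set D : ℝ := (2:ℝ)^i with hD
  have hD0 : 0 < D := by positivity
  have hw2 : w ≤ 1/2 := hw'.trans (by norm_num)
  have hθ : 1 ≤ T / N := by rw [le_div_iff₀ hN0]; linarith
  have h3 : T / D + 2 ≤ 3*(T / D) := by
    have : 1 ≤ T / D := by rw [le_div_iff₀ hD0]; linarith
    linarith
  have hnn : ∀ t : ℝ, 0 ≤ (v:ℝ)^w / ‖(⟨1 - w, t⟩:ℂ) - 1‖ := fun t => by positivity
  rcases hab with ha | ⟨hb1, hb2, hb3⟩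
  · refine ⟨4*T*(v:ℝ)^(w - 1), fun t ht => ?_, ?_⟩
    · refine (ztail_bound' hw hw2 hv1).trans ?_
      have h4 : 2*(1 + |t|)*(v:ℝ)^(w - 1) ≤ 4*T*(v:ℝ)^(w - 1) :=
        mul_le_mul_of_nonneg_right (by linarith) (by positivity)
      linarith [hnn t]
    · have e : (4*T*(v:ℝ)^(w - 1))^2 = 16*T^2*((v:ℝ)^(2*w) / v^2) := by
        rw [mul_pow, sq_rpow hv0.le, show 2*(w - 1) = 2*w - (2:ℕ) by push_cast; ring, rpow_sub hv0, rpow_natCast]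
        ring
      rw [e]
      calc _ ≤ 16*T^2*((v:ℝ)^(2*w) / v^2)*(60*(3*(T / D)) * D^(2*w)) := by gcongr
        _ = 2880*T^3/(v^2*D)*((v:ℝ) * D)^(2*w) := by
            rw [mul_rpow hv0.le hD0.le]; field_simp; ring
        _ ≤ 2880*T^3/((N:ℝ)^3/8)*(X:ℝ)^(2*w) := by
            gcongr
            linarith
        _ = 23040*1^2*(T / N)^3*(X:ℝ)^(2*w) := by field_simp; ring
        _ ≤ _ := by gcongr; norm_num
  · refine ⟨15*ℓ*(v:ℝ)^(-(1/(2*(2:ℝ)^60))), fun t ht => ?_, ?_⟩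
    · by_cases h2 : 2 ≤ |t|
      · have h := ztail_main (k := 2) (s := ⟨1 - w, t⟩) (v := v) le_rfl (by push_cast; linarith)
          (by change 1 - w ≤ 2; linarith) h2 (by push_cast; exact hb1) (by
            push_cast; rw [rpow_two]; exact ht.trans hb2)
        push_cast at h
        simp only [sub_sub_cancel] at h
        refine h.trans ?_
        have h5 : log |t| ≤ ℓ := (log_le_log (by linarith) ht).trans hlT
        have h6 : ‖(⟨1 - w, t⟩:ℂ) - 1‖ ≤ 2*|t| := by
          refine (norm_le_abs_re_add_abs_im _).trans ?_
          simp [abs_of_pos hw]; linarith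
        have h7 : 0 < ‖(⟨1 - w, t⟩:ℂ) - 1‖ := by
          rw [norm_pos_iff]; intro h; have := congrArg Complex.re h; simp at this; linarith
        refine add_le_add ?_ ?_
        · rw [← mul_div_assoc, div_le_div_iff₀ (by linarith) h7]
          have : 0 ≤ (v:ℝ)^w := by positivity
          clear * - this h6 h2; nlinarith
        · gcongr; linarith
      · push Not at h2
        refine (ztail_bound' hw hw2 hv1).trans ?_
        have h4 : 2*(1 + |t|)*(v:ℝ)^(w - 1) ≤ 15*ℓ*(v:ℝ)^(-(1/(2*(2:ℝ)^60))) := by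
          gcongr ?_ * ?_
          · linarith
          · refine rpow_le_rpow_of_exponent_le hv1' ?_
            have : (1:ℝ) / (2*(2:ℝ)^60) ≤ 1/2 := by norm_num
            linarith
        linarith [hnn t]
    · rw [mul_pow, sq_rpow hv0.le, show 2 * -(1/(2*(2:ℝ)^60)) = -(2*(1/(2*(2:ℝ)^60))) by ring]
      have hu : 0 ≤ (v:ℝ)^(-(2*(1/(2*(2:ℝ)^60)))) := by positivity
      generalize (v:ℝ)^(-(2*(1/(2*(2:ℝ)^60)))) = u at *
      calc _ ≤ (15*ℓ)^2*u*(60*(3*(T / D)) * D^(2*w)) := by gcongr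
        _ = 40500*ℓ^2*(T * u / D) * D^(2*w) := by ring
        _ ≤ 40500*ℓ^2*(T / N)*(X:ℝ)^(2*w) := by
            have : T * u / D ≤ T / N := by rw [div_le_iff₀ hD0]; linarith
            gcongr
        _ ≤ _ := by
            gcongr
            exact le_self_pow₀ hθ (by norm_num)

lemma one_sub_mean {N X Y : ℕ} {w T ℓ : ℝ} (hw : 0 < w) (hw' : w ≤ 1/(2*(2:ℝ)^60)) (hT : 2 ≤ T) (hN : 1 ≤ N)
    (hNT : (N:ℝ) ≤ T) (hY : 1 ≤ Y) (hYX : Y ≤ X) (hYN : Y ≤ N) (hℓ : 1 + log (2*X:ℕ) ≤ ℓ)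
    (hlT : log T ≤ ℓ)
    (hab : ∀ i, 2^i ≤ Y → ShortTail N X T i) :
    ∫ t in (-T)..T, ‖1 - riemannZeta ⟨1 - w, t⟩ * moll Y ⟨1 - w, t⟩‖^2 ≤
      10^6*ℓ^4*(T / Y + (T / N)^3/w^2)*((2*X:ℕ):ℝ)^(2*w) := by
  have hN0 : (0:ℝ) < N := by exact_mod_cast hN
  have hY0 : (0:ℝ) < Y := by exact_mod_cast hY
  have hθ : 1 ≤ T / N := by rw [le_div_iff₀ hN0]; linarith
  have hYN' : (Y:ℝ) ≤ N := by exact_mod_cast hYN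
  have hlog2X : 0 ≤ log (2*X:ℕ) := log_natCast_nonneg _
  have hℓ1 : 1 ≤ ℓ := by linarith
  set nb := Nat.log 2 Y + 1 with hnb
  have hi : ∀ i ∈ range nb, 2^i ≤ Y := fun i hi => by
    rw [mem_range, hnb, Nat.lt_succ_iff] at hi
    exact (Nat.pow_le_pow_right (by norm_num) hi).trans (pow_log_le_self 2 (by omega))
  have hnbl : (nb:ℝ) ≤ 2*ℓ := by
    have h1 : (Nat.log 2 Y:ℝ) * log 2 ≤ log (2*X:ℕ) := by
      rw [← log_pow]
      refine log_le_log (by positivity) ?_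
      exact_mod_cast (pow_log_le_self 2 (by omega : Y ≠ 0)).trans (by omega)
    have := log_two_gt_d9
    rw [hnb]; push_cast
    have h0 : (0:ℝ) ≤ Nat.log 2 Y := by positivity
    nlinarith
  choose! E hE1 hE2 using fun i (h : i ∈ range nb) => tail_E (X := X) (i := i) hw hw' hT hN hNT
    (by
      have : ((2^i:ℕ):ℝ) ≤ Y := by exact_mod_cast hi i h
      push_cast at this; linarith) ((hi i h).trans hYX) hℓ1 hlT (hab i (hi i h))
  set P : ℝ → ℂ := fun t => ∑ n ∈ Ioc Y (2*X), ((acoef X Y n : ℤ):ℂ)*(n:ℂ)^(-(⟨1 - w, t⟩:ℂ)) with hP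
  have hPc : Continuous P := continuous_term _ (fun n hn => by rw [mem_Ioc] at hn; omega) w _
  set G : ℝ := 8*(X:ℝ)^(2*w) / w^2 with hG
  have hX2 : (X:ℝ)^(2*w) ≤ ((2*X:ℕ):ℝ)^(2*w) :=
    rpow_le_rpow (by positivity) (by push_cast; linarith [show (0:ℝ) ≤ X by positivity]) (by linarith)
  have hpt : ∀ t, |t| ≤ T → ‖1 - riemannZeta ⟨1 - w, t⟩ * moll Y ⟨1 - w, t⟩‖^2 ≤
      2*‖P t‖^2 + 4*ℓ * ∑ i ∈ range nb, (G*(1 + t^2)⁻¹ + 2*E i^2*‖blk Y i ⟨1 - w, t⟩‖^2) := by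
    intro t ht
    rw [one_sub_split hY hYX, norm_neg]
    set Q := ∑ i ∈ range nb, ztail ⟨1 - w, t⟩ (X/2^i) * blk Y i ⟨1 - w, t⟩ with hQ
    have h1 : ‖P t + Q‖^2 ≤ 2*‖P t‖^2 + 2*‖Q‖^2 := by
      have := norm_add_le (P t) Q
      have := pow_le_pow_left₀ (norm_nonneg _) this 2
      linarith [sq_nonneg (‖P t‖ - ‖Q‖)]
    refine h1.trans (add_le_add le_rfl ?_)
    have h2 : ‖Q‖^2 ≤ nb * ∑ i ∈ range nb, ‖ztail ⟨1 - w, t⟩ (X/2^i) * blk Y i ⟨1 - w, t⟩‖^2 := by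
      calc _ ≤ (∑ i ∈ range nb, ‖ztail ⟨1 - w, t⟩ (X/2^i) * blk Y i ⟨1 - w, t⟩‖)^2 := by
            gcongr; exact norm_sum_le _ _
        _ ≤ _ := by
            refine sq_sum_le_card_mul_sum_sq.trans (le_of_eq ?_)
            rw [card_range]
    have h3 : ∀ i ∈ range nb, ‖ztail ⟨1 - w, t⟩ (X/2^i) * blk Y i ⟨1 - w, t⟩‖^2 ≤
        G*(1 + t^2)⁻¹ + 2*E i^2*‖blk Y i ⟨1 - w, t⟩‖^2 := by
      intro i hir
      have hz := hE1 i hir t ht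
      have hb := blk_bound Y i (by linarith [show (1:ℝ) / (2*(2:ℝ)^60) ≤ 1 by norm_num] : w ≤ 1) t
      set v : ℝ := ((X/2^i:ℕ):ℝ) with hv
      have hvX : v * 2^i ≤ X := by rw [hv]; exact_mod_cast Nat.div_mul_le_self X (2^i)
      set z := ‖(⟨1 - w, t⟩:ℂ) - 1‖ with hzd
      have hz2 : z^2 = w^2 + t^2 := by
        rw [hzd, ← normSq_eq_norm_sq, normSq_apply]; simp; ring
      have hw1 : w ≤ 1 := hw'.trans (by norm_num)
      have hzi : (z^2)⁻¹ ≤ (1 + t^2)⁻¹ / w^2 := by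
        rw [hz2, inv_eq_one_div, inv_eq_one_div, div_div, div_le_div_iff₀ (by positivity) (by positivity)]
        have : w^2 ≤ 1 := pow_le_one₀ hw.le hw1
        linarith [mul_le_mul_of_nonneg_right this (sq_nonneg t)]
      rw [norm_mul, mul_pow]
      calc _ ≤ (2*(v^w / z) + E i)^2*‖blk Y i ⟨1 - w, t⟩‖^2 := by gcongr
        _ ≤ (8*(v^w)^2*(z^2)⁻¹ + 2*E i^2) * ‖blk Y i ⟨1 - w, t⟩‖^2 := by
            gcongr
            have e : 8*(v^w)^2*(z^2)⁻¹ = 2*(2*(v^w / z))^2 := by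
              rw [div_eq_mul_inv, mul_pow, mul_pow, inv_pow]; ring
            rw [e]; linarith [sq_nonneg (2*(v^w / z) - E i)]
        _ = 8*(v^w)^2*(z^2)⁻¹ * ‖blk Y i ⟨1 - w, t⟩‖^2 + 2*E i^2*‖blk Y i ⟨1 - w, t⟩‖^2 := by ring
        _ ≤ 8*(v^w)^2*((1 + t^2)⁻¹ / w^2)*(((2:ℝ)^i)^w)^2 + 2*E i^2*‖blk Y i ⟨1 - w, t⟩‖^2 := by gcongr
        _ = 8*(v * 2^i)^(2*w) / w^2*(1 + t^2)⁻¹ + 2*E i^2*‖blk Y i ⟨1 - w, t⟩‖^2 := by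
            rw [sq_rpow (by positivity), sq_rpow (by positivity), mul_rpow (by positivity) (by positivity)]; ring
        _ ≤ _ := by rw [hG]; gcongr
    have h4 := sum_le_sum h3
    have h5 : 0 ≤ ∑ i ∈ range nb, ‖ztail ⟨1 - w, t⟩ (X/2^i) * blk Y i ⟨1 - w, t⟩‖^2 :=
      sum_nonneg fun i _ => by positivity
    calc _ ≤ 2*((2*ℓ) * ∑ i ∈ range nb, (G*(1 + t^2)⁻¹ + 2*E i^2*‖blk Y i ⟨1 - w, t⟩‖^2)) := by
          refine mul_le_mul_of_nonneg_left (h2.trans ?_) (by norm_num)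
          gcongr
      _ = _ := by ring
  have hic : Continuous fun t : ℝ => (1 + t^2)⁻¹ :=
    Continuous.inv₀ (by fun_prop) fun t => by positivity
  have hbc := fun i => continuous_blk Y i w
  refine (int_mono (by linarith) (fun t => by positivity) (by fun_prop) hpt).trans ?_
  have hI1 : ∫ t in (-T)..T, (1 + t^2)⁻¹ ≤ 4 := by
    rw [integral_inv_one_add_sq]
    have := arctan_lt_pi_div_two T
    rw [arctan_neg]; linarith [pi_lt_four]
  have hB : ∀ i ∈ range nb, ∫ t in (-T)..T, (G*(1 + t^2)⁻¹ + 2*E i^2*‖blk Y i ⟨1 - w, t⟩‖^2) ≤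
      81032*ℓ^2*((T / N)^3/w^2)*(X:ℝ)^(2*w) := by
    intro i hir
    rw [intervalIntegral.integral_add ((hic.const_mul _).intervalIntegrable _ _)
      ((by fun_prop : Continuous fun t : ℝ => 2*E i^2*‖blk Y i ⟨1 - w, t⟩‖^2).intervalIntegrable _ _),
      intervalIntegral.integral_const_mul, intervalIntegral.integral_const_mul]
    have hm := blk_mean Y i (by linarith [show (1:ℝ) / (2*(2:ℝ)^60) ≤ 1 by norm_num] : w ≤ 1) hT
    have h2 := hE2 i hir
    have hw1 : w ≤ 1 := hw'.trans (by norm_num)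
    have hθw : (T / N)^3 ≤ (T / N)^3/w^2 := by
      rw [le_div_iff₀ (by positivity)]
      exact mul_le_of_le_one_right (by positivity) (pow_le_one₀ hw.le hw1)
    calc _ ≤ G * 4 + 2*(E i^2*(60*(T/2^i + 2)*((2:ℝ)^i)^(2*w))) := by
          rw [mul_assoc 2 (E i^2)]; gcongr
      _ ≤ G * 4 + 2*(40500*ℓ^2*(T / N)^3*(X:ℝ)^(2*w)) := by gcongr
      _ ≤ (32*1^2*(1^3/w^2)*(X:ℝ)^(2*w)) + 2*(40500*ℓ^2*((T / N)^3/w^2)*(X:ℝ)^(2*w)) := by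
          refine add_le_add (le_of_eq (by rw [hG]; ring)) (by gcongr)
      _ ≤ (32*ℓ^2*((T / N)^3/w^2)*(X:ℝ)^(2*w)) + 2*(40500*ℓ^2*((T / N)^3/w^2)*(X:ℝ)^(2*w)) := by
          gcongr
      _ = _ := by ring
  have hP1 := part1_bound (X := X) hY hw.le hT
  rw [intervalIntegral.integral_add (Continuous.intervalIntegrable (by fun_prop) _ _) (Continuous.intervalIntegrable (by fun_prop) _ _),
    intervalIntegral.integral_const_mul, intervalIntegral.integral_const_mul,
    intervalIntegral.integral_finsetSum fun i _ => Continuous.intervalIntegrable (by fun_prop) _ _]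
  have hS := sum_le_sum hB
  rw [sum_const, card_range, nsmul_eq_mul] at hS
  have hTY : 1 ≤ T / Y := by rw [le_div_iff₀ hY0]; linarith
  have hθ3 : 0 ≤ (T / N)^3/w^2 := by positivity
  set Z := ((2*X:ℕ):ℝ)^(2*w) with hZ
  have hZ0 : 0 ≤ Z := by positivity
  calc _ ≤ 2*(60*((T / Y + 1) * Z * ℓ^4)) + 4*ℓ*((2*ℓ)*(81032*ℓ^2*((T / N)^3/w^2) * Z)) := by
        refine add_le_add (mul_le_mul_of_nonneg_left (hP1.trans ?_) (by norm_num)) ?_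
        · gcongr
        · refine mul_le_mul_of_nonneg_left (hS.trans ?_) (by positivity)
          gcongr
    _ = (120*(T / Y + 1) + 648256*((T / N)^3/w^2))*(ℓ^4*Z) := by ring
    _ ≤ (10^6*(T / Y + (T / N)^3/w^2))*(ℓ^4*Z) := by gcongr; linarith
    _ = _ := by ring

lemma efn_mean : ∃ q1 : ℝ, 1000 ≤ q1 ∧ ∀ q ≥ q1, ∀ (N X Y : ℕ) (w T ℓ : ℝ), w = 1/q^199 → 2 ≤ T → 1 ≤ N →
    (N:ℝ) ≤ T → 1 ≤ Y → Y ≤ X → Y ≤ N → 1 + log (2*X:ℕ) ≤ ℓ → log T ≤ ℓ → 8*T ≤ exp (q^200) →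
    (∀ i, 2^i ≤ Y → ShortTail N X T i) →
    ∫ t in (-T)..T, ‖efn Y ⟨1 - w, t⟩‖^2 ≤
      10^8*q^800*ℓ^4*(T / Y + (T / N)^3)*((2*X:ℕ):ℝ)^(2*w) := by
  obtain ⟨q1, hq1, hz⟩ := zlog_bound
  refine ⟨q1, hq1, fun q hq N X Y w T ℓ hwq hT hN hNT hY hYX hYN hℓ hlT hTq hab => ?_⟩
  have hq1000 : 1000 ≤ q := hq1.trans hq
  have hq0 : 0 < q := by linarith
  have hw : 0 < w := by rw [hwq]; positivity
  have hw' : w ≤ 1/(2*(2:ℝ)^60) := by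
    rw [hwq]
    refine one_div_le_one_div_of_le (by norm_num) ?_
    calc (2*(2:ℝ)^60) ≤ 1000^199 := by norm_num
      _ ≤ q^199 := by gcongr
  have hw1 : w ≤ 1 := hw'.trans (by norm_num)
  have hI := one_sub_mean hw hw' hT hN hNT hY hYX hYN hℓ hlT hab
  have hwi : 1/w^2 = q^398 := by rw [hwq, div_pow, one_pow, one_div_one_div, ← pow_mul]
  have hN0 : (0:ℝ) < N := by exact_mod_cast hN
  have hY0 : (0:ℝ) < Y := by exact_mod_cast hY
  have hℓ1 : 1 ≤ ℓ := by have := log_natCast_nonneg (2*X); linarith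
  set Z := ((2*X:ℕ):ℝ)^(2*w) with hZ
  have hs1 : ∀ t : ℝ, (⟨1 - w, t⟩:ℂ) ≠ 1 := fun t h => by
    have := congrArg Complex.re h; simp at this; linarith
  have hline : Continuous fun t : ℝ => (⟨1 - w, t⟩:ℂ) := by
    simp_rw [mk_eq]; fun_prop
  have hζc : Continuous fun t : ℝ => riemannZeta ⟨1 - w, t⟩ := continuous_iff_continuousAt.2 fun t =>
    ContinuousAt.comp (f := fun t : ℝ => (⟨1 - w, t⟩:ℂ)) (g := riemannZeta)
      (differentiableAt_riemannZeta (hs1 t)).continuousAt hline.continuousAt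
  have hMc : Continuous fun t : ℝ => moll Y ⟨1 - w, t⟩ := (differentiable_moll Y).continuous.comp hline
  have hic : Continuous fun t : ℝ => (1 + t^2)⁻¹ :=
    Continuous.inv₀ (by fun_prop) fun t => by positivity
  have hM : ∀ t, ‖moll Y ⟨1 - w, t⟩‖^2 ≤ ℓ^2*Z := by
    intro t
    have h1 : ‖moll Y ⟨1 - w, t⟩‖ ≤ ((2*X:ℕ):ℝ)^w * ℓ := by
      refine (norm_moll_le Y _).trans ?_
      calc _ ≤ ∑ d ∈ Icc 1 Y, ((2*X:ℕ):ℝ)^w*(d:ℝ)⁻¹ := by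
            refine sum_le_sum fun d hd => ?_
            rw [mem_Icc] at hd
            have hd0 : (0:ℝ) < d := by exact_mod_cast hd.1
            rw [show -(⟨1 - w, t⟩:ℂ).re = w - 1 by simp, rpow_sub_one hd0.ne', div_eq_mul_inv]
            gcongr
            omega
        _ ≤ _ := by
            rw [← mul_sum]
            gcongr
            refine (sum_inv_le_log Y).trans (le_trans ?_ hℓ)
            gcongr
            omega
    calc _ ≤ (((2*X:ℕ):ℝ)^w * ℓ)^2 := by gcongr
      _ = _ := by rw [mul_pow, sq_rpow (by positivity)]; ring
  have hZ1 : 1 ≤ Z := one_le_rpow (by exact_mod_cast (by omega : 1 ≤ 2*X)) (by linarith)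
  have hpt : ∀ t, |t| ≤ T → ‖efn Y ⟨1 - w, t⟩‖^2 ≤
      12*q^402*‖1 - riemannZeta ⟨1 - w, t⟩ * moll Y ⟨1 - w, t⟩‖^2 + 6*q^796*ℓ^2*Z*(1 + t^2)⁻¹ := by
    intro t ht
    have hζ := hz q hq ⟨1 - w, t⟩ (by rw [hwq]) (by change 1 - w ≤ 2; linarith) (by
      change 8*|t| ≤ _; linarith)
    rw [efn_eq Y (hs1 t) hζ.1 (zeta_ne_of (hs1 t) hζ.1)]
    set U := 1 - riemannZeta ⟨1 - w, t⟩ * moll Y ⟨1 - w, t⟩ with hU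
    set s : ℂ := ⟨1 - w, t⟩ with hs
    set z := ‖s - 1‖ with hzd
    have hz2 : z^2 = w^2 + t^2 := by
      rw [hzd, ← normSq_eq_norm_sq, normSq_apply]; simp [hs]; ring
    have hz0 : 0 < z := norm_pos_iff.2 (sub_ne_zero.2 (hs1 t))
    have hwz : w ≤ z := by
      refine le_of_sq_le_sq ?_ hz0.le
      rw [hz2]; nlinarith [sq_nonneg t]
    have hzi1 : 1/z ≤ q^199 := by
      calc 1/z ≤ 1/w := by gcongr
        _ = _ := by rw [hwq, one_div_one_div]
    have hzi : (1/z)^2 ≤ q^398*(1 + t^2)⁻¹ := by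
      rw [← hwi, div_pow, one_pow, hz2, inv_eq_one_div, div_mul_div_comm, one_mul, one_div_le_one_div (by positivity) (by positivity)]
      have : w^2 ≤ 1 := by nlinarith
      nlinarith [sq_nonneg t]
    have hl : ‖zlog s - 1/(s - 1)‖ ≤ 2*q^201 := by
      refine (norm_sub_le _ _).trans ?_
      rw [norm_div, norm_one, ← hzd]
      have : q^199 ≤ q^201 := pow_le_pow_right₀ (by linarith) (by norm_num)
      linarith [hζ.2]
    have h1 : ‖-(zlog s - 1/(s - 1)) * U - 1/(s - 1) + moll Y s / (s - 1)^2‖ ≤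
        2*q^201*‖U‖ + 1/z + ‖moll Y s‖ * (1/z)^2 := by
      refine (norm_add_le _ _).trans (add_le_add ((norm_sub_le _ _).trans (add_le_add ?_ ?_)) ?_)
      · rw [norm_mul, norm_neg]; gcongr
      · rw [norm_div, norm_one]
      · rw [norm_div, norm_pow, ← hzd]; exact le_of_eq (by ring)
    have h2 : ∀ a b c : ℝ, (a + b + c)^2 ≤ 3*a^2 + 3*b^2 + 3*c^2 := fun a b c => by
      nlinarith [sq_nonneg (a - b), sq_nonneg (b - c), sq_nonneg (a - c)]
    have hi0 : 0 ≤ (1 + t^2)⁻¹ := by positivity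
    have h4 : (1/z)^2*(1/z)^2 ≤ (q^398*(1 + t^2)⁻¹)*(q^199)^2 := by gcongr
    have hq398 : q^398 ≤ q^796 := pow_le_pow_right₀ (by linarith) (by norm_num)
    calc _ ≤ (2*q^201*‖U‖ + 1/z + ‖moll Y s‖ * (1/z)^2)^2 := by gcongr
      _ ≤ _ := h2 _ _ _
      _ = 12*q^402*‖U‖^2 + 3*(1/z)^2 + 3*(‖moll Y s‖^2*((1/z)^2*(1/z)^2)) := by ring
      _ ≤ 12*q^402*‖U‖^2 + 3*(q^796*1^2*1*(1 + t^2)⁻¹) +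
          3*((ℓ^2*Z)*((q^398*(1 + t^2)⁻¹)*(q^199)^2)) := by
          gcongr ?_ + 3*?_ + 3*(?_ * ?_)
          · exact le_rfl
          · rw [one_pow, mul_one, mul_one]; exact hzi.trans (by gcongr)
          · exact hM t
      _ ≤ 12*q^402*‖U‖^2 + 3*(q^796*ℓ^2*Z*(1 + t^2)⁻¹) +
          3*((ℓ^2*Z)*((q^398*(1 + t^2)⁻¹)*(q^199)^2)) := by gcongr
      _ = _ := by ring
  have hUc : Continuous fun t : ℝ => ‖1 - riemannZeta ⟨1 - w, t⟩ * moll Y ⟨1 - w, t⟩‖^2 := by fun_prop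
  refine (int_mono (by linarith) (fun t => by positivity) (by fun_prop) hpt).trans ?_
  rw [intervalIntegral.integral_add ((hUc.const_mul _).intervalIntegrable _ _) ((hic.const_mul _).intervalIntegrable _ _),
    intervalIntegral.integral_const_mul, intervalIntegral.integral_const_mul]
  have hI1 : ∫ t in (-T)..T, (1 + t^2)⁻¹ ≤ 4 := by
    rw [integral_inv_one_add_sq]
    have := arctan_lt_pi_div_two T
    rw [arctan_neg]; linarith [pi_lt_four]
  have hθ : 1 ≤ T / N := by rw [le_div_iff₀ hN0]; linarith
  have hYN' : (Y:ℝ) ≤ N := by exact_mod_cast hYN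
  have hTY : 1 ≤ T / Y := by rw [le_div_iff₀ hY0]; linarith
  have hθ3 : 0 ≤ (T / N)^3 := by positivity
  have hq398 : 1 ≤ q^398 := one_le_pow₀ (by linarith)
  have hq4 : q^796 ≤ q^800 := pow_le_pow_right₀ (by linarith) (by norm_num)
  have hℓ2 : ℓ^2 ≤ ℓ^4 := pow_le_pow_right₀ hℓ1 (by norm_num)
  rw [div_eq_mul_one_div ((T / N)^3), hwi] at hI
  calc _ ≤ 12*q^402*(10^6*ℓ^4*(T / Y * q^398 + (T / N)^3*q^398) * Z) + 6*q^796*ℓ^2*Z * 4 := by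
        refine add_le_add (mul_le_mul_of_nonneg_left (hI.trans ?_) (by positivity)) (by gcongr)
        have : T / Y ≤ T / Y * q^398 := le_mul_of_one_le_right (by positivity) hq398
        gcongr
    _ ≤ 12*q^402*(10^6*ℓ^4*(T / Y * q^398 + (T / N)^3*q^398) * Z) + 6*q^800*ℓ^4*Z * 4 := by gcongr
    _ = (12*10^6*(T / Y + (T / N)^3) + 24)*(q^800*ℓ^4*Z) := by ring
    _ ≤ (10^8*(T / Y + (T / N)^3))*(q^800*ℓ^4*Z) := by gcongr; linarith
    _ = _ := by ring

/-- The absolute saving exponent: a tenth of the exponent `1 / (2 * 2 ^ 60)` in `ztail_main` for `k = 2`. -/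
def ep : ℝ := 1/(20*(2:ℝ)^60)

/-- `qp N ^ 200 = 2 log N`. -/
def qp (N:ℕ) : ℝ := (2*log N)^(1/200:ℝ)

/-- The width of the zero-free region used at level `N`. -/
def wp (N:ℕ) : ℝ := 1/qp N^199

/-- The height at which the contour is cut. -/
def tp (N:ℕ) : ℝ := 8*N * log N

/-- The length `N ^ (1 - ep * wp N / 4)` of the mollifier. -/
def yp (N:ℕ) : ℕ := ⌊exp ((1 - ep * wp N/4) * log N)⌋₊

lemma ep_pos : 0 < ep := by unfold ep; positivity
lemma ep_lt : ep < 1/100 := by unfold ep; norm_num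

lemma ev_pow (C:ℝ) (k:ℕ) {c : ℝ} (hc : 0 < c) : ∀ᶠ x : ℝ in atTop, C * x^k ≤ exp (c * x) := by
  have h := (isLittleO_pow_exp_pos_mul_atTop k hc).const_mul_left C
  have h2 := h.bound (c := 1) one_pos
  filter_upwards [h2] with x hx
  rw [one_mul, norm_of_nonneg (exp_pos _).le] at hx
  exact (le_abs_self _).trans hx

lemma tendsto_logN : Tendsto (fun N : ℕ => log N) atTop atTop :=
  tendsto_log_atTop.comp tendsto_natCast_atTop_atTop

lemma tendsto_qp : Tendsto qp atTop atTop :=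
  (tendsto_rpow_atTop (by norm_num : (0:ℝ) < 1/200)).comp (tendsto_logN.const_mul_atTop (by norm_num : (0:ℝ) < 2))

lemma qp_pow (N:ℕ) : qp N^200 = 2*log N := by
  rw [qp, ← rpow_natCast, ← rpow_mul (by have := log_natCast_nonneg N; linarith)]; norm_num

lemma wp_mul_log {N : ℕ} (h : 0 < qp N) : wp N * log N = qp N/2 := by
  have e : log N = qp N^199*qp N/2 := by rw [← pow_succ, qp_pow]; ring
  have hp : qp N^199 ≠ 0 := by positivity
  rw [e, wp]
  generalize qp N^199 = z at *
  field_simp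

lemma half_le_floor {x : ℝ} (hx : 1 ≤ x) : x/2 ≤ ⌊x⌋₊ := by
  have h1 := lt_floor_add_one x
  have h2 : (1:ℝ) ≤ ⌊x⌋₊ := by exact_mod_cast le_floor (by simpa using hx)
  linarith

/-- The mean square of the error function on the line `Re s = 1 - wp N`. The saving `exp (-ep * qp N)` against
`N ^ (4 * wp N) = exp (2 * qp N)` is what makes almost all short intervals work. -/
lemma efn_meansq : ∀ᶠ N : ℕ in atTop,
    ∫ t in (-tp N)..(tp N), ‖efn (yp N) ⟨1 - wp N, t⟩‖^2 ≤ exp ((2 - ep) * qp N) := by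
  obtain ⟨q1, hq1, hmean⟩ := efn_mean
  have hep := ep_pos
  have hep2 := ep_lt
  have E1 := tendsto_logN.eventually (ev_pow 64 1 (by norm_num : (0:ℝ) < 1))
  have E3 := tendsto_logN.eventually (ev_pow 8 1 (by norm_num : (0:ℝ) < 1/2))
  have E5 := tendsto_qp.eventually (ev_pow (10^14) 2200 (by positivity : 0 < 7/8*ep))
  filter_upwards [E1, E3, E5, tendsto_qp.eventually_ge_atTop q1, tendsto_logN.eventually_ge_atTop (2^61 + 1/ep),
    eventually_ge_atTop 2] with N e1 e3 e5 hq hL hN2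
  set q := qp N with hqd
  set L := log N with hLd
  set w := wp N with hwd
  have hq0 : 0 < q := by linarith
  have hwL : w * L = q/2 := wp_mul_log hq0
  have hqL : q^200 = 2*L := qp_pow N
  have hiep : 0 < 1/ep := by positivity
  have hL1 : 2^61 ≤ L := by linarith
  have hLep : 1 ≤ ep * L := by
    have : 1/ep ≤ L := by linarith [show (0:ℝ) ≤ 2^61 by positivity]
    rwa [div_le_iff₀ hep, mul_comm] at this
  have hL100 : 100 ≤ L := le_trans (by norm_num) hL1
  have hN0 : (0:ℝ) < N := by exact_mod_cast (by omega : 0 < N)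
  have hNe : exp L = N := exp_log hN0
  have hw0 : 0 < w := by rw [hwd, wp]; positivity
  have hw1 : w ≤ 1/2 := by
    rw [hwd, wp]
    refine one_div_le_one_div_of_le (by norm_num) ?_
    calc (2:ℝ) ≤ q := by linarith
      _ ≤ q^199 := le_self_pow₀ (by linarith) (by norm_num)
  have hlog2 := log_two_lt_d9
  have hlog2' := log_two_gt_d9
  have hexp2 : ∀ x : ℝ, 1 ≤ x → 2 ≤ exp x := fun x hx => by have := add_one_le_exp x; linarith
  have hexp3 : ∀ x : ℝ, 2 ≤ x → 4 ≤ exp x := fun x hx => by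
    have h := hexp2 (x/2) (by linarith)
    have e : exp x = exp (x/2) * exp (x/2) := by rw [← exp_add]; ring_nf
    nlinarith
  -- the length of the long Dirichlet polynomial
  set x := exp ((2 - 2*ep) * L) with hx
  set X := ⌊x⌋₊ with hX
  have hxN : 4*(N:ℝ) ≤ x := by
    have h := hexp3 ((1 - 2*ep) * L) (by nlinarith)
    rw [hx, show (2 - 2*ep) * L = (1 - 2*ep) * L + L by ring, exp_add, hNe]
    nlinarith
  have hN1 : (1:ℝ) ≤ N := by exact_mod_cast (by omega : 1 ≤ N)
  have hXx : (X:ℝ) ≤ x := floor_le (exp_pos _).le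
  have hxX : x/2 ≤ X := half_le_floor (by linarith)
  have hNX : N ≤ X := le_floor (by linarith)
  -- the length of the mollifier
  set y := exp ((1 - ep * w/4) * L) with hy
  have hye : y * exp (ep * q/8) = N := by
    rw [hy, ← exp_add, ← hNe]; congr 1
    have : ep * w/4*L = ep * q/8 := by rw [show ep * w/4*L = ep*(w * L)/4 by ring, hwL]; ring
    linarith
  have hYd : yp N = ⌊y⌋₊ := rfl
  have hepw : ep * w/4 ≤ 1 := by clear * - hep hep2 hw0 hw1; nlinarith
  have hy1 : 1 ≤ y := one_le_exp (mul_nonneg (by linarith) (by linarith))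
  have hyY : y/2 ≤ (yp N : ℝ) := by rw [hYd]; exact half_le_floor hy1
  have hY1 : 1 ≤ yp N := by rw [hYd]; exact le_floor (by simpa using hy1)
  have hyN : y ≤ N := by
    rw [← hye]; exact le_mul_of_one_le_right (by linarith) (one_le_exp (by positivity))
  have hYN : yp N ≤ N := by
    rw [hYd]; exact_mod_cast (floor_le (by linarith : 0 ≤ y)).trans hyN
  rw [pow_one] at e1 e3
  rw [one_mul] at e1
  rw [hNe] at e1
  have hT : tp N = 8*N * L := rfl
  have hTN : tp N / N = 8*L := by rw [hT]; field_simp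
  have hNT : (N:ℝ) ≤ tp N := by rw [hT]; clear * - hN0 hL100; nlinarith
  have hN2' : (2:ℝ) ≤ N := by exact_mod_cast hN2
  have hmain := hmean q hq N X (yp N) w (tp N) (4*L) rfl (by linarith) (by omega) hNT hY1 (by omega) hYN (by
      have h1 : log (2*X:ℕ) ≤ log (2*x) := by
        refine log_le_log (by exact_mod_cast (by omega : 0 < 2*X)) ?_
        push_cast; linarith
      rw [log_mul (by norm_num) (exp_pos _).ne', log_exp] at h1
      clear * - h1 hep hlog2 hL100; nlinarith) (by
      have h1 : tp N ≤ N^2 := by rw [hT]; clear * - e1 hN0 hL100; nlinarith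
      have h2 := log_le_log (by linarith) h1
      rw [log_pow] at h2; push_cast at h2
      linarith) (by
      rw [hqL, two_mul, exp_add, hNe, hT]; clear * - e1 hN0; nlinarith) (by
      intro i hi
      unfold ShortTail
      set D : ℝ := 2^i with hD
      have hD0 : 0 < D := by positivity
      have hDN : D ≤ N := by rw [hD]; exact_mod_cast hi.trans hYN
      have hvf : ((X/2^i:ℕ):ℝ) = ⌊(X:ℝ) / D⌋₊ := by
        rw [hD, show (2:ℝ)^i = ((2^i:ℕ):ℝ) by push_cast; rfl, Nat.floor_div_eq_div]
      have hv : x / (4*D) ≤ ((X/2^i:ℕ):ℝ) := by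
        rw [hvf]
        refine le_trans ?_ (half_le_floor ?_)
        · rw [div_div, div_le_div_iff₀ (by positivity) (by positivity)]; clear * - hxX hD0; nlinarith
        · rw [le_div_iff₀ hD0]; linarith
      generalize X/2^i = V at *
      have hx0 : 0 < x := exp_pos _
      have hV0 : (0:ℝ) < V := lt_of_lt_of_le (by positivity) hv
      by_cases hc : 2*D ≤ exp ((1 - 4*ep) * L)
      · left
        have e : x^2 = exp ((1 - 4*ep) * L)*(N:ℝ)^3 := by
          rw [hx, ← hNe, ← exp_nat_mul, ← exp_nat_mul, ← exp_add]; congr 1; push_cast; ring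
        calc (N:ℝ)^3 ≤ 8*((x / (4*D))^2*D) := by
              rw [div_pow, e]
              have e' : 8*(exp ((1 - 4*ep) * L)*(N:ℝ)^3/(4*D)^2*D) =
                (N:ℝ)^3*(exp ((1 - 4*ep) * L) / (2*D)) := by field_simp; ring
              rw [e']
              refine le_mul_of_one_le_right (by positivity) ?_
              rw [le_div_iff₀ (by positivity)]; linarith
          _ ≤ _ := by gcongr
      · right
        push Not at hc
        have hV : exp (3/4*L) ≤ V := by
          refine le_trans ?_ hv
          rw [le_div_iff₀ (by positivity)]
          have h4 := hexp3 ((1/4 - 2*ep) * L) (by clear * - hep2 hL100; nlinarith)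
          have ex : x = exp (3/4*L)*(exp ((1/4 - 2*ep) * L) * N) := by
            rw [← hNe, ← exp_add, ← exp_add, hx]; congr 1; ring
          rw [ex]
          gcongr
        refine ⟨?_, ?_, ?_⟩
        · rw [le_log_iff_exp_le hV0]
          refine le_trans (exp_le_exp.2 ?_) hV
          have : (2:ℝ)^61 = 2*2^60 := by norm_num
          linarith
        · calc tp N ≤ exp (1/2*L) * N := by rw [hT]; clear * - e3 hN0; nlinarith
            _ = exp (3/4*L)^2 := by
                rw [← hNe, ← exp_add, ← exp_nat_mul]; congr 1; push_cast; ring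
            _ ≤ _ := by gcongr
        · have h1 : (V:ℝ)^(-(2*(1/(2*(2:ℝ)^60)))) ≤ exp (-(15*ep * L)) := by
            refine (rpow_le_rpow_of_nonpos (exp_pos _) hV ?_).trans (le_of_eq ?_)
            · rw [Left.neg_nonpos_iff]; positivity
            · rw [← exp_mul]; congr 1; rw [ep]; ring
          have h2 := hexp2 (11*ep * L) (by linarith)
          have h3 : N * exp (-(15*ep * L)) * exp (11*ep * L) = exp ((1 - 4*ep) * L) := by
            rw [← hNe, ← exp_add, ← exp_add]; congr 1; ring
          have h4 : N * exp (-(15*ep * L)) ≤ D := by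
            have : 0 < N * exp (-(15*ep * L)) := by positivity
            clear * - this h2 h3 hc; nlinarith
          calc _ ≤ tp N * exp (-(15*ep * L)) := by gcongr; rw [hT]; positivity
            _ = (N * exp (-(15*ep * L)))*(tp N / N) := by field_simp
            _ ≤ _ := by gcongr; rw [hTN]; positivity)
  refine hmain.trans ?_
  have hTY : tp N / (yp N : ℝ) ≤ 16*L * exp (ep * q/8) := by
    rw [div_le_iff₀ (by linarith), hT, ← hye]
    have : 0 ≤ 16*L * exp (ep * q/8) := by positivity
    clear * - this hyY; nlinarith
  have hZ : ((2*X:ℕ):ℝ)^(2*w) ≤ 2*exp ((2 - 2*ep) * q) := by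
    calc _ ≤ (2*x)^(2*w) := by
          refine rpow_le_rpow (by positivity) ?_ (by positivity)
          push_cast; linarith
      _ = 2^(2*w) * exp ((2 - 2*ep) * q) := by
          rw [mul_rpow (by norm_num) (exp_pos _).le, ← exp_mul]
          congr 2
          rw [show (2 - 2*ep) * L*(2*w) = (2 - 2*ep)*(2*(w * L)) by ring, hwL]; ring
      _ ≤ 2^(1:ℝ) * exp ((2 - 2*ep) * q) := by
          gcongr
          · norm_num
          · linarith
      _ = _ := by rw [rpow_one]
  have he1 : 1 ≤ exp (ep * q/8) := one_le_exp (by positivity)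
  have hLe : L = q^200/2 := by rw [hqL]; ring
  calc _ ≤ 10^8*q^800*(4*L)^4*(16*L * exp (ep * q/8) + (8*L)^3)*(2*exp ((2 - 2*ep) * q)) := by
        rw [hTN]; gcongr
    _ ≤ 10^8*q^800*(4*L)^4*(16*L^3*exp (ep * q/8) + (8*L)^3*exp (ep * q/8)) *
          (2*exp ((2 - 2*ep) * q)) := by
        have hl3 : L ≤ L^3 := le_self_pow₀ (by linarith) (by norm_num)
        have : (8*L)^3 ≤ (8*L)^3*exp (ep * q/8) := le_mul_of_one_le_right (by positivity) he1
        gcongr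
    _ = 10^8*256*528*2*(q^800*L^7)*(exp (ep * q/8) * exp ((2 - 2*ep) * q)) := by ring
    _ ≤ 10^14*q^2200*(exp (ep * q/8) * exp ((2 - 2*ep) * q)) := by
        have e : q^2200 = q^800*(2*L)^7 := by rw [← hqL, ← pow_mul, ← pow_add]
        rw [e]
        have : 0 ≤ q^800*L^7 := by positivity
        gcongr
        · norm_num
        · linarith
    _ ≤ exp (7/8*ep * q)*(exp (ep * q/8) * exp ((2 - 2*ep) * q)) := by gcongr
    _ = _ := by rw [← exp_add, ← exp_add]; congr 1; ring

/-! ### From the explicit formula to primes in almost all short intervals -/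

lemma integral_exp_gw {A : ℝ} (hA : 0 < A) (y:ℝ) : Integrable (fun z => exp z * gw A y z) ∧
    ∫ z, exp z * gw A y z = exp (y + 1/(4*A)) * sqrt (π / A) := by
  have e : (fun z => exp z * gw A y z) =
      fun z => exp (y + 1/(4*A)) * exp (-A*(z - (y + 1/(2*A)))^2) := by
    funext z
    rw [gw, ← exp_add, ← exp_add]
    congr 1; field_simp; ring
  rw [e]
  exact ⟨(integrable_gauss_shift hA _).const_mul _, by rw [integral_const_mul, integral_gauss_shift]⟩

lemma main_bounds {A : ℝ} (hA : 0 < A) (y:ℝ) :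
    exp y * sqrt (π / A) - 1 ≤ ∫ z in Set.Ioi 0, exp z * gw A y z ∧
    ∫ z in Set.Ioi 0, exp z * gw A y z ≤ exp (y + 1/(4*A)) * sqrt (π / A) := by
  obtain ⟨hi, hv⟩ := integral_exp_gw hA y
  have hg : ∀ z, gw A y z ≤ 1 := fun z => exp_le_one_iff.2 (by nlinarith [sq_nonneg (z - y)])
  have h0 : ∀ z, 0 ≤ gw A y z := fun z => (exp_pos _).le
  have hs := intervalIntegral.integral_Iic_add_Ioi (b := 0) hi.integrableOn hi.integrableOn
  have h1 : ∫ z in Set.Iic 0, exp z * gw A y z ≤ 1 := by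
    calc _ ≤ ∫ z in Set.Iic (0:ℝ), exp z := by
          refine integral_mono hi.integrableOn (integrableOn_exp_Iic 0) fun z => ?_
          exact mul_le_of_le_one_right (exp_pos _).le (hg z)
      _ = 1 := integral_exp_Iic_zero
  have h2 : 0 ≤ ∫ z in Set.Iic 0, exp z * gw A y z :=
    integral_nonneg fun z => mul_nonneg (exp_pos _).le (h0 z)
  have h3 : exp y * sqrt (π / A) ≤ exp (y + 1/(4*A)) * sqrt (π / A) := by
    gcongr; simp; positivity
  constructor <;> linarith

/-- The function `e^{-u²} - e^{-1/2} e^{-u²/2}` is positive only for `|u| < 1`, but has positive integral. -/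
lemma main_lower {T : ℝ} (hT : 10 ≤ T) (y:ℝ) : 1/5*(exp y / T) - 1 ≤
    (∫ z in Set.Ioi 0, exp z * gw (T^2) y z) -
      exp (-1/2) * ∫ z in Set.Ioi 0, exp z * gw (T^2/2) y z := by
  have hT0 : 0 < T := by linarith
  have h1 := (main_bounds (A := T^2) (by positivity) y).1
  have h2 := (main_bounds (A := T^2/2) (by positivity) y).2
  have e1 : sqrt (π / T^2) = sqrt π / T := by
    rw [sqrt_div pi_pos.le, sqrt_sq hT0.le]
  have e2 : sqrt (π / (T^2/2)) = sqrt 2*(sqrt π / T) := by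
    rw [show π / (T^2/2) = 2*(π / T^2) by field_simp, sqrt_mul (by norm_num), e1]
  rw [e1] at h1
  rw [e2] at h2
  have h5 : 1/(4*(T^2/2)) ≤ 1/200 := by
    apply one_div_le_one_div_of_le (by norm_num); nlinarith
  have hE : exp (-1/2) * exp (y + 1/(4*(T^2/2))) ≤ exp y * exp (-(99/200)) := by
    rw [← exp_add, ← exp_add]; apply exp_le_exp.2; linarith
  have hE2 : exp (-(99/200)) ≤ 0.6125 := by
    rw [exp_neg]
    have := sum_le_exp_of_nonneg (show (0:ℝ) ≤ 99/200 by norm_num) 5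
    simp [sum_range_succ, Nat.factorial] at this
    rw [inv_le_comm₀ (exp_pos _) (by norm_num)]
    refine le_trans ?_ this
    norm_num
  have hs2 : sqrt 2 ≤ 1.4143 := by rw [sqrt_le_left (by norm_num)]; norm_num
  have hpi : 1.7 ≤ sqrt π := by
    apply le_sqrt_of_sq_le; have := pi_gt_three; norm_num; linarith
  have hP : 0 ≤ exp y*(sqrt π / T) := by positivity
  have h6 : exp (-1/2) * ∫ z in Set.Ioi 0, exp z * gw (T^2/2) y z ≤
      0.6125*1.4143*(exp y*(sqrt π / T)) := by
    calc _ ≤ exp (-1/2)*(exp (y + 1/(4*(T^2/2)))*(sqrt 2*(sqrt π / T))) := by gcongr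
      _ = (exp (-1/2) * exp (y + 1/(4*(T^2/2)))) * sqrt 2*(sqrt π / T) := by ring
      _ ≤ (exp y * 0.6125) * 1.4143*(sqrt π / T) := by
          refine mul_le_mul_of_nonneg_right (mul_le_mul (hE.trans ?_) hs2 (by positivity) (by positivity)) (by positivity)
          gcongr
      _ = _ := by ring
  have h7 : 1.7*(exp y / T) ≤ exp y*(sqrt π / T) := by
    rw [mul_div_assoc', mul_div_assoc']
    apply div_le_div_of_nonneg_right _ hT0.le
    rw [mul_comm]; gcongr
  have : 0 ≤ exp y / T := by positivity
  linarith

/-- A difference of two Gaussian weights is a lower bound for the indicator function of a short interval. -/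
lemma short_sum {T y : ℝ} (hT : 0 < T) (J : Finset ℕ) (hJ : ∀ m : ℕ, 1 ≤ m → |log m - y| < 1/T → m ∈ J) :
    (∑' n : ℕ, vonMangoldt n * gw (T^2) y (log n)) -
      exp (-1/2)*(∑' n : ℕ, vonMangoldt n * gw (T^2/2) y (log n)) ≤
      ∑ m ∈ J, vonMangoldt m := by
  have s1 := (gtr_vm (A := T^2) (by positivity) y).2.2
  have s2 := ((gtr_vm (A := T^2/2) (by positivity) y).2.2).mul_left (exp (-1/2))
  rw [← tsum_mul_left, ← s1.tsum_sub s2, ← tsum_subtype' J vonMangoldt,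
    tsum_subtype (↑J : Set ℕ) (vonMangoldt : ℕ → ℝ)]
  refine (s1.sub s2).tsum_le_tsum (fun m => ?_) (summable_of_hasFiniteSupport (J.finite_toSet.subset Set.support_indicator_subset))
  have hL : 0 ≤ vonMangoldt m := vonMangoldt_nonneg
  have hg : gw (T^2) y (log m) ≤ 1 :=
    exp_le_one_iff.2 (by have := mul_nonneg (sq_nonneg T) (sq_nonneg (log m - y)); linarith)
  have hg2 : 0 ≤ gw (T^2/2) y (log m) := (exp_pos _).le
  by_cases hm : m ∈ J
  · rw [Set.indicator_of_mem (by exact_mod_cast hm)]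
    have : 0 ≤ exp (-1/2)*(vonMangoldt m * gw (T^2/2) y (log m)) := by positivity
    nlinarith
  · rw [Set.indicator_of_notMem (by exact_mod_cast hm)]
    rcases Nat.eq_zero_or_pos m with rfl | h1
    · simp
    have hu : 1/T ≤ |log m - y| := by
      by_contra h; exact hm (hJ m h1 (not_le.1 h))
    have hu2 : 1 ≤ T^2*(log m - y)^2 := by
      rw [← sq_abs (log m - y), ← mul_pow]
      apply one_le_pow₀
      rwa [div_le_iff₀' hT] at hu
    have : gw (T^2) y (log m) ≤ exp (-1/2) * gw (T^2/2) y (log m) := by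
      rw [gw, gw, ← exp_add]; apply exp_le_exp.2; linarith
    nlinarith

/-- The integrand on the shifted contour, without its dependence on `y`. -/
def hfn (N:ℕ) (A t : ℝ) : ℂ :=
  efn (yp N) ⟨1 - wp N, t⟩ * cexp ((⟨1 - wp N, t⟩:ℂ)^2/(4*A))

/-- The truncated contour integral at `y`, normalized by `e^{(1 - w) y}`. -/
def gfn (N:ℕ) (A y : ℝ) : ℂ :=
  ∫ t in (-tp N)..(tp N), hfn N A t * cexp (((t * y:ℝ):ℂ) * I)

lemma ker_integral (N:ℕ) (A y : ℝ) :
    ∫ t in (-tp N)..(tp N), efn (yp N) ⟨1 - wp N, t⟩ * ker A y ⟨1 - wp N, t⟩ =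
      (exp ((1 - wp N) * y):ℝ) * gfn N A y := by
  rw [gfn, ← intervalIntegral.integral_const_mul]
  congr 1; funext t
  rw [hfn, ker, Complex.exp_add, show ((⟨1 - wp N, t⟩:ℂ) * y) =
    (((1 - wp N) * y:ℝ):ℂ) + ((t * y:ℝ):ℂ) * I by rw [mk_eq]; push_cast; ring, Complex.exp_add,
    ofReal_exp]
  ring

/-- The explicit formula after the contour shift: everything but the term with `gfn` is negligible. -/
lemma formula_err : ∃ C : ℝ, 0 ≤ C ∧ ∀ᶠ N : ℕ in atTop, ∀ A y : ℝ, (8*N:ℝ)^2/2 ≤ A → A ≤ (8*N:ℝ)^2 → 0 ≤ y →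
    |(∑' n : ℕ, vonMangoldt n * gw A y (log n)) - ∫ z in Set.Ioi 0, exp z * gw A y z| ≤
      yp N*(15 + 6*(y + log (yp N))) + exp ((1 - wp N) * y) * ‖gfn N A y‖ / (8*N) +
      (4*((yp N + 1) * qp N^420) + 2*C) * exp (1 + 2*y - log N^2/8) := by
  obtain ⟨q1, hq1, C, hC, h⟩ := efn_shift
  refine ⟨C, hC, ?_⟩
  have E1 := tendsto_logN.eventually (ev_pow 64 1 (by norm_num : (0:ℝ) < 1))
  filter_upwards [tendsto_qp.eventually (eventually_ge_atTop q1), E1, tendsto_logN.eventually (eventually_ge_atTop 1),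
    eventually_ge_atTop 1] with N hq e1 hL hN A y hA1 hA2 hy
  have hNr : (1:ℝ) ≤ N := by exact_mod_cast hN
  have hA : 1 ≤ A := by nlinarith
  have hT : 2 ≤ tp N := by unfold tp; nlinarith
  have hT8 : 8*tp N ≤ exp (qp N^200) := by
    rw [qp_pow, two_mul, exp_add, exp_log (by linarith), tp]
    rw [one_mul, pow_one, exp_log (by linarith)] at e1
    nlinarith
  have h1 := h (qp N) hq (yp N) A y (tp N) hA hy hT hT8
  have h2 := (explicit_formula (by linarith : 0 < A) y (yp N)).1
  have h3 := errI_total hA y (yp N)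
  rw [← wp, ker_integral] at h1
  set S := ∑' n : ℕ, vonMangoldt n * gw A y (log n)
  set Q := ∫ z in Set.Ioi 0, exp z * gw A y z
  set E := ∑ d ∈ Icc 1 (yp N), (moebius d : ℝ) * errI A y d
  rw [abs_of_nonneg hy] at h3
  have hs : (8*N:ℝ) ≤ sqrt (4*π * A) := by
    apply le_sqrt_of_sq_le; have := pi_gt_three; nlinarith
  have h4 : ‖(((sqrt (4*π * A))⁻¹:ℝ):ℂ)*((exp ((1 - wp N) * y):ℝ) * gfn N A y)‖ ≤
      exp ((1 - wp N) * y) * ‖gfn N A y‖ / (8*N) := by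
    rw [norm_mul, norm_mul, norm_real, norm_real, norm_of_nonneg (by positivity),
      norm_of_nonneg (by positivity), mul_comm, ← div_eq_mul_inv]
    gcongr
  have h5 : exp (1 + 2*y - tp N^2/(8*A)) ≤ exp (1 + 2*y - log N^2/8) := by
    apply exp_le_exp.2
    have : log N^2/8 ≤ tp N^2/(8*A) := by
      rw [div_le_div_iff₀ (by norm_num) (by linarith), tp]
      nlinarith [sq_nonneg (log N)]
    linarith
  have h6 : ((S - Q:ℝ):ℂ) = (E:ℂ) + gtr A y (efn (yp N)) := by
    rw [Complex.ofReal_sub, h2]; ring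
  have h7 : |S - Q| ≤ |E| + ‖gtr A y (efn (yp N))‖ := by
    rw [← norm_eq_abs, ← norm_real, h6, ← norm_eq_abs, ← norm_real]; exact norm_add_le _ _
  have h8 := norm_sub_norm_le (gtr A y (efn (yp N)))
    ((((sqrt (4*π * A))⁻¹:ℝ):ℂ)*((exp ((1 - wp N) * y):ℝ) * gfn N A y))
  have h9 : 0 ≤ 4*((yp N + 1) * qp N^420) + 2*C := by
    have : 0 ≤ qp N := by linarith
    positivity
  have h10 := mul_le_mul_of_nonneg_left h5 h9
  linarith

lemma hfn_facts : ∀ᶠ N : ℕ in atTop, ∀ A : ℝ, 1 ≤ A → ContinuousOn (hfn N A) (Set.Icc (-tp N) (tp N)) ∧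
    ∫ t in (-tp N)..(tp N), ‖hfn N A t‖^2 ≤ 3*exp ((2 - ep) * qp N) := by
  obtain ⟨q1, hq1, hz⟩ := zlog_bound
  have E1 := tendsto_logN.eventually (ev_pow 64 1 (by norm_num : (0:ℝ) < 1))
  filter_upwards [tendsto_qp.eventually (eventually_ge_atTop q1), E1, tendsto_logN.eventually (eventually_ge_atTop 1),
    eventually_ge_atTop 1, efn_meansq] with N hq e1 hL hN hI A hA
  have hNr : (1:ℝ) ≤ N := by exact_mod_cast hN
  have hT : 0 ≤ tp N := by unfold tp; positivity
  have hw : 0 ≤ wp N ∧ wp N ≤ 1 := by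
    have : 1 ≤ qp N^199 := one_le_pow₀ (by linarith)
    exact ⟨by unfold wp; positivity, by unfold wp; rw [div_le_one (by linarith)]; exact this⟩
  have hT8 : 8*tp N ≤ exp (qp N^200) := by
    rw [qp_pow, two_mul, exp_add, exp_log (by linarith), tp]
    rw [one_mul, pow_one, exp_log (by linarith)] at e1
    nlinarith
  have hline : Continuous fun t : ℝ => (⟨1 - wp N, t⟩:ℂ) := by simp only [mk_eq]; fun_prop
  have hc1 : ContinuousOn (fun t : ℝ => efn (yp N) ⟨1 - wp N, t⟩) (Set.Icc (-tp N) (tp N)) := by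
    intro t ht
    have h1 : riemannZeta₁ ⟨1 - wp N, t⟩ ≠ 0 := by
      refine (hz (qp N) hq ⟨1 - wp N, t⟩ (by rw [← wp]) (by change 1 - wp N ≤ 2; linarith) ?_).1
      have : |t| ≤ tp N := abs_le.2 ht
      change 8*|t| ≤ _
      linarith
    exact (ContinuousAt.comp (f := fun t : ℝ => (⟨1 - wp N, t⟩:ℂ)) (g := efn (yp N))
      (efn_differentiableAt (yp N) h1).continuousAt hline.continuousAt).continuousWithinAt
  have hc2 : Continuous fun t : ℝ => cexp ((⟨1 - wp N, t⟩:ℂ)^2/(4*A)) := by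
    exact Complex.continuous_exp.comp ((hline.pow 2).div_const _)
  have hc : ContinuousOn (hfn N A) (Set.Icc (-tp N) (tp N)) := hc1.mul hc2.continuousOn
  refine ⟨hc, ?_⟩
  have huI : Set.uIcc (-tp N) (tp N) = Set.Icc (-tp N) (tp N) := Set.uIcc_of_le (by linarith)
  calc _ ≤ ∫ t in (-tp N)..(tp N), 3*‖efn (yp N) ⟨1 - wp N, t⟩‖^2 := by
        refine intervalIntegral.integral_mono_on (by linarith) ?_ ?_ fun t _ => ?_
        · exact ContinuousOn.intervalIntegrable (by rw [huI]; exact hc.norm.pow 2)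
        · exact ContinuousOn.intervalIntegrable (by rw [huI]; exact continuousOn_const.mul (hc1.norm.pow 2))
        · have h1 : ‖cexp ((⟨1 - wp N, t⟩:ℂ)^2/(4*A))‖ ≤ exp (1/4) := by
            have := norm_ker A 0 (1 - wp N) t
            rw [ker, Complex.ofReal_zero, mul_zero, add_zero, mul_zero, add_zero] at this
            rw [this]
            apply exp_le_exp.2
            rw [div_le_div_iff₀ (by linarith) (by norm_num)]
            nlinarith [sq_nonneg t]
          rw [hfn, norm_mul, mul_pow, mul_comm]
          refine mul_le_mul_of_nonneg_right ?_ (by positivity)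
          calc _ ≤ exp (1/4)^2 := by gcongr
            _ = exp (1/2) := by rw [← exp_nat_mul]; norm_num
            _ ≤ exp 1 := by gcongr; norm_num
            _ ≤ 3 := by have := exp_one_lt_d9; linarith
    _ ≤ _ := by rw [intervalIntegral.integral_const_mul]; linarith

/-- The logarithmic positions `y` which detect the interval `[n^c, (n+1)^c)`. -/
def win (N:ℕ) (c:ℝ) (n:ℕ) : Set ℝ :=
  Set.Icc (c * log n + 1/(8*N)) (c * log n + 2/(8*N))

open Classical in
/-- The `n` for which the contour integrals are large on the whole window. -/
def gbad (N:ℕ) (c:ℝ) : Finset ℕ := (Icc N (2*N)).filter fun n => ∀ y ∈ win N c n,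
  exp (2*qp N)/2500 < ‖gfn N ((8*N:ℝ)^2) y‖^2 + ‖gfn N ((8*N:ℝ)^2/2) y‖^2

open Classical in
lemma mem_gbad {N : ℕ} {c : ℝ} {n : ℕ} : n ∈ gbad N c ↔ n ∈ Icc N (2*N) ∧ ∀ y ∈ win N c n,
    exp (2*qp N)/2500 < ‖gfn N ((8*N:ℝ)^2) y‖^2 + ‖gfn N ((8*N:ℝ)^2/2) y‖^2 := mem_filter

lemma log_gap {c : ℝ} (hc : 2 ≤ c) {n : ℕ} (hn : 1 ≤ n) : 2/((n:ℝ) + 1) ≤ c * log (n + 1) - c * log n := by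
  have hnr : (1:ℝ) ≤ n := by exact_mod_cast hn
  have h := one_sub_inv_le_log_of_pos (show (0:ℝ) < (n + 1) / n by positivity)
  rw [log_div (by positivity) (by positivity), inv_div] at h
  have e : 1 - (n:ℝ) / (n + 1) = 1/(n + 1) := by field_simp; ring
  rw [e] at h
  have h2 : (2:ℝ) / (n + 1) = 2*(1/(n + 1)) := by ring
  have h3 : (0:ℝ) ≤ 1/(n + 1) := by positivity
  rw [h2]; nlinarith

lemma win_lt {N : ℕ} (hN : 1 ≤ N) {c : ℝ} (hc : 2 ≤ c) {n n' : ℕ} (h1 : N ≤ n) (h : n < n') (h2 : n' ≤ 2*N) :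
    Disjoint (win N c n) (win N c n') := by
  rw [Set.disjoint_left]
  intro y hy hy'
  have hNr : (1:ℝ) ≤ N := by exact_mod_cast hN
  have g := log_gap hc (hN.trans h1)
  have hn : ((n:ℝ) + 1) ≤ n' := by exact_mod_cast h
  have hn2 : (n':ℝ) ≤ 2*N := by exact_mod_cast h2
  have hl : c * log (n + 1) ≤ c * log n' := by gcongr
  have h3 : 2/(2*N:ℝ) ≤ 2/((n:ℝ) + 1) := by gcongr; linarith
  have h4 : 2/(2*N:ℝ) = 8*(1/(8*N)) := by field_simp
  have h5 : 2/(8*N:ℝ) = 2*(1/(8*N)) := by ring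
  have h6 : 0 < 1/(8*N:ℝ) := by positivity
  have a := hy.2
  have b := hy'.1
  rw [h5] at a; linarith

/-- The windows of distinct `n` are disjoint, so the mean square of `gfn` bounds the number of exceptions. -/
lemma gbad_card : ∀ᶠ N : ℕ in atTop, ∀ c : ℝ, 2 ≤ c → ((gbad N c).card:ℝ) ≤ 10^7*N * exp (-(ep * qp N)) := by
  filter_upwards [hfn_facts, eventually_ge_atTop 1, tendsto_logN.eventually (eventually_ge_atTop 1)] with N hh hN hL c hc
  have hNr : (1:ℝ) ≤ N := by exact_mod_cast hN
  have hT : 0 ≤ tp N := by unfold tp; positivity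
  obtain ⟨a1, a2⟩ := hh ((8*N:ℝ)^2) (by nlinarith)
  obtain ⟨b1, b2⟩ := hh ((8*N:ℝ)^2/2) (by nlinarith)
  -- an upper bound for all positions in the windows
  set y₁ : ℝ := c * log (2*N) + 1 with hy1
  have hy0 : 0 < y₁ := by
    have : 0 ≤ log (2*N) := log_nonneg (by linarith)
    positivity
  set κ : ℝ := 1/y₁^2 with hκ
  obtain ⟨i1, j1⟩ := bessel_gauss (κ := κ) (by positivity) hT a1
  obtain ⟨i2, j2⟩ := bessel_gauss (κ := κ) (by positivity) hT b1
  set F : ℝ → ℝ := fun y => ‖gfn N ((8*N:ℝ)^2) y‖^2*exp (-κ * y^2) +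
    ‖gfn N ((8*N:ℝ)^2/2) y‖^2*exp (-κ * y^2) with hF
  have iF : Integrable F := i1.add i2
  have hF0 : ∀ y, 0 ≤ F y := fun y => by positivity
  have hFI : ∫ y, F y ≤ 12*π * exp ((2 - ep) * qp N) := by
    have e : ∫ y, F y = _ := integral_add i1 i2
    rw [e]
    have := pi_pos
    calc _ ≤ 2*π*(3*exp ((2 - ep) * qp N)) + 2*π*(3*exp ((2 - ep) * qp N)) := by
          refine add_le_add (j1.trans ?_) (j2.trans ?_) <;> gcongr
      _ = _ := by ring
  have hlow : (gbad N c).card*(1/(8*N)*(exp (2*qp N)/2500/3)) ≤ ∫ y, F y := by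
    calc _ = ∑ n ∈ gbad N c, 1/(8*N)*(exp (2*qp N)/2500/3) := by rw [sum_const, nsmul_eq_mul]
      _ ≤ ∑ n ∈ gbad N c, ∫ y in win N c n, F y := by
          refine sum_le_sum fun n hn => ?_
          obtain ⟨hn1, hn2⟩ := mem_gbad.1 hn
          obtain ⟨hn3, hn4⟩ := mem_Icc.1 hn1
          have hv : volume.real (win N c n) = 1/(8*N) := by
            rw [win, volume_real_Icc_of_le (by gcongr; norm_num)]; ring
          rw [← hv, ← smul_eq_mul, ← setIntegral_const]
          refine setIntegral_mono_on (integrableOn_const (by rw [win, volume_Icc]; exact ENNReal.ofReal_ne_top))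
            iF.integrableOn measurableSet_Icc fun y hy => ?_
          have hb := hn2 y hy
          have hln : 0 ≤ log n := log_natCast_nonneg n
          have hy2 : 0 ≤ y := le_trans (by positivity) hy.1
          have hy3 : y ≤ y₁ := by
            refine hy.2.trans ?_
            have h1 : log n ≤ log (2*N) :=
              log_le_log (by exact_mod_cast (hN.trans hn3)) (by exact_mod_cast hn4)
            have h2 : 2/(8*N:ℝ) ≤ 1 := by rw [div_le_one (by positivity)]; linarith
            have h3 := mul_le_mul_of_nonneg_left h1 (by linarith : 0 ≤ c)
            linarith
          have hex : 1/3 ≤ exp (-κ * y^2) := by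
            have h1 : -1 ≤ -κ * y^2 := by
              have : κ * y^2 ≤ 1 := by
                rw [hκ, div_mul_eq_mul_div, one_mul, div_le_one (by positivity)]; gcongr
              linarith
            refine le_trans ?_ (exp_le_exp.2 h1)
            rw [exp_neg, one_div]
            have := exp_one_lt_d9
            apply inv_anti₀ (exp_pos _); linarith
          calc _ = exp (2*qp N)/2500*(1/3) := by ring
            _ ≤ (‖gfn N ((8*N:ℝ)^2) y‖^2 + ‖gfn N ((8*N:ℝ)^2/2) y‖^2) * exp (-κ * y^2) := by
                gcongr
            _ = F y := by rw [hF]; ring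
      _ = ∫ y in ⋃ n ∈ gbad N c, win N c n, F y := by
          refine (integral_biUnion_finset _ (fun n _ => measurableSet_Icc) ?_ fun n _ => iF.integrableOn).symm
          intro n hn n' hn' hne
          have m1 := mem_Icc.1 (mem_gbad.1 hn).1
          have m2 := mem_Icc.1 (mem_gbad.1 hn').1
          rcases lt_or_gt_of_ne hne with h | h
          · exact win_lt hN hc m1.1 h m2.2
          · exact (win_lt hN hc m2.1 h m1.2).symm
      _ ≤ _ := setIntegral_le_integral iF (Eventually.of_forall hF0)
  have h1 := hlow.trans hFI
  have e : exp ((2 - ep) * qp N) = exp (2*qp N) * exp (-(ep * qp N)) := by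
    rw [← exp_add]; congr 1; ring
  rw [e] at h1
  have hP := exp_pos (2*qp N)
  have h2 : ((gbad N c).card:ℝ) ≤ 60000*N*(12*π * exp (-(ep * qp N))) := by
    have h3 : (60000*N / exp (2*qp N))*((gbad N c).card*(1/(8*N)*(exp (2*qp N)/2500/3))) ≤
      (60000*N / exp (2*qp N))*(12*π*(exp (2*qp N) * exp (-(ep * qp N)))) := by gcongr
    calc _ = _ := ?_
      _ ≤ _ := h3
      _ = _ := ?_
    · field_simp; ring
    · field_simp
  refine h2.trans ?_
  have := pi_lt_d2
  have h4 : 0 ≤ N * exp (-(ep * qp N)) := by positivity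
  nlinarith

/-- The integers `m` with `n^c ≤ m ≤ (n+1)^c - 1`. -/
def jset (c:ℝ) (n:ℕ) : Finset ℕ := Icc ⌈(n:ℝ)^c⌉₊ ⌊((n:ℝ) + 1)^c - 1⌋₊

lemma mem_jset {c : ℝ} {n : ℕ} (hc : 0 ≤ c) {m : ℕ} :
    m ∈ jset c n ↔ (n:ℝ)^c ≤ m ∧ (m:ℝ) ≤ ((n:ℝ) + 1)^c - 1 := by
  have : (0:ℝ) ≤ ((n:ℝ) + 1)^c - 1 := by
    have := one_le_rpow (x := (n:ℝ) + 1) (by linarith [Nat.cast_nonneg (α := ℝ) n]) hc; linarith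
  rw [jset, mem_Icc, Nat.ceil_le, Nat.le_floor_iff this]

lemma mem_of_win {N : ℕ} (hN : 20 ≤ N) {c : ℝ} (hc : 2 ≤ c) {n : ℕ} (h1 : N ≤ n) (h2 : n ≤ 2*N) {y : ℝ}
    (hy : y ∈ win N c n) {m : ℕ} (hm : 1 ≤ m) (hmy : |log m - y| < 1/(8*N)) : m ∈ jset c n := by
  have hNr : (20:ℝ) ≤ N := by exact_mod_cast hN
  have h1r : (N:ℝ) ≤ n := by exact_mod_cast h1
  have h2r : (n:ℝ) ≤ 2*N := by exact_mod_cast h2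
  have hn0 : (0:ℝ) < n := by linarith
  have hm0 : (0:ℝ) < m := by exact_mod_cast hm
  obtain ⟨ha, hb⟩ := abs_lt.1 hmy
  have hy1 := hy.1
  have hy2 := hy.2
  have e2 : 2/(8*N:ℝ) = 2*(1/(8*N)) := by ring
  set v : ℝ := 1/(8*N) with hv
  have hv0 : 0 < v := by positivity
  have hvN : v*(8*N) = 1 := by rw [hv]; field_simp
  rw [mem_jset (by linarith)]
  constructor
  · rw [rpow_def_of_pos hn0, ← exp_log hm0]; apply exp_le_exp.2; linarith
  · have g := log_gap hc (by omega : 1 ≤ n)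
    have hg : 7*v ≤ 2/((n:ℝ) + 1) := by
      rw [le_div_iff₀ (by positivity)]; nlinarith
    have hm1 : (m:ℝ) ≤ (n:ℝ)^c * exp (3*v) := by
      rw [rpow_def_of_pos hn0, ← exp_add, ← exp_log hm0]; apply exp_le_exp.2; linarith
    have hn1 : (n:ℝ)^c * exp (7*v) ≤ ((n:ℝ) + 1)^c := by
      rw [rpow_def_of_pos hn0, rpow_def_of_pos (by linarith), ← exp_add]; apply exp_le_exp.2
      linarith
    have he : exp (3*v)*(1 + 4*v) ≤ exp (7*v) := by
      rw [show 7*v = 3*v + 4*v by ring, exp_add]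
      gcongr; linarith [add_one_le_exp (4*v)]
    have he1 : 1 ≤ exp (3*v) := one_le_exp (by positivity)
    have hnc : (n:ℝ)^2 ≤ (n:ℝ)^c := by
      rw [← rpow_natCast]; exact rpow_le_rpow_of_exponent_le (by linarith) (by simpa using hc)
    have h4 : 1 ≤ (n:ℝ)^c*(4*v) := by
      calc (1:ℝ) ≤ (n:ℝ)^2*(4*v) := by nlinarith
        _ ≤ _ := by gcongr
    have h5 : (n:ℝ)^c * exp (3*v) + 1 ≤ (n:ℝ)^c * exp (7*v) := by
      have := mul_le_mul_of_nonneg_left he (by positivity : 0 ≤ (n:ℝ)^c)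
      nlinarith
    linarith

lemma psi_lower {R : ℝ} (hR : 0 < R) : ∀ᶠ N : ℕ in atTop, ∀ c : ℝ, 2 ≤ c → c ≤ R → ∀ n ∈ Icc N (2*N), n ∉ gbad N c →
    (n:ℝ)^(c - 1)/200 ≤ ∑ m ∈ jset c n, vonMangoldt m := by
  obtain ⟨C, hC, hf⟩ := formula_err
  have E1 := tendsto_qp.eventually (ev_pow (16000*(R + 1)) 200 (by have := ep_pos; positivity : 0 < ep/8))
  have E2 := tendsto_logN.eventually (ev_pow ((64 + 2*C) * 400) 3 (by norm_num : (0:ℝ) < 1))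
  filter_upwards [hf, E1, E2, tendsto_logN.eventually (eventually_ge_atTop (8*(6*R + 2))),
    tendsto_qp.eventually (eventually_ge_atTop 1), eventually_ge_atTop 400] with N hf e1 e2 hL hq hN c hc hcR n hn hng
  obtain ⟨h1, h2⟩ := mem_Icc.1 hn
  have hNr : (400:ℝ) ≤ N := by exact_mod_cast hN
  have h1r : (N:ℝ) ≤ n := by exact_mod_cast h1
  have h2r : (n:ℝ) ≤ 2*N := by exact_mod_cast h2
  have hn0 : (0:ℝ) < n := by linarith
  rw [mem_gbad] at hng
  push Not at hng
  obtain ⟨y, hy, hG⟩ := hng hn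
  have hwL := wp_mul_log (N := N) (by linarith)
  have hqp := qp_pow N
  have hw0 : 0 ≤ wp N := by unfold wp; positivity
  have hyp : (yp N : ℝ) ≤ N * exp (-(ep * qp N/8)) := by
    refine (floor_le (exp_pos _).le).trans (le_of_eq ?_)
    rw [show (1 - ep * wp N/4) * log N = log N + -(ep*(wp N * log N)/4) by ring, hwL, exp_add,
      exp_log (by linarith)]
    congr 2; ring
  have hep := ep_pos
  have hypN : (yp N : ℝ) ≤ N := hyp.trans (mul_le_of_le_one_right (by linarith) (exp_le_one_iff.2 (by
    have : 0 ≤ ep * qp N/8 := by positivity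
    linarith)))
  have hexpL : exp (log N) = N := exp_log (by linarith)
  set L := log N with hLd
  set q := qp N with hqd
  set X : ℝ := exp y / (8*N) with hX
  have hL1 : 1 ≤ L := by linarith
  have hln : L ≤ log n := log_le_log (by linarith) h1r
  have hln2 : log n ≤ L + 1 := by
    calc _ ≤ log (2*N) := log_le_log hn0 h2r
      _ = log 2 + L := log_mul (by norm_num) (by linarith)
      _ ≤ _ := by have := log_two_lt_d9; linarith
  have hv : (0:ℝ) ≤ 1/(8*N) ∧ 2/(8*N:ℝ) ≤ 1 :=
    ⟨by positivity, by rw [div_le_one (by positivity)]; linarith⟩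
  have hyc : c * log n ≤ y := by have := hy.1; linarith [hv.1]
  have hy2L : 2*L ≤ y := by clear * - hyc hc hln hL1; nlinarith
  have hyR : y ≤ 3*R * L := by have := hy.2; have := hv.2; clear * - hy this hL1 hln2 hln hc hcR; nlinarith [hy.2]
  have hy0 : 0 ≤ y := by linarith
  have hXN : N/8 ≤ X := by
    rw [hX, div_le_div_iff₀ (by norm_num) (by positivity)]
    have : (N:ℝ) * N ≤ exp y := by
      calc (N:ℝ) * N = exp (2*L) := by rw [two_mul, exp_add, hexpL]
        _ ≤ _ := exp_le_exp.2 hy2L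
    linarith
  have hwy : exp ((1 - wp N) * y) * exp q ≤ exp y := by
    rw [← exp_add]; apply exp_le_exp.2
    have : wp N*(2*L) ≤ wp N * y := by gcongr
    linarith
  have hGb : ∀ g : ℂ, ‖g‖^2 ≤ exp (2*q)/2500 → exp ((1 - wp N) * y) * ‖g‖ / (8*N) ≤ X/50 := by
    intro g hg
    have h3 : ‖g‖ ≤ exp q/50 := by
      apply le_of_sq_le_sq _ (by positivity)
      calc _ ≤ _ := hg
        _ = (exp q/50)^2 := by rw [div_pow, ← exp_nat_mul]; norm_num
    rw [hX, div_right_comm]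
    apply div_le_div_of_nonneg_right _ (by positivity)
    have := mul_le_mul_of_nonneg_left h3 (exp_pos ((1 - wp N) * y)).le
    linarith
  have hI : (yp N : ℝ)*(15 + 6*(y + log (yp N))) ≤ X/50 := by
    have hlY : log (yp N) ≤ L := by
      rcases Nat.eq_zero_or_pos (yp N) with h | h
      · rw [h]; simp; linarith
      · exact log_le_log (by exact_mod_cast h) hypN
    have h3 : 15 + 6*(y + log (yp N)) ≤ 40*(R + 1) * L := by linarith [mul_le_mul_of_nonneg_left hL1 hR.le]
    have h3' : 0 ≤ 40*(R + 1) * L := by positivity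
    calc _ ≤ N * exp (-(ep * q/8))*(40*(R + 1) * L) := by
          refine (mul_le_mul_of_nonneg_left h3 (by positivity)).trans (mul_le_mul_of_nonneg_right hyp h3')
      _ = N*(exp (-(ep * q/8))*(16000*(R + 1) * q^200))/800 := by rw [hqp]; ring
      _ ≤ N*(exp (-(ep * q/8)) * exp (ep/8*q))/800 := by gcongr
      _ = N/800 := by rw [← exp_add, show -(ep * q/8) + ep/8*q = 0 by ring, exp_zero, mul_one]
      _ ≤ _ := by linarith
  have hS : (4*((yp N + 1) * q^420) + 2*C) * exp (1 + 2*y - L^2/8) ≤ X/50 := by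
    have h3 : exp (1 + 2*y - L^2/8) ≤ exp (-L) := by apply exp_le_exp.2; clear * - hL hL1 hyR; nlinarith
    have h4 : q^420 ≤ 8*L^3 := by
      calc _ ≤ q^600 := pow_le_pow_right₀ hq (by norm_num)
        _ = (q^200)^3 := by rw [← pow_mul]
        _ = _ := by rw [hqp]; ring
    have hl3 : 1 ≤ L^3 := one_le_pow₀ hL1
    have h5 : 4*(((yp N : ℝ) + 1) * q^420) + 2*C ≤ N*((64 + 2*C) * L^3) := by
      have h6 : ((yp N : ℝ) + 1) * q^420 ≤ (2*N)*(8*L^3) := by gcongr; linarith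
      have h7 : 2*C ≤ N*(2*C * L^3) := by
        have : 2*C ≤ 2*C * L^3 := le_mul_of_one_le_right (by positivity) hl3
        exact this.trans (le_mul_of_one_le_left (by positivity) (by linarith))
      linarith
    calc _ ≤ N*((64 + 2*C) * L^3) * exp (-L) := by
          refine mul_le_mul h5 h3 (exp_pos _).le (by positivity)
      _ = N*(((64 + 2*C) * 400*L^3) * exp (-L))/400 := by ring
      _ ≤ N*(exp (1*L) * exp (-L))/400 := by gcongr
      _ = N/400 := by rw [one_mul, ← exp_add, add_neg_cancel, exp_zero, mul_one]
      _ ≤ _ := by linarith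
  have f1 := hf ((8*N:ℝ)^2) y (by linarith [sq_nonneg (8*N:ℝ)]) le_rfl hy0
  have f2 := hf ((8*N:ℝ)^2/2) y le_rfl (by linarith [sq_nonneg (8*N:ℝ)]) hy0
  have g1 := hGb (gfn N ((8*N:ℝ)^2) y) (by have := sq_nonneg ‖gfn N ((8*N:ℝ)^2/2) y‖; linarith)
  have g2 := hGb (gfn N ((8*N:ℝ)^2/2) y) (by have := sq_nonneg ‖gfn N ((8*N:ℝ)^2) y‖; linarith)
  have hm := main_lower (T := 8*N) (by linarith) y
  have hs := short_sum (T := 8*N) (y := y) (by linarith) (jset c n)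
    (fun m hm hmy => mem_of_win (by omega) hc h1 h2 hy hm hmy)
  have a1 := (abs_le.1 f1).1
  have a2 := (abs_le.1 f2).2
  have hhalf : 0 ≤ exp (-1/2) ∧ exp (-1/2) ≤ 1 := ⟨(exp_pos _).le, exp_le_one_iff.2 (by norm_num)⟩
  have hX0 : 0 ≤ X := by positivity
  have a3 : (∑' n : ℕ, vonMangoldt n * gw ((8*N:ℝ)^2/2) y (log n)) -
      ∫ z in Set.Ioi 0, exp z * gw ((8*N:ℝ)^2/2) y z ≤ 3*(X/50) := by linarith
  have a4 : exp (-1/2)*((∑' n : ℕ, vonMangoldt n * gw ((8*N:ℝ)^2/2) y (log n)) -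
      ∫ z in Set.Ioi 0, exp z * gw ((8*N:ℝ)^2/2) y z) ≤ 3*(X/50) :=
    (mul_le_mul_of_nonneg_left a3 hhalf.1).trans (mul_le_of_le_one_left (by positivity) hhalf.2)
  have hfin : (n:ℝ)^(c - 1)/8 ≤ X := by
    rw [rpow_sub_one hn0.ne', hX, div_div]
    refine div_le_div₀ (exp_pos _).le ?_ (by linarith) (by linarith)
    rw [rpow_def_of_pos hn0]; apply exp_le_exp.2; linarith
  rw [mul_sub] at a4
  linarith

lemma power_count {a b k : ℕ} (ha : 1 ≤ a) (hk : 2 ≤ k) {D : ℝ} (hD : 0 ≤ D) (hb : (b:ℝ) ≤ a + D) (s : Finset ℕ)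
    (hs : ∀ x ∈ s, a ≤ x^k ∧ x^k ≤ b) : (s.card:ℝ) ≤ 1 + D / sqrt a := by
  rcases s.eq_empty_or_nonempty with rfl | hne
  · simp; positivity
  set x0 := s.min' hne
  set x1 := s.max' hne
  have hle : x0 ≤ x1 := s.min'_le_max' hne
  have h0 := (hs _ (s.min'_mem hne)).1
  have h1 := hs _ (s.max'_mem hne)
  change a ≤ x0^k at h0
  change a ≤ x1^k ∧ x1^k ≤ b at h1
  have hcard : (s.card:ℝ) ≤ 1 + ((x1:ℝ) - x0) := by
    have : s ⊆ Icc x0 x1 := fun x hx => mem_Icc.2 ⟨s.min'_le x hx, s.le_max' x hx⟩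
    have h := card_le_card this
    rw [Nat.card_Icc] at h
    have h' : s.card + x0 ≤ x1 + 1 := by omega
    have : (s.card:ℝ) + x0 ≤ x1 + 1 := by exact_mod_cast h'
    linarith
  refine hcard.trans ?_
  gcongr
  have ha' : (0:ℝ) < a := by exact_mod_cast ha
  rw [le_div_iff₀ (sqrt_pos.2 ha')]
  have hx1 : 1 ≤ x1 := by
    rcases Nat.eq_zero_or_pos x1 with h | h
    · rw [h, zero_pow (by omega)] at h1; omega
    · exact h
  have hsq : sqrt a ≤ (x1:ℝ)^(k - 1) := by
    rw [sqrt_le_left (by positivity), ← pow_mul]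
    calc (a:ℝ) ≤ (x1:ℝ)^k := by exact_mod_cast h1.1
      _ ≤ _ := pow_le_pow_right₀ (by exact_mod_cast hx1) (by omega)
  have hler : (x0:ℝ) ≤ x1 := by exact_mod_cast hle
  have e : ∀ x : ℝ, x^k = x * x^(k - 1) := fun x => by rw [← pow_succ']; congr 1; omega
  have h0r : (a:ℝ) ≤ (x0:ℝ)^k := by exact_mod_cast h0
  have h1r : (x1:ℝ)^k ≤ b := by exact_mod_cast h1.2
  calc ((x1:ℝ) - x0) * sqrt a ≤ (x1 - x0)*(x1:ℝ)^(k - 1) := by gcongr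
    _ = (x1:ℝ)^k - x0*(x1:ℝ)^(k - 1) := by rw [e]; ring
    _ ≤ (x1:ℝ)^k - x0*(x0:ℝ)^(k - 1) := by gcongr
    _ ≤ D := by rw [← e]; linarith

lemma primePow_count {a b : ℕ} (ha : 1 ≤ a) {D : ℝ} (hD : 0 ≤ D) (hb : (b:ℝ) ≤ a + D) :
    (((Icc a b).filter fun m => IsPrimePow m ∧ ¬ m.Prime).card:ℝ) ≤ (Nat.log 2 b:ℝ)*(1 + D / sqrt a) := by
  set s : ℕ → Finset ℕ := fun k => (Icc 0 b).filter fun x => a ≤ x^k ∧ x^k ≤ b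
  have hsub : ((Icc a b).filter fun m => IsPrimePow m ∧ ¬ m.Prime) ⊆
      (Icc 2 (Nat.log 2 b)).biUnion fun k => (s k).image (·^k) := by
    intro m hm
    obtain ⟨h1, h2, h3⟩ := mem_filter.1 hm
    obtain ⟨h4, h5⟩ := mem_Icc.1 h1
    obtain ⟨p, k, hp, hk, rfl⟩ := (isPrimePow_nat_iff m).1 h2
    have hk2 : 2 ≤ k := by
      rcases Nat.lt_or_ge k 2 with h | h
      · have : k = 1 := by omega
        rw [this, pow_one] at h3; exact absurd hp h3
      · exact h
    have hb0 : b ≠ 0 := by omega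
    refine mem_biUnion.2 ⟨k, mem_Icc.2 ⟨hk2, Nat.le_log_of_pow_le (by norm_num) ?_⟩, mem_image.2 ⟨p, ?_, rfl⟩⟩
    · exact (Nat.pow_le_pow_left hp.two_le k).trans h5
    · exact mem_filter.2 ⟨mem_Icc.2 ⟨Nat.zero_le _, (Nat.le_self_pow (by omega) p).trans h5⟩, h4, h5⟩
  calc _ ≤ (((Icc 2 (Nat.log 2 b)).biUnion fun k => (s k).image (·^k)).card:ℝ) := by exact_mod_cast card_le_card hsub
    _ ≤ ∑ k ∈ Icc 2 (Nat.log 2 b), (((s k).image (·^k)).card:ℝ) := by exact_mod_cast card_biUnion_le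
    _ ≤ ∑ k ∈ Icc 2 (Nat.log 2 b), (1 + D / sqrt a) := by
        refine sum_le_sum fun k hk => ?_
        refine le_trans (by exact_mod_cast card_image_le) (power_count ha (mem_Icc.1 hk).1 hD hb (s k) fun x hx => (mem_filter.1 hx).2)
    _ ≤ _ := by
        rw [sum_const, nsmul_eq_mul]
        gcongr
        rw [Nat.card_Icc]; omega

/-- The number of primes `p` with `n^c ≤ p ≤ (n+1)^c - 1`. -/
def pcnt (c:ℝ) (n:ℕ) : ℕ := ((jset c n).filter Nat.Prime).card

lemma rpow_gap {c : ℝ} (hc : 2 ≤ c) {n : ℕ} (hn : c ≤ n) : ((n:ℝ) + 1)^c ≤ (n:ℝ)^c + 2*c*(n:ℝ)^(c - 1) := by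
  have hn0 : (0:ℝ) < n := by linarith
  have h1 : ((n:ℝ) + 1)^c ≤ (n:ℝ)^c * exp (c / n) := by
    rw [rpow_def_of_pos hn0, rpow_def_of_pos (by linarith), ← exp_add]
    apply exp_le_exp.2
    have h := log_le_sub_one_of_pos (show 0 < ((n:ℝ) + 1) / n by positivity)
    rw [log_div (by positivity) hn0.ne'] at h
    have e : ((n:ℝ) + 1) / n - 1 = 1/n := by field_simp; ring
    rw [e] at h
    have h2 := mul_le_mul_of_nonneg_right h (by linarith : 0 ≤ c)
    have e2 : c / n = 1/n * c := by ring
    rw [e2]; linarith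
  have h2 : exp (c / n) ≤ 1 + 2*(c / n) := by
    have hx : |c / n| ≤ 1 := by rw [abs_of_nonneg (by positivity), div_le_one hn0]; exact hn
    have h := abs_exp_sub_one_le hx
    rw [abs_of_nonneg (show 0 ≤ c / n by positivity)] at h
    linarith [le_abs_self (exp (c / n) - 1)]
  calc _ ≤ _ := h1
    _ ≤ (n:ℝ)^c*(1 + 2*(c / n)) := by gcongr
    _ = _ := by rw [rpow_sub_one hn0.ne']; ring

/-- Prime powers contribute negligibly to the sum of `vonMangoldt` over the interval. -/
lemma pcnt_lower {R : ℝ} (hR : 0 < R) : ∀ᶠ n : ℕ in atTop, ∀ c : ℝ, 2 ≤ c → c ≤ R →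
    (n:ℝ)^(c - 1)/200 ≤ ∑ m ∈ jset c n, vonMangoldt m →
    1/800*(n:ℝ)^(c - 1)*(c * log n)⁻¹ ≤ pcnt c n := by
  have E := tendsto_logN.eventually (ev_pow (3200*R^2*(1 + 2*R)) 2 (by norm_num : (0:ℝ) < 1))
  filter_upwards [E, tendsto_logN.eventually (eventually_ge_atTop 1), eventually_ge_atTop ⌈R⌉₊, eventually_ge_atTop 2]
    with n hE hL hnR hn2 c hc hcR hsum
  have hnR' : R ≤ n := (le_ceil R).trans (by exact_mod_cast hnR)
  have hn2' : (2:ℝ) ≤ n := by exact_mod_cast hn2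
  have hn0 : (0:ℝ) < n := by linarith
  rw [one_mul, exp_log hn0] at hE
  set L := log n
  set a := ⌈(n:ℝ)^c⌉₊ with ha
  set b := ⌊((n:ℝ) + 1)^c - 1⌋₊ with hb
  have hnc0 : 0 < (n:ℝ)^c := by positivity
  have ha1 : 1 ≤ a := Nat.ceil_pos.2 hnc0
  have haR : (n:ℝ)^c ≤ a := le_ceil _
  set D := 2*R*(n:ℝ)^(c - 1) with hD
  have hge1 : (1:ℝ) ≤ ((n:ℝ) + 1)^c := one_le_rpow (by linarith) (by linarith)
  have hbr : (b:ℝ) ≤ ((n:ℝ) + 1)^c - 1 := floor_le (by linarith)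
  have hP0 : 0 < (n:ℝ)^(c - 1) := by positivity
  have hbD : (b:ℝ) ≤ a + D := by
    have := rpow_gap hc (hcR.trans hnR')
    have h2 : 2*c*(n:ℝ)^(c - 1) ≤ D := by rw [hD]; gcongr
    linarith
  have hpp := primePow_count ha1 (by positivity : 0 ≤ D) hbD
  -- sizes of logarithms
  have hl1 : log ((n:ℝ) + 1) ≤ 2*L := by
    calc _ ≤ log ((n:ℝ)^2) := log_le_log (by linarith) (by nlinarith)
      _ = _ := by rw [log_pow]; norm_cast
  have hLm : ∀ m ∈ jset c n, vonMangoldt m ≤ c*(2*L) := by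
    intro m hm
    obtain ⟨m1, m2⟩ := (mem_jset (by linarith)).1 hm
    calc _ ≤ log m := ArithmeticFunction.vonMangoldt_le_log
      _ ≤ log (((n:ℝ) + 1)^c) := log_le_log (by linarith) (by linarith)
      _ = c * log ((n:ℝ) + 1) := log_rpow (by linarith) c
      _ ≤ _ := by gcongr
  have hlogb : (Nat.log 2 b:ℝ) ≤ 4*R * L := by
    rcases Nat.eq_zero_or_pos b with h | h
    · rw [h, Nat.log_zero_right]; simp; positivity
    have h1 : ((2:ℝ))^(Nat.log 2 b) ≤ b := by exact_mod_cast pow_log_le_self 2 h.ne'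
    have h2 := log_le_log (by positivity) h1
    rw [log_pow] at h2
    have h3 : log b ≤ c*(2*L) := by
      calc _ ≤ log (((n:ℝ) + 1)^c) := log_le_log (by exact_mod_cast h) (by linarith)
        _ = c * log ((n:ℝ) + 1) := log_rpow (by linarith) c
        _ ≤ _ := by gcongr
    have h4 : c*(2*L) ≤ R*(2*L) := by gcongr
    have h5 := log_two_gt_d9
    have h6 : (Nat.log 2 b:ℝ)*(1/2) ≤ Nat.log 2 b * log 2 := by gcongr; linarith
    linarith
  have hsq : 1 + D / sqrt a ≤ (1 + 2*R)*((n:ℝ)^(c - 1) / n) := by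
    have h1 : (n:ℝ) ≤ sqrt a := by
      apply le_sqrt_of_sq_le
      calc (n:ℝ)^2 ≤ (n:ℝ)^c := by
            rw [← rpow_natCast]; exact rpow_le_rpow_of_exponent_le (by linarith) (by simpa using hc)
        _ ≤ a := haR
    have h2 : D / sqrt a ≤ D / n := by gcongr
    have h3 : 1 ≤ (n:ℝ)^(c - 1) / n := by
      rw [le_div_iff₀ hn0, one_mul]
      nth_rewrite 1 [← rpow_one (n:ℝ)]
      exact rpow_le_rpow_of_exponent_le (by linarith) (by linarith)
    calc _ ≤ (n:ℝ)^(c - 1) / n + D / n := add_le_add h3 h2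
      _ = _ := by rw [hD]; ring
  have hpp2 : c*(2*L)*(((Icc a b).filter fun m => IsPrimePow m ∧ ¬ m.Prime).card:ℝ) ≤ (n:ℝ)^(c - 1)/400 := by
    calc _ ≤ R*(2*L)*(4*R * L*((1 + 2*R)*((n:ℝ)^(c - 1) / n))) := by
          refine mul_le_mul (by gcongr) (hpp.trans ?_) (by positivity) (by positivity)
          refine mul_le_mul hlogb hsq (by positivity) (by positivity)
      _ = (3200*R^2*(1 + 2*R) * L^2)*((n:ℝ)^(c - 1) / n)/400 := by ring
      _ ≤ n*((n:ℝ)^(c - 1) / n)/400 := by gcongr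
      _ = _ := by field_simp
  have hsplit : ∑ m ∈ jset c n, vonMangoldt m ≤
      c*(2*L) * pcnt c n + c*(2*L)*(((Icc a b).filter fun m => IsPrimePow m ∧ ¬ m.Prime).card:ℝ) := by
    rw [← sum_filter_add_sum_filter_not (jset c n) Nat.Prime]
    refine add_le_add ?_ ?_
    · rw [mul_comm, pcnt, ← nsmul_eq_mul]
      exact sum_le_card_nsmul _ _ _ fun m hm => hLm m (mem_filter.1 hm).1
    · rw [mul_comm, ← nsmul_eq_mul]
      calc _ = ∑ m ∈ (Icc a b).filter (fun m => IsPrimePow m ∧ ¬ m.Prime), vonMangoldt m := by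
            refine (sum_subset (fun m hm => ?_) fun m hm hm' => ?_).symm
            · obtain ⟨h1, h2⟩ := mem_filter.1 hm
              exact mem_filter.2 ⟨h1, h2.2⟩
            · obtain ⟨h1, h2⟩ := mem_filter.1 hm
              rw [ArithmeticFunction.vonMangoldt_eq_zero_iff]
              intro hp
              exact hm' (mem_filter.2 ⟨h1, hp, h2⟩)
        _ ≤ _ := sum_le_card_nsmul _ _ _ fun m hm => hLm m (mem_filter.1 hm).1
  rw [← div_eq_mul_inv, div_le_iff₀ (by positivity)]
  linarith

/-- Up to a small exceptional set, `[n^c, (n+1)^c)` contains the expected order of primes. -/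
theorem primes_ae {R : ℝ} (hR : 0 < R) : ∀ᶠ N : ℕ in atTop, ∀ c : ℝ, 2 ≤ c → c ≤ R → ∀ s ⊆ Icc N (2*N),
    (∀ n ∈ s, (pcnt c n : ℝ) < 1/800*(n:ℝ)^(c - 1)*(c * log n)⁻¹) →
    (s.card:ℝ) ≤ 10^7*N * exp (-(ep * qp N)) := by
  obtain ⟨n₀, hn₀⟩ := eventually_atTop.1 (pcnt_lower hR)
  filter_upwards [gbad_card, psi_lower hR, eventually_ge_atTop n₀] with N h1 h2 h3 c hc hcR s hs hlt
  refine le_trans ?_ (h1 c hc)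
  refine Nat.cast_le.2 (card_le_card fun n hn => ?_)
  by_contra hg
  exact absurd (hn₀ n (h3.trans (mem_Icc.1 (hs hn)).1) c hc hcR (h2 c hc hcR n (hs hn) hg)) (not_le.2 (hlt n hn))

end

/-! ### Iterated exceptional sets -/

open Classical in
/-- `bad c h k` collects the `n` which cannot serve as a node at level `k` of a tree of height `h`: either
`[n^c, (n+1)^c)` with `c = c (k + 1)` has too few primes, or more than half of them are in `bad c (h - 1) (k + 1)`. -/
def bad (c : ℕ → ℝ) : ℕ → ℕ → Set ℕ
  | 0 => fun _ => ∅
  | h + 1 => fun k => {n | (pcnt (c (k + 1)) n:ℝ) < 1/800*(n:ℝ)^(c (k + 1) - 1)*(c (k + 1) * log n)⁻¹ ∨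
      pcnt (c (k + 1)) n < 2*(((jset (c (k + 1)) n).filter Nat.Prime).filter (· ∈ bad c h (k + 1))).card}

lemma jset_lt {c : ℝ} (hc : 0 ≤ c) {n n' x x' : ℕ} (h : n < n') (hx : x ∈ jset c n) (hx' : x' ∈ jset c n') : x < x' := by
  have h1 := ((mem_jset hc).1 hx).2
  have h2 := ((mem_jset hc).1 hx').1
  have h3 : ((n:ℝ) + 1)^c ≤ (n':ℝ)^c :=
    rpow_le_rpow (by positivity) (by exact_mod_cast h) hc
  have : (x:ℝ) < x' := by linarith
  exact_mod_cast this

lemma jset_eq {c : ℝ} (hc : 0 ≤ c) {n n' x : ℕ} (hx : x ∈ jset c n) (hx' : x ∈ jset c n') : n = n' := by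
  rcases lt_trichotomy n n' with h | h | h
  · exact absurd (jset_lt hc h hx hx') (lt_irrefl _)
  · exact h
  · exact absurd (jset_lt hc h hx' hx) (lt_irrefl _)

lemma dyadic_count (P : Set ℕ) (X r : ℕ) (β:ℝ)
    (h : ∀ i : ℕ, ∀ s ⊆ Icc (2^i * X) (2*(2^i * X)), (∀ n ∈ s, n ∈ P) → (s.card:ℝ) ≤ 2^i * X * β) :
    ∀ s ⊆ Ico X (2^r * X), (∀ n ∈ s, n ∈ P) → (s.card:ℝ) ≤ 2^r * X * β - X * β := by
  induction r with
  | zero => intro s hs _; simp at hs; simp [hs]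
  | succ r ih =>
    intro s hs hP
    have h1 := ih (s.filter (· < 2^r * X)) (fun n hn => by
      obtain ⟨a, b⟩ := mem_filter.1 hn
      exact mem_Ico.2 ⟨(mem_Ico.1 (hs a)).1, b⟩) fun n hn => hP n (mem_filter.1 hn).1
    have h2 := h r (s.filter (¬ · < 2^r * X)) (fun n hn => by
      obtain ⟨a, b⟩ := mem_filter.1 hn
      have := (mem_Ico.1 (hs a)).2
      rw [pow_succ] at this
      exact mem_Icc.2 ⟨by omega, by linarith⟩) fun n hn => hP n (mem_filter.1 hn).1
    have h3 : (s.card:ℝ) = (s.filter (· < 2^r * X)).card + (s.filter (¬ · < 2^r * X)).card := by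
      exact_mod_cast (card_filter_add_card_filter_not (s := s) (· < 2^r * X)).symm
    rw [h3, pow_succ]; linarith

lemma qp_mono {N N' : ℕ} (hN : 1 ≤ N) (h : N ≤ N') : qp N ≤ qp N' := by
  unfold qp
  have h0 := log_natCast_nonneg N
  refine rpow_le_rpow (by linarith) ?_ (by norm_num)
  have := log_le_log (by exact_mod_cast hN : (0:ℝ) < N) (by exact_mod_cast h : (N:ℝ) ≤ N')
  linarith

lemma qp_sq (N:ℕ) : qp (N^2) = 2^(1/200:ℝ) * qp N := by
  unfold qp
  have h0 := log_natCast_nonneg N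
  rw [← mul_rpow (by norm_num) (by linarith)]
  push_cast
  rw [log_pow]; norm_num

open Classical in
/-- The exceptional sets stay small because the children of `n ∼ N` have size at least `N ^ 2`, where the relative
density of the next exceptional set is smaller than at `N` by more than any power of `log N`. -/
lemma bad_count {R : ℝ} (hR : 2 ≤ R) : ∃ N₀ : ℕ, ∀ c : ℕ → ℝ, (∀ k, 2 ≤ c k ∧ c k ≤ R) → ∀ h k N : ℕ, N₀ ≤ N →
    ∀ s ⊆ Icc N (2*N), (∀ n ∈ s, n ∈ bad c h k) → (s.card:ℝ) ≤ N * exp (-(ep * qp N/2)) := by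
  have hep := ep_pos
  obtain ⟨r, hr⟩ : ∃ r : ℕ, (3:ℝ)^R ≤ 2^r := by
    obtain ⟨r, hr⟩ := pow_unbounded_of_one_lt ((3:ℝ)^R) (by norm_num : (1:ℝ) < 2)
    exact ⟨r, hr.le⟩
  have hg : 0 < ep*((2:ℝ)^(1/200:ℝ) - 1)/2 := by
    have : (1:ℝ) < 2^(1/200:ℝ) := one_lt_rpow (by norm_num) (by norm_num)
    have : 0 < (2:ℝ)^(1/200:ℝ) - 1 := by linarith
    positivity
  have E1 := tendsto_qp.eventually (ev_pow (2^r * 6400*R) 200 hg)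
  have E2 := tendsto_qp.eventually (ev_pow (2*10^7) 0 (by positivity : 0 < ep/2))
  obtain ⟨N₀, hN₀⟩ := eventually_atTop.1 ((primes_ae (by linarith : 0 < R)).and (E1.and (E2.and (eventually_ge_atTop 2))))
  refine ⟨N₀, fun c hc h => ?_⟩
  induction h with
  | zero =>
    intro k N _ s _ hb
    have : s = ∅ := eq_empty_of_forall_notMem fun n hn => hb n hn
    rw [this]; simp; positivity
  | succ h ih =>
    intro k N hN s hs hb
    obtain ⟨hpa, e1, e2, hN2⟩ := hN₀ N hN
    obtain ⟨hc2, hcR⟩ := hc (k + 1)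
    set C := c (k + 1) with hC
    have hNr : (2:ℝ) ≤ N := by exact_mod_cast hN2
    have hN0 : (0:ℝ) < N := by linarith
    have hq0 : 0 ≤ qp N := by have := log_natCast_nonneg N; unfold qp; positivity
    set β := exp (-(ep * qp N/2)) with hβ
    set β' := exp (-(ep * qp (N^2)/2)) with hβ'
    set p1 : ℕ → Prop := fun n => (pcnt C n : ℝ) < 1/800*(n:ℝ)^(C - 1)*(C * log n)⁻¹ with hp1
    have h3 : (s.card:ℝ) = (s.filter p1).card + (s.filter (¬ p1 ·)).card := by
      exact_mod_cast (card_filter_add_card_filter_not (s := s) p1).symm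
    have hA : ((s.filter p1).card:ℝ) ≤ N * β/2 := by
      have h4 := hpa C hc2 hcR (s.filter p1) ((filter_subset _ _).trans hs) fun n hn => (mem_filter.1 hn).2
      have e : exp (-(ep * qp N)) = β * β := by rw [hβ, ← exp_add]; congr 1; ring
      have e3 : 2*10^7*β ≤ 1 := by
        rw [pow_zero, mul_one] at e2
        calc _ ≤ exp (ep/2*qp N) * β := by gcongr
          _ = 1 := by rw [hβ, ← exp_add, show ep/2*qp N + -(ep * qp N/2) = 0 by ring, exp_zero]
      rw [e] at h4
      have : 0 ≤ N * β := by positivity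
      nlinarith
    have hB : ((s.filter (¬ p1 ·)).card:ℝ) ≤ N * β/2 := by
      set s2 := s.filter (¬ p1 ·) with hs2
      set B : ℕ → Finset ℕ := fun n => ((jset C n).filter Nat.Prime).filter (· ∈ bad c h (k + 1)) with hBd
      set X := ⌈(N:ℝ)^C⌉₊ with hX
      have hNC : 0 < (N:ℝ)^C := by positivity
      have hX1 : (N:ℝ)^C ≤ X := le_ceil _
      have hNC2 : (N:ℝ)^2 ≤ (N:ℝ)^C := by
        rw [← rpow_natCast]; exact rpow_le_rpow_of_exponent_le (by linarith) (by simpa using hc2)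
      have hX2 : (X:ℝ) ≤ 2*(N:ℝ)^C := by
        have := ceil_lt_add_one hNC.le
        have h5 : (1:ℝ) ≤ (N:ℝ)^2 := one_le_pow₀ (by linarith)
        linarith
      have hXN : N^2 ≤ X := by
        have : ((N^2:ℕ):ℝ) ≤ X := by push_cast; linarith
        exact_mod_cast this
      have hs2N : ∀ n ∈ s2, N ≤ n ∧ n ≤ 2*N := fun n hn => mem_Icc.1 (hs (mem_filter.1 hn).1)
      have hU := dyadic_count (bad c h (k + 1)) X r β' (fun i t ht htb => by
        have hi : X ≤ 2^i * X := Nat.le_mul_of_pos_left _ (by positivity)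
        have hNN : N ≤ N^2 := Nat.le_self_pow (by norm_num) N
        have h5 := ih (k + 1) (2^i * X) (hN.trans (hNN.trans (hXN.trans hi))) t ht htb
        have hm : qp (N^2) ≤ qp (2^i * X) := qp_mono (Nat.one_le_iff_ne_zero.2 (by positivity)) (hXN.trans hi)
        have hexp : exp (-(ep * qp (2^i * X)/2)) ≤ β' := exp_le_exp.2 (by
          have := mul_le_mul_of_nonneg_left hm hep.le
          linarith)
        calc _ ≤ ((2^i * X:ℕ):ℝ) * exp (-(ep * qp (2^i * X)/2)) := h5
          _ ≤ ((2^i * X:ℕ):ℝ) * β' := mul_le_mul_of_nonneg_left hexp (by positivity)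
          _ = 2^i * X * β' := by push_cast; ring) (s2.biUnion B) (fun m hm => by
          obtain ⟨n, hn, hmn⟩ := mem_biUnion.1 hm
          obtain ⟨h5, h6⟩ := hs2N n hn
          obtain ⟨h7, h8⟩ := (mem_jset (by linarith)).1 (mem_filter.1 (mem_filter.1 hmn).1).1
          have h5r : (N:ℝ) ≤ n := by exact_mod_cast h5
          have h6r : (n:ℝ) ≤ 2*N := by exact_mod_cast h6
          refine mem_Ico.2 ⟨Nat.ceil_le.2 (le_trans (by gcongr) h7), ?_⟩
          have h9 : ((n:ℝ) + 1)^C ≤ 2^r * X := by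
            calc _ ≤ (3*N:ℝ)^C := by gcongr; linarith
              _ = 3^C*(N:ℝ)^C := mul_rpow (by norm_num) (by linarith)
              _ ≤ 3^R*(N:ℝ)^C := by gcongr; norm_num
              _ ≤ _ := by gcongr
          have : (m:ℝ) < ((2^r * X:ℕ):ℝ) := by push_cast; linarith
          exact_mod_cast this) fun m hm => by
            obtain ⟨n, hn, hmn⟩ := mem_biUnion.1 hm
            exact (mem_filter.1 hmn).2
      rw [card_biUnion fun n hn n' hn' hne => disjoint_left.2 fun x hx hx' => hne (jset_eq (by linarith : 0 ≤ C)
        (mem_filter.1 (mem_filter.1 hx).1).1 (mem_filter.1 (mem_filter.1 hx').1).1)] at hU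
      -- a lower bound for the number of bad children of each `n ∈ s2`
      set τ : ℝ := 1/800*(N:ℝ)^(C - 1)*(R * qp N^200)⁻¹ with hτ
      have hL0 : 0 < log N := log_pos (by linarith)
      have hq200 : qp N^200 = 2*log N := qp_pow N
      have hBn : ∀ n ∈ s2, τ/2 ≤ (B n).card := by
        intro n hn
        obtain ⟨h5, h6⟩ := hs2N n hn
        obtain ⟨hn1, hn2⟩ := mem_filter.1 hn
        have h5r : (N:ℝ) ≤ n := by exact_mod_cast h5
        have h6r : (n:ℝ) ≤ 2*N := by exact_mod_cast h6
        have h7 : pcnt C n < 2*(B n).card := (hb n hn1).resolve_left hn2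
        have h7r : (pcnt C n : ℝ) < 2*(B n).card := by exact_mod_cast h7
        have h8 := not_lt.1 hn2
        have hln : 0 < log n := log_pos (by linarith)
        have h9 : log n ≤ qp N^200 := by
          rw [hq200]
          calc log n ≤ log ((N:ℝ)^2) := log_le_log (by linarith) (by nlinarith)
            _ = _ := by rw [log_pow]; norm_cast
        have h10 : τ ≤ 1/800*(n:ℝ)^(C - 1)*(C * log n)⁻¹ := by
          rw [hτ]
          have : (N:ℝ)^(C - 1) ≤ (n:ℝ)^(C - 1) := rpow_le_rpow hN0.le h5r (by linarith)
          gcongr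
        linarith
      have hτ0 : 0 < τ := by rw [hτ, hq200]; positivity
      have h11 : (s2.card:ℝ)*(τ/2) ≤ 2^r*(2*(N:ℝ)^C) * β' := by
        calc _ = ∑ n ∈ s2, τ/2 := by rw [sum_const, nsmul_eq_mul]
          _ ≤ ∑ n ∈ s2, ((B n).card:ℝ) := sum_le_sum hBn
          _ ≤ 2^r * X * β' := by
              push_cast at hU
              have : 0 ≤ X * β' := by positivity
              linarith
          _ ≤ _ := by gcongr
      have h12 : (s2.card:ℝ) ≤ N*((2^r * 6400*R * qp N^200) * β')/2 := by
        rw [← le_div_iff₀ (by positivity)] at h11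
        refine h11.trans (le_of_eq ?_)
        rw [hτ, rpow_sub_one hN0.ne', hq200]
        field_simp; ring
      refine h12.trans ?_
      have h13 : exp (ep*((2:ℝ)^(1/200:ℝ) - 1)/2*qp N) * β' = β := by
        rw [hβ', hβ, ← exp_add, qp_sq]; congr 1; ring
      rw [← h13]; gcongr
    rw [h3]; linarith

/-! ### The tree -/

lemma enum_finset (s : Finset ℕ) : ∃ f : ℕ → ℕ, (∀ i ∈ Icc 1 s.card, f i ∈ s) ∧
    StrictMonoOn f (Icc 1 s.card : Finset ℕ) := by
  refine ⟨fun i => if h : i - 1 < s.card then s.orderEmbOfFin rfl ⟨i - 1, h⟩ else 0, fun i hi => ?_,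
    fun i hi j hj hij => ?_⟩
  · have := mem_Icc.1 hi
    simp only [show i - 1 < s.card by omega, dif_pos]
    exact orderEmbOfFin_mem _ _ _
  · have h1 := mem_Icc.1 (mem_coe.1 hi)
    have h2 := mem_Icc.1 (mem_coe.1 hj)
    simp only [show i - 1 < s.card by omega, show j - 1 < s.card by omega, dif_pos]
    exact (s.orderEmbOfFin rfl).strictMono (by rw [Fin.mk_lt_mk]; omega)

/-- The tree generated from the root `p₁` when a node `n` at level `k` has the elements of `ch k n` as children. -/
lemma exists_tree (ch : ℕ → ℕ → Finset ℕ) (good : ℕ → ℕ → Prop) (p₁:ℕ) (h1 : good 1 p₁)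
    (hch : ∀ k n p, p ∈ ch k n → good (k + 1) p)
    (hdis : ∀ k n n' p, p ∈ ch k n → p ∈ ch k n' → n = n') :
    ∃ (I : ℕ → Finset (List ℕ)) (a m : List ℕ → ℕ), a [1] = p₁ ∧ I 1 = {[1]} ∧
      (∀ k ≥ 1, ∀ j ∈ I k, j.length = k ∧ good k (a j) ∧ m j = (ch k (a j)).card) ∧
      (∀ k ≥ 1, ∀ l : List ℕ, l ∈ I (k + 1) ↔ ∃ j ∈ I k, ∃ i : ℕ, 1 ≤ i ∧ i ≤ m j ∧ l = j ++ [i]) ∧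
      (∀ k ≥ 1, ∀ j ∈ I k, ∀ i, 1 ≤ i → i ≤ m j → a (j ++ [i]) ∈ ch k (a j)) ∧
      (∀ k ≥ 1, ∀ j ∈ I k, ∀ i i', 1 ≤ i → i < i' → i' ≤ m j → a (j ++ [i]) < a (j ++ [i'])) ∧
      ∀ k ≥ 1, ∀ j ∈ I k, ∀ j' ∈ I k, a j = a j' → j = j' := by
  choose f hf hmono using enum_finset
  let st : List ℕ → ℕ × ℕ := fun l => l.tail.foldl (fun x i => (x.1 + 1, f (ch x.1 x.2) i)) (1, p₁)
  let m : List ℕ → ℕ := fun l => (ch (st l).1 (st l).2).card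
  let J : ℕ → Finset (List ℕ) := fun k => Nat.rec {[1]}
    (fun _ s => s.biUnion fun j => (Icc 1 (m j)).image fun i => j ++ [i]) k
  have hst : ∀ j : List ℕ, j ≠ [] → ∀ i, st (j ++ [i]) = ((st j).1 + 1, f (ch (st j).1 (st j).2) i) := by
    intro j hj i
    simp only [st, List.tail_append_of_ne_nil hj, List.foldl_append, List.foldl_cons, List.foldl_nil]
  have hJ : ∀ k l, l ∈ J (k + 1) ↔ ∃ j ∈ J k, ∃ i : ℕ, 1 ≤ i ∧ i ≤ m j ∧ l = j ++ [i] := by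
    intro k l
    simp only [J, mem_biUnion, mem_image, mem_Icc]
    constructor
    · rintro ⟨j, hj, i, hi, rfl⟩; exact ⟨j, hj, i, hi.1, hi.2, rfl⟩
    · rintro ⟨j, hj, i, hi, hi', rfl⟩; exact ⟨j, hj, i, ⟨hi, hi'⟩, rfl⟩
  have hinv : ∀ k, ∀ j ∈ J k, j.length = k + 1 ∧ (st j).1 = k + 1 ∧ good (k + 1) (st j).2 := by
    intro k
    induction k with
    | zero =>
      intro j hj
      obtain rfl : j = [1] := by simpa [J] using hj
      exact ⟨rfl, rfl, h1⟩
    | succ k ih =>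
      intro l hl
      obtain ⟨j, hj, i, hi, hi', rfl⟩ := (hJ k l).1 hl
      obtain ⟨a1, a2, a3⟩ := ih j hj
      have hne : j ≠ [] := by rintro rfl; simp at a1
      rw [hst j hne]
      refine ⟨by simp [a1], by simp [a2], ?_⟩
      have := hf (ch (st j).1 (st j).2) i (mem_Icc.2 ⟨hi, hi'⟩)
      exact hch _ _ _ (by rwa [a2] at this ⊢)
  have hne : ∀ k, ∀ j ∈ J k, j ≠ [] := by
    rintro k j hj rfl
    have := (hinv k _ hj).1; simp at this
  have hmem : ∀ k, ∀ j ∈ J k, ∀ i, 1 ≤ i → i ≤ m j → (st (j ++ [i])).2 ∈ ch (k + 1) (st j).2 := by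
    intro k j hj i hi hi'
    rw [hst j (hne k j hj), ← (hinv k j hj).2.1]
    exact hf _ i (mem_Icc.2 ⟨hi, hi'⟩)
  have hlt : ∀ k, ∀ j ∈ J k, ∀ i i', 1 ≤ i → i < i' → i' ≤ m j → (st (j ++ [i])).2 < (st (j ++ [i'])).2 := by
    intro k j hj i i' hi hii hi'
    rw [hst j (hne k j hj), hst j (hne k j hj)]
    exact hmono _ (mem_coe.2 (mem_Icc.2 ⟨hi, (hii.trans_le hi').le⟩)) (mem_coe.2 (mem_Icc.2 ⟨by omega, hi'⟩)) hii
  have hinj : ∀ k, ∀ j ∈ J k, ∀ j' ∈ J k, (st j).2 = (st j').2 → j = j' := by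
    intro k
    induction k with
    | zero =>
      intro j hj j' hj' _
      obtain rfl : j = [1] := by simpa [J] using hj
      obtain rfl : j' = [1] := by simpa [J] using hj'
      rfl
    | succ k ih =>
      intro l hl l' hl' he
      obtain ⟨j, hj, i, hi, hi', rfl⟩ := (hJ k l).1 hl
      obtain ⟨j', hj', i', hi2, hi2', rfl⟩ := (hJ k l').1 hl'
      have e1 := hmem k j hj i hi hi'
      rw [he] at e1
      obtain rfl := ih j hj j' hj' (hdis _ _ _ _ e1 (hmem k j' hj' i' hi2 hi2'))
      rcases lt_trichotomy i i' with h | rfl | h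
      · exact absurd he (hlt k j hj i i' hi h hi2').ne
      · rfl
      · exact absurd he (hlt k j hj i' i hi2 h hi').ne'
  refine ⟨fun k => J (k - 1), fun j => (st j).2, m, rfl, rfl, ?_⟩
  refine ⟨fun k hk j hj => ?_, fun k hk l => ?_, fun k hk j hj => ?_, fun k hk => hlt (k - 1), fun k hk => hinj (k - 1)⟩
  · have := hinv (k - 1) j hj
    rw [Nat.sub_add_cancel hk] at this
    exact ⟨this.1, this.2.2, by simp only [m, this.2.1]⟩
  · obtain ⟨k, rfl⟩ := Nat.exists_eq_add_of_le' hk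
    exact hJ k l
  · have := hmem (k - 1) j hj
    rwa [Nat.sub_add_cancel hk] at this

open Classical in
lemma bad_mono (c : ℕ → ℝ) (h k : ℕ) : bad c h k ⊆ bad c (h + 1) k := by
  induction h generalizing k with
  | zero => exact fun _ hx => absurd hx (Set.notMem_empty _)
  | succ h ih =>
    intro n hn
    rcases hn with hn | hn
    · exact Or.inl hn
    · refine Or.inr (hn.trans_le ?_)
      have := ih (k + 1)
      gcongr 2*?_
      exact card_le_card fun x hx => mem_filter.2 ⟨(mem_filter.1 hx).1, this (mem_filter.1 hx).2⟩

lemma bad_stable (c : ℕ → ℝ) (k:ℕ) (s : Finset ℕ) : ∃ h, ∀ n ∈ s, ∀ h', n ∈ bad c h' k → n ∈ bad c h k := by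
  have hm : Monotone fun h => bad c h k := monotone_nat_of_le_succ fun h => bad_mono c h k
  induction s using Finset.induction_on with
  | empty => exact ⟨0, by simp⟩
  | insert x s _ ih =>
    obtain ⟨h, hh⟩ := ih
    by_cases hx : ∃ g, x ∈ bad c g k
    · obtain ⟨g, hg⟩ := hx
      refine ⟨max g h, fun n hn h' hn' => ?_⟩
      rcases mem_insert.1 hn with rfl | hn
      · exact hm (le_max_left g h) hg
      · exact hm (le_max_right g h) (hh n hn h' hn')
    · refine ⟨h, fun n hn h' hn' => ?_⟩
      rcases mem_insert.1 hn with rfl | hn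
      · exact absurd ⟨h', hn'⟩ hx
      · exact hh n hn h' hn'

open Classical in
/-- The primes of `[n^c, (n+1)^c)`, `c = c (k + 1)`, that carry subtrees of every height. -/
def childs (c : ℕ → ℝ) (k n : ℕ) : Finset ℕ :=
  ((jset (c (k + 1)) n).filter Nat.Prime).filter fun p => ∀ h, p ∉ bad c h (k + 1)

lemma mem_childs {c : ℕ → ℝ} {k n p : ℕ} : p ∈ childs c k n ↔
    p ∈ jset (c (k + 1)) n ∧ p.Prime ∧ ∀ h, p ∉ bad c h (k + 1) := by
  classical
  simp only [childs, mem_filter, and_assoc]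

open Classical in
/-- A compactness argument: finitely many children have a common height beyond which no new one becomes bad. -/
lemma childs_card {c : ℕ → ℝ} {k n : ℕ} (hn : ∀ h, n ∉ bad c h k) :
    1/1600*(n:ℝ)^(c (k + 1) - 1)*(c (k + 1) * log n)⁻¹ ≤ (childs c k n).card := by
  set s := (jset (c (k + 1)) n).filter Nat.Prime with hs
  obtain ⟨h, hh⟩ := bad_stable c (k + 1) s
  have h1 := hn (h + 1)
  have h2 : ¬ ((pcnt (c (k + 1)) n:ℝ) < 1/800*(n:ℝ)^(c (k + 1) - 1)*(c (k + 1) * log n)⁻¹) :=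
    fun h' => h1 (Or.inl h')
  have h3 : ¬ (pcnt (c (k + 1)) n < 2*(s.filter (· ∈ bad c h (k + 1))).card) := fun h' => h1 (Or.inr h')
  have h4 : childs c k n = s.filter (¬ · ∈ bad c h (k + 1)) := by
    unfold childs
    refine filter_congr fun p hp => ⟨fun h' => h' h, fun h' g hg => h' (hh p hp g hg)⟩
  have h5 := card_filter_add_card_filter_not (s := s) (· ∈ bad c h (k + 1))
  have h6 : pcnt (c (k + 1)) n = s.card := rfl
  rw [← h4] at h5
  have h7 : s.card ≤ 2*(childs c k n).card := by omega
  have h8 : (s.card:ℝ) ≤ 2*(childs c k n).card := by exact_mod_cast h7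
  rw [h6] at h2
  linarith [not_lt.1 h2]

open Classical in
/-- The root is sought among the children of an auxiliary node `n` near `√M` with exponent `2`. -/
lemma exists_root {R : ℝ} (hR : 2 ≤ R) : ∃ M₀ : ℕ, 3 ≤ M₀ ∧ ∀ c : ℕ → ℝ, (∀ k, 2 ≤ c k ∧ c k ≤ R) → c 1 = 2 →
    ∀ M ≥ M₀, ∃ p : ℕ, p.Prime ∧ M ≤ p ∧ p ≤ 2*M ∧ ∀ h, p ∉ bad c h 1 := by
  obtain ⟨N₀, hN₀⟩ := bad_count hR
  have E := tendsto_qp.eventually (ev_pow 10 0 (by have := ep_pos; positivity : 0 < ep/2))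
  obtain ⟨N₁, hN₁⟩ := eventually_atTop.1 E
  refine ⟨(N₀ + N₁ + 100)^2, by nlinarith [Nat.zero_le (N₀ + N₁)], fun c hc hc1 M hM => ?_⟩
  set N := Nat.sqrt M + 1 with hN
  have hge : N₀ + N₁ + 100 ≤ Nat.sqrt M := Nat.le_sqrt'.2 hM
  have hsq1 : M < N^2 := by rw [hN]; exact Nat.lt_succ_sqrt' M
  have hsq2 : Nat.sqrt M^2 ≤ M := Nat.sqrt_le' M
  -- a good auxiliary node
  obtain ⟨n, hn1, hn2, hng⟩ : ∃ n, N ≤ n ∧ n ≤ N + N/5 ∧ ∀ h, n ∉ bad c h 0 := by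
    by_contra hcon
    push Not at hcon
    obtain ⟨h, hh⟩ := bad_stable c 0 (Icc N (N + N/5))
    have h1 := hN₀ c hc h 0 N (by omega) (Icc N (N + N/5)) (Icc_subset_Icc le_rfl (by omega)) fun n hn => by
      obtain ⟨g, hg⟩ := hcon n (mem_Icc.1 hn).1 (mem_Icc.1 hn).2
      exact hh n hn g hg
    have h2 := hN₁ N (by omega)
    have h3 : 10*exp (-(ep * qp N/2)) ≤ 1 := by
      rw [pow_zero, mul_one] at h2
      calc _ ≤ exp (ep/2*qp N) * exp (-(ep * qp N/2)) := by gcongr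
        _ = 1 := by rw [← exp_add, show ep/2*qp N + -(ep * qp N/2) = 0 by ring, exp_zero]
    have h4 : N ≤ 5*(Icc N (N + N/5)).card := by rw [Nat.card_Icc]; omega
    have h5 : (N:ℝ) ≤ 5*(Icc N (N + N/5)).card := by exact_mod_cast h4
    have h6 : (0:ℝ) < N := by rw [hN]; positivity
    nlinarith
  have h1 := childs_card hng
  have hnr : (1:ℝ) < n := by exact_mod_cast (by omega : 1 < n)
  rw [zero_add, hc1] at h1
  have h2 : (0:ℝ) < (childs c 0 n).card := lt_of_lt_of_le (by
    have := log_pos hnr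
    positivity) h1
  obtain ⟨p, hp⟩ := card_pos.1 (by exact_mod_cast h2 : 0 < (childs c 0 n).card)
  obtain ⟨hp3, hp4, hp2⟩ := mem_childs.1 hp
  rw [zero_add, hc1] at hp3
  obtain ⟨hp5, hp6⟩ := (mem_jset (by norm_num)).1 hp3
  rw [rpow_two] at hp5 hp6
  have hp5' : n^2 ≤ p := by exact_mod_cast hp5
  have hp6' : p + 1 ≤ (n + 1)^2 := by
    have : (p:ℝ) + 1 ≤ ((n:ℝ) + 1)^2 := by linarith
    exact_mod_cast this
  refine ⟨p, hp4, ?_, ?_, hp2⟩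
  · nlinarith
  · set q := Nat.sqrt M
    have h5 : 5*(n + 1) ≤ 6*q + 11 := by omega
    have h6 : 100 ≤ q := by omega
    have h7 : 25*(n + 1)^2 ≤ (6*q + 11)^2 := by nlinarith
    nlinarith

end

end PrimeTree

open Real Set

/-- **Lemma 4.1.** Tuples in `ℕ^k` are encoded as lists of length `k`; `(j, i)` is `j ++ [i]`,
and the one-entry tuple `(1)` is `[1]`.

There is an absolute constant `d₂ > 0` such that for every `R > 0` there is `M₀ = M₀(R) ∈ ℕ`
with: for every sequence `(c_k)` with `2 ≤ c_k ≤ R` and every integer `M ≥ M₀` there exist a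
prime `p₁ ∈ [M, 2M]`, index sets `I_k ⊆ ℕ^k`, a prime-valued `a` with `a((1)) = p₁`, and
`m : ⋃_k I_k → ℕ` satisfying (B1)–(B4). -/
theorem construction_general_case :
    ∃ d₂ : ℝ, 0 < d₂ ∧ ∀ R : ℝ, 0 < R → ∃ M₀ : ℕ,
      ∀ c : ℕ → ℝ, (∀ k ≥ 1, 2 ≤ c k ∧ c k ≤ R) →
      ∀ M : ℕ, M₀ ≤ M →
        ∃ p₁ : ℕ, p₁.Prime ∧ M ≤ p₁ ∧ p₁ ≤ 2 * M ∧
        ∃ (I : ℕ → Finset (List ℕ)) (a m : List ℕ → ℕ),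
          -- index sets live in ℕ^k
          (∀ k ≥ 1, ∀ j ∈ I k, j.length = k) ∧
          -- `a` takes prime values
          (∀ k ≥ 1, ∀ j ∈ I k, (a j).Prime) ∧
          -- `a((1)) = p₁`
          a [1] = p₁ ∧
          -- (B1)
          I 1 = {[1]} ∧
          (∀ k, 2 ≤ k → ∀ l : List ℕ,
            l ∈ I k ↔ ∃ j ∈ I (k - 1), ∃ i : ℕ, 1 ≤ i ∧ i ≤ m j ∧ l = j ++ [i]) ∧
          -- (B2)
          (∀ k, 2 ≤ k → ∀ j ∈ I (k - 1),
            ((a j : ℝ) ^ c k ≤ (a (j ++ [1]) : ℝ)) ∧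
            (∀ i : ℕ, 1 ≤ i → i < m j → a (j ++ [i]) < a (j ++ [i + 1])) ∧
            ((a (j ++ [m j]) : ℝ) ≤ ((a j : ℝ) + 1) ^ c k - 1)) ∧
          -- (B3)
          (∀ k, 2 ≤ k → ∀ j ∈ I (k - 1), ∀ j' ∈ I (k - 1), j ≠ j' →
            2 ≤ |(a j : ℝ) - (a j' : ℝ)|) ∧
          -- (B4)
          (∀ k, 2 ≤ k → ∀ j ∈ I (k - 1),
            d₂ * (a j : ℝ) ^ (c k - 1) * (c k * Real.log (a j))⁻¹ ≤ (m j : ℝ)) := by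
  refine ⟨1 / 1600, by norm_num, fun R _ => ?_⟩
  rcases lt_or_ge R 2 with hR | hR
  · exact ⟨0, fun c hc => absurd ((hc 1 le_rfl).1.trans (hc 1 le_rfl).2) (not_le.2 hR)⟩
  obtain ⟨M₀, h3, hM₀⟩ := PrimeTree.exists_root hR
  refine ⟨M₀, fun c hc M hM => ?_⟩
  -- `c 0` is irrelevant and `c 1` only serves to find the root
  set c' : ℕ → ℝ := fun k => if k ≤ 1 then 2 else c k with hc'
  have hc'2 : ∀ k, 2 ≤ c' k ∧ c' k ≤ R := by
    intro k
    by_cases hk : k ≤ 1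
    · simp [hc', hk, hR]
    · simp only [hc', hk, if_false]; exact hc k (by omega)
  obtain ⟨p₁, hp, hpM, hp2M, hgood⟩ := hM₀ c' hc'2 (by simp [hc']) M hM
  obtain ⟨I, a, m, ha1, hI1, hinv, hIs, hmem, hlt, hinj⟩ := PrimeTree.exists_tree
    (fun k n => if 3 ≤ n then PrimeTree.childs c' k n else ∅)
    (fun k n => n.Prime ∧ 3 ≤ n ∧ ∀ h, n ∉ PrimeTree.bad c' h k) p₁
    ⟨hp, h3.trans (hM.trans hpM), hgood⟩
    (fun k n p hp => by
      split_ifs at hp with h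
      · obtain ⟨q3, q4, q2⟩ := PrimeTree.mem_childs.1 hp
        have q5 := ((PrimeTree.mem_jset (by linarith [(hc'2 (k + 1)).1])).1 q3).1
        have q6 : (n : ℝ) ≤ (n : ℝ) ^ c' (k + 1) := Real.self_le_rpow_of_one_le
          (by exact_mod_cast (by omega : 1 ≤ n)) (by linarith [(hc'2 (k + 1)).1])
        have q7 : n ≤ p := by exact_mod_cast q6.trans q5
        exact ⟨q4, h.trans q7, q2⟩
      · exact absurd hp (Finset.notMem_empty _))
    (fun k n n' p hp hp' => by
      split_ifs at hp hp' with h h'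
      · exact PrimeTree.jset_eq (by linarith [(hc'2 (k + 1)).1]) (PrimeTree.mem_childs.1 hp).1
          (PrimeTree.mem_childs.1 hp').1
      all_goals first | exact absurd hp (Finset.notMem_empty _) | exact absurd hp' (Finset.notMem_empty _))
  have hck : ∀ k, 1 ≤ k → c' (k + 1) = c (k + 1) := fun k hk => by simp [hc', show k ≠ 0 by omega]
  have hB4 : ∀ k ≥ 1, ∀ j ∈ I k,
      1 / 1600 * (a j : ℝ) ^ (c (k + 1) - 1) * (c (k + 1) * Real.log (a j))⁻¹ ≤ (m j : ℝ) := by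
    intro k hk j hj
    obtain ⟨-, ⟨_, q2, q3⟩, q4⟩ := hinv k hk j hj
    rw [q4, if_pos q2, ← hck k hk]
    exact PrimeTree.childs_card q3
  have hm1 : ∀ k ≥ 1, ∀ j ∈ I k, 1 ≤ m j := by
    intro k hk j hj
    have q := hB4 k hk j hj
    obtain ⟨-, ⟨_, q2, _⟩, _⟩ := hinv k hk j hj
    have q5 : (1 : ℝ) < a j := by exact_mod_cast (by omega : 1 < a j)
    have q6 := Real.log_pos q5
    have q7 := (hc (k + 1) (by omega)).1
    have q8 : (0 : ℝ) < m j := lt_of_lt_of_le (by positivity) q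
    exact_mod_cast q8
  have hB2 : ∀ k ≥ 1, ∀ j ∈ I k, ∀ i, 1 ≤ i → i ≤ m j →
      (a j : ℝ) ^ c (k + 1) ≤ a (j ++ [i]) ∧ (a (j ++ [i]) : ℝ) ≤ ((a j : ℝ) + 1) ^ c (k + 1) - 1 := by
    intro k hk j hj i hi hi'
    have q := hmem k hk j hj i hi hi'
    obtain ⟨-, ⟨_, q2, _⟩, _⟩ := hinv k hk j hj
    rw [if_pos q2] at q
    rw [← hck k hk]
    exact (PrimeTree.mem_jset (by linarith [(hc'2 (k + 1)).1])).1 (PrimeTree.mem_childs.1 q).1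
  refine ⟨p₁, hp, hpM, hp2M, I, a, m, fun k hk j hj => (hinv k hk j hj).1, fun k hk j hj => (hinv k hk j hj).2.1.1,
    ha1, hI1, ?_, ?_, ?_, ?_⟩
  · intro k hk
    obtain ⟨k, rfl⟩ := Nat.exists_eq_add_of_le' hk
    exact hIs (k + 1) (by omega)
  · intro k hk j hj
    obtain ⟨k, rfl⟩ := Nat.exists_eq_add_of_le' hk
    have hk1 : k + 1 ≥ 1 := by omega
    have q := hm1 _ hk1 j hj
    exact ⟨(hB2 _ hk1 j hj 1 le_rfl q).1, fun i hi hi' => hlt _ hk1 j hj i (i + 1) hi (by omega) hi',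
      (hB2 _ hk1 j hj (m j) q le_rfl).2⟩
  · intro k hk j hj j' hj' hne
    obtain ⟨k, rfl⟩ := Nat.exists_eq_add_of_le' hk
    have hk1 : k + 1 ≥ 1 := by omega
    obtain ⟨-, ⟨q1, q2, _⟩, _⟩ := hinv _ hk1 j hj
    obtain ⟨-, ⟨r1, r2, _⟩, _⟩ := hinv _ hk1 j' hj'
    have e : a j ≠ a j' := fun h => hne (hinj _ hk1 j hj j' hj' h)
    -- distinct odd numbers differ by at least `2`
    have o1 := q1.eq_two_or_odd
    have o2 := r1.eq_two_or_odd
    have : (2 : ℤ) ≤ |(a j : ℤ) - a j'| := by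
      rw [le_abs]; omega
    exact_mod_cast this
  · intro k hk j hj
    obtain ⟨k, rfl⟩ := Nat.exists_eq_add_of_le' hk
    exact hB4 (k + 1) (by omega) j hj
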